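/- Let p ∈ (1,∞), w ∈ A_p(𝓗^{n-1}) and b ∈ BMO(𝓗^{n-1}). Then the commutator of the Cauchy–Szegő operator [b,𝒞] is bounded on the weighted Lebesgue space L^p_w(𝓗^{n-1}): there exists C > 0 such that for every f ∈ L^p_w(𝓗^{n-1}), the principal value defining [b,𝒞]f(g) exists for almost every g and ‖[b,𝒞]f‖_{L^p_w} ≤ C ‖b‖_BMO ‖f‖_{L^p_w}. -/

import Mathlib

/-!
The commutator bound is proved by real-variable methods on an abstract metric measure space in which
a ball of radius `r` has measure `V * r ^ Q` (`CZ.HomSp`), for kernels with the usual size and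
regularity bounds and with mean zero on annuli (`CZ.CZK`); at the end the quaternionic Heisenberg
group with its gauge distance and the Cauchy–Szegő kernel are shown to be an instance.

*Singular integrals.* Dyadic pieces of the kernel are almost orthogonal by cancellation, so the
Cotlar–Stein lemma (`CZ.cotlar_stein`) bounds the truncations on `L²` uniformly (`CZ.CZK.l2`). Cotlar's
inequality gives weak type (2,2) of the maximal truncation (`CZ.CZK.weak22`), a Calderón–Zygmund
decomposition over Whitney balls gives weak type (1,1) (`CZ.CZK.weak11`), and density of functions
that are locally constant almost everywhere gives principal values of integrable functions
(`CZ.CZK.pv_ae`). A good-λ inequality whose constants depend on the weight only through its `A_p`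
constant yields weighted bounds for the maximal truncation (`CZ.CZK.weighted`).

*Commutators.* The John–Nirenberg inequality in the measure `w dμ` shows that `w * exp (η b)` is an
`A_p` weight, with a uniform constant, for all small real `η` (`CZ.ApPair.tilt`). Following
Coifman–Rochberg–Weiss, Cauchy's formula represents `x` as a circular average of `exp (δ e^{iθ} x)`;
hence the truncated commutator is an average over `θ` of the truncated singular integral conjugated
by `exp (δ e^{iθ} b)` (`CZ.CZK.CTr_eq`), and uniform weighted bounds for tilted weights bound it on
`L^p(w)` (`CZ.CZK.comm_nice`). Fatou's lemma extends the estimate to all functions and to principal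
values (`CZ.comm_bound`).

*Existence of the principal value.* A weight satisfying the hypotheses may vanish almost everywhere, so
principal values have to exist for every measurable `f`. At a point where some truncated commutator
is not an integral, all truncations at smaller scales are the junk value zero. At almost every other
point `x`, the kernel being nonzero on a fixed proportion of every ball, comparison with
nearby base points shows that `(b x - b) f` is integrable near `x` (`CZ.ae_loc`), which reduces the
question to integrable functions (`CZ.CE_pv`).

*The Cauchy–Szegő kernel.* Smoothness and homogeneity of the derivatives of the quaternionic Cauchy
kernel give size and regularity. For the mean-zero property (`CZ.ck_Sh`) the imaginary coordinates
are odd in the central variable, while the integral of the real part over the centre is, by homogeneity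
and differentiation in the radial variable, zero; cylindrical and gauge shells are compared by
dilation invariance.
-/

open MeasureTheory Filter Topology ENNReal NNReal
noncomputable section

namespace QHeis

abbrev G (n : ℕ) := (Fin 3 → ℝ) × (Fin (4*(n-1)) → ℝ)

def bmat : Fin 3 → Fin 4 → Fin 4 → ℝ :=
  ![![![0,1,0,0], ![-1,0,0,0], ![0,0,0,-1], ![0,0,1,0]],
    ![![0,0,1,0], ![0,0,0,1], ![-1,0,0,0], ![0,-1,0,0]],
    ![![0,0,0,1], ![0,0,-1,0], ![0,1,0,0], ![-1,0,0,0]]]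

def idx {n : ℕ} (l : Fin (n-1)) (k : Fin 4) : Fin (4*(n-1)) :=
  ⟨4 * l.1 + k.1, by have h1 := l.2; have h2 := k.2; omega⟩

def mul {n : ℕ} (a b : G n) : G n :=
  (fun α => a.1 α + b.1 α +
      2 * ∑ l : Fin (n-1), ∑ k : Fin 4, ∑ j : Fin 4,
        bmat α k j * a.2 (idx l k) * b.2 (idx l j),
    a.2 + b.2)

def inv {n : ℕ} (a : G n) : G n := (-a.1, -a.2)

def hnorm {n : ℕ} (g : G n) : ℝ :=
  ((∑ i, (g.2 i)^2)^2 + ∑ α, (g.1 α)^2) ^ ((4:ℝ)⁻¹)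

def rho {n : ℕ} (h g : G n) : ℝ := hnorm (mul (inv g) h)

def ball {n : ℕ} (g : G n) (r : ℝ) : Set (G n) := {h | rho h g < r}

def dil {n : ℕ} (r : ℝ) (g : G n) : G n := (fun α => r^2 * g.1 α, fun i => r * g.2 i)

def avg {n : ℕ} (B : Set (G n)) (f : G n → ℝ) : ℝ := (volume B).toReal⁻¹ * ∫ x in B, f x

def oscB {n : ℕ} (f : G n → ℝ) (g : G n) (r : ℝ) : ℝ :=
  avg (ball g r) (fun x => |f x - avg (ball g r) f|)

def IsLocInt {n : ℕ} (f : G n → ℝ) : Prop :=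
  ∀ (g : G n) (r : ℝ), 0 < r → IntegrableOn f (ball g r)

def InBMO {n : ℕ} (b : G n → ℝ) : Prop :=
  IsLocInt b ∧ ∃ C : ℝ, ∀ (g : G n) (r : ℝ), 0 < r → oscB b g r ≤ C

def bmoNorm {n : ℕ} (b : G n → ℝ) : ℝ :=
  sInf {C : ℝ | 0 ≤ C ∧ ∀ (g : G n) (r : ℝ), 0 < r → oscB b g r ≤ C}

def InVMO {n : ℕ} (b : G n → ℝ) : Prop :=
  InBMO b ∧ ∀ ε : ℝ, 0 < ε → ∃ φ : G n → ℝ, ContDiff ℝ (⊤ : ℕ∞) φ ∧ HasCompactSupport φ ∧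
    InBMO (fun x => b x - φ x) ∧ bmoNorm (fun x => b x - φ x) < ε

def wInt {n : ℕ} (w : G n → ℝ) (E : Set (G n)) : ℝ≥0∞ := ∫⁻ x in E, ENNReal.ofReal (w x)

def IsApGt1 {n : ℕ} (p : ℝ) (w : G n → ℝ) : Prop :=
  ∃ C : ℝ, ∀ (g : G n) (r : ℝ), 0 < r →
    (wInt w (ball g r) / volume (ball g r)) *
      ((∫⁻ x in ball g r, (ENNReal.ofReal (w x)) ^ (-(1/(p-1)))) / volume (ball g r)) ^ (p-1)
      ≤ ENNReal.ofReal C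

def IsA1 {n : ℕ} (w : G n → ℝ) : Prop :=
  ∃ C : ℝ, ∀ (g : G n) (r : ℝ), 0 < r →
    wInt w (ball g r) / volume (ball g r)
      ≤ ENNReal.ofReal C * essInf (fun x => ENNReal.ofReal (w x)) (volume.restrict (ball g r))

def IsAp {n : ℕ} (p : ℝ) (w : G n → ℝ) : Prop :=
  Measurable w ∧ (∀ x, 0 ≤ w x) ∧ (∀ (g : G n) (r : ℝ), 0 < r → wInt w (ball g r) < ⊤) ∧
    ((p = 1 ∧ IsA1 w) ∨ (1 < p ∧ IsApGt1 p w))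

def morreyNormE {n : ℕ} (p κ : ℝ) (w : G n → ℝ) (F : G n → ℝ≥0∞) : ℝ≥0∞ :=
  ⨆ (g : G n) (r : ℝ) (_ : 0 < r),
    ((∫⁻ x in ball g r, (F x) ^ p * ENNReal.ofReal (w x)) / (wInt w (ball g r)) ^ κ) ^ (1/p)

def morreyNorm {n : ℕ} (p κ : ℝ) (w f : G n → ℝ) : ℝ≥0∞ :=
  morreyNormE p κ w (fun x => ENNReal.ofReal |f x|)

def MemMorrey {n : ℕ} (p κ : ℝ) (w f : G n → ℝ) : Prop :=
  Measurable f ∧ morreyNorm p κ w f < ⊤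

def lpwNorm {n : ℕ} (p : ℝ) (w f : G n → ℝ) : ℝ≥0∞ :=
  (∫⁻ g, (ENNReal.ofReal |f g|) ^ p * ENNReal.ofReal (w g)) ^ (1/p)

def lpwNormQ {n : ℕ} (p : ℝ) (w : G n → ℝ) (f : G n → Quaternion ℝ) : ℝ≥0∞ :=
  (∫⁻ g, (ENNReal.ofReal ‖f g‖) ^ p * ENNReal.ofReal (w g)) ^ (1/p)

def dre (F : Quaternion ℝ → Quaternion ℝ) (σ : Quaternion ℝ) : Quaternion ℝ :=
  deriv (fun s : ℝ => F (σ + (s : Quaternion ℝ))) 0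

def sker (m : ℕ) (c : ℝ) (σ : Quaternion ℝ) : Quaternion ℝ :=
  c • (dre^[m] (fun τ => ((Quaternion.normSq τ) ^ 2)⁻¹ • star τ)) σ

def toQ {n : ℕ} (g : G n) : Quaternion ℝ := ⟨∑ i, (g.2 i)^2, g.1 0, g.1 1, g.1 2⟩

def Kker {n : ℕ} (c : ℝ) (g : G n) : Quaternion ℝ := sker (2*(n-1)) c (toQ g)

def Kker2 {n : ℕ} (c : ℝ) (g h : G n) : Quaternion ℝ := Kker c (mul (inv h) g)

def commTendsto {n : ℕ} (c : ℝ) (b f : G n → ℝ) (g : G n) (L : Quaternion ℝ) : Prop :=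
  Tendsto (fun ε : ℝ => ∫ h in {h : G n | ε < rho g h}, ((b g - b h) * f h) • Kker2 c g h)
    (nhdsWithin 0 (Set.Ioi 0)) (nhds L)

def commFun {n : ℕ} (c : ℝ) (b f : G n → ℝ) (g : G n) : Quaternion ℝ :=
  limUnder (nhdsWithin (0:ℝ) (Set.Ioi 0))
    (fun ε : ℝ => ∫ h in {h : G n | ε < rho g h}, ((b g - b h) * f h) • Kker2 c g h)

def eT {n : ℕ} (α : Fin 3) : G n := (Pi.single α 1, 0)
def eY {n : ℕ} (i : Fin (4*(n-1))) : G n := (0, Pi.single i 1)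

def pderiv {n : ℕ} (v : G n) (f : G n → ℝ) (g : G n) : ℝ :=
  deriv (fun s : ℝ => f (g + s • v)) 0

def Y {n : ℕ} (l : Fin (n-1)) (j : Fin 4) (f : G n → ℝ) (g : G n) : ℝ :=
  pderiv (eY (idx l j)) f g +
    2 * ∑ α : Fin 3, (∑ k : Fin 4, bmat α k j * g.2 (idx l k)) * pderiv (eT α) f g

def gradHsup {n : ℕ} (b : G n → ℝ) : ℝ :=
  sSup {a : ℝ | ∃ (g : G n) (l : Fin (n-1)) (j : Fin 4), a = |Y l j b g|}

def maxFunE {n : ℕ} (f : G n → ℝ) (g : G n) : ℝ≥0∞ :=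
  ⨆ (g0 : G n) (r : ℝ) (_ : 0 < r) (_ : g ∈ ball g0 r),
    (∫⁻ x in ball g0 r, ENNReal.ofReal |f x|) / volume (ball g0 r)

def Ceta {n : ℕ} (c : ℝ) (φ : ℝ → ℝ) (η : ℝ) (f : G n → ℝ) (g : G n) : Quaternion ℝ :=
  ∫ h, (φ (rho g h / η) * f h) • Kker2 c g h

def commEta {n : ℕ} (c : ℝ) (φ : ℝ → ℝ) (η : ℝ) (b f : G n → ℝ) (g : G n) : Quaternion ℝ :=
  ∫ h, ((b g - b h) * (φ (rho g h / η) * f h)) • Kker2 c g h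

def CstarE {n : ℕ} (c : ℝ) (φ : ℝ → ℝ) (f : G n → ℝ) (g : G n) : ℝ≥0∞ :=
  ⨆ (η : ℝ) (_ : 0 < η), ENNReal.ofReal ‖Ceta c φ η f g‖

def IsCompactComm {n : ℕ} (c p κ : ℝ) (w b : G n → ℝ) : Prop :=
  ∀ F : Set (G n → ℝ), (∀ f ∈ F, MemMorrey p κ w f) →
    (∃ M : ℝ, ∀ f ∈ F, morreyNorm p κ w f ≤ ENNReal.ofReal M) →
    ∀ ε : ℝ, 0 < ε → ∃ T : Set (G n → Quaternion ℝ), T.Finite ∧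
      ∀ f ∈ F, ∃ t ∈ T,
        morreyNormE p κ w (fun g => ENNReal.ofReal ‖commFun c b f g - t g‖) < ENNReal.ofReal ε

end QHeis

set_option linter.unusedSectionVars false
set_option linter.unusedVariables false
set_option linter.deprecated false

namespace CZ

open Set Metric

/-! ### Maximal functions of doubling measures -/

section Maximal

variable {X : Type*} [MetricSpace X] [MeasurableSpace X] [BorelSpace X]
  [SecondCountableTopology X]

/-- The uncentred maximal function of `f` with respect to the measure `ν`. -/
def MF (ν : Measure X) (f : X → ℝ≥0∞) (x : X) : ℝ≥0∞ :=
  ⨆ (c : X) (r : ℝ) (_ : x ∈ ball c r), (∫⁻ y in ball c r, f y ∂ν) / ν (ball c r)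

lemma le_MF (ν : Measure X) (f : X → ℝ≥0∞) {x c : X} {r : ℝ} (h : x ∈ ball c r) :
    (∫⁻ y in ball c r, f y ∂ν) / ν (ball c r) ≤ MF ν f x :=
  le_iSup_of_le c (le_iSup_of_le r (le_iSup_of_le h le_rfl))

/-- `ν` is finite on balls and doubling with constant `D`. -/
structure Doubling (ν : Measure X) (D : ℝ≥0∞) : Prop where
  fin : D ≠ ⊤
  ball_fin : ∀ x r, ν (ball x r) ≠ ⊤
  dbl : ∀ x r, ν (ball x (2 * r)) ≤ D * ν (ball x r)

lemma setLIntegral_le_MF {ν : Measure X} (f : X → ℝ≥0∞) {x c : X} {r : ℝ}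
    (h : x ∈ ball c r) (hf : ν (ball c r) ≠ ⊤) :
    ∫⁻ y in ball c r, f y ∂ν ≤ MF ν f x * ν (ball c r) := by
  by_cases h0 : ν (ball c r) = 0
  · rw [Measure.restrict_eq_zero.2 h0]; simp
  · exact (ENNReal.div_le_iff h0 hf).1 (le_MF ν f h)

lemma MF_le_iff {ν : Measure X} {f : X → ℝ≥0∞} {x : X} {a : ℝ≥0∞} :
    MF ν f x ≤ a ↔ ∀ c r, x ∈ ball c r → (∫⁻ y in ball c r, f y ∂ν) / ν (ball c r) ≤ a := by
  simp [MF, iSup_le_iff]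

lemma lt_MF_iff {ν : Measure X} {f : X → ℝ≥0∞} {x : X} {a : ℝ≥0∞} :
    a < MF ν f x ↔ ∃ c r, x ∈ ball c r ∧ a < (∫⁻ y in ball c r, f y ∂ν) / ν (ball c r) := by
  simp [MF, lt_iSup_iff]

lemma isOpen_lt_MF (ν : Measure X) (f : X → ℝ≥0∞) (a : ℝ≥0∞) : IsOpen {x | a < MF ν f x} := by
  rw [Metric.isOpen_iff]
  intro x hx
  obtain ⟨c, r, hc, h⟩ := lt_MF_iff.1 hx
  obtain ⟨e, he, hs⟩ := Metric.isOpen_iff.1 (isOpen_ball (x := c) (ε := r)) x hc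
  exact ⟨e, he, fun y hy => lt_MF_iff.2 ⟨c, r, hs hy, h⟩⟩

lemma measurable_MF (ν : Measure X) (f : X → ℝ≥0∞) : Measurable (MF ν f) :=
  measurable_of_Ioi fun a => (isOpen_lt_MF ν f a).measurableSet

lemma MF_mono {ν : Measure X} {f g : X → ℝ≥0∞} (h : ∀ x, f x ≤ g x) (x : X) :
    MF ν f x ≤ MF ν g x :=
  MF_le_iff.2 fun c r hx =>
    (ENNReal.div_le_div_right (lintegral_mono h) _).trans (le_MF ν g hx)

lemma MF_congr {ν : Measure X} {f g : X → ℝ≥0∞} (h : f =ᵐ[ν] g) (x : X) :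
    MF ν f x = MF ν g x := by
  unfold MF
  refine iSup_congr fun c => iSup_congr fun r => iSup_congr fun hx => ?_
  rw [lintegral_congr_ae (ae_restrict_of_ae h)]

/-- Weak type (1,1) of the maximal function of a doubling measure, by the Vitali covering lemma. -/
lemma MF_weak {ν : Measure X} {D : ℝ≥0∞} (hν : Doubling ν D) (f : X → ℝ≥0∞) (a : ℝ≥0∞) :
    a * ν {x | a < MF ν f x} ≤ D ^ 2 * ∫⁻ x, f x ∂ν := by
  -- radii are bounded by `R` first, so that Vitali's lemma applies
  set S : ℕ → Set X := fun N => {x | ∃ c r, r ≤ (N : ℝ) ∧ x ∈ ball c r ∧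
    a < (∫⁻ y in ball c r, f y ∂ν) / ν (ball c r)} with hS
  have hU : {x | a < MF ν f x} = ⋃ N, S N := by
    ext x
    simp only [mem_setOf_eq, lt_MF_iff, mem_iUnion, hS]
    constructor
    · rintro ⟨c, r, h1, h2⟩
      obtain ⟨N, hN⟩ := exists_nat_ge r
      exact ⟨N, c, r, hN, h1, h2⟩
    · rintro ⟨N, c, r, -, h1, h2⟩
      exact ⟨c, r, h1, h2⟩
  have hmono : Monotone S := by
    intro N M hNM x hx
    obtain ⟨c, r, h0, h1, h2⟩ := hx
    exact ⟨c, r, h0.trans (by exact_mod_cast hNM), h1, h2⟩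
  rw [hU, hmono.measure_iUnion, ENNReal.mul_iSup]
  refine iSup_le fun N => ?_
  set t : Set (X × ℝ) := {q | q.2 ≤ (N : ℝ) ∧ 0 < q.2 ∧
    a < (∫⁻ y in ball q.1 q.2, f y ∂ν) / ν (ball q.1 q.2)} with ht
  obtain ⟨u, hut, hdis, hcov⟩ := Vitali.exists_disjoint_subfamily_covering_enlargement_ball
    t (fun q => q.1) (fun q => q.2) N (fun q hq => hq.1) 4 (by norm_num)
  have hcount : u.Countable := hdis.countable_of_isOpen (fun q _ => isOpen_ball)
    (fun q hq => nonempty_ball.2 (hut hq).2.1)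
  have hsub : S N ⊆ ⋃ q ∈ u, ball q.1 (4 * q.2) := by
    rintro x ⟨c, r, h0, h1, h2⟩
    obtain ⟨q, hq, hqs⟩ := hcov (c, r) ⟨h0, pos_of_mem_ball h1, h2⟩
    exact mem_biUnion hq (hqs h1)
  have hone : ∀ q ∈ u, a * ν (ball q.1 (4 * q.2)) ≤ D ^ 2 * ∫⁻ y in ball q.1 q.2, f y ∂ν := by
    intro q hq
    have h2 := (hut hq).2.2
    have h4 : ν (ball q.1 (4 * q.2)) ≤ D ^ 2 * ν (ball q.1 q.2) := by
      have e : (4 : ℝ) * q.2 = 2 * (2 * q.2) := by ring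
      rw [e, sq, mul_assoc]
      exact (hν.dbl _ _).trans (by gcongr; exact hν.dbl _ _)
    have h5 : a * ν (ball q.1 q.2) ≤ ∫⁻ y in ball q.1 q.2, f y ∂ν :=
      ENNReal.mul_le_of_le_div h2.le
    calc a * ν (ball q.1 (4 * q.2)) ≤ a * (D ^ 2 * ν (ball q.1 q.2)) := by gcongr
      _ = D ^ 2 * (a * ν (ball q.1 q.2)) := by ring
      _ ≤ _ := by gcongr
  have := hcount.to_subtype
  calc a * ν (S N) ≤ a * ∑' q : u, ν (ball q.1.1 (4 * q.1.2)) := by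
        gcongr
        refine (measure_mono hsub).trans ?_
        rw [biUnion_eq_iUnion]
        exact measure_iUnion_le _
    _ = ∑' q : u, a * ν (ball q.1.1 (4 * q.1.2)) := ENNReal.tsum_mul_left.symm
    _ ≤ ∑' q : u, D ^ 2 * ∫⁻ y in ball q.1.1 q.1.2, f y ∂ν :=
        ENNReal.tsum_le_tsum fun q => hone q q.2
    _ = D ^ 2 * ∑' q : u, ∫⁻ y in ball q.1.1 q.1.2, f y ∂ν := ENNReal.tsum_mul_left
    _ = D ^ 2 * ∫⁻ y in ⋃ q : u, ball q.1.1 q.1.2, f y ∂ν := by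
        rw [lintegral_iUnion (fun _ => measurableSet_ball)]
        intro i j hij
        exact hdis i.2 j.2 (fun h => hij (Subtype.ext h))
    _ ≤ _ := by gcongr; exact Measure.restrict_le_self

/-- The layer-cake formula for a power of an extended nonnegative number. -/
lemma rpow_layer {p : ℝ} (hp : 0 < p) (y : ℝ≥0∞) :
    y ^ p = ENNReal.ofReal p * ∫⁻ t in Ioi (0 : ℝ),
      ENNReal.ofReal (t ^ (p - 1)) * (if ENNReal.ofReal t < y then 1 else 0) := by
  have key : ∀ a : ℝ, 0 ≤ a → ENNReal.ofReal p * ∫⁻ t in Ioo (0 : ℝ) a,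
      ENNReal.ofReal (t ^ (p - 1)) = ENNReal.ofReal a ^ p := by
    intro a ha
    have hii : IntervalIntegrable (fun t : ℝ => t ^ (p - 1)) volume 0 a :=
      intervalIntegral.intervalIntegrable_rpow' (by linarith)
    have h1 : IntegrableOn (fun t : ℝ => t ^ (p - 1)) (Ioo 0 a) :=
      ((intervalIntegrable_iff_integrableOn_Ioo_of_le ha).1 hii)
    rw [← ofReal_integral_eq_lintegral_ofReal h1, ← ENNReal.ofReal_mul hp.le,
      ← integral_Ioc_eq_integral_Ioo, ← intervalIntegral.integral_of_le ha,
      integral_rpow (Or.inl (by linarith)), ENNReal.ofReal_rpow_of_nonneg ha hp.le]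
    · congr 1
      rw [sub_add_cancel, Real.zero_rpow hp.ne']
      field_simp
      ring
    · exact (ae_restrict_iff' measurableSet_Ioo).2
        (Eventually.of_forall fun t ht => Real.rpow_nonneg ht.1.le _)
  have hset : ∀ a : ℝ, 0 ≤ a → (∫⁻ t in Ioi (0 : ℝ), ENNReal.ofReal (t ^ (p - 1)) *
      (if ENNReal.ofReal t < ENNReal.ofReal a then 1 else 0)) =
      ∫⁻ t in Ioo (0 : ℝ) a, ENNReal.ofReal (t ^ (p - 1)) := by
    intro a ha
    rw [← lintegral_indicator measurableSet_Ioi, ← lintegral_indicator measurableSet_Ioo]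
    congr 1; ext t
    by_cases ht : 0 < t
    · simp only [indicator, mem_Ioi, ht, if_true, mem_Ioo, true_and]
      by_cases hta : t < a
      · simp [hta, (ENNReal.ofReal_lt_ofReal_iff_of_nonneg ht.le).2 hta]
      · have : ¬ ENNReal.ofReal t < ENNReal.ofReal a := by
          rw [ENNReal.ofReal_lt_ofReal_iff_of_nonneg ht.le]; exact hta
        simp [hta, this]
    · simp [indicator, ht]
  by_cases hy : y = ⊤
  · subst hy
    rw [ENNReal.top_rpow_of_pos hp]
    symm
    rw [eq_top_iff]
    refine le_of_tendsto' (f := fun N : ℕ => ENNReal.ofReal (N : ℝ) ^ p) (x := atTop) ?_ ?_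
    · have := (ENNReal.continuous_rpow_const (y := p)).tendsto ⊤
      rw [ENNReal.top_rpow_of_pos hp] at this
      refine this.comp ?_
      simpa using ENNReal.tendsto_nat_nhds_top
    · intro N
      rw [← key N (by positivity), ← hset N (by positivity)]
      gcongr with t
      split_ifs <;> simp_all
  · rw [← ENNReal.ofReal_toReal hy, hset _ ENNReal.toReal_nonneg, key _ ENNReal.toReal_nonneg]

lemma lintegral_rpow_layer {ν : Measure X} [SFinite ν] {p : ℝ} (hp : 0 < p) {f : X → ℝ≥0∞}
    (hf : Measurable f) :
    ∫⁻ x, f x ^ p ∂ν = ENNReal.ofReal p * ∫⁻ t in Ioi (0 : ℝ),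
      ENNReal.ofReal (t ^ (p - 1)) * ν {x | ENNReal.ofReal t < f x} := by
  have hm : Measurable (fun z : X × ℝ => ENNReal.ofReal (z.2 ^ (p - 1)) *
      (if ENNReal.ofReal z.2 < f z.1 then (1 : ℝ≥0∞) else 0)) := by
    refine Measurable.mul (by fun_prop) ?_
    refine Measurable.ite ?_ measurable_const measurable_const
    exact measurableSet_lt (by fun_prop) (by fun_prop)
  calc ∫⁻ x, f x ^ p ∂ν = ∫⁻ x, ENNReal.ofReal p * (∫⁻ t in Ioi (0 : ℝ),
      ENNReal.ofReal (t ^ (p - 1)) * (if ENNReal.ofReal t < f x then 1 else 0)) ∂ν := by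
        congr 1; ext x; exact rpow_layer hp (f x)
    _ = ENNReal.ofReal p * ∫⁻ x, (∫⁻ t in Ioi (0 : ℝ),
      ENNReal.ofReal (t ^ (p - 1)) * (if ENNReal.ofReal t < f x then 1 else 0)) ∂ν :=
        lintegral_const_mul _ (Measurable.lintegral_prod_right' hm)
    _ = ENNReal.ofReal p * ∫⁻ t in Ioi (0 : ℝ), (∫⁻ x,
      ENNReal.ofReal (t ^ (p - 1)) * (if ENNReal.ofReal t < f x then 1 else 0) ∂ν) := by
        rw [lintegral_lintegral_swap hm.aemeasurable]
    _ = _ := by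
        congr 2; ext t
        have hms : MeasurableSet {x | ENNReal.ofReal t < f x} :=
          measurableSet_lt measurable_const hf
        rw [lintegral_const_mul _ (Measurable.ite hms measurable_const measurable_const)]
        congr 1
        rw [← lintegral_indicator_one hms]
        congr 1; ext x; simp [indicator]

/-- Strong type `(q,q)` of the maximal function of a doubling measure, with a constant that only
depends on `q` and the doubling constant. -/
lemma MF_strong (D : ℝ≥0∞) (hD : D ≠ ⊤) {q : ℝ} (hq : 1 < q) :
    ∃ C : ℝ≥0∞, C ≠ ⊤ ∧ ∀ (ν : Measure X) [SFinite ν], Doubling ν D → ∀ f : X → ℝ≥0∞,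
      Measurable f → ∫⁻ x, MF ν f x ^ q ∂ν ≤ C * ∫⁻ x, f x ^ q ∂ν := by
  refine ⟨ENNReal.ofReal q * (2 * D ^ 2 * ((ENNReal.ofReal (q - 1))⁻¹ * 2 ^ (q - 1))), ?_, ?_⟩
  · have h1 : (ENNReal.ofReal (q - 1))⁻¹ ≠ ⊤ := by simp [hq]
    have h2 : (2 : ℝ≥0∞) ^ (q - 1) ≠ ⊤ :=
      ENNReal.rpow_ne_top_of_nonneg (by linarith) (by norm_num)
    exact ENNReal.mul_ne_top (by simp) (ENNReal.mul_ne_top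
      (ENNReal.mul_ne_top (by simp) (ENNReal.pow_ne_top hD)) (ENNReal.mul_ne_top h1 h2))
  intro ν _ hν f hf
  have hq1 : 0 < q - 1 := by linarith
  have hlevel : ∀ t : ℝ, 0 < t → ENNReal.ofReal (t ^ (q - 1)) * ν {x | ENNReal.ofReal t < MF ν f x}
      ≤ 2 * D ^ 2 * ∫⁻ x, f x * (ENNReal.ofReal (t ^ (q - 1 - 1)) *
        (if ENNReal.ofReal t < 2 * f x then 1 else 0)) ∂ν := by
    intro t ht
    set g : X → ℝ≥0∞ := fun x => f x * (if ENNReal.ofReal t < 2 * f x then 1 else 0) with hg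
    have hfg : ∀ x, f x ≤ g x + ENNReal.ofReal (t / 2) := by
      intro x
      by_cases h : ENNReal.ofReal t < 2 * f x
      · simp [hg, h]
      · simp only [hg, h, if_false, mul_zero, zero_add]
        rw [not_lt] at h
        rw [ENNReal.ofReal_div_of_pos (by norm_num), ENNReal.ofReal_ofNat,
          ENNReal.le_div_iff_mul_le (by simp) (by simp), mul_comm]
        exact h
    have hM : ∀ x, MF ν f x ≤ MF ν g x + ENNReal.ofReal (t / 2) := by
      intro x
      refine MF_le_iff.2 fun c r hx => ?_
      calc (∫⁻ y in ball c r, f y ∂ν) / ν (ball c r)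
          ≤ (∫⁻ y in ball c r, (g y + ENNReal.ofReal (t / 2)) ∂ν) / ν (ball c r) := by
            gcongr with y; exact hfg y
        _ = (∫⁻ y in ball c r, g y ∂ν) / ν (ball c r)
            + ENNReal.ofReal (t / 2) * ν (ball c r) / ν (ball c r) := by
            rw [lintegral_add_right _ measurable_const, ENNReal.add_div, setLIntegral_const]
        _ ≤ _ := by
            gcongr
            · exact le_MF ν g hx
            · rw [mul_div_assoc]
              exact mul_le_of_le_one_right' ENNReal.div_self_le_one
    have hsub : {x | ENNReal.ofReal t < MF ν f x} ⊆ {x | ENNReal.ofReal (t / 2) < MF ν g x} := by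
      intro x hx
      by_contra hc
      have hc' : MF ν g x ≤ ENNReal.ofReal (t / 2) := not_lt.1 hc
      have : MF ν f x ≤ ENNReal.ofReal t := by
        refine (hM x).trans ?_
        refine (add_le_add_left hc' _).trans ?_
        rw [← ENNReal.ofReal_add (by positivity) (by positivity)]
        simp
      exact absurd hx (not_lt.2 this)
    have hw := MF_weak hν g (ENNReal.ofReal (t / 2))
    have e1 : ENNReal.ofReal (t ^ (q - 1)) =
        2 * ENNReal.ofReal (t ^ (q - 1 - 1)) * ENNReal.ofReal (t / 2) := by
      rw [← ENNReal.ofReal_ofNat, ← ENNReal.ofReal_mul (by norm_num),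
        ← ENNReal.ofReal_mul (by positivity)]
      congr 1
      rw [Real.rpow_sub_one ht.ne' (q - 1)]
      field_simp
    calc _ ≤ 2 * ENNReal.ofReal (t ^ (q - 1 - 1)) * (ENNReal.ofReal (t / 2) *
          ν {x | ENNReal.ofReal (t / 2) < MF ν g x}) := by
            rw [e1, mul_assoc]; gcongr
      _ ≤ 2 * ENNReal.ofReal (t ^ (q - 1 - 1)) * (D ^ 2 * ∫⁻ x, g x ∂ν) := by gcongr
      _ = 2 * D ^ 2 * (ENNReal.ofReal (t ^ (q - 1 - 1)) * ∫⁻ x, g x ∂ν) := by ring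
      _ = _ := by
        rw [← lintegral_const_mul' _ _ ENNReal.ofReal_ne_top]
        congr 2; ext x; simp only [hg]; ring
  rw [lintegral_rpow_layer (by linarith) (measurable_MF ν f), mul_assoc]
  gcongr
  have hm : Measurable (fun z : ℝ × X => f z.2 * (ENNReal.ofReal (z.1 ^ (q - 1 - 1)) *
        (if ENNReal.ofReal z.1 < 2 * f z.2 then (1 : ℝ≥0∞) else 0))) := by
    refine Measurable.mul (by fun_prop) (Measurable.mul (by fun_prop) ?_)
    refine Measurable.ite ?_ measurable_const measurable_const
    exact measurableSet_lt (by fun_prop) (by fun_prop)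
  calc ∫⁻ t in Ioi (0 : ℝ), ENNReal.ofReal (t ^ (q - 1)) * ν {x | ENNReal.ofReal t < MF ν f x}
      ≤ ∫⁻ t in Ioi (0 : ℝ), 2 * D ^ 2 * ∫⁻ x, f x * (ENNReal.ofReal (t ^ (q - 1 - 1)) *
        (if ENNReal.ofReal t < 2 * f x then 1 else 0)) ∂ν :=
        setLIntegral_mono' measurableSet_Ioi fun t ht => hlevel t ht
    _ = 2 * D ^ 2 * ∫⁻ t in Ioi (0 : ℝ), ∫⁻ x, f x * (ENNReal.ofReal (t ^ (q - 1 - 1)) *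
        (if ENNReal.ofReal t < 2 * f x then 1 else 0)) ∂ν :=
        lintegral_const_mul _ (Measurable.lintegral_prod_right' hm)
    _ = 2 * D ^ 2 * ∫⁻ x, (∫⁻ t in Ioi (0 : ℝ), f x * (ENNReal.ofReal (t ^ (q - 1 - 1)) *
        (if ENNReal.ofReal t < 2 * f x then 1 else 0))) ∂ν := by
        rw [lintegral_lintegral_swap hm.aemeasurable]
    _ = 2 * D ^ 2 * ∫⁻ x, ((ENNReal.ofReal (q - 1))⁻¹ * 2 ^ (q - 1)) * f x ^ q ∂ν := by
        congr 2; ext x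
        have hmx : Measurable fun t : ℝ => ENNReal.ofReal (t ^ (q - 1 - 1)) *
            (if ENNReal.ofReal t < 2 * f x then (1 : ℝ≥0∞) else 0) := by
          refine Measurable.mul (by fun_prop) ?_
          refine Measurable.ite ?_ measurable_const measurable_const
          exact measurableSet_lt (by fun_prop) (by fun_prop)
        rw [lintegral_const_mul _ hmx]
        have h := rpow_layer hq1 (2 * f x)
        have h0 : ENNReal.ofReal (q - 1) ≠ 0 := by simp [hq]
        have h3 : (∫⁻ t in Ioi (0 : ℝ), ENNReal.ofReal (t ^ (q - 1 - 1)) *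
            (if ENNReal.ofReal t < 2 * f x then (1 : ℝ≥0∞) else 0)) =
            (ENNReal.ofReal (q - 1))⁻¹ * (2 * f x) ^ (q - 1) := by
          rw [h, ← mul_assoc, ENNReal.inv_mul_cancel h0 ENNReal.ofReal_ne_top, one_mul]
        rw [h3, ENNReal.mul_rpow_of_nonneg _ _ hq1.le]
        have h4 : f x ^ q = f x * f x ^ (q - 1) := by
          conv_lhs => rw [show q = 1 + (q - 1) by ring]
          rw [ENNReal.rpow_add_of_nonneg _ _ zero_le_one hq1.le, ENNReal.rpow_one]
        rw [h4]; ring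
    _ = 2 * D ^ 2 * (((ENNReal.ofReal (q - 1))⁻¹ * 2 ^ (q - 1)) * ∫⁻ x, f x ^ q ∂ν) := by
        rw [lintegral_const_mul _ (by fun_prop)]
    _ = _ := by ring

/-- A Whitney-type family for an open set `Ω`: disjoint balls `ball x (r x)`, `x ∈ u`, inside `Ω`,
whose dilates by the factor `4` cover `Ω`, and whose dilates by the factor `11` meet `Ωᶜ`. -/
structure Whitney (Ω : Set X) (u : Set X) (r : X → ℝ) : Prop where
  countable : u.Countable
  pos : ∀ x ∈ u, 0 < r x
  disj : u.PairwiseDisjoint fun x => ball x (r x)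
  cover : Ω = ⋃ x ∈ u, ball x (4 * r x)
  sub : ∀ x ∈ u, ball x (10 * r x) ⊆ Ω
  touch : ∀ x ∈ u, ∃ a, a ∉ Ω ∧ dist x a < 11 * r x

/-- An open set with nonempty complement, in which the radii of balls are bounded, has a Whitney
family: apply the Vitali covering lemma to balls of radius proportional to the distance to the
complement. -/
lemma exists_whitney {Ω : Set X} (hΩ : IsOpen Ω) (hne : Ωᶜ.Nonempty) {R : ℝ}
    (hR : ∀ x s, ball x s ⊆ Ω → s ≤ R) : ∃ u r, Whitney Ω u r := by
  have hpos : ∀ x ∈ Ω, 0 < infDist x Ωᶜ := by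
    intro x hx
    rw [← hΩ.isClosed_compl.notMem_iff_infDist_pos hne]
    exact fun h => h hx
  have hball : ∀ x, ball x (infDist x Ωᶜ) ⊆ Ω := by
    intro x y hy
    by_contra hc
    have := infDist_le_dist_of_mem (x := x) (s := Ωᶜ) hc
    rw [mem_ball, dist_comm] at hy
    linarith
  obtain ⟨u, hu, hd, hc⟩ := Vitali.exists_disjoint_subfamily_covering_enlargement_ball
    Ω (fun x => x) (fun x => infDist x Ωᶜ / 10) (R / 10)
    (fun x hx => by have := hR x _ (hball x); gcongr) 4 (by norm_num)
  have hp : ∀ x ∈ u, 0 < infDist x Ωᶜ / 10 := fun x hx => by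
    have := hpos x (hu hx); positivity
  refine ⟨u, fun x => infDist x Ωᶜ / 10, ?_, hp, hd, ?_, ?_, ?_⟩
  · exact hd.countable_of_isOpen (fun q _ => isOpen_ball) (fun q hq => nonempty_ball.2 (hp q hq))
  · apply Subset.antisymm
    · intro x hx
      obtain ⟨b, hb, hs⟩ := hc x hx
      exact mem_biUnion hb (hs (mem_ball_self (by have := hpos x hx; positivity)))
    · refine iUnion₂_subset fun x hx => (ball_subset_ball ?_).trans (hball x)
      have := hp x hx; linarith
  · intro x hx
    rw [mul_div_cancel₀ _ (by norm_num)]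
    exact hball x
  · intro x hx
    have := hp x hx
    obtain ⟨a, ha, h⟩ := (infDist_lt_iff hne (x := x) (r := 11 * (infDist x Ωᶜ / 10))).1
      (by linarith)
    exact ⟨a, ha, h⟩

end Maximal
end CZ

namespace CZ

open Set Metric

/-! ### Homogeneous measures and tail estimates -/

section Hom

variable {X : Type*} [MetricSpace X] [MeasurableSpace X] [BorelSpace X]
  [SecondCountableTopology X]

/-- `μ` is homogeneous of dimension `Q`: a ball of radius `r` has measure `V * r ^ Q`. -/
structure HomSp (μ : Measure X) (Q : ℕ) (V : ℝ) : Prop where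
  one_le : 1 ≤ Q
  pos : 0 < V
  ball : ∀ (x : X) (r : ℝ), 0 < r → μ (ball x r) = ENNReal.ofReal (V * r ^ Q)

variable {μ : Measure X} {Q : ℕ} {V : ℝ}

lemma HomSp.ball_ne_top (h : HomSp μ Q V) (x : X) (r : ℝ) : μ (Metric.ball x r) ≠ ⊤ := by
  rcases le_or_gt r 0 with hr | hr
  · rw [ball_eq_empty.2 hr]; simp
  · rw [h.ball x r hr]; exact ENNReal.ofReal_ne_top

lemma HomSp.ball_ne_zero (h : HomSp μ Q V) (x : X) {r : ℝ} (hr : 0 < r) :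
    μ (Metric.ball x r) ≠ 0 := by
  rw [h.ball x r hr]
  have := h.pos
  simpa using by positivity

lemma HomSp.ball_mul (h : HomSp μ Q V) (x y : X) {r t : ℝ} (ht : 0 < t) :
    μ (Metric.ball x (t * r)) = ENNReal.ofReal (t ^ Q) * μ (Metric.ball y r) := by
  rcases le_or_gt r 0 with hr | hr
  · rw [ball_eq_empty.2 hr, ball_eq_empty.2 (by nlinarith)]; simp
  · rw [h.ball x _ (by positivity), h.ball y r hr, ← ENNReal.ofReal_mul (by positivity)]
    congr 1; ring

lemma HomSp.doubling (h : HomSp μ Q V) : Doubling μ (2 ^ Q) where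
  fin := by simp
  ball_fin := h.ball_ne_top
  dbl x r := by
    rw [h.ball_mul x x (by norm_num : (0 : ℝ) < 2), ENNReal.ofReal_pow (by norm_num)]
    simp

lemma HomSp.closedBall (h : HomSp μ Q V) (x : X) {r : ℝ} (hr : 0 ≤ r) :
    μ (Metric.closedBall x r) = ENNReal.ofReal (V * r ^ Q) := by
  have hQ := h.one_le
  apply le_antisymm
  · have ht : Tendsto (fun s : ℝ => ENNReal.ofReal (V * s ^ Q)) (𝓝[>] r)
        (𝓝 (ENNReal.ofReal (V * r ^ Q))) :=
      ((ENNReal.continuous_ofReal.comp (by fun_prop : Continuous fun s : ℝ => V * s ^ Q)).tendsto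
        r).mono_left nhdsWithin_le_nhds
    refine ge_of_tendsto ht ?_
    filter_upwards [self_mem_nhdsWithin] with s hs
    rw [← h.ball x s (hr.trans_lt hs)]
    exact measure_mono (closedBall_subset_ball hs)
  · rcases hr.eq_or_lt with rfl | hr
    · rw [zero_pow (by omega)]; simp
    · rw [← h.ball x r hr]; exact measure_mono ball_subset_closedBall

lemma HomSp.measure_singleton (h : HomSp μ Q V) (x : X) : μ {x} = 0 := by
  have := h.closedBall x le_rfl
  have hQ := h.one_le
  rw [zero_pow (by omega)] at this
  simpa using this

lemma HomSp.annulus_le (h : HomSp μ Q V) (x : X) {a b : ℝ} (ha : 0 ≤ a) (hab : a ≤ b) :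
    μ {y | a < dist x y ∧ dist x y ≤ b} ≤ ENNReal.ofReal (V * (b ^ Q - a ^ Q)) := by
  have e : {y | a < dist x y ∧ dist x y ≤ b} = Metric.closedBall x b \ Metric.closedBall x a := by
    ext y; simp [dist_comm, and_comm]
  rw [e, measure_diff (closedBall_subset_closedBall hab) measurableSet_closedBall.nullMeasurableSet
    (by rw [h.closedBall x ha]; simp), h.closedBall x ha, h.closedBall x (ha.trans hab),
    ← ENNReal.ofReal_sub _ (by have := h.pos; positivity)]
  exact (ENNReal.ofReal_le_ofReal (by rw [mul_sub]))

/-- The tail of a kernel decaying like `r / ρ ^ (Q + 1)` is controlled by the maximal function. -/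
lemma HomSp.tail (h : HomSp μ Q V) (f : X → ℝ≥0∞) {x x' : X} {r : ℝ} (hr : 0 < r)
    (hx : dist x x' ≤ r) :
    ∫⁻ y in (Metric.ball x r)ᶜ, f y * ENNReal.ofReal (r / dist x y ^ (Q + 1)) ∂μ
      ≤ ENNReal.ofReal (V * 2 ^ (Q + 1)) * MF μ f x' := by
  have hV := h.pos
  set S : ℕ → Set X := fun j => {y | 2 ^ j * r ≤ dist x y ∧ dist x y < 2 ^ (j + 1) * r} with hS
  have hcov : (Metric.ball x r)ᶜ ⊆ ⋃ j, S j := by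
    intro y hy
    have hy' : r ≤ dist x y := by simpa [dist_comm] using hy
    have h1 : 1 ≤ dist x y / r := by rwa [one_le_div hr]
    obtain ⟨j, hj1, hj2⟩ := exists_nat_pow_near h1 (by norm_num : (1 : ℝ) < 2)
    refine mem_iUnion.2 ⟨j, ?_, ?_⟩
    · rwa [le_div_iff₀ hr] at hj1
    · rwa [div_lt_iff₀ hr] at hj2
  have hSm : ∀ j, MeasurableSet (S j) := fun j =>
    (measurableSet_le (f := fun _ => 2 ^ j * r) (g := fun y => dist x y)
      (by fun_prop) (by fun_prop)).inter
      (measurableSet_lt (f := fun y => dist x y) (g := fun _ => 2 ^ (j + 1) * r)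
        (by fun_prop) (by fun_prop))
  have hone : ∀ j : ℕ, ∫⁻ y in S j, f y * ENNReal.ofReal (r / dist x y ^ (Q + 1)) ∂μ
      ≤ (2⁻¹ : ℝ≥0∞) ^ j * (ENNReal.ofReal (V * 2 ^ Q) * MF μ f x') := by
    intro j
    have h2 : (0 : ℝ) < 2 ^ j * r := by positivity
    calc ∫⁻ y in S j, f y * ENNReal.ofReal (r / dist x y ^ (Q + 1)) ∂μ
        ≤ ∫⁻ y in S j, f y * ENNReal.ofReal (r / (2 ^ j * r) ^ (Q + 1)) ∂μ := by
          refine setLIntegral_mono' (hSm j) fun y hy => ?_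
          gcongr
          exact hy.1
      _ = (∫⁻ y in S j, f y ∂μ) * ENNReal.ofReal (r / (2 ^ j * r) ^ (Q + 1)) :=
          lintegral_mul_const' _ _ ENNReal.ofReal_ne_top
      _ ≤ (∫⁻ y in Metric.ball x (2 ^ (j + 1) * r), f y ∂μ) *
          ENNReal.ofReal (r / (2 ^ j * r) ^ (Q + 1)) := by
          gcongr
          intro y hy
          rw [mem_ball, dist_comm]; exact hy.2
      _ ≤ (MF μ f x' * μ (Metric.ball x (2 ^ (j + 1) * r))) *
          ENNReal.ofReal (r / (2 ^ j * r) ^ (Q + 1)) := by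
          gcongr
          refine setLIntegral_le_MF f ?_ (h.ball_ne_top _ _)
          rw [mem_ball, dist_comm]
          have : (1 : ℝ) < 2 ^ (j + 1) := one_lt_pow₀ (by norm_num) (by omega)
          nlinarith
      _ = _ := by
          have e2 : (2⁻¹ : ℝ≥0∞) ^ j = ENNReal.ofReal ((2⁻¹) ^ j) := by
            rw [ENNReal.ofReal_pow (by norm_num), ENNReal.ofReal_inv_of_pos (by norm_num)]; simp
          rw [h.ball _ _ (by positivity), mul_assoc, ← ENNReal.ofReal_mul (by positivity), e2,
            ← mul_assoc, ← ENNReal.ofReal_mul (by positivity), mul_comm]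
          congr 2
          rw [inv_pow]
          field_simp
          ring
  calc _ ≤ ∫⁻ y in ⋃ j, S j, f y * ENNReal.ofReal (r / dist x y ^ (Q + 1)) ∂μ :=
        lintegral_mono_set hcov
    _ ≤ ∑' j, ∫⁻ y in S j, f y * ENNReal.ofReal (r / dist x y ^ (Q + 1)) ∂μ :=
        lintegral_iUnion_le _ _
    _ ≤ ∑' j : ℕ, (2⁻¹ : ℝ≥0∞) ^ j * (ENNReal.ofReal (V * 2 ^ Q) * MF μ f x') :=
        ENNReal.tsum_le_tsum hone
    _ = 2 * (ENNReal.ofReal (V * 2 ^ Q) * MF μ f x') := by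
        rw [ENNReal.tsum_mul_right, ENNReal.tsum_geometric]
        simp
    _ = _ := by
        have e : V * 2 ^ (Q + 1) = 2 * (V * 2 ^ Q) := by ring
        rw [← mul_assoc, e, ENNReal.ofReal_mul (p := 2) (by norm_num), ENNReal.ofReal_ofNat]

lemma MF_one_le (ν : Measure X) (x : X) : MF ν (fun _ => 1) x ≤ 1 :=
  MF_le_iff.2 fun c r hx => by simp [ENNReal.div_self_le_one]

lemma HomSp.tail_one (h : HomSp μ Q V) (x : X) {r : ℝ} (hr : 0 < r) :
    ∫⁻ y in (Metric.ball x r)ᶜ, ENNReal.ofReal (r / dist x y ^ (Q + 1)) ∂μ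
      ≤ ENNReal.ofReal (V * 2 ^ (Q + 1)) := by
  have := h.tail (fun _ => 1) hr (x := x) (x' := x) (by simp [hr.le])
  simp only [one_mul] at this
  exact this.trans (mul_le_of_le_one_right' (MF_one_le μ x))

end Hom
end CZ

namespace CZ

open Set Metric

/-! ### Muckenhoupt weights -/

section Weights

variable {X : Type*} [MetricSpace X] [MeasurableSpace X] [BorelSpace X]
  [SecondCountableTopology X]

/-- A pair of dual Muckenhoupt weights: `σ = w ^ (1 - q)` almost everywhere, and the `A_p`
condition holds on all balls with constant `C`. -/
structure ApPair (μ : Measure X) (p q : ℝ) (w σ : X → ℝ≥0∞) (C : ℝ≥0∞) : Prop where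
  conj : p.HolderConjugate q
  meas_w : Measurable w
  meas_σ : Measurable σ
  fin : C ≠ ⊤
  prod : ∀ᵐ x ∂μ, w x ^ (1 / p) * σ x ^ (1 / q) = 1
  bound : ∀ x r, (∫⁻ y in ball x r, w y ∂μ) ^ (1 / p) * (∫⁻ y in ball x r, σ y ∂μ) ^ (1 / q)
    ≤ C * μ (ball x r)

variable {μ : Measure X} {Q : ℕ} {V : ℝ} {p q : ℝ} {w σ : X → ℝ≥0∞} {C : ℝ≥0∞}

lemma ApPair.symm (h : ApPair μ p q w σ C) : ApPair μ q p σ w C where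
  conj := h.conj.symm
  meas_w := h.meas_σ
  meas_σ := h.meas_w
  fin := h.fin
  prod := by filter_upwards [h.prod] with x hx; rwa [mul_comm]
  bound x r := by rw [mul_comm]; exact h.bound x r

lemma ApPair.ae_w (h : ApPair μ p q w σ C) : ∀ᵐ x ∂μ, w x ≠ 0 ∧ w x ≠ ⊤ := by
  have hp := h.conj.pos
  filter_upwards [h.prod] with x hx
  constructor
  · intro h0
    rw [h0, ENNReal.zero_rpow_of_pos (by positivity)] at hx; simp at hx
  · intro h0
    rw [h0, ENNReal.top_rpow_of_pos (by positivity)] at hx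
    by_cases hs : σ x ^ (1 / q) = 0
    · rw [hs] at hx; simp at hx
    · rw [ENNReal.top_mul hs] at hx; simp at hx

lemma ApPair.ae_eq (h : ApPair μ p q w σ C) : ∀ᵐ x ∂μ, σ x = w x ^ (1 - q) := by
  have hp := h.conj.pos
  have hq := h.conj.symm.pos
  filter_upwards [h.prod, h.ae_w, h.symm.ae_w] with x hx hw hs
  have h1 : σ x ^ (1 / q) = (w x ^ (1 / p))⁻¹ := by
    rw [mul_comm] at hx
    exact ENNReal.eq_inv_of_mul_eq_one_left hx
  calc σ x = (σ x ^ (1 / q)) ^ q := by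
        rw [← ENNReal.rpow_mul, one_div, inv_mul_cancel₀ hq.ne', ENNReal.rpow_one]
    _ = w x ^ (1 - q) := by
        rw [h1, ← ENNReal.rpow_neg, ← ENNReal.rpow_mul]
        congr 1
        have := h.conj.symm.sub_one_mul_conj
        field_simp
        linarith

/-- Hölder's inequality for the pair of dual weights. -/
lemma ApPair.hoelder (h : ApPair μ p q w σ C) (E : Set X) :
    μ E ≤ (∫⁻ y in E, w y ∂μ) ^ (1 / p) * (∫⁻ y in E, σ y ∂μ) ^ (1 / q) := by
  have hp := h.conj.pos
  have hq := h.conj.symm.pos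
  have hh := ENNReal.lintegral_mul_le_Lp_mul_Lq (μ.restrict E) h.conj
    (f := fun x => w x ^ (1 / p)) (g := fun x => σ x ^ (1 / q))
    (h.meas_w.pow_const _).aemeasurable (h.meas_σ.pow_const _).aemeasurable
  have e1 : ∀ x, (w x ^ (1 / p)) ^ p = w x := fun x => by
    rw [← ENNReal.rpow_mul, one_div, inv_mul_cancel₀ hp.ne', ENNReal.rpow_one]
  have e2 : ∀ x, (σ x ^ (1 / q)) ^ q = σ x := fun x => by
    rw [← ENNReal.rpow_mul, one_div, inv_mul_cancel₀ hq.ne', ENNReal.rpow_one]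
  simp only [e1, e2] at hh
  refine le_trans (le_of_eq ?_) hh
  have : ∫⁻ x in E, 1 ∂μ = ∫⁻ x in E, ((fun x => w x ^ (1 / p)) * fun x => σ x ^ (1 / q)) x ∂μ := by
    refine lintegral_congr_ae (ae_restrict_of_ae ?_)
    filter_upwards [h.prod] with x hx
    simp only [Pi.mul_apply, hx]
  rw [← this]; simp

lemma ApPair.fin_w (h : ApPair μ p q w σ C) (hμ : HomSp μ Q V) (x : X) (r : ℝ) :
    ∫⁻ y in ball x r, w y ∂μ ≠ ⊤ := by
  rcases le_or_gt r 0 with hr | hr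
  · rw [ball_eq_empty.2 hr]; simp
  intro htop
  have hp := h.conj.pos
  have hq := h.conj.symm.pos
  have hb := h.bound x r
  have hh := h.hoelder (ball x r)
  have h0 := hμ.ball_ne_zero x hr
  rw [htop, ENNReal.top_rpow_of_pos (by positivity)] at hb hh
  by_cases hs : (∫⁻ y in ball x r, σ y ∂μ) ^ (1 / q) = 0
  · rw [hs] at hh; simp at hh; exact h0 hh
  · rw [ENNReal.top_mul hs, top_le_iff] at hb
    exact ENNReal.mul_ne_top h.fin (hμ.ball_ne_top x r) hb

lemma ApPair.compare (h : ApPair μ p q w σ C) {E : Set X} {x : X} {r : ℝ} (hE : E ⊆ ball x r) :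
    μ E * (∫⁻ y in ball x r, w y ∂μ) ^ (1 / p)
      ≤ C * μ (ball x r) * (∫⁻ y in E, w y ∂μ) ^ (1 / p) := by
  have hq := h.conj.symm.pos
  calc μ E * (∫⁻ y in ball x r, w y ∂μ) ^ (1 / p)
      ≤ ((∫⁻ y in E, w y ∂μ) ^ (1 / p) * (∫⁻ y in ball x r, σ y ∂μ) ^ (1 / q)) *
        (∫⁻ y in ball x r, w y ∂μ) ^ (1 / p) := by
        gcongr
        refine (h.hoelder E).trans ?_
        gcongr
    _ = (∫⁻ y in E, w y ∂μ) ^ (1 / p) * ((∫⁻ y in ball x r, w y ∂μ) ^ (1 / p) *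
        (∫⁻ y in ball x r, σ y ∂μ) ^ (1 / q)) := by ring
    _ ≤ (∫⁻ y in E, w y ∂μ) ^ (1 / p) * (C * μ (ball x r)) :=
        mul_le_mul_right (h.bound x r) _
    _ = _ := by ring

/-- A subset of a ball of proportional measure has proportional weight. -/
lemma ApPair.compare' (h : ApPair μ p q w σ C) (hμ : HomSp μ Q V) {E : Set X} {x : X} {r : ℝ}
    (hE : E ⊆ ball x r) {a : ℝ≥0∞} (ha : μ (ball x r) ≤ a * μ E) :
    ∫⁻ y in ball x r, w y ∂μ ≤ (C * a) ^ p * ∫⁻ y in E, w y ∂μ := by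
  have hp := h.conj.pos
  rcases le_or_gt r 0 with hr | hr
  · rw [ball_eq_empty.2 hr]; simp
  have h0 := hμ.ball_ne_zero x hr
  have ht := hμ.ball_ne_top x r
  have hE0 : μ E ≠ 0 := by
    intro h'; rw [h'] at ha; simp at ha; exact h0 ha
  have hEt : μ E ≠ ⊤ := ((measure_mono hE).trans_lt ht.lt_top).ne
  have key : (∫⁻ y in ball x r, w y ∂μ) ^ (1 / p) ≤ C * a * (∫⁻ y in E, w y ∂μ) ^ (1 / p) := by
    have := (h.compare hE).trans (mul_le_mul_left (mul_le_mul_right ha C) _)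
    have e : C * (a * μ E) * (∫⁻ y in E, w y ∂μ) ^ (1 / p) =
      μ E * (C * a * (∫⁻ y in E, w y ∂μ) ^ (1 / p)) := by ring
    rw [e] at this
    exact (ENNReal.mul_le_mul_iff_right hE0 hEt).1 this
  have := ENNReal.rpow_le_rpow key hp.le
  rwa [ENNReal.mul_rpow_of_nonneg _ _ hp.le, ← ENNReal.rpow_mul, ← ENNReal.rpow_mul, one_div,
    inv_mul_cancel₀ hp.ne', ENNReal.rpow_one, ENNReal.rpow_one] at this

lemma ApPair.doubling (h : ApPair μ p q w σ C) (hμ : HomSp μ Q V) :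
    Doubling (μ.withDensity w) ((C * 2 ^ Q) ^ p) where
  fin := ENNReal.rpow_ne_top_of_nonneg h.conj.pos.le (ENNReal.mul_ne_top h.fin (by simp))
  ball_fin x r := by
    rw [withDensity_apply _ measurableSet_ball]; exact h.fin_w hμ x r
  dbl x r := by
    rw [withDensity_apply _ measurableSet_ball, withDensity_apply _ measurableSet_ball]
    rcases le_or_gt r 0 with hr | hr
    · rw [ball_eq_empty.2 hr, ball_eq_empty.2 (by linarith)]; simp
    · exact h.compare' hμ (ball_subset_ball (by linarith)) (hμ.doubling.dbl x r)

/-- Muckenhoupt's theorem, with a constant depending only on the `A_p` constant. The proof compares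
`MF μ` with a composition of the maximal functions of the measures `w μ` and `σ μ`. -/
lemma muckenhoupt (Q : ℕ) {p q : ℝ} (hpq : p.HolderConjugate q) {C : ℝ≥0∞} (hC : C ≠ ⊤) :
    ∃ K : ℝ≥0∞, K ≠ ⊤ ∧ ∀ (μ : Measure X) [SFinite μ] (V : ℝ), HomSp μ Q V →
      ∀ w σ : X → ℝ≥0∞, ApPair μ p q w σ C → ∀ f : X → ℝ≥0∞, Measurable f →
      ∫⁻ x, MF μ f x ^ p * w x ∂μ ≤ K * ∫⁻ x, f x ^ p * w x ∂μ := by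
  have hp := hpq.pos
  have hq := hpq.symm.pos
  have hp1 : 0 < p - 1 := hpq.sub_one_pos
  have hpq' : (p - 1) * q = p := hpq.sub_one_mul_conj
  obtain ⟨K1, hK1, H1⟩ := MF_strong (X := X) ((C * 2 ^ Q) ^ p)
    (ENNReal.rpow_ne_top_of_nonneg hp.le (ENNReal.mul_ne_top hC (by simp))) hpq.symm.lt
  obtain ⟨K2, hK2, H2⟩ := MF_strong (X := X) ((C * 2 ^ Q) ^ q)
    (ENNReal.rpow_ne_top_of_nonneg hq.le (ENNReal.mul_ne_top hC (by simp))) hpq.lt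
  refine ⟨(C ^ p) ^ q * (K1 * K2), ENNReal.mul_ne_top (ENNReal.rpow_ne_top_of_nonneg hq.le
    (ENNReal.rpow_ne_top_of_nonneg hp.le hC)) (ENNReal.mul_ne_top hK1 hK2), ?_⟩
  intro μ _ V hμ w σ h f hf
  set ν := μ.withDensity w with hν
  set τ := μ.withDensity σ with hτ
  set g : X → ℝ≥0∞ := MF τ (fun x => f x * (σ x)⁻¹) with hg
  have hgm : Measurable g := measurable_MF _ _
  set k : X → ℝ≥0∞ := fun x => g x ^ (p - 1) * (w x)⁻¹ with hk
  have hkm : Measurable k := (hgm.pow_const _).mul h.meas_w.inv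
  have hdν : Doubling ν ((C * 2 ^ Q) ^ p) := h.doubling hμ
  have hdτ : Doubling τ ((C * 2 ^ Q) ^ q) := h.symm.doubling hμ
  have pt : ∀ x, MF μ f x ^ (p - 1) ≤ C ^ p * MF ν k x := by
    intro x
    have : MF μ f x ≤ (C ^ p * MF ν k x) ^ (1 / (p - 1)) := by
      refine MF_le_iff.2 fun c r hx => ?_
      rw [one_div, ENNReal.le_rpow_inv_iff hp1]
      have hr := pos_of_mem_ball hx
      have hm0 := hμ.ball_ne_zero c hr
      have hmt := hμ.ball_ne_top c r
      set B := ball c r with hB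
      have hBm : MeasurableSet B := measurableSet_ball
      set A := (∫⁻ y in B, f y * (σ y)⁻¹ ∂τ) / τ B with hA
      have hAg : ∀ y ∈ B, A ≤ g y := fun y hy => le_MF _ _ hy
      have i1 : ∫⁻ y in B, f y ∂μ = ∫⁻ y in B, f y * (σ y)⁻¹ ∂τ := by
        rw [hτ, restrict_withDensity hBm, lintegral_withDensity_eq_lintegral_mul _ h.meas_σ
          (g := fun y => f y * (σ y)⁻¹) (hf.mul h.meas_σ.inv)]
        refine lintegral_congr_ae (ae_restrict_of_ae ?_)
        filter_upwards [h.symm.ae_w] with y hy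
        simp only [Pi.mul_apply]
        rw [mul_left_comm, ENNReal.mul_inv_cancel hy.1 hy.2, mul_one]
      have hτ0 : τ B ≠ 0 := by
        intro h0
        have h1 := h.hoelder B
        rw [hτ, withDensity_apply _ hBm] at h0
        rw [h0, ENNReal.zero_rpow_of_pos (by positivity)] at h1
        simp at h1; exact hm0 h1
      have hτt : τ B ≠ ⊤ := hdτ.ball_fin c r
      have i2 : ∫⁻ y in B, f y ∂μ = A * τ B := by
        rw [i1, hA, ENNReal.div_mul_cancel hτ0 hτt]
      have i3 : A ^ (p - 1) * μ B ≤ MF ν k x * ν B := by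
        refine le_trans ?_ (setLIntegral_le_MF k hx (hdν.ball_fin c r))
        rw [hν, restrict_withDensity hBm, lintegral_withDensity_eq_lintegral_mul _ h.meas_w hkm,
          ← setLIntegral_const]
        refine lintegral_mono_ae ?_
        filter_upwards [ae_restrict_mem hBm, ae_restrict_of_ae h.ae_w] with y hy hw
        simp only [Pi.mul_apply, hk]
        rw [mul_left_comm, ENNReal.mul_inv_cancel hw.1 hw.2, mul_one]
        exact ENNReal.rpow_le_rpow (hAg y hy) hp1.le
      have i4 : τ B ^ (p - 1) * ν B ≤ C ^ p * μ B ^ p := by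
        have := ENNReal.rpow_le_rpow (h.bound c r) hp.le
        rw [ENNReal.mul_rpow_of_nonneg _ _ hp.le, ENNReal.mul_rpow_of_nonneg _ _ hp.le,
          ← ENNReal.rpow_mul, ← ENNReal.rpow_mul, one_div_mul_cancel hp.ne', ENNReal.rpow_one,
          ← withDensity_apply _ hBm, ← withDensity_apply _ hBm] at this
        have e : 1 / q * p = p - 1 := by
          field_simp; linarith
        rwa [e, mul_comm] at this
      rw [i2, ENNReal.div_rpow_of_nonneg _ _ hp1.le, ENNReal.mul_rpow_of_nonneg _ _ hp1.le]
      have hmp0 : μ B ^ (p - 1) ≠ 0 := by simp [hm0, hmt]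
      have hmpt : μ B ^ (p - 1) ≠ ⊤ := ENNReal.rpow_ne_top_of_nonneg hp1.le hmt
      rw [ENNReal.div_le_iff hmp0 hmpt, ← ENNReal.mul_le_mul_iff_left hm0 hmt]
      have e5 : μ B ^ (p - 1) * μ B = μ B ^ p := by
        conv_lhs => rw [← ENNReal.rpow_one (μ B), ← ENNReal.rpow_mul, one_mul]
        rw [← ENNReal.rpow_add _ _ hm0 hmt]; congr 1; ring
      calc A ^ (p - 1) * τ B ^ (p - 1) * μ B = (A ^ (p - 1) * μ B) * τ B ^ (p - 1) := by ring
        _ ≤ (MF ν k x * ν B) * τ B ^ (p - 1) := by gcongr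
        _ = MF ν k x * (τ B ^ (p - 1) * ν B) := by ring
        _ ≤ MF ν k x * (C ^ p * μ B ^ p) := by gcongr
        _ = _ := by rw [← e5]; ring
    have := ENNReal.rpow_le_rpow this hp1.le
    rwa [← ENNReal.rpow_mul, one_div_mul_cancel hp1.ne', ENNReal.rpow_one] at this
  calc ∫⁻ x, MF μ f x ^ p * w x ∂μ = ∫⁻ x, MF μ f x ^ p ∂ν := by
        rw [hν, lintegral_withDensity_eq_lintegral_mul _ h.meas_w
          ((measurable_MF μ f).pow_const p)]
        congr 1; ext x; simp [mul_comm]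
    _ ≤ ∫⁻ x, (C ^ p) ^ q * MF ν k x ^ q ∂ν := by
        refine lintegral_mono fun x => ?_
        rw [← ENNReal.mul_rpow_of_nonneg _ _ hq.le, ← hpq', ENNReal.rpow_mul]
        rw [hpq']
        exact ENNReal.rpow_le_rpow (pt x) hq.le
    _ = (C ^ p) ^ q * ∫⁻ x, MF ν k x ^ q ∂ν :=
        lintegral_const_mul _ ((measurable_MF ν k).pow_const q)
    _ ≤ (C ^ p) ^ q * (K1 * ∫⁻ x, k x ^ q ∂ν) := by gcongr; exact H1 ν hdν k hkm
    _ = (C ^ p) ^ q * (K1 * ∫⁻ x, g x ^ p ∂τ) := by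
        congr 2
        rw [hν, hτ, lintegral_withDensity_eq_lintegral_mul _ h.meas_w (hkm.pow_const q),
          lintegral_withDensity_eq_lintegral_mul _ h.meas_σ (hgm.pow_const p)]
        refine lintegral_congr_ae ?_
        filter_upwards [h.ae_w, h.ae_eq] with y hw he
        simp only [Pi.mul_apply, hk]
        rw [he, ENNReal.mul_rpow_of_nonneg _ _ hq.le, ← ENNReal.rpow_mul, hpq',
          ENNReal.rpow_sub _ _ hw.1 hw.2, ENNReal.rpow_one, ENNReal.inv_rpow, div_eq_mul_inv]
        ring
    _ ≤ (C ^ p) ^ q * (K1 * (K2 * ∫⁻ x, (f x * (σ x)⁻¹) ^ p ∂τ)) := by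
        gcongr; exact H2 τ hdτ _ (hf.mul h.meas_σ.inv)
    _ = (C ^ p) ^ q * (K1 * (K2 * ∫⁻ x, f x ^ p * w x ∂μ)) := by
        congr 3
        rw [hτ, lintegral_withDensity_eq_lintegral_mul _ h.meas_σ
          (g := fun x => (f x * (σ x)⁻¹) ^ p) ((hf.mul h.meas_σ.inv).pow_const p)]
        refine lintegral_congr_ae ?_
        filter_upwards [h.symm.ae_w, h.symm.ae_eq] with y hw he
        simp only [Pi.mul_apply]
        rw [he, ENNReal.mul_rpow_of_nonneg _ _ hp.le,
          ENNReal.rpow_sub _ _ hw.1 hw.2, ENNReal.rpow_one, ENNReal.inv_rpow, div_eq_mul_inv]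
        ring
    _ = _ := by ring

end Weights
end CZ

namespace CZ

open Set Metric

/-! ### Almost orthogonality -/

section CotlarStein

open ContinuousLinearMap

variable {E : Type*} [NormedAddCommGroup E] [InnerProductSpace ℝ E] [CompleteSpace E]

lemma le_sqrt_mul_sqrt {x a b : ℝ} (h0 : 0 ≤ x) (ha : x ≤ a) (hb : x ≤ b) :
    x ≤ √a * √b := by
  rw [← Real.sqrt_mul (h0.trans ha)]
  exact Real.le_sqrt_of_sq_le (by nlinarith)

/-- The words of length `2 (m + 1)` in the expansion of `(S† S) ^ (m + 1)`: each word `R` begins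
with the factor `(T f)†`, and its norm is estimated by pairing the factors in the two possible ways,
which gives the two bounds `b₁` and `b₂`. -/
lemma cotlar_words {N : ℕ} (T : Fin N → E →L[ℝ] E) (γ : Fin N → Fin N → ℝ) (Γ G : ℝ)
    (hγ : ∀ i j, 0 ≤ γ i j) (hG : ∀ i, ‖T i‖ ≤ G) (hG0 : 0 ≤ G)
    (h1 : ∀ i j, ‖adjoint (T i) ∘L T j‖ ≤ γ i j ^ 2)
    (h2 : ∀ i j, ‖T i ∘L adjoint (T j)‖ ≤ γ i j ^ 2)
    (hΓ : ∀ i, ∑ j, γ i j ≤ Γ) (hΓ0 : 0 ≤ Γ) (m : ℕ) :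
    ∃ (J : Type) (_ : Fintype J) (f : J → Fin N) (R R' : J → E →L[ℝ] E) (b₁ b₂ : J → ℝ),
      (∀ α, 0 ≤ b₁ α) ∧ (∀ α, 0 ≤ b₂ α) ∧
      (∀ α, R α = adjoint (T (f α)) ∘L R' α) ∧ (∀ α, ‖R α‖ ≤ b₁ α) ∧ (∀ α, ‖R' α‖ ≤ b₂ α) ∧
      (adjoint (∑ i, T i) ∘L (∑ i, T i)) ^ (m + 1) = ∑ α, R α ∧
      ∀ i, ∑ α, (if f α = i then √(b₁ α) * √(b₂ α) else 0) ≤ Γ ^ (2 * m + 1) * √G := by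
  have hS : adjoint (∑ i, T i) ∘L (∑ i, T i)
      = ∑ q : Fin N × Fin N, adjoint (T q.1) ∘L T q.2 := by
    rw [Fintype.sum_prod_type, Finset.sum_comm]
    ext x
    simp [map_sum]
  induction m with
  | zero =>
    refine ⟨Fin N × Fin N, inferInstance, fun q => q.1, fun q => adjoint (T q.1) ∘L T q.2,
      fun q => T q.2, fun q => γ q.1 q.2 ^ 2, fun q => G, fun q => by positivity, fun q => hG0,
      fun q => rfl, fun q => h1 _ _, fun q => hG _, ?_, ?_⟩
    · rw [zero_add, pow_one, hS]
    · intro i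
      rw [Fintype.sum_prod_type, Finset.sum_comm]
      simp only [Finset.sum_ite_eq', Finset.mem_univ, if_true]
      rw [← Finset.sum_mul]
      simp only [Real.sqrt_sq (hγ _ _)]
      simpa using mul_le_mul_of_nonneg_right (hΓ i) (Real.sqrt_nonneg _)
  | succ m ih =>
    obtain ⟨J, hJ, f, R, R', b₁, b₂, p1, p2, hR, hb1, hb2, hsum, hi⟩ := ih
    refine ⟨Fin N × Fin N × J, inferInstance, fun q => q.1,
      fun q => (adjoint (T q.1) ∘L T q.2.1) ∘L R q.2.2,
      fun q => (T q.2.1 ∘L adjoint (T (f q.2.2))) ∘L R' q.2.2,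
      fun q => γ q.1 q.2.1 ^ 2 * b₁ q.2.2, fun q => γ q.2.1 (f q.2.2) ^ 2 * b₂ q.2.2,
      fun q => mul_nonneg (sq_nonneg _) (p1 _), fun q => mul_nonneg (sq_nonneg _) (p2 _),
      fun q => ?_, fun q => ?_, fun q => ?_, ?_, ?_⟩
    · ext x; simp [hR]
    · exact (opNorm_comp_le _ _).trans (mul_le_mul (h1 _ _) (hb1 _) (norm_nonneg _) (sq_nonneg _))
    · exact (opNorm_comp_le _ _).trans (mul_le_mul (h2 _ _) (hb2 _) (norm_nonneg _) (sq_nonneg _))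
    · rw [pow_succ', hsum, hS]
      simp only [Fintype.sum_prod_type]
      ext x
      simp [map_sum]
      rw [Finset.sum_comm]
      refine Finset.sum_congr rfl fun i _ => ?_
      rw [Finset.sum_comm]
    · intro i
      have e : ∀ j : Fin N, ∀ α : J, √(γ i j ^ 2 * b₁ α) * √(γ j (f α) ^ 2 * b₂ α)
          = γ i j * (γ j (f α) * (√(b₁ α) * √(b₂ α))) := by
        intro j α
        rw [Real.sqrt_mul (sq_nonneg _), Real.sqrt_mul (sq_nonneg _), Real.sqrt_sq (hγ _ _),
          Real.sqrt_sq (hγ _ _)]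
        ring
      have e2 : ∀ j : Fin N, ∑ α, γ j (f α) * (√(b₁ α) * √(b₂ α))
          = ∑ l, γ j l * ∑ α, (if f α = l then √(b₁ α) * √(b₂ α) else 0) := by
        intro j
        simp only [Finset.mul_sum]
        rw [Finset.sum_comm]
        refine Finset.sum_congr rfl fun α _ => ?_
        simp
      rw [Fintype.sum_prod_type, Finset.sum_eq_single i (fun a _ ha => by simp [ha]) (by simp)]
      simp only [if_true]
      rw [Fintype.sum_prod_type]
      simp only [e, ← Finset.mul_sum, e2]
      have hP : 0 ≤ Γ ^ (2 * m + 1) * √G := by positivity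
      calc ∑ j, γ i j * ∑ l, γ j l * ∑ α, (if f α = l then √(b₁ α) * √(b₂ α) else 0)
          ≤ ∑ j, γ i j * ∑ l, γ j l * (Γ ^ (2 * m + 1) * √G) := by
            gcongr with j _ l _
            · exact hγ _ _
            · exact hγ _ _
            · exact hi l
        _ = ∑ j, γ i j * ((∑ l, γ j l) * (Γ ^ (2 * m + 1) * √G)) := by
            simp only [Finset.sum_mul]
        _ ≤ ∑ j, γ i j * (Γ * (Γ ^ (2 * m + 1) * √G)) := by
            gcongr with j _
            · exact hγ _ _
            · exact hΓ j
        _ = (∑ j, γ i j) * (Γ * (Γ ^ (2 * m + 1) * √G)) := by rw [Finset.sum_mul]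
        _ ≤ Γ * (Γ * (Γ ^ (2 * m + 1) * √G)) := by gcongr; exact hΓ i
        _ = _ := by ring

/-- The Cotlar–Stein almost orthogonality lemma. -/
lemma cotlar_stein {N : ℕ} (T : Fin N → E →L[ℝ] E) (γ : Fin N → Fin N → ℝ) (Γ : ℝ)
    (hγ : ∀ i j, 0 ≤ γ i j)
    (h1 : ∀ i j, ‖adjoint (T i) ∘L T j‖ ≤ γ i j ^ 2)
    (h2 : ∀ i j, ‖T i ∘L adjoint (T j)‖ ≤ γ i j ^ 2)
    (hΓ : ∀ i, ∑ j, γ i j ≤ Γ) (hΓ0 : 0 < Γ) : ‖∑ i, T i‖ ≤ Γ := by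
  set S := ∑ i, T i with hS
  obtain ⟨G, hG0, hG⟩ : ∃ G, 0 ≤ G ∧ ∀ i, ‖T i‖ ≤ G :=
    ⟨∑ i, ‖T i‖, by positivity, fun i => Finset.single_le_sum (f := fun i => ‖T i‖)
      (fun _ _ => norm_nonneg _) (Finset.mem_univ i)⟩
  have key : ∀ m : ℕ, ‖(adjoint S ∘L S) ^ (m + 1)‖ ≤ N * G * Γ ^ (2 * m + 1) := by
    intro m
    obtain ⟨J, hJ, f, R, R', b₁, b₂, p1, p2, hR, hb1, hb2, hsum, hi⟩ :=
      cotlar_words T γ Γ G hγ hG hG0 h1 h2 hΓ hΓ0.le m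
    rw [hsum]
    have hRn : ∀ α, ‖R α‖ ≤ √G * (√(b₁ α) * √(b₂ α)) := by
      intro α
      have hx : ‖R α‖ ≤ G * b₂ α := by
        rw [hR]
        refine (opNorm_comp_le _ _).trans ?_
        refine mul_le_mul ?_ (hb2 _) (norm_nonneg _) hG0
        rw [LinearIsometryEquiv.norm_map]; exact hG _
      have := le_sqrt_mul_sqrt (norm_nonneg _) (hb1 α) hx
      rw [Real.sqrt_mul hG0] at this
      linarith
    calc ‖∑ α, R α‖ ≤ ∑ α, √G * (√(b₁ α) * √(b₂ α)) := norm_sum_le_of_le _ fun α _ => hRn α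
      _ = √G * ∑ i, ∑ α, (if f α = i then √(b₁ α) * √(b₂ α) else 0) := by
          rw [← Finset.mul_sum, Finset.sum_comm]
          congr 1
          refine Finset.sum_congr rfl fun α _ => ?_
          simp
      _ ≤ √G * ∑ i : Fin N, Γ ^ (2 * m + 1) * √G := by
          gcongr with i; exact hi i
      _ = N * (√G * √G) * Γ ^ (2 * m + 1) := by
          simp; ring
      _ = _ := by rw [Real.mul_self_sqrt hG0]

  have hn : ∀ k : ℕ, ‖S‖ ^ (2 * 2 ^ k) ≤ N * G / Γ * Γ ^ (2 * 2 ^ k) := by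
    intro k
    have e1 : ‖(adjoint S ∘L S) ^ 2 ^ k‖ = ‖S‖ ^ (2 * 2 ^ k) := by
      have := congrArg NNReal.toReal (IsSelfAdjoint.nnnorm_pow_two_pow
        (E := E →L[ℝ] E) (x := adjoint S ∘L S) (IsSelfAdjoint.star_mul_self S) k)
      rw [coe_nnnorm, NNReal.coe_pow, coe_nnnorm] at this
      change ‖(adjoint S ∘L S) ^ 2 ^ k‖ = ‖adjoint S ∘L S‖ ^ 2 ^ k at this
      rw [this, norm_adjoint_comp_self, ← sq, ← pow_mul]
    have hk : 2 ^ k = (2 ^ k - 1) + 1 := by have := Nat.one_le_two_pow (n := k); omega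
    have h3 := key (2 ^ k - 1)
    rw [← hk, e1] at h3
    refine h3.trans ?_
    have : 2 * 2 ^ k = (2 * (2 ^ k - 1) + 1) + 1 := by omega
    rw [this, pow_succ Γ]
    rw [div_mul_eq_mul_div, le_div_iff₀ hΓ0]
    ring_nf
    rfl
  by_contra hc
  rw [not_le] at hc
  have hr : 1 < ‖S‖ / Γ := by rwa [one_lt_div hΓ0]
  obtain ⟨k, hk⟩ := pow_unbounded_of_one_lt (N * G / Γ) hr
  have h4 : (‖S‖ / Γ) ^ (2 * 2 ^ k) ≤ N * G / Γ := by
    rw [div_pow, div_le_iff₀ (by positivity)]; exact hn k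
  have h5 : (‖S‖ / Γ) ^ k ≤ (‖S‖ / Γ) ^ (2 * 2 ^ k) :=
    pow_le_pow_right₀ hr.le (by have := Nat.lt_two_pow_self (n := k); omega)
  linarith

end CotlarStein

/-! ### Integral operators on `L²` -/

section Schur

variable {X : Type*} [MeasurableSpace X] {μ : Measure X} [SFinite μ]

/-- Schur's test. -/
lemma schur {κ : X → X → ℝ≥0∞} (hκ : Measurable (Function.uncurry κ)) {a b : ℝ≥0∞}
    (h1 : ∀ x, ∫⁻ y, κ x y ∂μ ≤ a) (h2 : ∀ y, ∫⁻ x, κ x y ∂μ ≤ b)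
    {f : X → ℝ≥0∞} (hf : AEMeasurable f μ) :
    ∫⁻ x, (∫⁻ y, κ x y * f y ∂μ) ^ 2 ∂μ ≤ a * b * ∫⁻ y, f y ^ 2 ∂μ := by
  wlog hfm : Measurable f generalizing f
  · have := this hf.measurable_mk.aemeasurable hf.measurable_mk
    have e1 : ∫⁻ y, f y ^ 2 ∂μ = ∫⁻ y, hf.mk f y ^ 2 ∂μ := lintegral_congr_ae (by
      filter_upwards [hf.ae_eq_mk] with y hy; rw [hy])
    have e2 : ∀ x, ∫⁻ y, κ x y * f y ∂μ = ∫⁻ y, κ x y * hf.mk f y ∂μ := fun x =>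
      lintegral_congr_ae (by filter_upwards [hf.ae_eq_mk] with y hy; rw [hy])
    simpa only [e1, e2] using this
  have hκx : ∀ x, Measurable (κ x) := fun x => hκ.comp measurable_prodMk_left
  have hκy : ∀ y, Measurable (fun x => κ x y) := fun y => hκ.comp measurable_prodMk_right
  have cs : ∀ x, (∫⁻ y, κ x y * f y ∂μ) ^ 2 ≤ a * ∫⁻ y, κ x y * f y ^ 2 ∂μ := by
    intro x
    have hh := ENNReal.lintegral_mul_le_Lp_mul_Lq μ (p := 2) (q := 2)
      Real.HolderConjugate.two_two
      (f := fun y => κ x y ^ (1 / 2 : ℝ)) (g := fun y => κ x y ^ (1 / 2 : ℝ) * f y)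
      ((hκx x).pow_const _).aemeasurable (((hκx x).pow_const _).mul hfm).aemeasurable
    have s1 : ∀ y, (κ x y ^ (1 / 2 : ℝ)) * (κ x y ^ (1 / 2 : ℝ)) = κ x y := fun y => by
      rw [← ENNReal.rpow_add_of_nonneg _ _ (by norm_num) (by norm_num)]; norm_num
    have e1 : ∀ y, (κ x y ^ (1 / 2 : ℝ)) ^ (2 : ℝ) = κ x y := fun y => by
      rw [← ENNReal.rpow_mul]; norm_num
    have e2 : ∀ y, (κ x y ^ (1 / 2 : ℝ) * f y) ^ (2 : ℝ) = κ x y * f y ^ 2 := fun y => by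
      rw [ENNReal.mul_rpow_of_nonneg _ _ (by norm_num), e1]; simp
    simp only [Pi.mul_apply, ← mul_assoc, s1, e1, e2] at hh
    calc (∫⁻ y, κ x y * f y ∂μ) ^ 2 ≤ ((∫⁻ y, κ x y ∂μ) ^ (1 / 2 : ℝ) *
          (∫⁻ y, κ x y * f y ^ 2 ∂μ) ^ (1 / 2 : ℝ)) ^ 2 := by gcongr
      _ = (∫⁻ y, κ x y ∂μ) * (∫⁻ y, κ x y * f y ^ 2 ∂μ) := by
          rw [mul_pow, ← ENNReal.rpow_natCast, ← ENNReal.rpow_mul, ← ENNReal.rpow_natCast,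
            ← ENNReal.rpow_mul]
          norm_num
      _ ≤ _ := by gcongr; exact h1 x
  have hm : Measurable (Function.uncurry fun x y => κ x y * f y ^ 2) :=
    hκ.mul ((hfm.comp measurable_snd).pow_const 2)
  calc ∫⁻ x, (∫⁻ y, κ x y * f y ∂μ) ^ 2 ∂μ ≤ ∫⁻ x, a * (∫⁻ y, κ x y * f y ^ 2 ∂μ) ∂μ :=
        lintegral_mono cs
    _ = a * ∫⁻ x, (∫⁻ y, κ x y * f y ^ 2 ∂μ) ∂μ :=
        lintegral_const_mul _ (Measurable.lintegral_prod_right' hm)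
    _ = a * ∫⁻ y, (∫⁻ x, κ x y * f y ^ 2 ∂μ) ∂μ := by
        rw [lintegral_lintegral_swap hm.aemeasurable]
    _ = a * ∫⁻ y, (∫⁻ x, κ x y ∂μ) * f y ^ 2 ∂μ := by
        congr 2; ext y; rw [lintegral_mul_const _ (hκy y)]
    _ ≤ a * ∫⁻ y, b * f y ^ 2 ∂μ := by gcongr with y; exact h2 y
    _ = _ := by rw [lintegral_const_mul _ (hfm.pow_const 2), mul_assoc]

end Schur
end CZ

namespace CZ

open Set Metric

section SchurOp

open ContinuousLinearMap

variable {X : Type*} [MeasurableSpace X] {μ : Measure X} [SFinite μ]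

lemma eLpNorm_two_sq (f : X → ℝ) : eLpNorm f 2 μ ^ 2 = ∫⁻ x, ‖f x‖ₑ ^ 2 ∂μ := by
  have := eLpNorm_nnreal_pow_eq_lintegral (f := f) (μ := μ) (p := 2) (by norm_num)
  simpa using this

lemma eLpNorm_two_le {f g : X → ℝ} {a : ℝ≥0∞}
    (h : ∫⁻ x, ‖g x‖ₑ ^ 2 ∂μ ≤ a ^ 2 * ∫⁻ x, ‖f x‖ₑ ^ 2 ∂μ) :
    eLpNorm g 2 μ ≤ a * eLpNorm f 2 μ := by
  rw [← eLpNorm_two_sq, ← eLpNorm_two_sq, ← mul_pow] at h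
  exact (ENNReal.pow_le_pow_left_iff (by norm_num)).1 h

/-- The integral kernel `κ` satisfies the hypotheses of Schur's test with constant `a`. -/
structure SchurK (μ : Measure X) (κ : X → X → ℝ) (a : ℝ) : Prop where
  meas : Measurable (Function.uncurry κ)
  nonneg : 0 ≤ a
  left : ∀ x, ∫⁻ y, ‖κ x y‖ₑ ∂μ ≤ ENNReal.ofReal a
  right : ∀ y, ∫⁻ x, ‖κ x y‖ₑ ∂μ ≤ ENNReal.ofReal a

variable {κ : X → X → ℝ} {a : ℝ}

lemma SchurK.symm (h : SchurK μ κ a) : SchurK μ (fun x y => κ y x) a where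
  meas := h.meas.comp measurable_swap
  nonneg := h.nonneg
  left := h.right
  right := h.left

lemma SchurK.bound (h : SchurK μ κ a) {f : X → ℝ} (hf : AEStronglyMeasurable f μ) :
    ∫⁻ x, (∫⁻ y, ‖κ x y‖ₑ * ‖f y‖ₑ ∂μ) ^ 2 ∂μ ≤ ENNReal.ofReal a ^ 2 * ∫⁻ y, ‖f y‖ₑ ^ 2 ∂μ := by
  rw [sq (ENNReal.ofReal a)]
  exact schur (κ := fun x y => ‖κ x y‖ₑ) h.meas.enorm h.left h.right hf.enorm

lemma SchurK.ae_fin (h : SchurK μ κ a) {f : X → ℝ} (hf : MemLp f 2 μ) :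
    ∀ᵐ x ∂μ, ∫⁻ y, ‖κ x y‖ₑ * ‖f y‖ₑ ∂μ < ⊤ := by
  have h1 := h.bound hf.1
  have h2 : ENNReal.ofReal a ^ 2 * ∫⁻ y, ‖f y‖ₑ ^ 2 ∂μ < ⊤ := by
    rw [← eLpNorm_two_sq]
    exact ENNReal.mul_lt_top (by simp) (ENNReal.pow_lt_top hf.2)
  have hm : AEMeasurable (fun x => (∫⁻ y, ‖κ x y‖ₑ * ‖f y‖ₑ ∂μ) ^ 2) μ := by
    refine AEMeasurable.pow_const ?_ 2
    have : AEMeasurable (fun z : X × X => ‖κ z.1 z.2‖ₑ * ‖f z.2‖ₑ) (μ.prod μ) :=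
      h.meas.enorm.aemeasurable.mul hf.1.enorm.comp_snd
    exact this.lintegral_prod_right'
  filter_upwards [ae_lt_top' hm (h1.trans_lt h2).ne] with x hx
  by_contra hc
  rw [not_lt, top_le_iff] at hc
  rw [hc] at hx; simp at hx

lemma SchurK.ae_int (h : SchurK μ κ a) {f : X → ℝ} (hf : MemLp f 2 μ) :
    ∀ᵐ x ∂μ, Integrable (fun y => κ x y * f y) μ := by
  filter_upwards [h.ae_fin hf] with x hx
  refine ⟨(h.meas.comp measurable_prodMk_left).aestronglyMeasurable.mul hf.1, ?_⟩
  simpa [HasFiniteIntegral, enorm_mul] using hx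

lemma SchurK.enorm_le (h : SchurK μ κ a) {f : X → ℝ} (x : X) :
    ‖∫ y, κ x y * f y ∂μ‖ₑ ≤ ∫⁻ y, ‖κ x y‖ₑ * ‖f y‖ₑ ∂μ := by
  refine (enorm_integral_le_lintegral_enorm _).trans (le_of_eq ?_)
  simp [enorm_mul]

lemma SchurK.memLp (h : SchurK μ κ a) {f : X → ℝ} (hf : MemLp f 2 μ) :
    MemLp (fun x => ∫ y, κ x y * f y ∂μ) 2 μ ∧
    eLpNorm (fun x => ∫ y, κ x y * f y ∂μ) 2 μ ≤ ENNReal.ofReal a * eLpNorm f 2 μ := by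
  have hm : AEStronglyMeasurable (fun x => ∫ y, κ x y * f y ∂μ) μ := by
    have : AEStronglyMeasurable (fun z : X × X => κ z.1 z.2 * f z.2) (μ.prod μ) :=
      h.meas.aestronglyMeasurable.mul hf.1.comp_snd
    exact this.integral_prod_right'
  have hb : eLpNorm (fun x => ∫ y, κ x y * f y ∂μ) 2 μ ≤ ENNReal.ofReal a * eLpNorm f 2 μ := by
    refine eLpNorm_two_le (le_trans ?_ (h.bound hf.1))
    gcongr with x
    exact h.enorm_le x
  exact ⟨⟨hm, hb.trans_lt (ENNReal.mul_lt_top (by simp) hf.2)⟩, hb⟩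

/-- The operator on `L²` with a kernel satisfying Schur's test. -/
lemma SchurK.exists_op (h : SchurK μ κ a) : ∃ T : Lp ℝ 2 μ →L[ℝ] Lp ℝ 2 μ, ‖T‖ ≤ a ∧
    ∀ f : Lp ℝ 2 μ, T f =ᵐ[μ] fun x => ∫ y, κ x y * f y ∂μ := by
  let L : Lp ℝ 2 μ →ₗ[ℝ] Lp ℝ 2 μ :=
    { toFun := fun f => (h.memLp (Lp.memLp f)).1.toLp _
      map_add' := by
        intro f g
        rw [← MemLp.toLp_add, MemLp.toLp_eq_toLp_iff]
        filter_upwards [h.ae_int (Lp.memLp f), h.ae_int (Lp.memLp g)] with x hf hg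
        rw [Pi.add_apply, ← integral_add hf hg]
        refine integral_congr_ae ?_
        filter_upwards [Lp.coeFn_add f g] with y hy
        rw [hy, Pi.add_apply, mul_add]
      map_smul' := by
        intro c f
        rw [RingHom.id_apply, ← MemLp.toLp_const_smul, MemLp.toLp_eq_toLp_iff]
        refine Eventually.of_forall fun x => ?_
        rw [Pi.smul_apply, smul_eq_mul, ← integral_const_mul]
        refine integral_congr_ae ?_
        filter_upwards [Lp.coeFn_smul c f] with y hy
        rw [hy, Pi.smul_apply, smul_eq_mul]; ring }
  have hL : ∀ f, ‖L f‖ ≤ a * ‖f‖ := by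
    intro f
    have h2 := (h.memLp (Lp.memLp f)).2
    change ‖(h.memLp (Lp.memLp f)).1.toLp _‖ ≤ _
    rw [Lp.norm_toLp, Lp.norm_def, ← ENNReal.toReal_ofReal h.nonneg, ← ENNReal.toReal_mul]
    exact ENNReal.toReal_mono (ENNReal.mul_ne_top (by simp) (Lp.memLp f).2.ne) h2
  exact ⟨L.mkContinuous a hL, L.mkContinuous_norm_le h.nonneg hL, fun f =>
    MemLp.coeFn_toLp (h.memLp (Lp.memLp f)).1⟩

lemma SchurK.prod_int (h : SchurK μ κ a) {f g : X → ℝ} (hf : MemLp f 2 μ) (hg : MemLp g 2 μ) :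
    Integrable (fun z : X × X => κ z.1 z.2 * f z.2 * g z.1) (μ.prod μ) := by
  refine ⟨(h.meas.aestronglyMeasurable.mul hf.1.comp_snd).mul hg.1.comp_fst, ?_⟩
  have hm1 : AEMeasurable (fun x => ∫⁻ y, ‖κ x y‖ₑ * ‖f y‖ₑ ∂μ) μ := by
    have : AEMeasurable (fun z : X × X => ‖κ z.1 z.2‖ₑ * ‖f z.2‖ₑ) (μ.prod μ) :=
      h.meas.enorm.aemeasurable.mul hf.1.enorm.comp_snd
    exact this.lintegral_prod_right'
  have hm2 : AEMeasurable (fun z : X × X => ‖κ z.1 z.2 * f z.2 * g z.1‖ₑ) (μ.prod μ) :=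
    ((h.meas.aestronglyMeasurable.mul hf.1.comp_snd).mul hg.1.comp_fst).enorm
  rw [hasFiniteIntegral_iff_enorm, lintegral_prod _ hm2]
  have e : ∀ x, ∫⁻ y, ‖κ x y * f y * g x‖ₑ ∂μ = (∫⁻ y, ‖κ x y‖ₑ * ‖f y‖ₑ ∂μ) * ‖g x‖ₑ := by
    intro x
    rw [← lintegral_mul_const' _ _ enorm_ne_top]
    simp [enorm_mul]
  simp only [e]
  have hh := ENNReal.lintegral_mul_le_Lp_mul_Lq μ Real.HolderConjugate.two_two hm1 hg.1.enorm
  refine lt_of_le_of_lt hh ?_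
  have h2 : ENNReal.ofReal a ^ 2 * ∫⁻ y, ‖f y‖ₑ ^ 2 ∂μ < ⊤ := by
    rw [← eLpNorm_two_sq]
    exact ENNReal.mul_lt_top (by simp) (ENNReal.pow_lt_top hf.2)
  have h3 : ∫⁻ y, ‖g y‖ₑ ^ 2 ∂μ < ⊤ := by
    rw [← eLpNorm_two_sq]; exact ENNReal.pow_lt_top hg.2
  refine ENNReal.mul_lt_top ?_ ?_
  · refine ENNReal.rpow_lt_top_of_nonneg (by norm_num) ?_
    simpa using ((h.bound hf.1).trans_lt h2).ne
  · refine ENNReal.rpow_lt_top_of_nonneg (by norm_num) ?_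
    simpa using h3.ne

lemma SchurK.adjoint_eq (h : SchurK μ κ a) {T T' : Lp ℝ 2 μ →L[ℝ] Lp ℝ 2 μ}
    (hT : ∀ f : Lp ℝ 2 μ, T f =ᵐ[μ] fun x => ∫ y, κ x y * f y ∂μ)
    (hT' : ∀ f : Lp ℝ 2 μ, T' f =ᵐ[μ] fun x => ∫ y, κ y x * f y ∂μ) : adjoint T = T' := by
  symm
  rw [eq_adjoint_iff]
  intro f g
  rw [L2.inner_def, L2.inner_def]
  have e1 : ∫ x, inner ℝ (T' f x) (g x) ∂μ = ∫ x, (∫ y, κ y x * g x * f y ∂μ) ∂μ := by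
    refine integral_congr_ae ?_
    filter_upwards [hT' f] with x hx
    rw [hx, RCLike.inner_apply, conj_trivial, mul_comm, ← integral_mul_const]
    congr 1; ext y; ring_nf
  have e2 : ∫ x, inner ℝ (f x) (T g x) ∂μ = ∫ x, (∫ y, κ x y * g y * f x ∂μ) ∂μ := by
    refine integral_congr_ae ?_
    filter_upwards [hT g] with x hx
    rw [hx, RCLike.inner_apply, conj_trivial, ← integral_mul_const]
  rw [e1, e2]
  exact (integral_integral_swap (f := fun x y => κ x y * g y * f x)
    (h.prod_int (Lp.memLp g) (Lp.memLp f))).symm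

/-- The norm of a composition is estimated by Schur's test for the composed kernel. -/
lemma SchurK.comp_le {κ₁ κ₂ : X → X → ℝ} {a₁ a₂ : ℝ} (h₁ : SchurK μ κ₁ a₁) (h₂ : SchurK μ κ₂ a₂)
    {T₁ T₂ : Lp ℝ 2 μ →L[ℝ] Lp ℝ 2 μ}
    (hT₁ : ∀ f : Lp ℝ 2 μ, T₁ f =ᵐ[μ] fun x => ∫ y, κ₁ x y * f y ∂μ)
    (hT₂ : ∀ f : Lp ℝ 2 μ, T₂ f =ᵐ[μ] fun x => ∫ y, κ₂ x y * f y ∂μ)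
    {D : X → X → ℝ≥0∞} (hD : Measurable (Function.uncurry D)) {d : ℝ} (hd : 0 ≤ d)
    (hb : ∀ x y, ‖∫ z, κ₁ x z * κ₂ z y ∂μ‖ₑ ≤ D x y)
    (hD1 : ∀ x, ∫⁻ y, D x y ∂μ ≤ ENNReal.ofReal d) (hD2 : ∀ y, ∫⁻ x, D x y ∂μ ≤ ENNReal.ofReal d) :
    ‖T₁ ∘L T₂‖ ≤ d := by
  refine opNorm_le_bound _ hd fun f => ?_
  have hfm := Lp.memLp f
  -- the function `y ↦ ∫ |κ₂ y z| |f z| dz` is in `L²`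
  set F : X → ℝ := fun y => (∫⁻ z, ‖κ₂ y z‖ₑ * ‖f z‖ₑ ∂μ).toReal with hF
  have hm0 : AEMeasurable (fun y => ∫⁻ z, ‖κ₂ y z‖ₑ * ‖f z‖ₑ ∂μ) μ := by
    have : AEMeasurable (fun z : X × X => ‖κ₂ z.1 z.2‖ₑ * ‖f z.2‖ₑ) (μ.prod μ) :=
      h₂.meas.enorm.aemeasurable.mul hfm.1.enorm.comp_snd
    exact this.lintegral_prod_right'
  have hFe : ∀ᵐ y ∂μ, ‖F y‖ₑ = ∫⁻ z, ‖κ₂ y z‖ₑ * ‖f z‖ₑ ∂μ := by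
    filter_upwards [h₂.ae_fin hfm] with y hy
    rw [hF]; simp only
    rw [Real.enorm_of_nonneg ENNReal.toReal_nonneg, ENNReal.ofReal_toReal hy.ne]
  have hFm : MemLp F 2 μ := by
    refine ⟨hm0.ennreal_toReal.aestronglyMeasurable, ?_⟩
    have : eLpNorm F 2 μ ≤ ENNReal.ofReal a₂ * eLpNorm f 2 μ := by
      refine eLpNorm_two_le (le_trans (le_of_eq ?_) (h₂.bound hfm.1))
      refine lintegral_congr_ae ?_
      filter_upwards [hFe] with y hy; rw [hy]
    exact this.trans_lt (ENNReal.mul_lt_top (by simp) hfm.2)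
  have key : ∀ᵐ x ∂μ, ‖(T₁ ∘L T₂) f x‖ₑ ≤ ∫⁻ y, D x y * ‖f y‖ₑ ∂μ := by
    filter_upwards [hT₁ (T₂ f), h₁.ae_fin hFm] with x hx hfin
    have e1 : (T₁ ∘L T₂) f x = ∫ z, (∫ y, κ₁ x z * (κ₂ z y * f y) ∂μ) ∂μ := by
      change T₁ (T₂ f) x = _
      rw [hx]
      refine integral_congr_ae ?_
      filter_upwards [hT₂ f] with z hz
      rw [hz, integral_const_mul]
    have hIg : Integrable (Function.uncurry fun z y => κ₁ x z * (κ₂ z y * f y)) (μ.prod μ) := by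
      have hms : AEStronglyMeasurable (Function.uncurry fun z y => κ₁ x z * (κ₂ z y * f y))
          (μ.prod μ) :=
        (((h₁.meas.comp measurable_prodMk_left).comp measurable_fst).aestronglyMeasurable).mul
          (h₂.meas.aestronglyMeasurable.mul hfm.1.comp_snd)
      refine ⟨hms, ?_⟩
      rw [hasFiniteIntegral_iff_enorm, lintegral_prod _ hms.enorm]
      refine lt_of_le_of_lt (le_of_eq ?_) hfin
      refine lintegral_congr_ae ?_
      filter_upwards [hFe] with z hz
      rw [hz, ← lintegral_const_mul' _ _ enorm_ne_top]
      simp [enorm_mul]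
    rw [e1, integral_integral_swap hIg]
    refine (enorm_integral_le_lintegral_enorm _).trans ?_
    gcongr with y
    have e3 : ∫ z, κ₁ x z * (κ₂ z y * f y) ∂μ = (∫ z, κ₁ x z * κ₂ z y ∂μ) * f y := by
      rw [← integral_mul_const]; congr 1; ext z; ring
    rw [e3, enorm_mul]
    gcongr
    exact hb x y
  have hfin : eLpNorm ((T₁ ∘L T₂) f) 2 μ ≤ ENNReal.ofReal d * eLpNorm f 2 μ := by
    refine eLpNorm_two_le ?_
    calc ∫⁻ x, ‖(T₁ ∘L T₂) f x‖ₑ ^ 2 ∂μ ≤ ∫⁻ x, (∫⁻ y, D x y * ‖f y‖ₑ ∂μ) ^ 2 ∂μ := by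
          refine lintegral_mono_ae ?_
          filter_upwards [key] with x hx
          gcongr
      _ ≤ _ := by
          rw [sq (ENNReal.ofReal d)]
          exact schur hD hD1 hD2 hfm.1.enorm
  rw [Lp.norm_def, Lp.norm_def, ← ENNReal.toReal_ofReal hd, ← ENNReal.toReal_mul]
  exact ENNReal.toReal_mono (ENNReal.mul_ne_top (by simp) hfm.2.ne) hfin

end SchurOp
end CZ

namespace CZ

/-! ### Calderón–Zygmund kernels: uniform `L²` bounds for truncations -/

open Set Metric

section CZ

variable {X : Type*} [MetricSpace X] [MeasurableSpace X] [BorelSpace X]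
  [SecondCountableTopology X] {μ : Measure X} {Q : ℕ} {V : ℝ}

/-- A Calderón–Zygmund kernel of size `dist ^ (-Q)`, Lipschitz regular in both variables, whose
integrals over all annuli centred at either variable vanish. -/
structure CZK (μ : Measure X) (Q : ℕ) (k : X → X → ℝ) (A : ℝ) : Prop where
  meas : Measurable (Function.uncurry k)
  nonneg : 0 ≤ A
  size : ∀ x y, x ≠ y → |k x y| ≤ A / dist x y ^ Q
  reg1 : ∀ x x' y, x ≠ y → 2 * dist x x' ≤ dist x y →
    |k x y - k x' y| ≤ A * dist x x' / dist x y ^ (Q + 1)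
  reg2 : ∀ x y y', x ≠ y → 2 * dist y y' ≤ dist x y →
    |k x y - k x y'| ≤ A * dist y y' / dist x y ^ (Q + 1)
  canc1 : ∀ x a b, 0 < a → ∫ y in {y | a < dist x y ∧ dist x y ≤ b}, k x y ∂μ = 0
  canc2 : ∀ y a b, 0 < a → ∫ x in {x | a < dist y x ∧ dist y x ≤ b}, k x y ∂μ = 0

variable {k : X → X → ℝ} {A : ℝ}

lemma CZK.symm (h : CZK μ Q k A) : CZK μ Q (fun x y => k y x) A where
  meas := h.meas.comp measurable_swap
  nonneg := h.nonneg
  size x y hxy := by rw [dist_comm]; exact h.size y x hxy.symm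
  reg1 x x' y hxy hd := by
    rw [dist_comm x y]; exact h.reg2 y x x' hxy.symm (by rwa [dist_comm y x])
  reg2 x y y' hxy hd := by
    rw [dist_comm x y]; exact h.reg1 y y' x hxy.symm (by rwa [dist_comm y x])
  canc1 := h.canc2
  canc2 := h.canc1

/-- The part of the kernel living on the dyadic annulus `r < dist x y ≤ 2 r`. -/
def pc (k : X → X → ℝ) (r : ℝ) (x y : X) : ℝ :=
  if r < dist x y ∧ dist x y ≤ 2 * r then k x y else 0

lemma pc_symm (k : X → X → ℝ) (r : ℝ) (x y : X) : pc (fun x y => k y x) r x y = pc k r y x := by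
  simp [pc, dist_comm]

lemma CZK.pc_meas (h : CZK μ Q k A) (r : ℝ) : Measurable (Function.uncurry (pc k r)) := by
  refine Measurable.ite (.inter (measurableSet_lt (f := fun _ => r)
    (g := fun z : X × X => dist z.1 z.2) (by fun_prop) (by fun_prop))
    (measurableSet_le (f := fun z : X × X => dist z.1 z.2) (g := fun _ => 2 * r)
    (by fun_prop) (by fun_prop))) h.meas measurable_const

lemma CZK.pc_le (h : CZK μ Q k A) {r : ℝ} (hr : 0 < r) (x y : X) : |pc k r x y| ≤ A / r ^ Q := by
  have hA := h.nonneg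
  rw [pc]
  split_ifs with hh
  · have : x ≠ y := fun e => by rw [e, dist_self] at hh; linarith [hh.1]
    refine (h.size x y this).trans ?_
    have := hh.1.le
    gcongr
  · rw [abs_zero]; positivity

lemma CZK.pc_left (h : CZK μ Q k A) (hμ : HomSp μ Q V) {r : ℝ} (hr : 0 < r) (x : X) :
    ∫⁻ y, ‖pc k r x y‖ₑ ∂μ ≤ ENNReal.ofReal (A * V * 2 ^ Q) := by
  have hA := h.nonneg
  have hV := hμ.pos
  have h1 : ∀ y, ‖pc k r x y‖ₑ ≤
      (Metric.closedBall x (2 * r)).indicator (fun _ => ENNReal.ofReal (A / r ^ Q)) y := by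
    intro y
    by_cases hy : y ∈ Metric.closedBall x (2 * r)
    · rw [indicator_of_mem hy, ← ofReal_norm]
      exact ENNReal.ofReal_le_ofReal (h.pc_le hr x y)
    · rw [mem_closedBall, dist_comm] at hy
      simp [pc, hy]
  refine (lintegral_mono h1).trans ?_
  rw [lintegral_indicator measurableSet_closedBall, setLIntegral_const, hμ.closedBall x (by positivity),
    ← ENNReal.ofReal_mul (by positivity)]
  refine ENNReal.ofReal_le_ofReal (le_of_eq ?_)
  field_simp
  ring

lemma CZK.pc_schur (h : CZK μ Q k A) (hμ : HomSp μ Q V) {r : ℝ} (hr : 0 < r) :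
    SchurK μ (pc k r) (A * V * 2 ^ Q) where
  meas := h.pc_meas r
  nonneg := by have := h.nonneg; have := hμ.pos; positivity
  left := h.pc_left hμ hr
  right y := by
    have := h.symm.pc_left hμ hr y
    simpa only [pc_symm] using this

lemma CZK.pc_int (h : CZK μ Q k A) {r : ℝ} (hr : 0 < r) (x : X) : ∫ y, pc k r x y ∂μ = 0 := by
  have := h.canc1 x r (2 * r) hr
  rw [← integral_indicator (by measurability)] at this
  simpa only [indicator, pc, mem_setOf_eq] using this

/-- Majorant of the oscillation of `pc k r x` on the ball of radius `s` around `y`. -/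
def oscE (Q : ℕ) (A r s : ℝ) (x y : X) : ℝ≥0∞ :=
  {z : X × X | dist z.1 z.2 ≤ 2 * r}.indicator (fun _ => ENNReal.ofReal (A * s / r ^ (Q + 1))) (x, y)
  + {z : X × X | r - 2 * s < dist z.1 z.2 ∧ dist z.1 z.2 ≤ r + s}.indicator
      (fun _ => ENNReal.ofReal (A / r ^ Q)) (x, y)
  + {z : X × X | 2 * r - 2 * s < dist z.1 z.2 ∧ dist z.1 z.2 ≤ 2 * r + s}.indicator
      (fun _ => ENNReal.ofReal (A / r ^ Q)) (x, y)

lemma oscE_comm (r s : ℝ) (x y : X) : oscE Q A r s x y = oscE Q A r s y x := by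
  simp [oscE, indicator, dist_comm]

lemma measurableSet_ann (a b : ℝ) : MeasurableSet {z : X × X | a < dist z.1 z.2 ∧ dist z.1 z.2 ≤ b} :=
  (measurableSet_lt (f := fun _ => a)
    (g := fun z : X × X => dist z.1 z.2) (by fun_prop) (by fun_prop)).inter
    (measurableSet_le (f := fun z : X × X => dist z.1 z.2) (g := fun _ => b)
    (by fun_prop) (by fun_prop))

lemma measurable_oscE (r s : ℝ) : Measurable (Function.uncurry (oscE (X := X) Q A r s)) := by
  refine .add (.add ?_ ?_) ?_
  · exact measurable_const.indicator (measurableSet_le (f := fun z : X × X => dist z.1 z.2)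
      (g := fun _ => 2 * r) (by fun_prop) (by fun_prop))
  · exact measurable_const.indicator (measurableSet_ann _ _)
  · exact measurable_const.indicator (measurableSet_ann _ _)

lemma pow_sub_le {a b : ℝ} (ha : 0 ≤ a) (hab : a ≤ b) (Q : ℕ) :
    b ^ Q - a ^ Q ≤ Q * (b - a) * b ^ (Q - 1) := by
  have h := Commute.mul_geom_sum₂ (Commute.all b a) Q
  rw [← h]
  have : ∑ i ∈ Finset.range Q, b ^ i * a ^ (Q - 1 - i) ≤ ∑ i ∈ Finset.range Q, b ^ (Q - 1) := by
    refine Finset.sum_le_sum fun i hi => ?_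
    rw [Finset.mem_range] at hi
    have hb := ha.trans hab
    calc b ^ i * a ^ (Q - 1 - i) ≤ b ^ i * b ^ (Q - 1 - i) := by gcongr
      _ = b ^ (Q - 1) := by rw [← pow_add]; congr 1; omega
  rw [Finset.sum_const, Finset.card_range, nsmul_eq_mul] at this
  nlinarith [sub_nonneg.2 hab]

lemma lintegral_oscE (hμ : HomSp μ Q V) (hA : 0 ≤ A) {r s : ℝ} (hr : 0 < r) (hs : 0 < s)
    (hsr : 4 * s ≤ r) (x : X) :
    ∫⁻ y, oscE Q A r s x y ∂μ ≤ ENNReal.ofReal (A * V * (s / r) * (2 ^ Q + 2 * (Q * 3 ^ Q))) := by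
  have hV := hμ.pos
  have hQ := hμ.one_le
  have m1 : MeasurableSet {y | dist x y ≤ 2 * r} :=
    measurableSet_le (f := fun y => dist x y) (g := fun _ => 2 * r) (by fun_prop) (by fun_prop)
  have m2 : ∀ a b, MeasurableSet {y | a < dist x y ∧ dist x y ≤ b} := fun a b =>
    measurable_prodMk_left (measurableSet_ann a b)
  have e1 : ∀ y, oscE Q A r s x y =
      {y | dist x y ≤ 2 * r}.indicator (fun _ => ENNReal.ofReal (A * s / r ^ (Q + 1))) y
      + {y | r - 2 * s < dist x y ∧ dist x y ≤ r + s}.indicator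
          (fun _ => ENNReal.ofReal (A / r ^ Q)) y
      + {y | 2 * r - 2 * s < dist x y ∧ dist x y ≤ 2 * r + s}.indicator
          (fun _ => ENNReal.ofReal (A / r ^ Q)) y := fun y => rfl
  have ann : ∀ a b : ℝ, 0 ≤ a → a ≤ b → b ≤ 3 * r → b - a = 3 * s →
      ∫⁻ y, {y | a < dist x y ∧ dist x y ≤ b}.indicator
          (fun _ => ENNReal.ofReal (A / r ^ Q)) y ∂μ
        ≤ ENNReal.ofReal (A * V * (s / r) * (Q * 3 ^ Q)) := by
    intro a b ha hab hb hs3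
    rw [lintegral_indicator (m2 _ _), setLIntegral_const]
    refine (mul_le_mul_right (hμ.annulus_le x ha hab) _).trans ?_
    rw [← ENNReal.ofReal_mul (by positivity)]
    refine ENNReal.ofReal_le_ofReal ?_
    have h1 := pow_sub_le ha hab Q
    have h2 : b ^ (Q - 1) ≤ (3 * r) ^ (Q - 1) := pow_le_pow_left₀ (ha.trans hab) hb _
    have h3 : b ^ Q - a ^ Q ≤ Q * (3 * s) * (3 * r) ^ (Q - 1) := by
      rw [hs3] at h1
      exact h1.trans (by gcongr)
    calc A / r ^ Q * (V * (b ^ Q - a ^ Q)) ≤ A / r ^ Q * (V * (Q * (3 * s) * (3 * r) ^ (Q - 1))) := by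
          gcongr
      _ = _ := by
          obtain ⟨q, rfl⟩ : ∃ q, Q = q + 1 := ⟨Q - 1, by omega⟩
          simp only [Nat.add_sub_cancel, mul_pow]
          field_simp
          ring
  have b1 : ∫⁻ y, {y | dist x y ≤ 2 * r}.indicator (fun _ => ENNReal.ofReal (A * s / r ^ (Q + 1))) y ∂μ
      ≤ ENNReal.ofReal (A * V * (s / r) * 2 ^ Q) := by
    rw [lintegral_indicator m1, setLIntegral_const]
    have : {y | dist x y ≤ 2 * r} = Metric.closedBall x (2 * r) := by
      ext y; simp [dist_comm]
    rw [this, hμ.closedBall x (by positivity), ← ENNReal.ofReal_mul (by positivity)]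
    refine ENNReal.ofReal_le_ofReal (le_of_eq ?_)
    rw [mul_pow]
    field_simp
    ring
  simp only [e1]
  rw [lintegral_add_right _ (measurable_const.indicator (m2 _ _)),
    lintegral_add_right _ (measurable_const.indicator (m2 _ _))]
  refine (add_le_add (add_le_add b1 (ann _ _ (by linarith) (by linarith) (by linarith) (by ring)))
    (ann _ _ (by linarith) (by linarith) (by linarith) (by ring))).trans (le_of_eq ?_)
  rw [← ENNReal.ofReal_add (by positivity) (by positivity),
    ← ENNReal.ofReal_add (by positivity) (by positivity)]
  congr 1; ring

/-- A dyadic piece is Lipschitz except near the two spheres bounding its annulus; both effects are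
majorised by `oscE`. -/
lemma CZK.pc_osc (h : CZK μ Q k A) {r s : ℝ} (hr : 0 < r) (hs : 0 < s)
    (hsr : 4 * s ≤ r) (x y z : X) (hz : dist y z ≤ s) :
    ‖pc k r x z - pc k r x y‖ₑ ≤ oscE Q A r s x y := by
  have hA := h.nonneg
  have t1 := dist_triangle x y z
  have t2 := dist_triangle_right x y z
  rw [← ofReal_norm, Real.norm_eq_abs]
  by_cases hy : r < dist x y ∧ dist x y ≤ 2 * r
  · by_cases hzz : r < dist x z ∧ dist x z ≤ 2 * r
    · have hxy : x ≠ y := fun e => by rw [e, dist_self] at hy; linarith [hy.1]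
      have := h.reg2 x y z hxy (by linarith)
      rw [pc, pc, if_pos hy, if_pos hzz, abs_sub_comm]
      refine le_trans ?_ (le_trans le_self_add le_self_add)
      rw [indicator_of_mem (by exact hy.2)]
      refine ENNReal.ofReal_le_ofReal (this.trans ?_)
      have := hy.1.le
      gcongr
    · have e : pc k r x z = 0 := if_neg hzz
      rw [e, zero_sub, abs_neg]
      have hle := ENNReal.ofReal_le_ofReal (h.pc_le hr x y)
      refine hle.trans ?_
      rw [not_and_or, not_lt, not_le] at hzz
      rw [oscE]
      rcases hzz with hzz | hzz
      · refine le_trans ?_ le_self_add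
        refine le_trans ?_ le_add_self
        rw [indicator_of_mem (by constructor <;> simp only <;> linarith [hy.1])]
      · refine le_trans ?_ le_add_self
        rw [indicator_of_mem (by constructor <;> simp only <;> linarith [hy.2])]
  · have e : pc k r x y = 0 := if_neg hy
    rw [e, sub_zero]
    by_cases hzz : r < dist x z ∧ dist x z ≤ 2 * r
    · have hle := ENNReal.ofReal_le_ofReal (h.pc_le hr x z)
      refine hle.trans ?_
      rw [not_and_or, not_lt, not_le] at hy
      rw [oscE]
      rcases hy with hy | hy
      · refine le_trans ?_ le_self_add
        refine le_trans ?_ le_add_self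
        rw [indicator_of_mem (by constructor <;> simp only <;> linarith [hzz.1])]
      · refine le_trans ?_ le_add_self
        rw [indicator_of_mem (by constructor <;> simp only <;> linarith [hzz.2])]
    · rw [pc, if_neg hzz]; simp

/-- Almost orthogonality: the composition of two dyadic pieces is small because the finer piece has
mean zero and the coarser one is smooth at the finer scale. -/
lemma CZK.pc_comp (h : CZK μ Q k A) (hμ : HomSp μ Q V) {r r' : ℝ} (hr : 0 < r) (hr' : 0 < r')
    (hrr : 8 * r' ≤ r) (x y : X) :
    ‖∫ z, pc k r x z * pc k r' y z ∂μ‖ₑ ≤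
      ENNReal.ofReal (A * V * 2 ^ Q) * oscE Q A r (2 * r') x y := by
  have hS := h.pc_schur hμ hr'
  have hi : Integrable (pc k r' y) μ :=
    ⟨(hS.meas.comp measurable_prodMk_left).aestronglyMeasurable,
      (hS.left y).trans_lt ENNReal.ofReal_lt_top⟩
  have hi2 : Integrable (fun z => pc k r x z * pc k r' y z) μ :=
    hi.bdd_mul (c := A / r ^ Q) ((h.pc_meas r).comp measurable_prodMk_left).aestronglyMeasurable
      (Eventually.of_forall fun z => h.pc_le hr x z)
  have e : ∫ z, pc k r x z * pc k r' y z ∂μ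
      = ∫ z, (pc k r x z - pc k r x y) * pc k r' y z ∂μ := by
    simp only [sub_mul]
    rw [integral_sub hi2 (hi.const_mul _), integral_const_mul, h.pc_int hr', mul_zero, sub_zero]
  rw [e]
  refine (enorm_integral_le_lintegral_enorm _).trans ?_
  calc ∫⁻ z, ‖(pc k r x z - pc k r x y) * pc k r' y z‖ₑ ∂μ
      ≤ ∫⁻ z, ‖pc k r' y z‖ₑ * oscE Q A r (2 * r') x y ∂μ := by
        refine lintegral_mono fun z => ?_
        rw [enorm_mul, mul_comm]
        by_cases hz : dist y z ≤ 2 * r'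
        · gcongr
          exact h.pc_osc hr (by positivity) (by linarith) x y z hz
        · have : pc k r' y z = 0 := if_neg fun hh => hz hh.2
          simp [this]
    _ = (∫⁻ z, ‖pc k r' y z‖ₑ ∂μ) * oscE Q A r (2 * r') x y := by
        exact lintegral_mul_const _ (hS.meas.comp measurable_prodMk_left).enorm
    _ ≤ _ := by gcongr; exact h.pc_left hμ hr' y

/-- Truncation of a singular integral operator at scale `ε`. -/
def Tr (μ : Measure X) (k : X → X → ℝ) (ε : ℝ) (f : X → ℝ) (x : X) : ℝ :=
  ∫ y in {y | ε < dist x y}, k x y * f y ∂μ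

variable [SFinite μ]

lemma CZK.op_comp (h : CZK μ Q k A) (hμ : HomSp μ Q V) {r r' : ℝ} (hr : 0 < r) (hr' : 0 < r')
    (hrr : 8 * r' ≤ r) {T T' : Lp ℝ 2 μ →L[ℝ] Lp ℝ 2 μ}
    (hT : ∀ f : Lp ℝ 2 μ, T f =ᵐ[μ] fun x => ∫ y, pc k r x y * f y ∂μ)
    (hT' : ∀ f : Lp ℝ 2 μ, T' f =ᵐ[μ] fun x => ∫ y, pc k r' y x * f y ∂μ) :
    ‖T ∘L T'‖ ≤ (A * V * 2 ^ Q) * (A * V * (2 * r' / r) * (2 ^ Q + 2 * (Q * 3 ^ Q))) := by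
  have hA := h.nonneg
  have hV := hμ.pos
  have hD1 : ∀ x, ∫⁻ y, ENNReal.ofReal (A * V * 2 ^ Q) * oscE Q A r (2 * r') x y ∂μ ≤
      ENNReal.ofReal ((A * V * 2 ^ Q) * (A * V * (2 * r' / r) * (2 ^ Q + 2 * (Q * 3 ^ Q)))) := by
    intro x
    rw [lintegral_const_mul' _ _ ENNReal.ofReal_ne_top,
      ENNReal.ofReal_mul (p := A * V * 2 ^ Q) (by positivity)]
    exact mul_le_mul_right (lintegral_oscE hμ hA hr (s := 2 * r') (by positivity) (by linarith) x) _
  refine (h.pc_schur hμ hr).comp_le (h.pc_schur hμ hr').symm hT hT'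
    (D := fun x y => ENNReal.ofReal (A * V * 2 ^ Q) * oscE Q A r (2 * r') x y)
    (measurable_const.mul (measurable_oscE r (2 * r'))) (by positivity)
    (fun x y => h.pc_comp hμ hr hr' hrr x y) hD1 (fun y => ?_)
  simp only [oscE_comm (y := y)]
  exact hD1 y

lemma geom_fin (N : ℕ) (i : Fin N) :
    ∑ j : Fin N, (3 / 4 : ℝ) ^ ((i.1 - j.1) + (j.1 - i.1)) ≤ 8 := by
  have hs : Summable fun n : ℕ => (3 / 4 : ℝ) ^ n := summable_geometric_of_lt_one (by norm_num) (by norm_num)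
  have ht : ∑' n : ℕ, (3 / 4 : ℝ) ^ n = 4 := by
    rw [tsum_geometric_of_lt_one (by norm_num) (by norm_num)]; norm_num
  have hle : ∀ j : Fin N, (3 / 4 : ℝ) ^ ((i.1 - j.1) + (j.1 - i.1)) ≤
      (if j.1 ≤ i.1 then (3 / 4 : ℝ) ^ (i.1 - j.1) else 0) +
      (if i.1 ≤ j.1 then (3 / 4 : ℝ) ^ (j.1 - i.1) else 0) := by
    intro j
    rcases le_total j.1 i.1 with hh | hh
    · rw [if_pos hh, Nat.sub_eq_zero_of_le hh, add_zero]
      have : (0 : ℝ) ≤ if i.1 ≤ j.1 then (3 / 4 : ℝ) ^ 0 else 0 := by split_ifs <;> norm_num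
      simpa using this
    · rw [if_pos hh, Nat.sub_eq_zero_of_le hh, zero_add]
      have : (0 : ℝ) ≤ if j.1 ≤ i.1 then (3 / 4 : ℝ) ^ 0 else 0 := by split_ifs <;> norm_num
      simpa using this
  refine (Finset.sum_le_sum fun j _ => hle j).trans ?_
  rw [Finset.sum_add_distrib]
  have b : ∀ (s : Finset (Fin N)) (g : Fin N → ℕ), Set.InjOn g s →
      ∑ j ∈ s, (3 / 4 : ℝ) ^ g j ≤ 4 := by
    intro s g hg
    rw [← Finset.sum_image (f := fun n => (3 / 4 : ℝ) ^ n) hg]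
    exact (hs.sum_le_tsum _ fun _ _ => by positivity).trans_eq ht
  rw [← Finset.sum_filter, ← Finset.sum_filter]
  have b1 := b (Finset.univ.filter fun j : Fin N => j.1 ≤ i.1) (fun j => i.1 - j.1) (by
    intro a ha b hb hab
    simp only [Finset.coe_filter, Finset.mem_univ, true_and, mem_setOf_eq] at ha hb hab
    ext; omega)
  have b2 := b (Finset.univ.filter fun j : Fin N => i.1 ≤ j.1) (fun j => j.1 - i.1) (by
    intro a ha b hb hab
    simp only [Finset.coe_filter, Finset.mem_univ, true_and, mem_setOf_eq] at ha hb hab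
    ext; omega)
  linarith

/-- Cotlar–Stein bound for finite sums of dyadic pieces, uniform in the number of pieces. -/
lemma CZK.bound_fin (h : CZK μ Q k A) (hμ : HomSp μ Q V) : ∃ Γ : ℝ, 0 < Γ ∧
    ∀ (ε : ℝ), 0 < ε → ∀ (N : ℕ) (f : X → ℝ), MemLp f 2 μ →
      ∫⁻ x, ‖∑ i : Fin N, ∫ y, pc k (2 ^ i.1 * ε) x y * f y ∂μ‖ₑ ^ 2 ∂μ
        ≤ ENNReal.ofReal Γ ^ 2 * ∫⁻ x, ‖f x‖ₑ ^ 2 ∂μ := by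
  have hA := h.nonneg
  have hV := hμ.pos
  set M := A * V * 2 ^ Q with hM
  have hM0 : 0 ≤ M := by positivity
  set d := M * (A * V * 2 * (2 ^ Q + 2 * (Q * 3 ^ Q))) with hd
  have hd0 : 0 ≤ d := by positivity
  set c0 := 1 + 2 * M + d with hc0
  have hc1 : 1 ≤ c0 := by linarith
  refine ⟨8 * c0, by linarith, ?_⟩
  intro ε hε N f hf
  choose T hTn hT using fun i : Fin N => (h.pc_schur hμ (r := 2 ^ i.1 * ε) (by positivity)).exists_op
  choose T' hTn' hT' using
    fun i : Fin N => (h.pc_schur hμ (r := 2 ^ i.1 * ε) (by positivity)).symm.exists_op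
  have hadj : ∀ i, ContinuousLinearMap.adjoint (T i) = T' i := fun i =>
    (h.pc_schur hμ (r := 2 ^ i.1 * ε) (by positivity)).adjoint_eq (hT i) (hT' i)
  have hadj' : ∀ i, ContinuousLinearMap.adjoint (T' i) = T i := fun i => by
    rw [← hadj, ContinuousLinearMap.adjoint_adjoint]
  set γ : Fin N → Fin N → ℝ := fun i j => c0 * (3 / 4 : ℝ) ^ ((i.1 - j.1) + (j.1 - i.1)) with hγ
  have trivial_bound : ∀ i j : Fin N, i.1 ≤ j.1 + 2 → j.1 ≤ i.1 + 2 → M * M ≤ γ i j ^ 2 := by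
    intro i j h1 h2
    rw [← sq]
    have : (3 / 4 : ℝ) ^ 2 ≤ (3 / 4 : ℝ) ^ ((i.1 - j.1) + (j.1 - i.1)) :=
      pow_le_pow_of_le_one (by norm_num) (by norm_num) (by omega)
    refine pow_le_pow_left₀ hM0 ?_ 2
    simp only [hγ]
    nlinarith
  -- decay of the composition norm for well separated scales
  have main_bound : ∀ i j : Fin N, j.1 + 3 ≤ i.1 →
      M * (A * V * (2 * (2 ^ j.1 * ε) / (2 ^ i.1 * ε)) * (2 ^ Q + 2 * (Q * 3 ^ Q))) ≤ γ i j ^ 2 := by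
    intro i j hij
    obtain ⟨l, hl⟩ : ∃ l, i.1 = j.1 + l := ⟨i.1 - j.1, by omega⟩
    have e : (2 * (2 ^ j.1 * ε) / (2 ^ i.1 * ε)) = 2 * (1 / 2 : ℝ) ^ l := by
      rw [hl, pow_add, one_div_pow]; field_simp
    have e2 : γ i j ^ 2 = c0 ^ 2 * (9 / 16 : ℝ) ^ l := by
      simp only [hγ, hl, Nat.add_sub_cancel_left]
      rw [show j.1 - (j.1 + l) = 0 by omega, add_zero, mul_pow, ← pow_mul, mul_comm l 2, pow_mul]
      norm_num
    rw [e, e2]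
    have h1 : (1 / 2 : ℝ) ^ l ≤ (9 / 16 : ℝ) ^ l := pow_le_pow_left₀ (by norm_num) (by norm_num) l
    have h2 : d ≤ c0 ^ 2 := by nlinarith
    calc M * (A * V * (2 * (1 / 2 : ℝ) ^ l) * (2 ^ Q + 2 * (Q * 3 ^ Q))) = d * (1 / 2 : ℝ) ^ l := by
          rw [hd]; ring
      _ ≤ c0 ^ 2 * (9 / 16 : ℝ) ^ l := by gcongr
  have sep : ∀ i j : Fin N, j.1 + 3 ≤ i.1 → 8 * (2 ^ j.1 * ε) ≤ 2 ^ i.1 * ε := by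
    intro i j hij
    have : (2 : ℝ) ^ (j.1 + 3) ≤ 2 ^ i.1 := pow_le_pow_right₀ (by norm_num) hij
    rw [pow_add] at this
    nlinarith
  have prodn : ∀ {S S' : Lp ℝ 2 μ →L[ℝ] Lp ℝ 2 μ}, ‖S‖ ≤ M → ‖S'‖ ≤ M → ‖S ∘L S'‖ ≤ M * M :=
    fun h1 h2 => (ContinuousLinearMap.opNorm_comp_le _ _).trans
      (mul_le_mul h1 h2 (norm_nonneg _) hM0)
  have γs : ∀ i j, γ i j = γ j i := fun i j => by simp only [hγ]; rw [add_comm]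
  have h2 : ∀ i j, ‖T i ∘L ContinuousLinearMap.adjoint (T j)‖ ≤ γ i j ^ 2 := by
    have big : ∀ i j : Fin N, j.1 + 3 ≤ i.1 → ‖T i ∘L T' j‖ ≤ γ i j ^ 2 := fun i j hij =>
      (h.op_comp hμ (by positivity) (by positivity) (sep i j hij) (hT i) (hT' j)).trans
        (main_bound i j hij)
    intro i j
    rw [hadj]
    by_cases hij : j.1 + 3 ≤ i.1
    · exact big i j hij
    by_cases hji : i.1 + 3 ≤ j.1
    · have := big j i hji
      rw [← LinearIsometryEquiv.norm_map ContinuousLinearMap.adjoint,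
        ContinuousLinearMap.adjoint_comp, hadj, hadj', γs] at this
      exact this
    · exact (prodn (hTn i) (hTn' j)).trans (trivial_bound i j (by omega) (by omega))
  have h1 : ∀ i j, ‖ContinuousLinearMap.adjoint (T i) ∘L T j‖ ≤ γ i j ^ 2 := by
    have big : ∀ i j : Fin N, j.1 + 3 ≤ i.1 → ‖T' i ∘L T j‖ ≤ γ i j ^ 2 := fun i j hij =>
      (h.symm.op_comp hμ (by positivity) (by positivity) (sep i j hij)
        (by simpa only [pc_symm] using hT' i) (by simpa only [pc_symm] using hT j)).trans
        (main_bound i j hij)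
    intro i j
    rw [hadj]
    by_cases hij : j.1 + 3 ≤ i.1
    · exact big i j hij
    by_cases hji : i.1 + 3 ≤ j.1
    · have := big j i hji
      rw [← LinearIsometryEquiv.norm_map ContinuousLinearMap.adjoint,
        ContinuousLinearMap.adjoint_comp, hadj, hadj', γs] at this
      exact this
    · exact (prodn (hTn' i) (hTn j)).trans (trivial_bound i j (by omega) (by omega))
  have key := cotlar_stein T γ (8 * c0) (fun i j => by positivity) h1 h2 (fun i => by
    simp only [hγ]
    rw [← Finset.mul_sum]
    have := geom_fin N i
    nlinarith) (by linarith)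
  have hF := hf.coeFn_toLp
  set F := hf.toLp f with hFdef
  have hval : (∑ i, T i) F =ᵐ[μ] fun x => ∑ i : Fin N, ∫ y, pc k (2 ^ i.1 * ε) x y * f y ∂μ := by
    rw [ContinuousLinearMap.sum_apply]
    refine (Lp.coeFn_finsetSum (s := Finset.univ) (f := fun i => T i F)).trans ?_
    have : ∀ᵐ x ∂μ, ∀ i, T i F x = ∫ y, pc k (2 ^ i.1 * ε) x y * F y ∂μ :=
      ae_all_iff.2 fun i => hT i F
    filter_upwards [this] with x hx
    rw [Finset.sum_apply]
    refine Finset.sum_congr rfl fun i _ => ?_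
    rw [hx]
    refine integral_congr_ae ?_
    filter_upwards [hF] with y hy
    rw [hy]
  have h3 : ‖(∑ i, T i) F‖ ≤ 8 * c0 * ‖F‖ :=
    (ContinuousLinearMap.le_opNorm _ _).trans (by gcongr)
  rw [Lp.norm_def, Lp.norm_def, eLpNorm_congr_ae hF, eLpNorm_congr_ae hval,
    ← ENNReal.toReal_ofReal (show 0 ≤ 8 * c0 by linarith), ← ENNReal.toReal_mul,
    ENNReal.toReal_le_toReal] at h3
  · have := pow_le_pow_left' h3 2
    rwa [mul_pow, eLpNorm_two_sq, eLpNorm_two_sq] at this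
  · rw [← eLpNorm_congr_ae hval]; exact (Lp.memLp _).2.ne
  · exact ENNReal.mul_ne_top ENNReal.ofReal_ne_top hf.2.ne

lemma CZK.meas_tr (h : CZK μ Q k A) {ε : ℝ} {f : X → ℝ} (hf : AEStronglyMeasurable f μ) :
    AEStronglyMeasurable (Tr μ k ε f) μ := by
  have : AEStronglyMeasurable (fun z : X × X => {z : X × X | ε < dist z.1 z.2}.indicator
      (fun z => k z.1 z.2 * f z.2) z) (μ.prod μ) :=
    (h.meas.aestronglyMeasurable.mul hf.comp_snd).indicator
      (measurableSet_lt (f := fun _ => ε) (g := fun z : X × X => dist z.1 z.2) (by fun_prop) (by fun_prop))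
  have := this.integral_prod_right'
  refine this.congr (Eventually.of_forall fun x => ?_)
  simp only [Tr]
  rw [← integral_indicator (measurableSet_lt (f := fun _ => ε) (g := fun y : X => dist x y)
    (by fun_prop) (by fun_prop))]
  rfl

lemma measurableSet_far (x : X) (ε : ℝ) : MeasurableSet {y | ε < dist x y} :=
  measurableSet_lt (f := fun _ => ε) (g := fun y : X => dist x y) (by fun_prop) (by fun_prop)

lemma CZK.far_le (h : CZK μ Q k A) {ε : ℝ} (hε : 0 < ε) {x y : X} (hy : ε < dist x y) :
    |k x y| ≤ A / ε ^ Q := by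
  have hA := h.nonneg
  refine (h.size x y fun e => by rw [e, dist_self] at hy; linarith).trans ?_
  gcongr

lemma CZK.int_far (h : CZK μ Q k A) {ε : ℝ} (hε : 0 < ε) {f : X → ℝ} (hf : Integrable f μ) (x : X) :
    IntegrableOn (fun y => k x y * f y) {y | ε < dist x y} μ := by
  refine hf.integrableOn.bdd_mul (c := A / ε ^ Q)
    (h.meas.comp measurable_prodMk_left).aestronglyMeasurable ?_
  exact (ae_restrict_iff' (measurableSet_far x ε)).2 (Eventually.of_forall fun y hy => h.far_le hε hy)

/-- Uniform `L²` boundedness of the truncations. -/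
lemma CZK.l2 (h : CZK μ Q k A) (hμ : HomSp μ Q V) : ∃ C : ℝ≥0∞, C ≠ ⊤ ∧
    ∀ ε : ℝ, 0 < ε → ∀ f : X → ℝ, Integrable f μ →
      ∫⁻ x, ‖Tr μ k ε f x‖ₑ ^ 2 ∂μ ≤ C * ∫⁻ x, ‖f x‖ₑ ^ 2 ∂μ := by
  obtain ⟨Γ, hΓ, hb⟩ := h.bound_fin hμ
  refine ⟨ENNReal.ofReal Γ ^ 2, by simp, ?_⟩
  intro ε hε f hf
  by_cases h2 : ∫⁻ x, ‖f x‖ₑ ^ 2 ∂μ = ⊤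
  · rw [h2, ENNReal.mul_top]; exact le_top
    have : 0 < ENNReal.ofReal Γ := by simpa using hΓ
    positivity
  have hf2 : MemLp f 2 μ := by
    refine ⟨hf.1, ?_⟩
    rw [← eLpNorm_two_sq] at h2
    exact lt_top_iff_ne_top.2 fun h => h2 (by rw [h]; simp)
  have hsum : ∀ (N : ℕ) x, ∑ i : Fin N, ∫ y, pc k (2 ^ i.1 * ε) x y * f y ∂μ
      = ∫ y in {y | ε < dist x y}, {y | dist x y ≤ 2 ^ N * ε}.indicator (fun y => k x y * f y) y ∂μ := by
    intro N x
    have hi : ∀ i : Fin N, Integrable (fun y => pc k (2 ^ i.1 * ε) x y * f y) μ := fun i =>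
      hf.bdd_mul (c := A / (2 ^ i.1 * ε) ^ Q)
      ((h.pc_meas _).comp measurable_prodMk_left).aestronglyMeasurable
      (Eventually.of_forall fun y => h.pc_le (by positivity) x y)
    rw [← integral_finset_sum _ (fun i _ => hi i), ← integral_indicator (measurableSet_far x ε)]
    refine integral_congr_ae (Eventually.of_forall fun y => ?_)
    simp only
    rw [← Finset.sum_mul]
    have : ∑ i : Fin N, pc k (2 ^ i.1 * ε) x y
        = if ε < dist x y ∧ dist x y ≤ 2 ^ N * ε then k x y else 0 := by
      rw [Fin.sum_univ_eq_sum_range (fun i => pc k (2 ^ i * ε) x y)]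
      induction N with
      | zero => simp
      | succ N ih =>
        rw [Finset.sum_range_succ, ih (fun i => hi i.castSucc), pc]
        have e : 2 * (2 ^ N * ε) = 2 ^ (N + 1) * ε := by ring
        have e1 : ε ≤ 2 ^ N * ε := by
          have : (1 : ℝ) ≤ 2 ^ N := one_le_pow₀ (by norm_num)
          nlinarith
        rw [e]
        have e2 : 2 ^ N * ε ≤ 2 ^ (N + 1) * ε := by rw [← e]; linarith
        by_cases c1 : ε < dist x y <;> by_cases c2 : dist x y ≤ 2 ^ N * ε <;>
          by_cases c3 : dist x y ≤ 2 ^ (N + 1) * ε <;>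
          simp [c1, c2, c3, not_lt.2, not_le.1] <;> linarith
    rw [this]
    by_cases c1 : ε < dist x y <;> by_cases c2 : dist x y ≤ 2 ^ N * ε <;> simp [indicator, c1, c2]
  have hlim : ∀ x, Tendsto (fun N : ℕ => ∑ i : Fin N, ∫ y, pc k (2 ^ i.1 * ε) x y * f y ∂μ) atTop
      (𝓝 (Tr μ k ε f x)) := by
    intro x
    simp only [hsum]
    have hfar := h.int_far hε hf x
    refine tendsto_integral_of_dominated_convergence (fun y => ‖k x y * f y‖) (fun N => ?_)
      hfar.norm (fun N => Eventually.of_forall fun y => ?_) (Eventually.of_forall fun y => ?_)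
    · exact hfar.1.indicator (measurableSet_le (f := fun y => dist x y) (g := fun _ => 2 ^ N * ε)
        (by fun_prop) (by fun_prop))
    · exact norm_indicator_le_norm_self _ _
    · obtain ⟨N, hN⟩ := pow_unbounded_of_one_lt (dist x y / ε) (by norm_num : (1 : ℝ) < 2)
      refine tendsto_const_nhds.congr' ?_
      filter_upwards [eventually_ge_atTop N] with n hn
      rw [indicator_of_mem]
      rw [div_lt_iff₀ hε] at hN
      have : (2 : ℝ) ^ N ≤ 2 ^ n := pow_le_pow_right₀ (by norm_num) hn
      simp only [mem_setOf_eq]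
      nlinarith
  calc ∫⁻ x, ‖Tr μ k ε f x‖ₑ ^ 2 ∂μ
      = ∫⁻ x, liminf (fun N : ℕ => ‖∑ i : Fin N, ∫ y, pc k (2 ^ i.1 * ε) x y * f y ∂μ‖ₑ ^ 2) atTop ∂μ := by
        refine lintegral_congr fun x => ?_
        exact (((ENNReal.continuous_pow 2).tendsto _).comp (hlim x).enorm).liminf_eq.symm
    _ ≤ liminf (fun N : ℕ => ∫⁻ x, ‖∑ i : Fin N, ∫ y, pc k (2 ^ i.1 * ε) x y * f y ∂μ‖ₑ ^ 2 ∂μ) atTop := by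
        refine lintegral_liminf_le' fun N => ?_
        refine AEMeasurable.pow_const (AEStronglyMeasurable.enorm ?_) 2
        refine Finset.aestronglyMeasurable_fun_sum _ fun i _ => ?_
        have : AEStronglyMeasurable (fun z : X × X => pc k (2 ^ i.1 * ε) z.1 z.2 * f z.2) (μ.prod μ) :=
          (h.pc_meas _).aestronglyMeasurable.mul hf.1.comp_snd
        exact this.integral_prod_right'
    _ ≤ _ := by
        refine liminf_le_of_frequently_le' (Eventually.frequently (Eventually.of_forall fun N => ?_))
        exact hb ε hε N f hf2

end CZ
end CZ

namespace CZ

open Set Metric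

/-! ### Maximal truncations: Cotlar's inequality and weak type (2,2) -/

section TStar

variable {X : Type*} [MetricSpace X] [MeasurableSpace X] [BorelSpace X]
  [SecondCountableTopology X] {μ : Measure X} {Q : ℕ} {V : ℝ} {k : X → X → ℝ} {A : ℝ}

lemma mul_MF {ν : Measure X} {g : X → ℝ≥0∞} {c : ℝ≥0∞} (hc : c ≠ ⊤) (x : X) :
    c * MF ν g x = MF ν (fun y => c * g y) x := by
  simp only [MF, ENNReal.mul_iSup, lintegral_const_mul' _ _ hc, mul_div_assoc]

lemma weak_of_le {ν : Measure X} {D : ℝ≥0∞} (hν : Doubling ν D) {F g₁ g₂ : X → ℝ≥0∞}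
    (hF : ∀ x, F x ≤ MF ν g₁ x + MF ν g₂ x) (t : ℝ≥0∞) :
    t * ν {x | t < F x} ≤ 2 * D ^ 2 * (∫⁻ x, g₁ x ∂ν + ∫⁻ x, g₂ x ∂ν) := by
  have hs : {x | t < F x} ⊆ {x | t / 2 < MF ν g₁ x} ∪ {x | t / 2 < MF ν g₂ x} := by
    intro x hx
    by_contra hcon
    simp only [mem_union, mem_setOf_eq, not_or, not_lt] at hcon
    have := (hF x).trans (add_le_add hcon.1 hcon.2)
    rw [ENNReal.add_halves] at this
    exact absurd hx (not_lt.2 this)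
  have h1 := MF_weak hν g₁ (t / 2)
  have h2 := MF_weak hν g₂ (t / 2)
  calc t * ν {x | t < F x} ≤ t * (ν {x | t / 2 < MF ν g₁ x} + ν {x | t / 2 < MF ν g₂ x}) := by
        gcongr; exact (measure_mono hs).trans (measure_union_le _ _)
    _ = 2 * (t / 2 * ν {x | t / 2 < MF ν g₁ x} + t / 2 * ν {x | t / 2 < MF ν g₂ x}) := by
        have e : t = 2 * (t / 2) := (ENNReal.mul_div_cancel (by norm_num) (by norm_num)).symm
        generalize ν {x | t / 2 < MF ν g₁ x} = a
        generalize ν {x | t / 2 < MF ν g₂ x} = b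
        nth_rewrite 1 [e]
        ring
    _ ≤ 2 * (D ^ 2 * ∫⁻ x, g₁ x ∂ν + D ^ 2 * ∫⁻ x, g₂ x ∂ν) := by gcongr
    _ = _ := by ring

lemma sq_lintegral_le {ν : Measure X} {B : Set X} {g : X → ℝ≥0∞} (hg : AEMeasurable g ν) :
    (∫⁻ y in B, g y ∂ν) ^ 2 ≤ ν B * ∫⁻ y in B, g y ^ 2 ∂ν := by
  have := ENNReal.lintegral_mul_le_Lp_mul_Lq (ν.restrict B) Real.HolderConjugate.two_two
    (f := fun _ => 1) (g := g) aemeasurable_const hg.restrict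
  simp only [Pi.mul_apply, one_mul, ENNReal.one_rpow, lintegral_const, Measure.restrict_apply_univ] at this
  have h2 := pow_le_pow_left' this 2
  refine h2.trans (le_of_eq ?_)
  rw [mul_pow, ← ENNReal.rpow_natCast, ← ENNReal.rpow_natCast, ← ENNReal.rpow_mul, ← ENNReal.rpow_mul]
  norm_num

lemma MF_sq_le (hμ : HomSp μ Q V) {g : X → ℝ≥0∞} (hg : AEMeasurable g μ) (x : X) :
    MF μ g x ^ 2 ≤ MF μ (fun y => g y ^ 2) x := by
  have : MF μ g x ≤ MF μ (fun y => g y ^ 2) x ^ (1 / 2 : ℝ) := by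
    refine MF_le_iff.2 fun c r hx => ?_
    rw [one_div, ENNReal.le_rpow_inv_iff (by norm_num)]
    refine le_trans ?_ (le_MF μ _ hx)
    have hr : 0 < r := by
      by_contra hcon; rw [ball_eq_empty.2 (not_lt.1 hcon)] at hx; exact hx
    have h0 := hμ.ball_ne_zero c hr
    have ht := hμ.ball_ne_top c r
    rw [show (2 : ℝ) = (2 : ℕ) by norm_num, ENNReal.rpow_natCast, ENNReal.le_div_iff_mul_le (.inl h0) (.inl ht)]
    have h2 := sq_lintegral_le (B := Metric.ball c r) hg
    rw [div_eq_mul_inv, mul_pow, mul_assoc]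
    calc (∫⁻ y in Metric.ball c r, g y ∂μ) ^ 2 * ((μ (Metric.ball c r))⁻¹ ^ 2 * μ (Metric.ball c r))
        ≤ (μ (Metric.ball c r) * ∫⁻ y in Metric.ball c r, g y ^ 2 ∂μ) *
          ((μ (Metric.ball c r))⁻¹ ^ 2 * μ (Metric.ball c r)) := by gcongr
      _ = (μ (Metric.ball c r) * (μ (Metric.ball c r))⁻¹) ^ 2 *
          ∫⁻ y in Metric.ball c r, g y ^ 2 ∂μ := by ring
      _ = _ := by rw [ENNReal.mul_inv_cancel h0 ht]; simp
  refine (pow_le_pow_left' this 2).trans (le_of_eq ?_)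
  rw [← ENNReal.rpow_natCast, ← ENNReal.rpow_mul]; norm_num

/-- The effect of moving the base point of the kernel, away from the base point. -/
lemma CZK.far_diff (h : CZK μ Q k A) (hμ : HomSp μ Q V) {s : ℝ} (hs : 0 < s) {x z x' : X}
    (hz : 2 * dist x z ≤ s) (hx' : dist x x' ≤ s) (f : X → ℝ) :
    ∫⁻ y in {y | s < dist x y}, ‖k x y - k z y‖ₑ * ‖f y‖ₑ ∂μ ≤
      ENNReal.ofReal (A * V * 2 ^ (Q + 1)) * MF μ (fun y => ‖f y‖ₑ) x' := by
  have hA := h.nonneg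
  calc ∫⁻ y in {y | s < dist x y}, ‖k x y - k z y‖ₑ * ‖f y‖ₑ ∂μ
      ≤ ∫⁻ y in {y | s < dist x y}, ENNReal.ofReal A * (‖f y‖ₑ * ENNReal.ofReal (s / dist x y ^ (Q + 1))) ∂μ := by
        refine setLIntegral_mono' (measurableSet_far x s) fun y hy => ?_
        have hy' : s < dist x y := hy
        have hxy : x ≠ y := fun e => by rw [e, dist_self] at hy'; linarith
        rw [mul_left_comm, mul_comm, ← ENNReal.ofReal_mul hA]
        gcongr
        rw [← ofReal_norm, Real.norm_eq_abs]
        refine ENNReal.ofReal_le_ofReal ((h.reg1 x z y hxy (by linarith)).trans ?_)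
        rw [mul_div_assoc]
        gcongr
        linarith [dist_nonneg (x := x) (y := z)]
    _ ≤ ∫⁻ y in (Metric.ball x s)ᶜ, ENNReal.ofReal A * (‖f y‖ₑ * ENNReal.ofReal (s / dist x y ^ (Q + 1))) ∂μ := by
        refine lintegral_mono_set fun y hy => ?_
        simp only [mem_setOf_eq] at hy
        simp only [mem_compl_iff, mem_ball, dist_comm y x, not_lt]
        exact hy.le
    _ ≤ _ := by
        rw [lintegral_const_mul' _ _ ENNReal.ofReal_ne_top, mul_assoc A, ENNReal.ofReal_mul hA, mul_assoc]
        gcongr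
        exact hμ.tail _ hs hx'

/-- The kernel integrated over a set at distance comparable to `s` from its base point. -/
lemma CZK.shell (h : CZK μ Q k A) (hμ : HomSp μ Q V) {s : ℝ} (hs : 0 < s) {x a x' : X} {S : Set X}
    (hSm : MeasurableSet S) (hS : ∀ y ∈ S, s ≤ 2 * dist x y ∧ dist a y ≤ 2 * s)
    (hx' : dist a x' < 3 * s) (f : X → ℝ) :
    ∫⁻ y in S, ‖k x y‖ₑ * ‖f y‖ₑ ∂μ ≤
      ENNReal.ofReal (A * V * 6 ^ Q) * MF μ (fun y => ‖f y‖ₑ) x' := by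
  have hA := h.nonneg
  have hV := hμ.pos
  calc ∫⁻ y in S, ‖k x y‖ₑ * ‖f y‖ₑ ∂μ ≤ ∫⁻ y in S, ENNReal.ofReal (A * 2 ^ Q / s ^ Q) * ‖f y‖ₑ ∂μ := by
        refine setLIntegral_mono' hSm fun y hy => ?_
        have hy' := (hS y hy).1
        have hxy : x ≠ y := fun e => by rw [e, dist_self] at hy'; linarith
        gcongr
        rw [← ofReal_norm, Real.norm_eq_abs]
        refine ENNReal.ofReal_le_ofReal ((h.size x y hxy).trans ?_)
        have hd : 0 < dist x y := dist_pos.2 hxy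
        rw [div_le_div_iff₀ (by positivity) (by positivity), mul_assoc, ← mul_pow]
        gcongr
    _ ≤ ∫⁻ y in Metric.ball a (3 * s), ENNReal.ofReal (A * 2 ^ Q / s ^ Q) * ‖f y‖ₑ ∂μ := by
        refine lintegral_mono_set fun y hy => ?_
        rw [mem_ball, dist_comm]; linarith [(hS y hy).2]
    _ ≤ ENNReal.ofReal (A * 2 ^ Q / s ^ Q) * (MF μ (fun y => ‖f y‖ₑ) x' * μ (Metric.ball a (3 * s))) := by
        rw [lintegral_const_mul' _ _ ENNReal.ofReal_ne_top]
        gcongr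
        exact setLIntegral_le_MF _ (by rwa [mem_ball, dist_comm]) (hμ.ball_ne_top _ _)
    _ = _ := by
        rw [hμ.ball _ _ (by positivity), mul_comm (MF _ _ _), ← mul_assoc, ← ENNReal.ofReal_mul (by positivity)]
        congr 2
        rw [mul_pow, show (6 : ℝ) = 2 * 3 by norm_num, mul_pow]
        field_simp

/-- The maximal truncation of a singular integral operator. -/
def TS (μ : Measure X) (k : X → X → ℝ) (f : X → ℝ) (x : X) : ℝ≥0∞ :=
  ⨆ (ε : ℝ) (_ : 0 < ε), ‖Tr μ k ε f x‖ₑ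

lemma le_TS {ε : ℝ} (hε : 0 < ε) (f : X → ℝ) (x : X) : ‖Tr μ k ε f x‖ₑ ≤ TS μ k f x :=
  le_iSup₂_of_le ε hε le_rfl

lemma TS_le {f : X → ℝ} {x : X} {a : ℝ≥0∞} (h : ∀ ε, 0 < ε → ‖Tr μ k ε f x‖ₑ ≤ a) :
    TS μ k f x ≤ a := iSup₂_le h

lemma Tr_congr {f g : X → ℝ} (h : f =ᵐ[μ] g) (ε : ℝ) (x : X) : Tr μ k ε f x = Tr μ k ε g x := by
  refine integral_congr_ae (ae_restrict_of_ae ?_)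
  filter_upwards [h] with y hy; rw [hy]

lemma TS_congr {f g : X → ℝ} (h : f =ᵐ[μ] g) (x : X) : TS μ k f x = TS μ k g x := by
  simp only [TS, Tr_congr h]

variable [SFinite μ]

lemma CZK.tr_add (h : CZK μ Q k A) {ε : ℝ} (hε : 0 < ε) {f g : X → ℝ} (hf : Integrable f μ)
    (hg : Integrable g μ) (x : X) :
    Tr μ k ε (fun y => f y + g y) x = Tr μ k ε f x + Tr μ k ε g x := by
  rw [Tr, Tr, Tr, ← integral_add (h.int_far hε hf x) (h.int_far hε hg x)]
  simp only [mul_add]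

lemma CZK.ts_add (h : CZK μ Q k A) {f g : X → ℝ} (hf : Integrable f μ)
    (hg : Integrable g μ) (x : X) :
    TS μ k (fun y => f y + g y) x ≤ TS μ k f x + TS μ k g x := by
  refine TS_le fun ε hε => ?_
  rw [h.tr_add hε hf hg]
  exact (enorm_add_le _ _).trans (add_le_add (le_TS hε _ _) (le_TS hε _ _))

lemma Tr_indicator (ε : ℝ) (f : X → ℝ) {S : Set X} (hS : MeasurableSet S) (x : X) :
    Tr μ k ε (S.indicator f) x = ∫ y in {y | ε < dist x y} ∩ S, k x y * f y ∂μ := by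
  rw [Tr, ← setIntegral_indicator hS]
  congr 1; ext y
  by_cases hy : y ∈ S <;> simp [hy]

lemma split_indicator (f : X → ℝ) (S : Set X) :
    f = fun y => S.indicator f y + Sᶜ.indicator f y := by
  ext y; by_cases hy : y ∈ S <;> simp [hy]

/-- Cotlar's inequality at a point. -/
lemma CZK.cotlar (h : CZK μ Q k A) (hμ : HomSp μ Q V) {ε₀ ε : ℝ} (hε₀ : 0 < ε₀) (hε : 2 * ε₀ ≤ ε)
    {f : X → ℝ} (hf : Integrable f μ) {x z : X} (hz : dist x z < ε / 2) :
    ‖Tr μ k ε f x‖ₑ ≤ ‖Tr μ k ε₀ f z‖ₑ + ‖Tr μ k ε₀ ((Metric.closedBall x ε).indicator f) z‖ₑ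
      + ENNReal.ofReal (A * V * 2 ^ (Q + 1)) * MF μ (fun y => ‖f y‖ₑ) x := by
  have hε' : 0 < ε := by linarith
  set S := Metric.closedBall x ε with hS
  have e1 := h.tr_add hε₀ (hf.indicator (s := S) measurableSet_closedBall)
    (hf.indicator (s := Sᶜ) measurableSet_closedBall.compl) z
  rw [← split_indicator f S] at e1
  have hset : Sᶜ = {y | ε < dist x y} := by ext y; simp [hS, dist_comm]
  have e2 : Tr μ k ε₀ (Sᶜ.indicator f) z = ∫ y in {y | ε < dist x y}, k z y * f y ∂μ := by
    rw [Tr_indicator _ _ measurableSet_closedBall.compl, hset, inter_eq_self_of_subset_right]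
    intro y hy
    simp only [mem_setOf_eq] at hy ⊢
    linarith [dist_triangle x z y]
  have i1 := h.int_far hε' hf x
  have i2 : IntegrableOn (fun y => k z y * f y) {y | ε < dist x y} μ :=
    (h.int_far hε₀ hf z).mono_set fun y hy => by
      simp only [mem_setOf_eq] at hy ⊢
      linarith [dist_triangle x z y]
  have e3 : Tr μ k ε f x = Tr μ k ε₀ f z - Tr μ k ε₀ (S.indicator f) z
      + ∫ y in {y | ε < dist x y}, (k x y - k z y) * f y ∂μ := by
    simp only [sub_mul]
    rw [integral_sub i1 i2, e1, e2, Tr]; ring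
  rw [e3]
  refine (enorm_add_le _ _).trans (add_le_add (enorm_sub_le) ?_)
  refine (enorm_integral_le_lintegral_enorm _).trans ?_
  simp only [enorm_mul]
  exact h.far_diff hμ hε' (by linarith) (by simp [hε'.le]) f

lemma sq_add3 (a b c : ℝ≥0∞) : (a + b + c) ^ 2 ≤ 3 * (a ^ 2 + b ^ 2 + c ^ 2) := by
  rcases eq_or_ne a ⊤ with rfl | ha
  · simp
  rcases eq_or_ne b ⊤ with rfl | hb
  · simp
  rcases eq_or_ne c ⊤ with rfl | hc
  · simp
  lift a to ℝ≥0 using ha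
  lift b to ℝ≥0 using hb
  lift c to ℝ≥0 using hc
  norm_cast
  rw [← NNReal.coe_le_coe]
  push_cast
  nlinarith [sq_nonneg ((a : ℝ) - b), sq_nonneg ((b : ℝ) - c), sq_nonneg ((a : ℝ) - c)]

/-- Cotlar's inequality in `L²` form: the truncation at scale `ε` is controlled by maximal functions
of a finer truncation and of `f`. -/
lemma CZK.cotlar_avg (h : CZK μ Q k A) (hμ : HomSp μ Q V) {C : ℝ≥0∞}
    (hC : ∀ ε : ℝ, 0 < ε → ∀ f : X → ℝ, Integrable f μ →
      ∫⁻ x, ‖Tr μ k ε f x‖ₑ ^ 2 ∂μ ≤ C * ∫⁻ x, ‖f x‖ₑ ^ 2 ∂μ)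
    {ε₀ ε : ℝ} (hε₀ : 0 < ε₀) (hε : 2 * ε₀ ≤ ε) {f : X → ℝ} (hf : Integrable f μ) (x : X) :
    ‖Tr μ k ε f x‖ₑ ^ 2 ≤ 3 * MF μ (fun z => ‖Tr μ k ε₀ f z‖ₑ ^ 2) x +
      3 * (C * ENNReal.ofReal (4 ^ Q) + ENNReal.ofReal (A * V * 2 ^ (Q + 1)) ^ 2) *
        MF μ (fun y => ‖f y‖ₑ ^ 2) x := by
  have hε' : 0 < ε := by linarith
  set S := Metric.closedBall x ε with hS
  set B := Metric.ball x (ε / 2) with hB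
  have hB0 : μ B ≠ 0 := hμ.ball_ne_zero x (by positivity)
  have hBt : μ B ≠ ⊤ := hμ.ball_ne_top x _
  set Cd := ENNReal.ofReal (A * V * 2 ^ (Q + 1)) with hCd
  set m := MF μ (fun y => ‖f y‖ₑ) x with hm
  set m2 := MF μ (fun y => ‖f y‖ₑ ^ 2) x with hm2
  have hmm : m ^ 2 ≤ m2 := MF_sq_le hμ hf.1.enorm x
  have hpt : ∀ z ∈ B, ‖Tr μ k ε f x‖ₑ ^ 2 ≤ 3 * (‖Tr μ k ε₀ f z‖ₑ ^ 2
      + ‖Tr μ k ε₀ (S.indicator f) z‖ₑ ^ 2 + (Cd * m) ^ 2) := fun z hz =>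
    (pow_le_pow_left' (h.cotlar hμ hε₀ hε hf (by rwa [hB, mem_ball, dist_comm] at hz)) 2).trans
      (sq_add3 _ _ _)
  have hf' : Integrable (S.indicator f) μ := hf.indicator measurableSet_closedBall
  have hb : ∫⁻ z in B, ‖Tr μ k ε₀ (S.indicator f) z‖ₑ ^ 2 ∂μ ≤ C * (m2 * (ENNReal.ofReal (4 ^ Q) * μ B)) := by
    refine (setLIntegral_le_lintegral _ _).trans ((hC ε₀ hε₀ _ hf').trans ?_)
    gcongr
    have e : ∀ y, ‖S.indicator f y‖ₑ ^ 2 = S.indicator (fun y => ‖f y‖ₑ ^ 2) y := fun y => by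
      by_cases hy : y ∈ S <;> simp [hy]
    simp only [e]
    rw [lintegral_indicator measurableSet_closedBall]
    have hb4 : μ (Metric.ball x (2 * ε)) = ENNReal.ofReal (4 ^ Q) * μ B := by
      rw [← hμ.ball_mul x x (by norm_num : (0 : ℝ) < 4)]; congr 2; ring
    rw [← hb4]
    refine (lintegral_mono_set (closedBall_subset_ball (show ε < 2 * ε by linarith))).trans ?_
    exact setLIntegral_le_MF _ (mem_ball_self (by positivity)) (hμ.ball_ne_top _ _)
  have ha : ∫⁻ z in B, ‖Tr μ k ε₀ f z‖ₑ ^ 2 ∂μ ≤ MF μ (fun z => ‖Tr μ k ε₀ f z‖ₑ ^ 2) x * μ B :=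
    setLIntegral_le_MF _ (mem_ball_self (by positivity)) hBt
  have key : ‖Tr μ k ε f x‖ₑ ^ 2 * μ B ≤ (3 * MF μ (fun z => ‖Tr μ k ε₀ f z‖ₑ ^ 2) x +
      3 * (C * ENNReal.ofReal (4 ^ Q) + Cd ^ 2) * m2) * μ B := by
    calc ‖Tr μ k ε f x‖ₑ ^ 2 * μ B = ∫⁻ z in B, ‖Tr μ k ε f x‖ₑ ^ 2 ∂μ := by rw [setLIntegral_const]
      _ ≤ ∫⁻ z in B, 3 * (‖Tr μ k ε₀ f z‖ₑ ^ 2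
          + ‖Tr μ k ε₀ (S.indicator f) z‖ₑ ^ 2 + (Cd * m) ^ 2) ∂μ :=
          setLIntegral_mono' measurableSet_ball hpt
      _ = 3 * (∫⁻ z in B, ‖Tr μ k ε₀ f z‖ₑ ^ 2 ∂μ
          + ∫⁻ z in B, ‖Tr μ k ε₀ (S.indicator f) z‖ₑ ^ 2 ∂μ + (Cd * m) ^ 2 * μ B) := by
          rw [lintegral_const_mul' _ _ (by norm_num), lintegral_add_right _ measurable_const,
            lintegral_add_left' ((h.meas_tr hf.1).enorm.pow_const 2).restrict, setLIntegral_const]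
      _ ≤ 3 * (MF μ (fun z => ‖Tr μ k ε₀ f z‖ₑ ^ 2) x * μ B
          + C * (m2 * (ENNReal.ofReal (4 ^ Q) * μ B)) + (Cd ^ 2 * m2) * μ B) := by
          rw [mul_pow]
          gcongr
      _ = _ := by ring
  exact (ENNReal.mul_le_mul_iff_left hB0 hBt).1 key

/-- Weak type (2,2) of the maximal truncation. -/
lemma CZK.weak22 (h : CZK μ Q k A) (hμ : HomSp μ Q V) : ∃ C : ℝ≥0∞, C ≠ ⊤ ∧
    ∀ f : X → ℝ, Integrable f μ → ∀ t : ℝ≥0∞,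
      t ^ 2 * μ {x | t < TS μ k f x} ≤ C * ∫⁻ x, ‖f x‖ₑ ^ 2 ∂μ := by
  obtain ⟨C, hCt, hC⟩ := h.l2 hμ
  set C1 := 3 * (C * ENNReal.ofReal (4 ^ Q) + ENNReal.ofReal (A * V * 2 ^ (Q + 1)) ^ 2) with hC1
  have hC1t : C1 ≠ ⊤ := by
    refine ENNReal.mul_ne_top (by norm_num) (ENNReal.add_ne_top.2 ⟨ENNReal.mul_ne_top hCt (by simp), by simp⟩)
  refine ⟨2 * (2 ^ Q) ^ 2 * (3 * C + C1), ?_, ?_⟩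
  · exact ENNReal.mul_ne_top (ENNReal.mul_ne_top (by norm_num) (by simp))
      (ENNReal.add_ne_top.2 ⟨ENNReal.mul_ne_top (by norm_num) hCt, hC1t⟩)
  intro f hf t
  set F : ℕ → X → ℝ≥0∞ := fun n x => ⨆ (ε : ℝ) (_ : 2 * (1 / ((n : ℝ) + 1)) ≤ ε), ‖Tr μ k ε f x‖ₑ with hF
  have hn : ∀ n : ℕ, (0 : ℝ) < 1 / ((n : ℝ) + 1) := fun n => by positivity
  have hFn : ∀ n, t ^ 2 * μ {x | t < F n x} ≤ 2 * (2 ^ Q) ^ 2 * (3 * C + C1) * ∫⁻ x, ‖f x‖ₑ ^ 2 ∂μ := by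
    intro n
    have hle : ∀ x, F n x ^ 2 ≤ MF μ (fun z => 3 * ‖Tr μ k (1 / ((n : ℝ) + 1)) f z‖ₑ ^ 2) x +
        MF μ (fun y => C1 * ‖f y‖ₑ ^ 2) x := by
      intro x
      rw [← mul_MF (by norm_num), ← mul_MF hC1t]
      set R := 3 * MF μ (fun z => ‖Tr μ k (1 / ((n : ℝ) + 1)) f z‖ₑ ^ 2) x + C1 * MF μ (fun y => ‖f y‖ₑ ^ 2) x
      have : F n x ≤ R ^ (1 / 2 : ℝ) := by
        refine iSup₂_le fun ε hε => ?_
        rw [one_div, ENNReal.le_rpow_inv_iff (by norm_num)]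
        rw [show (2 : ℝ) = (2 : ℕ) by norm_num, ENNReal.rpow_natCast]
        exact h.cotlar_avg hμ hC (hn n) hε hf x
      refine (pow_le_pow_left' this 2).trans (le_of_eq ?_)
      rw [← ENNReal.rpow_natCast, ← ENNReal.rpow_mul]; norm_num
    have hw := weak_of_le hμ.doubling hle (t ^ 2)
    have hset : {x | t < F n x} = {x | t ^ 2 < F n x ^ 2} := by
      ext x; simp only [mem_setOf_eq]
      exact (ENNReal.pow_lt_pow_left_iff (by norm_num)).symm
    rw [hset]
    refine hw.trans ?_
    rw [lintegral_const_mul' _ _ (by norm_num), lintegral_const_mul' _ _ hC1t, mul_assoc (2 * _), add_mul,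
      mul_assoc 3 C]
    exact mul_le_mul_right (add_le_add (mul_le_mul_right (hC _ (hn n) f hf) 3) le_rfl) _
  have hU : {x | t < TS μ k f x} = ⋃ n, {x | t < F n x} := by
    ext x
    simp only [TS, hF, mem_setOf_eq, mem_iUnion, lt_iSup_iff]
    constructor
    · rintro ⟨ε, hε, hx⟩
      obtain ⟨n, hn⟩ := exists_nat_one_div_lt (show 0 < ε / 2 by positivity)
      exact ⟨n, ε, by linarith, hx⟩
    · rintro ⟨n, ε, hε, hx⟩
      exact ⟨ε, by linarith [hn n], hx⟩
  have hmono : Monotone fun n => {x | t < F n x} := by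
    intro n m hnm x hx
    simp only [hF, mem_setOf_eq, lt_iSup_iff] at hx ⊢
    obtain ⟨ε, hε, hx⟩ := hx
    refine ⟨ε, le_trans ?_ hε, hx⟩
    have : (n : ℝ) ≤ m := by exact_mod_cast hnm
    gcongr
  rw [hU, hmono.measure_iUnion, ENNReal.mul_iSup]
  exact iSup_le hFn

end TStar
end CZ

namespace CZ

/-! ### Weak type (1,1) of maximal truncations -/

open Set Metric

variable {X : Type*} [MetricSpace X] [MeasurableSpace X] [BorelSpace X]
  [SecondCountableTopology X] {μ : Measure X} {Q : ℕ} {V : ℝ} {k : X → X → ℝ} {A : ℝ}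

lemma HomSp.locFin (hμ : HomSp μ Q V) : IsLocallyFiniteMeasure μ :=
  ⟨fun x => ⟨Metric.ball x 1, ball_mem_nhds x one_pos, (hμ.ball_ne_top x 1).lt_top⟩⟩

lemma HomSp.unif (hμ : HomSp μ Q V) : IsUnifLocDoublingMeasure μ := by
  refine ⟨⟨2 ^ Q, ?_⟩⟩
  filter_upwards [self_mem_nhdsWithin] with ε (hε : 0 < ε) x
  rw [hμ.closedBall x hε.le, hμ.closedBall x (by positivity), mul_pow]
  have hV := hμ.pos
  rw [show V * (2 ^ Q * ε ^ Q) = 2 ^ Q * (V * ε ^ Q) by ring, ENNReal.ofReal_mul (by positivity)]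
  simp

lemma HomSp.cball_ae (hμ : HomSp μ Q V) (x : X) {r : ℝ} (hr : 0 < r) :
    Metric.closedBall x r =ᵐ[μ] Metric.ball x r := by
  refine (ae_eq_of_subset_of_measure_ge ball_subset_closedBall ?_
    measurableSet_ball.nullMeasurableSet ?_).symm
  · rw [hμ.ball x r hr, hμ.closedBall x hr.le]
  · rw [hμ.closedBall x hr.le]; simp

/-- Lebesgue differentiation: `f ≤ M f` almost everywhere. -/
lemma HomSp.le_MF_ae (hμ : HomSp μ Q V) {f : X → ℝ≥0∞} (hf : AEMeasurable f μ)
    (hfi : ∫⁻ x, f x ∂μ ≠ ⊤) : ∀ᵐ x ∂μ, f x ≤ MF μ f x := by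
  have := hμ.locFin
  have := hμ.unif
  filter_upwards [(IsUnifLocDoublingMeasure.vitaliFamily μ 1).ae_tendsto_lintegral_div hf hfi] with x hx
  have h1 := hx.comp (IsUnifLocDoublingMeasure.tendsto_closedBall_filterAt μ (K := 1) (fun _ : ℝ => x)
    (l := 𝓝[>] (0 : ℝ)) (fun δ => δ) tendsto_id (by
      filter_upwards [self_mem_nhdsWithin] with δ (hδ : 0 < δ)
      exact mem_closedBall_self (by linarith)))
  refine le_of_tendsto h1 ?_
  filter_upwards [self_mem_nhdsWithin] with δ (hδ : 0 < δ)
  simp only [Function.comp]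
  rw [setLIntegral_congr (hμ.cball_ae x hδ), measure_congr (hμ.cball_ae x hδ)]
  exact le_MF μ f (mem_ball_self hδ)

lemma HomSp.radius_le (hμ : HomSp μ Q V) {Ω : Set X} (hΩ : μ Ω ≠ ⊤) :
    ∃ R : ℝ, ∀ x s, Metric.ball x s ⊆ Ω → s ≤ R := by
  have hV := hμ.pos
  refine ⟨max 1 ((μ Ω).toReal / V), fun x s hs => ?_⟩
  by_contra hcon
  push Not at hcon
  have h1 : 1 < s := (le_max_left _ _).trans_lt hcon
  have h2 := (le_max_right _ _).trans_lt hcon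
  have h3 := measure_mono (μ := μ) hs
  rw [hμ.ball x s (by linarith), ENNReal.ofReal_le_iff_le_toReal hΩ] at h3
  rw [div_lt_iff₀ hV] at h2
  have : s ≤ s ^ Q := le_self_pow₀ h1.le (by have := hμ.one_le; omega)
  nlinarith

lemma HomSp.whitney (hμ : HomSp μ Q V) [Nonempty X] {Ω : Set X} (hΩ : IsOpen Ω) (hfin : μ Ω ≠ ⊤) :
    ∃ u r, Whitney Ω u r := by
  obtain ⟨R, hR⟩ := hμ.radius_le hfin
  refine exists_whitney hΩ ?_ hR
  by_contra hcon
  rw [not_nonempty_iff_eq_empty, compl_empty_iff] at hcon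
  obtain ⟨x⟩ := ‹Nonempty X›
  have := hR x (R + 1) (by rw [hcon]; exact subset_univ _)
  linarith

/-- Disjoint sets squeezed between a disjoint family and a covering one. -/
lemma exists_partition {ι α : Type*} [Countable ι] [MeasurableSpace α] {B C : ι → Set α}
    (hB : ∀ i, MeasurableSet (B i)) (hC : ∀ i, MeasurableSet (C i)) (hBC : ∀ i, B i ⊆ C i)
    (hd : Pairwise (Function.onFun Disjoint B)) :
    ∃ S : ι → Set α, (∀ i, MeasurableSet (S i)) ∧ Pairwise (Function.onFun Disjoint S) ∧
      (∀ i, B i ⊆ S i) ∧ (∀ i, S i ⊆ C i) ∧ ⋃ i, S i = ⋃ i, C i := by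
  have := Encodable.ofCountable ι
  set P : ι → Set α := fun i => ⋃ j, ⋃ (_ : Encodable.encode j < Encodable.encode i), C j with hP
  set S : ι → Set α := fun i => B i ∪ (C i \ ((⋃ j, B j) ∪ P i)) with hS
  have hlt : ∀ i j, Encodable.encode i < Encodable.encode j → Disjoint (S i) (S j) := by
    intro i j hij
    rw [Set.disjoint_left]
    rintro x (hx | hx) (hy | hy)
    · exact Set.disjoint_left.1 (hd (fun e => by simp [e] at hij : i ≠ j)) hx hy
    · exact hy.2 (Or.inl (mem_iUnion.2 ⟨i, hx⟩))
    · exact hx.2 (Or.inl (mem_iUnion.2 ⟨j, hy⟩))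
    · exact hy.2 (Or.inr (mem_iUnion₂.2 ⟨i, hij, hx.1⟩))
  refine ⟨S, fun i => ?_, ?_, fun i => subset_union_left, fun i => ?_, ?_⟩
  · exact (hB i).union ((hC i).diff ((MeasurableSet.iUnion hB).union
      (MeasurableSet.iUnion fun j => MeasurableSet.iUnion fun _ => hC j)))
  · intro i j hij
    rcases lt_trichotomy (Encodable.encode i) (Encodable.encode j) with h | h | h
    · exact hlt i j h
    · exact absurd (Encodable.encode_injective h) hij
    · exact (hlt j i h).symm
  · exact union_subset (hBC i) diff_subset
  · refine subset_antisymm (iUnion_mono fun i => union_subset (hBC i) diff_subset) ?_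
    intro x hx
    by_cases hxB : x ∈ ⋃ j, B j
    · obtain ⟨j, hj⟩ := mem_iUnion.1 hxB
      exact mem_iUnion.2 ⟨j, Or.inl hj⟩
    obtain ⟨i, hi⟩ := mem_iUnion.1 hx
    -- the covering set of least code containing `x`
    have hex : ∃ m, ∃ i, Encodable.encode i = m ∧ x ∈ C i := ⟨_, i, rfl, hi⟩
    classical
    obtain ⟨i₀, hi₀, hx₀⟩ := Nat.find_spec hex
    refine mem_iUnion.2 ⟨i₀, Or.inr ⟨hx₀, ?_⟩⟩
    rintro (h | h)
    · exact hxB h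
    · obtain ⟨j, hj, hxj⟩ := mem_iUnion₂.1 h
      exact Nat.find_min hex (hi₀ ▸ hj) ⟨j, rfl, hxj⟩

/-- The bad part: functions supported in the Whitney pieces `S i`, with mean zero on each. -/
lemma CZK.bad (h : CZK μ Q k A) (hμ : HomSp μ Q V) [SFinite μ] {ι : Type*} [Countable ι] {S : ι → Set X}
    (hSm : ∀ i, MeasurableSet (S i)) (hSd : Pairwise (Function.onFun Disjoint S)) {z : ι → X} {r : ι → ℝ}
    (hr : ∀ i, 0 < r i) (hS : ∀ i, S i ⊆ Metric.ball (z i) (4 * r i)) {b : X → ℝ} (hb : Integrable b μ)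
    (hb0 : ∀ x, x ∉ ⋃ i, S i → b x = 0) (hbi : ∀ i, ∫ y in S i, b y ∂μ = 0) {x : X}
    (hx : ∀ i, 10 * r i ≤ dist x (z i)) :
    TS μ k b x ≤ (∑' i, ENNReal.ofReal (4 * A) * (∫⁻ y in S i, ‖b y‖ₑ ∂μ) *
        ENNReal.ofReal (r i / dist x (z i) ^ (Q + 1)))
      + ENNReal.ofReal (A * V * 6 ^ Q) * MF μ (fun y => ‖b y‖ₑ) x := by
  have hA := h.nonneg
  refine TS_le fun ε hε => ?_
  set F := {y | ε < dist x y} with hF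
  have hFm : MeasurableSet F := measurableSet_far x ε
  set E := {y | ε < dist x y ∧ dist x y ≤ 3 * ε} with hE
  have hEm : MeasurableSet E := hFm.inter
    (measurableSet_le (f := fun y => dist x y) (g := fun _ => 3 * ε) (by fun_prop) (by fun_prop))
  set T : ι → ℝ≥0∞ := fun i => ENNReal.ofReal (4 * A) * (∫⁻ y in S i, ‖b y‖ₑ ∂μ) *
        ENNReal.ofReal (r i / dist x (z i) ^ (Q + 1))
  have hIg := h.int_far hε hb x
  -- each piece is either off the truncation sphere or close to it
  have hpiece : ∀ i, ‖∫ y in F ∩ S i, k x y * b y ∂μ‖ₑ ≤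
      T i + ∫⁻ y in E ∩ S i, ‖k x y‖ₑ * ‖b y‖ₑ ∂μ := by
    intro i
    have hri := hr i
    have hxi := hx i
    by_cases hc1 : S i ⊆ F
    · refine le_add_right ?_
      rw [inter_eq_self_of_subset_right hc1]
      have e : ∫ y in S i, k x y * b y ∂μ = ∫ y in S i, (k x y - k x (z i)) * b y ∂μ := by
        simp only [sub_mul]
        rw [integral_sub (hIg.mono_set hc1) (hb.integrableOn.const_mul _), integral_const_mul, hbi i]
        simp
      rw [e]
      refine (enorm_integral_le_lintegral_enorm _).trans ?_
      have : ∀ y ∈ S i, ‖(k x y - k x (z i)) * b y‖ₑ ≤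
          (ENNReal.ofReal (4 * A) * ENNReal.ofReal (r i / dist x (z i) ^ (Q + 1))) * ‖b y‖ₑ := by
        intro y hy
        have hy' : dist y (z i) < 4 * r i := hS i hy
        rw [enorm_mul]
        refine mul_le_mul_left ?_ _
        rw [← ENNReal.ofReal_mul (by positivity), Real.enorm_eq_ofReal_abs, abs_sub_comm]
        refine ENNReal.ofReal_le_ofReal ?_
        have hd : 0 < dist x (z i) := by linarith
        refine (h.reg2 x (z i) y (dist_pos.1 hd) (by rw [dist_comm (z i)]; linarith)).trans ?_
        rw [dist_comm (z i), mul_comm 4 A, mul_assoc, mul_div_assoc, ← mul_div_assoc 4]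
        gcongr
      refine (setLIntegral_mono' (hSm i) this).trans ?_
      rw [lintegral_const_mul' _ _ (by finiteness)]
      exact le_of_eq (by ring)
    · obtain ⟨y₀, hy₀, hy₀F⟩ := not_subset.1 hc1
      have hy₀' : dist y₀ (z i) < 4 * r i := hS i hy₀
      have hy₀F' : dist x y₀ ≤ ε := not_lt.1 hy₀F
      have hre : 6 * r i ≤ ε := by
        have := dist_triangle x y₀ (z i)
        linarith
      refine le_add_left ?_
      have hsub : F ∩ S i = E ∩ S i := by
        ext y
        simp only [hF, hE, mem_inter_iff, mem_setOf_eq]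
        constructor
        · rintro ⟨hy, hyS⟩
          have hyS' : dist y (z i) < 4 * r i := hS i hyS
          have h1 := dist_triangle x y₀ y
          have h2 := dist_triangle_right y₀ y (z i)
          exact ⟨⟨hy, by linarith⟩, hyS⟩
        · rintro ⟨hy, hyS⟩; exact ⟨hy.1, hyS⟩
      rw [hsub]
      refine (enorm_integral_le_lintegral_enorm _).trans (le_of_eq ?_)
      simp only [enorm_mul]
  have hsum : Tr μ k ε b x = ∑' i, ∫ y in F ∩ S i, k x y * b y ∂μ := by
    rw [← integral_iUnion (fun i => hFm.inter (hSm i))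
      (fun i j hij => (hSd hij).mono inter_subset_right inter_subset_right)
      (hIg.mono_set (iUnion_subset fun i => inter_subset_left)), ← inter_iUnion]
    refine (setIntegral_eq_of_subset_of_forall_diff_eq_zero hFm inter_subset_left ?_)
    rintro y ⟨hy, hy'⟩
    rw [hb0 y fun hyS => hy' ⟨hy, hyS⟩, mul_zero]
  rw [hsum]
  refine (enorm_tsum_le_tsum_enorm).trans ((ENNReal.tsum_le_tsum hpiece).trans ?_)
  rw [ENNReal.tsum_add]
  refine add_le_add le_rfl ?_
  rw [← lintegral_iUnion (fun i => hEm.inter (hSm i))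
      (fun i j hij => (hSd hij).mono inter_subset_right inter_subset_right), ← inter_iUnion]
  refine (lintegral_mono_set inter_subset_left).trans ?_
  refine h.shell hμ (s := 3 / 2 * ε) (a := x) (by positivity) hEm ?_ (by simp; positivity) b
  rintro y ⟨h1, h2⟩
  exact ⟨by linarith, by linarith⟩

/-- A simple function built on a countable partition. -/
lemma exists_pw {ι : Type*} {S : ι → Set X} (hSd : Pairwise (Function.onFun Disjoint S)) (c : ι → ℝ) :
    ∃ g : X → ℝ, (∀ i, ∀ x ∈ S i, g x = c i) ∧ ∀ x, x ∉ ⋃ i, S i → g x = 0 := by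
  classical
  refine ⟨fun x => if hx : ∃ i, x ∈ S i then c hx.choose else 0, fun i x hx => ?_, fun x hx => ?_⟩
  · have hex : ∃ i, x ∈ S i := ⟨i, hx⟩
    simp only [dif_pos hex]
    by_cases he : hex.choose = i
    · rw [he]
    · exact absurd hx (Set.disjoint_left.1 (hSd he) hex.choose_spec)
  · exact dif_neg (by simpa using hx)

lemma enorm_avg_le {S : Set X} {f : X → ℝ} {m : ℝ≥0∞}
    (hm : ∫⁻ y in S, ‖f y‖ₑ ∂μ ≤ m * μ S) (h0 : μ S ≠ 0) (ht : μ S ≠ ⊤) :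
    ‖(μ S).toReal⁻¹ * ∫ y in S, f y ∂μ‖ₑ ≤ m ∧
    ‖(μ S).toReal⁻¹ * ∫ y in S, f y ∂μ‖ₑ * μ S ≤ ∫⁻ y in S, ‖f y‖ₑ ∂μ := by
  have e : ‖(μ S).toReal⁻¹‖ₑ = (μ S)⁻¹ := by
    rw [Real.enorm_eq_ofReal (by positivity), ENNReal.ofReal_inv_of_pos (ENNReal.toReal_pos h0 ht),
      ENNReal.ofReal_toReal ht]
  have h1 : ‖(μ S).toReal⁻¹ * ∫ y in S, f y ∂μ‖ₑ ≤ (μ S)⁻¹ * ∫⁻ y in S, ‖f y‖ₑ ∂μ := by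
    rw [enorm_mul, e]
    exact mul_le_mul_right (enorm_integral_le_lintegral_enorm _) _
  constructor
  · refine h1.trans ((mul_le_mul_right hm _).trans (le_of_eq ?_))
    rw [mul_comm m, ← mul_assoc, ENNReal.inv_mul_cancel h0 ht, one_mul]
  · refine (mul_le_mul_left h1 _).trans (le_of_eq ?_)
    rw [mul_comm, ← mul_assoc, ENNReal.mul_inv_cancel h0 ht, one_mul]

/-- Weak type (1,1) of the maximal truncation, by the Calderón–Zygmund decomposition. -/
lemma CZK.weak11 (h : CZK μ Q k A) (hμ : HomSp μ Q V) [SFinite μ] : ∃ C : ℝ≥0∞, C ≠ ⊤ ∧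
    ∀ f : X → ℝ, Integrable f μ → ∀ t : ℝ≥0∞,
      t * μ {x | t < TS μ k f x} ≤ C * ∫⁻ x, ‖f x‖ₑ ∂μ := by
  obtain ⟨C, hCt, hC⟩ := h.weak22 hμ
  have hA := h.nonneg
  have hV := hμ.pos
  set c12 : ℝ≥0∞ := ENNReal.ofReal (12 ^ Q) with hc12
  set cW : ℝ≥0∞ := ENNReal.ofReal (4 * A) * ENNReal.ofReal (V * 2 ^ (Q + 1)) with hcW
  set cM : ℝ≥0∞ := ENNReal.ofReal (A * V * 6 ^ Q) with hcM
  refine ⟨(2 ^ Q) ^ 2 + 4 * C * (1 + c12) * 2 + 4 * cW * 2 + 4 * cM * (2 ^ Q) ^ 2 * 2, by finiteness, ?_⟩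
  intro f hf t
  set N := ∫⁻ x, ‖f x‖ₑ ∂μ with hN
  have hNt : N ≠ ⊤ := hf.2.ne
  rcases eq_or_ne t 0 with rfl | ht0
  · simp
  rcases eq_or_ne t ⊤ with rfl | htt
  · simp
  rcases isEmpty_or_nonempty X with hX | hX
  · have : {x | t < TS μ k f x} = ∅ := Set.eq_empty_of_isEmpty _
    rw [this]; simp
  set Ω := {x | t < MF μ (fun y => ‖f y‖ₑ) x} with hΩ
  have hΩw : t * μ Ω ≤ (2 ^ Q) ^ 2 * N := MF_weak hμ.doubling _ t
  have hΩt : μ Ω ≠ ⊤ := by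
    intro hcon
    rw [hcon, ENNReal.mul_top ht0] at hΩw
    exact absurd hΩw (not_le.2 (by finiteness))
  obtain ⟨u, r, W⟩ := hμ.whitney (Ω := Ω) (isOpen_lt_MF μ _ t) hΩt
  have : Countable u := W.countable.to_subtype
  have hpos : ∀ i : u, 0 < r i := fun i => W.pos i i.2
  obtain ⟨S, hSm, hSd, hBS, hSC, hSU⟩ := exists_partition (ι := u) (B := fun i => Metric.ball (i : X) (r i))
    (C := fun i => Metric.ball (i : X) (4 * r i)) (fun i => measurableSet_ball) (fun i => measurableSet_ball)
    (fun i => ball_subset_ball (by linarith [hpos i]))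
    (fun i j hij => W.disj i.2 j.2 (fun e => hij (Subtype.ext e)))
  have hUΩ : ⋃ i, S i = Ω := by
    rw [hSU, ← biUnion_eq_iUnion u fun x _ => Metric.ball x (4 * r x)]
    exact W.cover.symm
  have hS0 : ∀ i, μ (S i) ≠ 0 := fun i h0 =>
    hμ.ball_ne_zero (i : X) (hpos i) (measure_mono_null (hBS i) h0)
  have hSt : ∀ i, μ (S i) ≠ ⊤ := fun i => ((measure_mono (hSC i)).trans_lt (hμ.ball_ne_top _ _).lt_top).ne
  have hfS : ∀ i, ∫⁻ y in S i, ‖f y‖ₑ ∂μ ≤ (c12 * t) * μ (S i) := by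
    intro i
    obtain ⟨a, haΩ, ha⟩ := W.touch i i.2
    have hri := hpos i
    refine (lintegral_mono_set ((hSC i).trans (ball_subset_ball (show 4 * r i ≤ 12 * r i by linarith)))).trans ?_
    refine (setLIntegral_le_MF _ (x := a) (by rw [mem_ball, dist_comm]; linarith) (hμ.ball_ne_top _ _)).trans ?_
    rw [hμ.ball_mul i (i : X) (by norm_num : (0 : ℝ) < 12)]
    calc _ ≤ t * (ENNReal.ofReal (12 ^ Q) * μ (S i)) :=
          mul_le_mul' (not_lt.1 haΩ) (mul_le_mul_right (measure_mono (hBS i)) _)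
      _ = _ := by ring
  obtain ⟨φ, hφ, hφ0⟩ := exists_pw hSd fun i => (μ (S i)).toReal⁻¹ * ∫ y in S i, f y ∂μ
  have hΩm : MeasurableSet Ω := (isOpen_lt_MF μ _ t).measurableSet
  have hφm : AEStronglyMeasurable φ μ := by
    have h1 : AEStronglyMeasurable φ (μ.restrict Ω) := by
      rw [← hUΩ, aestronglyMeasurable_iUnion_iff]
      intro i
      refine (aestronglyMeasurable_const (b := (μ (S i)).toReal⁻¹ * ∫ y in S i, f y ∂μ)).congr ?_
      filter_upwards [ae_restrict_mem (hSm i)] with y hy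
      exact (hφ i y hy).symm
    have h2 := h1.indicator hΩm
    have h3 := (aestronglyMeasurable_indicator_iff hΩm).2 h1
    refine h3.congr (Eventually.of_forall fun y => ?_)
    by_cases hy : y ∈ Ω
    · simp [hy]
    · simp [hy, hφ0 y (by rwa [hUΩ])]
  have hφΩ : ∀ g : X → ℝ≥0∞, (∀ y, y ∉ Ω → g y = 0) →
      ∫⁻ y, g y ∂μ = ∑' i, ∫⁻ y in S i, g y ∂μ := by
    intro g hg
    rw [← lintegral_iUnion hSm hSd, hUΩ, ← lintegral_indicator hΩm]
    congr 1; ext y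
    by_cases hy : y ∈ Ω <;> simp [hy, hg]
  have hφS : ∀ i, ∫⁻ y in S i, ‖φ y‖ₑ ∂μ ≤ ∫⁻ y in S i, ‖f y‖ₑ ∂μ := by
    intro i
    have e : ∫⁻ y in S i, ‖φ y‖ₑ ∂μ = ∫⁻ y in S i, ‖(μ (S i)).toReal⁻¹ * ∫ y in S i, f y ∂μ‖ₑ ∂μ :=
      setLIntegral_congr_fun (hSm i) fun y hy => by simp only [hφ i y hy]
    rw [e, setLIntegral_const]
    exact (enorm_avg_le (hfS i) (hS0 i) (hSt i)).2
  have hfsum : ∑' i, ∫⁻ y in S i, ‖f y‖ₑ ∂μ ≤ N := by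
    rw [← lintegral_iUnion hSm hSd]
    exact setLIntegral_le_lintegral _ _
  have hφN : ∫⁻ y, ‖φ y‖ₑ ∂μ ≤ N := by
    rw [hφΩ _ fun y hy => by rw [hφ0 y (by rwa [hUΩ]), enorm_zero]]
    exact (ENNReal.tsum_le_tsum hφS).trans hfsum
  have hφi : Integrable φ μ := ⟨hφm, hφN.trans_lt hNt.lt_top⟩
  -- bad and good parts
  set b : X → ℝ := fun y => Ω.indicator f y - φ y with hb
  set g : X → ℝ := fun y => Ωᶜ.indicator f y + φ y with hg
  have hbi : Integrable b μ := (hf.indicator hΩm).sub hφi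
  have hgi : Integrable g μ := (hf.indicator hΩm.compl).add hφi
  have hfbg : f = fun y => g y + b y := by
    ext y; simp only [hg, hb]
    by_cases hy : y ∈ Ω <;> simp [hy]
  have hindN : ∀ S' : Set X, ∫⁻ y, ‖S'.indicator f y‖ₑ ∂μ ≤ N := fun S' =>
    lintegral_mono fun y => by by_cases hy : y ∈ S' <;> simp [hy]
  have hbN : ∫⁻ y, ‖b y‖ₑ ∂μ ≤ 2 * N := by
    refine (lintegral_mono fun y => enorm_sub_le).trans ?_
    rw [lintegral_add_right' _ hφm.enorm, two_mul]
    exact add_le_add (hindN _) hφN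
  have hgN : ∫⁻ y, ‖g y‖ₑ ∂μ ≤ 2 * N := by
    refine (lintegral_mono fun y => enorm_add_le _ _).trans ?_
    rw [lintegral_add_right' _ hφm.enorm, two_mul]
    exact add_le_add (hindN _) hφN
  have hgle : ∀ᵐ y ∂μ, ‖g y‖ₑ ≤ (1 + c12) * t := by
    filter_upwards [hμ.le_MF_ae hf.1.enorm hNt] with y hy
    by_cases hyΩ : y ∈ Ω
    · obtain ⟨i, hi⟩ := mem_iUnion.1 (hUΩ.symm ▸ hyΩ : y ∈ ⋃ i, S i)
      simp only [hg, indicator_of_notMem (fun h : y ∈ Ωᶜ => h hyΩ), zero_add, hφ i y hi]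
      refine (enorm_avg_le (hfS i) (hS0 i) (hSt i)).1.trans ?_
      exact mul_le_mul_left (le_add_self) _
    · simp only [hg, indicator_of_mem (show y ∈ Ωᶜ from hyΩ), hφ0 y (by rwa [hUΩ]), add_zero]
      refine hy.trans ((not_lt.1 hyΩ).trans ?_)
      exact le_mul_of_one_le_left' (le_self_add)
  have hg2 : ∫⁻ y, ‖g y‖ₑ ^ 2 ∂μ ≤ (1 + c12) * t * (2 * N) := by
    calc ∫⁻ y, ‖g y‖ₑ ^ 2 ∂μ ≤ ∫⁻ y, (1 + c12) * t * ‖g y‖ₑ ∂μ := by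
          refine lintegral_mono_ae ?_
          filter_upwards [hgle] with y hy
          rw [sq]; exact mul_le_mul_left hy _
      _ ≤ _ := by
          rw [lintegral_const_mul' _ _ (by finiteness)]
          exact mul_le_mul_right hgN _
  set Wf : X → ℝ≥0∞ := fun x => ∑' i : u, ENNReal.ofReal (4 * A) * (∫⁻ y in S i, ‖b y‖ₑ ∂μ) *
        ENNReal.ofReal (r i / dist x i ^ (Q + 1)) with hWf
  have hbad : ∀ x, x ∉ Ω → TS μ k b x ≤ Wf x + MF μ (fun y => cM * ‖b y‖ₑ) x := by
    intro x hx
    rw [← mul_MF (by finiteness)]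
    refine h.bad hμ hSm hSd hpos hSC hbi ?_ ?_ ?_
    · intro y hy
      simp [hb, hφ0 y hy, indicator_of_notMem (show y ∉ Ω by rwa [← hUΩ])]
    · intro i
      have e1 : ∫ y in S i, b y ∂μ = ∫ y in S i, f y ∂μ - ∫ y in S i, φ y ∂μ := by
        rw [← integral_sub hf.integrableOn hφi.integrableOn]
        refine setIntegral_congr_fun (hSm i) fun y hy => ?_
        simp only [hb]
        rw [indicator_of_mem (hUΩ ▸ mem_iUnion.2 ⟨i, hy⟩)]
      rw [e1, setIntegral_congr_fun (hSm i) (hφ i), setIntegral_const, Measure.real, smul_eq_mul,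
        ← mul_assoc, mul_inv_cancel₀ (ENNReal.toReal_pos (hS0 i) (hSt i)).ne', one_mul, sub_self]
    · intro i
      by_contra hcon
      exact hx (W.sub i i.2 (by rw [mem_ball]; exact not_le.1 hcon))
  have hWi : ∫⁻ x in Ωᶜ, Wf x ∂μ ≤ cW * (2 * N) := by
    rw [lintegral_tsum fun i => by
      refine (Measurable.const_mul ?_ _).aemeasurable
      exact ENNReal.measurable_ofReal.comp (by fun_prop)]
    have : ∀ i : u, ∫⁻ x in Ωᶜ, ENNReal.ofReal (4 * A) * (∫⁻ y in S i, ‖b y‖ₑ ∂μ) *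
        ENNReal.ofReal (r i / dist x i ^ (Q + 1)) ∂μ ≤ cW * ∫⁻ y in S i, ‖b y‖ₑ ∂μ := by
      intro i
      have hfin : ∫⁻ y in S i, ‖b y‖ₑ ∂μ ≠ ⊤ :=
        ((setLIntegral_le_lintegral _ _).trans_lt hbi.2).ne
      rw [lintegral_const_mul' _ _ (by finiteness)]
      have h1 : ∫⁻ x in Ωᶜ, ENNReal.ofReal (r i / dist x i ^ (Q + 1)) ∂μ ≤ ENNReal.ofReal (V * 2 ^ (Q + 1)) := by
        refine le_trans ?_ (hμ.tail_one (i : X) (hpos i))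
        simp only [dist_comm _ (i : X)]
        refine lintegral_mono_set (compl_subset_compl.2 (fun y hy => W.sub i i.2 (ball_subset_ball ?_ hy)))
        linarith [hpos i]
      refine (mul_le_mul_right h1 _).trans (le_of_eq ?_)
      rw [hcW]; ring
    refine (ENNReal.tsum_le_tsum this).trans ?_
    rw [ENNReal.tsum_mul_left, ← lintegral_iUnion hSm hSd]
    exact mul_le_mul_right ((setLIntegral_le_lintegral _ _).trans hbN) _
  have ht4 : t / 4 ≠ 0 := by simp [ht0]
  have e2 : t = 2 * (t / 2) := (ENNReal.mul_div_cancel (by norm_num) (by norm_num)).symm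
  have e4 : t = 4 * (t / 4) := (ENNReal.mul_div_cancel (by norm_num) (by norm_num)).symm
  have hsub : {x | t < TS μ k f x} ⊆ Ω ∪ {x | t / 2 < TS μ k g x} ∪ ({x | t / 4 ≤ Wf x} ∩ Ωᶜ) ∪
      {x | t / 4 < MF μ (fun y => cM * ‖b y‖ₑ) x} := by
    intro x hx
    by_contra hcon
    simp only [mem_union, mem_inter_iff, mem_setOf_eq, not_or, not_and, not_lt, mem_compl_iff] at hcon
    obtain ⟨⟨⟨h1, h2⟩, h3⟩, h4⟩ := hcon
    have h3' : Wf x ≤ t / 4 := (not_le.1 fun h => h3 h h1).le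
    have : TS μ k f x ≤ t / 2 + (t / 4 + t / 4) := by
      rw [hfbg]
      exact (h.ts_add hgi hbi x).trans (add_le_add h2 ((hbad x h1).trans (add_le_add h3' h4)))
    have e : t / 4 + t / 4 = t / 2 := by
      rw [← two_mul, ENNReal.div_eq_inv_mul, ENNReal.div_eq_inv_mul, ← mul_assoc]
      congr 1
      rw [show (4 : ℝ≥0∞) = 2 * 2 by norm_num, ENNReal.mul_inv (by simp) (by simp), ← mul_assoc,
        ENNReal.mul_inv_cancel (by norm_num) (by norm_num), one_mul]
    rw [e, ENNReal.add_halves] at this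
    exact absurd hx (not_lt.2 this)
  have m2 : t * μ {x | t / 2 < TS μ k g x} ≤ 4 * C * (1 + c12) * 2 * N := by
    have h1 := (hC g hgi (t / 2)).trans (mul_le_mul_right hg2 C)
    generalize μ {x | t / 2 < TS μ k g x} = m at *
    rw [← ENNReal.mul_le_mul_iff_right ht0 htt]
    calc t * (t * m) = 4 * ((t / 2) ^ 2 * m) := by
          generalize hs : t / 2 = s at *
          rw [e2]; ring
      _ ≤ 4 * (C * ((1 + c12) * t * (2 * N))) := mul_le_mul_right h1 _
      _ = _ := by ring
  have m3 : t * μ ({x | t / 4 ≤ Wf x} ∩ Ωᶜ) ≤ 4 * cW * 2 * N := by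
    have h1 : (t / 4) * μ ({x | t / 4 ≤ Wf x} ∩ Ωᶜ) ≤ cW * (2 * N) := by
      refine le_trans ?_ hWi
      rw [← Measure.restrict_apply' hΩm.compl]
      refine mul_meas_ge_le_lintegral₀ ?_ _
      refine AEMeasurable.ennreal_tsum fun i => ?_
      refine (Measurable.const_mul ?_ _).aemeasurable
      exact ENNReal.measurable_ofReal.comp (by fun_prop)
    generalize μ ({x | t / 4 ≤ Wf x} ∩ Ωᶜ) = m at *
    calc t * m = 4 * ((t / 4) * m) := by
          generalize hs : t / 4 = s at *
          rw [e4]; ring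
      _ ≤ 4 * (cW * (2 * N)) := mul_le_mul_right h1 _
      _ = _ := by ring
  have m4 : t * μ {x | t / 4 < MF μ (fun y => cM * ‖b y‖ₑ) x} ≤ 4 * cM * (2 ^ Q) ^ 2 * 2 * N := by
    have h1 := MF_weak hμ.doubling (fun y => cM * ‖b y‖ₑ) (t / 4)
    rw [lintegral_const_mul' _ _ (by finiteness)] at h1
    have h2 := h1.trans (mul_le_mul_right (mul_le_mul_right hbN cM) _)
    generalize μ {x | t / 4 < MF μ (fun y => cM * ‖b y‖ₑ) x} = m at *
    calc t * m = 4 * ((t / 4) * m) := by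
          generalize hs : t / 4 = s at *
          rw [e4]; ring
      _ ≤ 4 * ((2 ^ Q) ^ 2 * (cM * (2 * N))) := mul_le_mul_right h2 _
      _ = _ := by ring
  calc t * μ {x | t < TS μ k f x} ≤ t * (μ Ω + μ {x | t / 2 < TS μ k g x} + μ ({x | t / 4 ≤ Wf x} ∩ Ωᶜ) +
        μ {x | t / 4 < MF μ (fun y => cM * ‖b y‖ₑ) x}) := by
        refine mul_le_mul_right ((measure_mono hsub).trans ?_) _
        refine (measure_union_le _ _).trans (add_le_add ((measure_union_le _ _).trans
          (add_le_add (measure_union_le _ _) le_rfl)) le_rfl)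
    _ = t * μ Ω + t * μ {x | t / 2 < TS μ k g x} + t * μ ({x | t / 4 ≤ Wf x} ∩ Ωᶜ) +
        t * μ {x | t / 4 < MF μ (fun y => cM * ‖b y‖ₑ) x} := by ring
    _ ≤ (2 ^ Q) ^ 2 * N + 4 * C * (1 + c12) * 2 * N + 4 * cW * 2 * N + 4 * cM * (2 ^ Q) ^ 2 * 2 * N :=
        add_le_add (add_le_add (add_le_add hΩw m2) m3) m4
    _ = _ := by ring

end CZ

namespace CZ

/-! ### Principal values of integrable functions -/

open Set Metric

variable {X : Type*} [MetricSpace X] [MeasurableSpace X] [BorelSpace X]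
  [SecondCountableTopology X] {μ : Measure X} {Q : ℕ} {V : ℝ} {k : X → X → ℝ} {A : ℝ}

/-- Almost every point has a neighbourhood on which the function is constant. -/
def LocConst (μ : Measure X) (g : X → ℝ) : Prop :=
  Integrable g μ ∧ ∀ᵐ x ∂μ, ∃ δ > 0, ∀ y ∈ Metric.ball x δ, g y = g x

lemma LocConst.add {f g : X → ℝ} (hf : LocConst μ f) (hg : LocConst μ g) : LocConst μ (f + g) := by
  refine ⟨hf.1.add hg.1, ?_⟩
  filter_upwards [hf.2, hg.2] with x ⟨δ, hδ, h1⟩ ⟨δ', hδ', h2⟩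
  refine ⟨min δ δ', lt_min hδ hδ', fun y hy => ?_⟩
  simp only [Pi.add_apply]
  rw [h1 y (ball_subset_ball (min_le_left _ _) hy), h2 y (ball_subset_ball (min_le_right _ _) hy)]

/-- Indicators of finite unions of balls approximate indicators of measurable sets. -/
lemma LocConst.approx (hμ : HomSp μ Q V) (c : ℝ) {s : Set X} (hs : MeasurableSet s) (hst : μ s < ⊤)
    {ε : ℝ≥0∞} (hε : ε ≠ 0) :
    ∃ g : X → ℝ, eLpNorm (g - s.indicator fun _ => c) 1 μ ≤ ε ∧ LocConst μ g := by
  have := hμ.locFin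
  rcases s.eq_empty_or_nonempty with rfl | ⟨x₀, hx₀⟩
  · exact ⟨0, by simp, integrable_zero _ _ _, Eventually.of_forall fun x => ⟨1, one_pos, by simp⟩⟩
  -- an `η` with `2 η ‖c‖ ≤ ε`
  obtain ⟨η, hη0, hη⟩ : ∃ η : ℝ≥0∞, η ≠ 0 ∧ ‖c‖ₑ * (η + η) ≤ ε := by
    refine ⟨(ε / (‖c‖ₑ + 1)) / 2, ?_, ?_⟩
    · simp [hε]
    · rw [ENNReal.add_halves, ENNReal.div_eq_inv_mul, ← mul_assoc]
      refine mul_le_of_le_one_left' ?_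
      rw [← div_eq_mul_inv]
      exact ENNReal.div_le_of_le_mul (by simp)
  obtain ⟨U, hsU, hU, hUt, hUs⟩ := hs.exists_isOpen_diff_lt hst.ne hη0
  have hr : ∀ x : U, ∃ r, 0 < r ∧ Metric.ball (x : X) r ⊆ U := fun x => Metric.isOpen_iff.1 hU x x.2
  choose r hr0 hrU using hr
  obtain ⟨T, hTc, hTU⟩ := TopologicalSpace.isOpen_iUnion_countable (fun x : U => Metric.ball (x : X) (r x))
    fun x => isOpen_ball
  have hTU' : ⋃ x ∈ T, Metric.ball (x : X) (r x) = U := by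
    rw [hTU]
    refine subset_antisymm (iUnion_subset hrU) fun x hx => mem_iUnion.2 ⟨⟨x, hx⟩, mem_ball_self (hr0 _)⟩
  have hTne : T.Nonempty := by
    rw [nonempty_iff_ne_empty]
    rintro rfl
    simp only [mem_empty_iff_false, iUnion_of_empty, iUnion_empty] at hTU'
    exact absurd (hsU hx₀) (by simp [← hTU'])
  obtain ⟨e, rfl⟩ := hTc.exists_eq_range hTne
  rw [biUnion_range] at hTU'
  set E : ℕ → Set X := fun N => ⋃ i, ⋃ (_ : i ≤ N), Metric.ball (e i : X) (r (e i)) with hE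
  have hEm : ∀ N, MeasurableSet (E N) := fun N =>
    MeasurableSet.iUnion fun i => MeasurableSet.iUnion fun _ => measurableSet_ball
  have hEU : ∀ N, E N ⊆ U := fun N => iUnion₂_subset fun i _ => hrU _
  have hlim : Tendsto (fun N => μ (U \ E N)) atTop (𝓝 0) := by
    have hanti : Antitone fun N => U \ E N := fun N M hNM =>
      diff_subset_diff_right (iUnion₂_subset fun i hi => subset_iUnion₂_of_subset i (hi.trans hNM) subset_rfl)
    have := tendsto_measure_iInter_atTop (μ := μ) (fun N => (hU.measurableSet.diff (hEm N)).nullMeasurableSet)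
      hanti ⟨0, ((measure_mono diff_subset).trans_lt hUt).ne⟩
    rwa [show ⋂ N, U \ E N = ∅ from ?_, measure_empty] at this
    rw [← diff_iUnion, diff_eq_empty, ← hTU']
    exact iUnion_subset fun i => subset_iUnion_of_subset i (subset_iUnion₂_of_subset i le_rfl subset_rfl)
  obtain ⟨N, hN⟩ := (hlim.eventually_lt_const (pos_iff_ne_zero.2 hη0)).exists
  have hEt : μ (E N) ≠ ⊤ := ((measure_mono (hEU N)).trans_lt hUt).ne
  refine ⟨(E N).indicator fun _ => c, ?_,
    (integrable_indicator_iff (hEm N)).2 (integrableOn_const hEt), ?_⟩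
  · rw [eLpNorm_one_eq_lintegral_enorm]
    have hle : ∀ x, ‖((E N).indicator (fun _ => c) - s.indicator fun _ => c) x‖ₑ ≤
        (U \ E N).indicator (fun _ => ‖c‖ₑ) x + (U \ s).indicator (fun _ => ‖c‖ₑ) x := by
      intro x
      by_cases h1 : x ∈ E N <;> by_cases h2 : x ∈ s
      · simp [h1, h2]
      · simp [h1, h2, hEU N h1]
      · simp [h1, h2, hsU h2]
      · simp [h1, h2]
    refine (lintegral_mono hle).trans ?_
    rw [lintegral_add_left (measurable_const.indicator (hU.measurableSet.diff (hEm N))),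
      lintegral_indicator (hU.measurableSet.diff (hEm N)), lintegral_indicator (hU.measurableSet.diff hs),
      setLIntegral_const, setLIntegral_const, ← mul_add]
    exact (mul_le_mul_right (add_le_add hN.le hUs.le) _).trans hη
  · have hsph : ∀ᵐ x ∂μ, ∀ i, x ∉ Metric.closedBall (e i : X) (r (e i)) \ Metric.ball (e i : X) (r (e i)) := by
      rw [ae_all_iff]
      intro i
      have h := hμ.cball_ae (e i : X) (hr0 (e i))
      rw [ae_eq_set] at h
      exact measure_eq_zero_iff_ae_notMem.1 h.1
    filter_upwards [hsph] with x hx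
    by_cases hxE : x ∈ E N
    · have hEo : IsOpen (E N) := isOpen_iUnion fun i => isOpen_iUnion fun _ => isOpen_ball
      obtain ⟨δ, hδ, h⟩ := Metric.isOpen_iff.1 hEo x hxE
      exact ⟨δ, hδ, fun y hy => by simp [h hy, hxE]⟩
    · have hCl : IsClosed (⋃ i ∈ Finset.range (N + 1), Metric.closedBall (e i : X) (r (e i))) :=
        isClosed_biUnion_finset fun i _ => isClosed_closedBall
      have hxC : x ∉ ⋃ i ∈ Finset.range (N + 1), Metric.closedBall (e i : X) (r (e i)) := by
        simp only [mem_iUnion, not_exists]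
        intro i hi hxi
        refine hx i ⟨hxi, fun hb => hxE (mem_iUnion₂.2 ⟨i, ?_, hb⟩)⟩
        exact Nat.lt_succ_iff.1 (Finset.mem_range.1 hi)
      obtain ⟨δ, hδ, h⟩ := Metric.isOpen_iff.1 hCl.isOpen_compl x hxC
      refine ⟨δ, hδ, fun y hy => ?_⟩
      have hyE : y ∉ E N := fun hyE => by
        obtain ⟨i, hi, hyi⟩ := mem_iUnion₂.1 hyE
        refine h hy (mem_iUnion₂.2 ⟨i, Finset.mem_range.2 (Nat.lt_succ_iff.2 hi), ball_subset_closedBall hyi⟩)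
      simp [hyE, hxE]

/-- Truncations of a function that is constant near `x` are eventually constant, by cancellation. -/
lemma CZK.pv_const (h : CZK μ Q k A) [SFinite μ] {g : X → ℝ} (hg : Integrable g μ) {x : X} {δ : ℝ}
    (hc : ∀ y ∈ Metric.ball x δ, g y = g x) {ε ε' : ℝ} (hε : 0 < ε) (hεε : ε ≤ ε') (hε' : ε' < δ) :
    Tr μ k ε g x = Tr μ k ε' g x := by
  have hm : MeasurableSet {y | ε < dist x y ∧ dist x y ≤ ε'} := (measurableSet_far x ε).inter
    (measurableSet_le (f := fun y => dist x y) (g := fun _ => ε') (by fun_prop) (by fun_prop))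
  have hsp : {y | ε < dist x y} = {y | ε < dist x y ∧ dist x y ≤ ε'} ∪ {y | ε' < dist x y} := by
    ext y
    simp only [mem_setOf_eq, mem_union]
    constructor
    · intro hy
      rcases le_or_gt (dist x y) ε' with h | h
      · exact Or.inl ⟨hy, h⟩
      · exact Or.inr h
    · rintro (h | h)
      · exact h.1
      · exact hεε.trans_lt h
  have hi := h.int_far hε hg x
  rw [Tr, Tr, hsp, setIntegral_union _ (measurableSet_far x ε') (hi.mono_set fun y hy => hy.1)
    (hi.mono_set fun y hy => lt_of_le_of_lt hεε hy)]
  · have : ∫ y in {y | ε < dist x y ∧ dist x y ≤ ε'}, k x y * g y ∂μ =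
        ∫ y in {y | ε < dist x y ∧ dist x y ≤ ε'}, k x y * g x ∂μ := by
      refine setIntegral_congr_fun hm fun y hy => ?_
      rw [hc y (by rw [mem_ball, dist_comm]; exact hy.2.trans_lt hε')]
    rw [this, integral_mul_const, h.canc1 x ε ε' hε, zero_mul, zero_add]
  · rw [Set.disjoint_left]
    rintro y hy hy'
    exact absurd hy.2 (not_le.2 hy')

/-- Principal values of integrable functions exist almost everywhere. -/
lemma CZK.pv_ae (h : CZK μ Q k A) (hμ : HomSp μ Q V) [SFinite μ] {f : X → ℝ} (hf : Integrable f μ) :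
    ∀ᵐ x ∂μ, ∃ L, Tendsto (fun ε => Tr μ k ε f x) (𝓝[>] 0) (𝓝 L) := by
  obtain ⟨C, hCt, hC⟩ := h.weak11 hμ
  have key : ∀ n : ℕ, ∀ᵐ x ∂μ, ∃ η > 0, ∀ ε ε', 0 < ε → ε ≤ ε' → ε' < η →
      ‖Tr μ k ε f x - Tr μ k ε' f x‖ₑ ≤ 2 * ENNReal.ofReal (1 / ((n : ℝ) + 1)) := by
    intro n
    set t : ℝ≥0∞ := ENNReal.ofReal (1 / ((n : ℝ) + 1)) with ht
    have ht0 : t ≠ 0 := by simp only [ht, ne_eq, ENNReal.ofReal_eq_zero, not_le]; positivity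
    rw [ae_iff]
    by_contra hpos
    set N := {x | ¬∃ η > 0, ∀ ε ε', 0 < ε → ε ≤ ε' → ε' < η →
      ‖Tr μ k ε f x - Tr μ k ε' f x‖ₑ ≤ 2 * t} with hN
    have hall : ∀ τ : ℝ≥0∞, τ ≠ 0 → t * μ N ≤ C * τ := by
      intro τ hτ
      obtain ⟨g, hg, hgP⟩ := (memLp_one_iff_integrable.2 hf).induction_dense (by norm_num) (LocConst μ)
        (fun c s hs hst ε hε => LocConst.approx hμ c hs hst hε) (fun f g hf hg => hf.add hg)
        (fun f hf => hf.1.1) hτ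
      rw [eLpNorm_one_eq_lintegral_enorm] at hg
      have hfg : Integrable (f - g) μ := hf.sub hgP.1
      refine le_trans ?_ ((hC _ hfg t).trans (mul_le_mul_right hg C))
      refine mul_le_mul_right (measure_mono_ae ?_) _
      filter_upwards [hgP.2] with x ⟨δ, hδ, hx⟩ hxN
      by_contra hcon
      have hcon' : TS μ k (f - g) x ≤ t := not_lt.1 hcon
      refine hxN ⟨δ, hδ, fun ε ε' hε hεε hε' => ?_⟩
      have e : ∀ ε, 0 < ε → Tr μ k ε f x = Tr μ k ε (f - g) x + Tr μ k ε g x := fun ε hε => by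
        rw [← h.tr_add hε hfg hgP.1]; simp
      rw [e ε hε, e ε' (hε.trans_le hεε), h.pv_const hgP.1 hx hε hεε hε', add_sub_add_right_eq_sub, two_mul]
      exact enorm_sub_le.trans (add_le_add ((le_TS hε _ _).trans hcon')
        ((le_TS (hε.trans_le hεε) _ _).trans hcon'))
    have h0 : t * μ N ≤ 0 := by
      refine ENNReal.le_of_forall_pos_le_add fun ε hε _ => ?_
      rw [zero_add]
      have hε0 : (ε : ℝ≥0∞) ≠ 0 := by simpa using hε.ne'
      refine (hall (ε / (C + 1)) ?_).trans ?_
      · exact ENNReal.div_ne_zero.2 ⟨hε0, by finiteness⟩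
      · rw [← mul_div_assoc]
        refine ENNReal.div_le_of_le_mul ?_
        rw [mul_comm]; exact mul_le_mul_right le_self_add _
    rcases mul_eq_zero.1 (nonpos_iff_eq_zero.1 h0) with h | h
    · exact ht0 h
    · exact hpos h
  rw [← ae_all_iff] at key
  filter_upwards [key] with x hx
  refine cauchy_map_iff_exists_tendsto.1 (Metric.cauchy_iff.2 ⟨inferInstance, fun τ hτ => ?_⟩)
  obtain ⟨n, hn⟩ := exists_nat_one_div_lt (show 0 < τ / 2 by positivity)
  obtain ⟨η, hη, hxη⟩ := hx n
  have hd : ∀ ε ε', 0 < ε → ε ≤ ε' → ε' < η → dist (Tr μ k ε f x) (Tr μ k ε' f x) < τ := by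
    intro ε ε' h1 h2 h3
    have h4 := hxη ε ε' h1 h2 h3
    rw [Real.enorm_eq_ofReal_abs, ← ENNReal.ofReal_ofNat 2, ← ENNReal.ofReal_mul (by norm_num),
      ENNReal.ofReal_le_ofReal_iff (by positivity)] at h4
    rw [Real.dist_eq]
    have : ((2 : ℕ) : ℝ) = 2 := by norm_num
    linarith
  refine ⟨_, image_mem_map (Ioo_mem_nhdsGT hη), ?_⟩
  rintro _ ⟨ε, hε, rfl⟩ _ ⟨ε', hε', rfl⟩
  rcases le_total ε ε' with hle | hle
  · exact hd _ _ hε.1 hle hε'.2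
  · rw [dist_comm]; exact hd _ _ hε'.1 hle hε.2

end CZ

namespace CZ

/-! ### Weighted bounds for maximal truncations: the good-λ inequality -/

open Set Metric

variable {X : Type*} [MetricSpace X] [MeasurableSpace X] [BorelSpace X]
  [SecondCountableTopology X] {μ : Measure X} {Q : ℕ} {V : ℝ} {k : X → X → ℝ} {A : ℝ}
  {w σ : X → ℝ≥0∞} {p q : ℝ} {C : ℝ≥0∞}

lemma CZK.tr_cont [SFinite μ] (h : CZK μ Q k A) (hμ : HomSp μ Q V) {ε : ℝ} (hε : 0 < ε) {f : X → ℝ}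
    (hf : Integrable f μ) : Continuous (Tr μ k ε f) := by
  rw [continuous_iff_continuousAt]
  intro x₀
  have hA := h.nonneg
  have e : ∀ x, Tr μ k ε f x = ∫ y, {y | ε < dist x y}.indicator (fun y => k x y * f y) y ∂μ :=
    fun x => (integral_indicator (measurableSet_far x ε)).symm
  simp only [ContinuousAt, funext e]
  refine tendsto_integral_filter_of_dominated_convergence (fun y => A / ε ^ Q * ‖f y‖)
    (Eventually.of_forall fun x => ?_) (Eventually.of_forall fun x => Eventually.of_forall fun y => ?_)
    (hf.norm.const_mul _) ?_
  · exact ((h.meas.comp measurable_prodMk_left).aestronglyMeasurable.mul hf.1).indicator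
      (measurableSet_far x ε)
  · by_cases hy : ε < dist x y
    · rw [indicator_of_mem (by exact hy), norm_mul]
      exact mul_le_mul_of_nonneg_right (h.far_le hε hy) (norm_nonneg _)
    · rw [indicator_of_notMem (by exact hy), norm_zero]; positivity
  have hnull : ∀ᵐ y ∂μ, dist x₀ y ≠ ε := by
    filter_upwards [(hμ.cball_ae x₀ hε).mem_iff] with y hy hd
    have := hy.1 (by rw [Metric.mem_closedBall, dist_comm]; exact hd.le)
    rw [Metric.mem_ball, dist_comm] at this
    linarith
  filter_upwards [hnull] with y hy
  have hc : Tendsto (fun x => dist x y) (𝓝 x₀) (𝓝 (dist x₀ y)) :=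
    (continuous_id.dist continuous_const).tendsto x₀
  rcases lt_or_gt_of_ne hy with hlt | hgt
  · refine tendsto_const_nhds.congr' ?_
    filter_upwards [hc.eventually_lt_const hlt] with x hx
    rw [indicator_of_notMem (by simp [hlt.le]), indicator_of_notMem (by simp [hx.le])]
  · have hk : Tendsto (fun x => k x y) (𝓝 x₀) (𝓝 (k x₀ y)) := by
      have h0 : 0 < dist x₀ y := hε.trans hgt
      have hd : Tendsto (fun x => dist x₀ x) (𝓝 x₀) (𝓝 0) := by
        have := (continuous_const.dist continuous_id : Continuous fun x => dist x₀ x).tendsto x₀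
        simpa using this
      rw [tendsto_iff_dist_tendsto_zero]
      refine squeeze_zero' (Eventually.of_forall fun _ => dist_nonneg)
        (g := fun x => A * dist x₀ x / dist x₀ y ^ (Q + 1)) ?_ ?_
      · filter_upwards [hd.eventually_lt_const (half_pos h0)] with x hx
        rw [dist_comm, Real.dist_eq]
        exact h.reg1 _ _ _ (dist_pos.1 h0) (by linarith)
      · simpa using (hd.const_mul A).div_const (dist x₀ y ^ (Q + 1))
    rw [indicator_of_mem (by exact hgt)]
    refine (hk.mul_const (f y)).congr' ?_
    filter_upwards [hc.eventually_const_lt hgt] with x hx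
    rw [indicator_of_mem (by exact hx)]

lemma CZK.isOpen_lt_TS [SFinite μ] (h : CZK μ Q k A) (hμ : HomSp μ Q V) {f : X → ℝ}
    (hf : Integrable f μ) (t : ℝ≥0∞) : IsOpen {x | t < TS μ k f x} := by
  have : {x | t < TS μ k f x} = ⋃ (ε : ℝ) (_ : 0 < ε), {x | t < ‖Tr μ k ε f x‖ₑ} := by
    ext x; simp [TS, lt_iSup_iff]
  rw [this]
  exact isOpen_iUnion fun ε => isOpen_iUnion fun hε =>
    isOpen_lt continuous_const (h.tr_cont hμ hε hf).enorm

lemma CZK.measurable_TS [SFinite μ] (h : CZK μ Q k A) (hμ : HomSp μ Q V) {f : X → ℝ}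
    (hf : Integrable f μ) : Measurable (TS μ k f) :=
  measurable_of_Ioi fun t => (h.isOpen_lt_TS hμ hf t).measurableSet

/-- If a set fills at most half of each Whitney ball of `Ω`, the rest of `Ω` carries a fixed
proportion of its weight. -/
lemma ApPair.whitney_half (h : ApPair μ p q w σ C) (hμ : HomSp μ Q V) {Ω u : Set X} {r : X → ℝ}
    (hW : Whitney Ω u r) {E : Set X} (hE : MeasurableSet E)
    (hsm : ∀ x ∈ u, 2 * μ (E ∩ ball x (r x)) ≤ μ (ball x (r x))) :
    μ.withDensity w Ω ≤ (C * (2 * 4 ^ Q)) ^ p * μ.withDensity w (Ω \ E) := by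
  set ν := μ.withDensity w
  have := hW.countable.to_subtype
  calc ν Ω ≤ ∑' x : u, ν (ball x.1 (4 * r x)) := by
        conv_lhs => rw [hW.cover, biUnion_eq_iUnion]
        exact measure_iUnion_le _
    _ ≤ ∑' x : u, (C * (2 * 4 ^ Q)) ^ p * ν (ball x.1 (r x) \ E) := by
        refine ENNReal.tsum_le_tsum fun x => ?_
        have hr := hW.pos x x.2
        rw [withDensity_apply _ measurableSet_ball, withDensity_apply _ (measurableSet_ball.diff hE)]
        refine h.compare' hμ (diff_subset.trans (ball_subset_ball (by linarith))) ?_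
        rw [hμ.ball_mul x.1 x.1 (by norm_num : (0:ℝ) < 4), ENNReal.ofReal_pow (by norm_num),
          show ENNReal.ofReal 4 = 4 by simp, mul_comm 2, mul_assoc]
        refine mul_le_mul_right ?_ _
        have h1 := hsm x x.2
        have h2 : μ (ball x.1 (r x)) = μ (E ∩ ball x.1 (r x)) + μ (ball x.1 (r x) \ E) := by
          rw [inter_comm, measure_inter_add_diff _ hE]
        have ht := hμ.ball_ne_top x.1 (r x)
        have ht1 : μ (E ∩ ball x.1 (r x)) ≠ ⊤ := ((measure_mono inter_subset_right).trans_lt ht.lt_top).ne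
        have h3 : μ (E ∩ ball x.1 (r x)) ≤ μ (ball x.1 (r x) \ E) := by
          rw [h2, two_mul] at h1
          exact (ENNReal.add_le_add_iff_left ht1).1 h1
        rw [h2, two_mul]; gcongr
    _ = (C * (2 * 4 ^ Q)) ^ p * ν (⋃ x : u, ball x.1 (r x) \ E) := by
        rw [ENNReal.tsum_mul_left, measure_iUnion _ fun x => measurableSet_ball.diff hE]
        intro x y hxy
        exact (hW.disj x.2 y.2 (fun e => hxy (Subtype.ext e))).mono diff_subset diff_subset
    _ ≤ _ := by
        gcongr
        refine iUnion_subset fun x => diff_subset_diff_left ?_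
        exact (ball_subset_ball (by linarith [hW.pos x x.2])).trans (hW.sub x x.2)

/-- The contraction factor of the good-λ argument for a weight with `A_p` constant `C`. -/
def theta (p : ℝ) (C : ℝ≥0∞) (Q : ℕ) : ℝ≥0∞ := 1 - ((C * (2 * 4 ^ Q)) ^ p + 2)⁻¹

lemma theta_lt {p : ℝ} (hp : 0 < p) {C : ℝ≥0∞} (hC : C ≠ ⊤) (Q : ℕ) : theta p C Q < 1 := by
  refine ENNReal.sub_lt_self one_ne_top one_ne_zero ?_
  rw [ENNReal.inv_ne_zero]
  exact ENNReal.add_ne_top.2 ⟨ENNReal.rpow_ne_top_of_nonneg hp.le (by finiteness), by norm_num⟩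

lemma theta_ne_zero (p : ℝ) (C : ℝ≥0∞) (Q : ℕ) : theta p C Q ≠ 0 := by
  rw [theta, ne_eq, tsub_eq_zero_iff_le, not_le, ENNReal.inv_lt_one]
  exact ENNReal.one_lt_two.trans_le le_add_self

/-- A set filling at most half of each Whitney ball of `Ω` carries at most the proportion `theta`
of the weight of `Ω`. -/
lemma ApPair.whitney_small (h : ApPair μ p q w σ C) (hμ : HomSp μ Q V) {Ω u : Set X} {r : X → ℝ}
    (hW : Whitney Ω u r) {E : Set X} (hE : MeasurableSet E)
    (hsm : ∀ x ∈ u, 2 * μ (E ∩ ball x (r x)) ≤ μ (ball x (r x))) :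
    μ.withDensity w (Ω ∩ E) ≤ theta p C Q * μ.withDensity w Ω := by
  have key := h.whitney_half hμ hW hE hsm
  set ν := μ.withDensity w
  set K := (C * (2 * 4 ^ Q)) ^ p with hK
  by_cases ht : ν Ω = ⊤
  · rw [ht, ENNReal.mul_top (theta_ne_zero _ _ _)]; exact le_top
  have hKt : K ≠ ⊤ := ENNReal.rpow_ne_top_of_nonneg h.conj.pos.le (by have := h.fin; finiteness)
  have key2 : ν Ω ≤ (K + 2) * ν (Ω \ E) := key.trans (by gcongr; exact le_self_add)
  have h1 : (K + 2)⁻¹ * ν Ω ≤ ν (Ω \ E) := by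
    rw [mul_comm, ← div_eq_mul_inv]
    exact ENNReal.div_le_of_le_mul' key2
  have h2 := measure_inter_add_diff (μ := ν) Ω hE
  rw [theta, ← hK, ENNReal.sub_mul (fun _ _ => ht), one_mul]
  refine ENNReal.le_sub_of_add_le_right ?_ ?_
  · exact (h1.trans_lt ((measure_mono diff_subset).trans_lt (lt_top_iff_ne_top.2 ht))).ne
  · rw [← h2]
    refine add_le_add le_rfl ?_
    rw [h2]; exact h1

variable [SFinite μ]

/-- The part of the function away from the point `a` contributes near `a` at most the maximal
truncation at `a`, up to a multiple of the maximal function. -/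
lemma CZK.far_part (h : CZK μ Q k A) (hμ : HomSp μ Q V) {f : X → ℝ} (hf : Integrable f μ)
    {a x z : X} {R : ℝ} (hR : 0 < R) (hx : 2 * dist a x ≤ R) (hz : dist a z ≤ R) :
    TS μ k ((Metric.closedBall a R)ᶜ.indicator f) x ≤
      TS μ k f a + ENNReal.ofReal (A * V * (2 ^ (Q + 1) + 6 ^ Q)) * MF μ (fun y => ‖f y‖ₑ) z := by
  refine TS_le fun ε hε => ?_
  have hA := h.nonneg
  have hV := hμ.pos
  have hSm : MeasurableSet (Metric.closedBall a R)ᶜ := measurableSet_closedBall.compl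
  rw [Tr_indicator _ _ hSm]
  set s := max ε R with hs
  have hsR : R ≤ s := le_max_right _ _
  have hsε : ε ≤ s := le_max_left _ _
  have hs0 : 0 < s := hR.trans_le hsR
  set D1 := {y | ε < dist x y} ∩ (Metric.closedBall a R)ᶜ with hD1
  set D2 := {y | s < dist a y} with hD2
  have hm1 : MeasurableSet D1 := (measurableSet_far x ε).inter hSm
  have hm2 : MeasurableSet D2 := measurableSet_far a s
  have mem1 : ∀ y, y ∈ D1 ↔ ε < dist x y ∧ R < dist a y := fun y => by
    simp [hD1, dist_comm]
  have i1 : IntegrableOn (fun y => k x y * f y) D1 μ := (h.int_far hε hf x).mono_set inter_subset_left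
  have i2 : IntegrableOn (fun y => k x y * f y) D2 μ :=
    (h.int_far (by positivity : 0 < R / 4) hf x).mono_set fun y hy => by
      simp only [hD2, mem_setOf_eq] at hy ⊢
      linarith [dist_triangle a x y]
  have i3 : IntegrableOn (fun y => k a y * f y) D2 μ := h.int_far hs0 hf a
  have e : ∫ y in D1, k x y * f y ∂μ = Tr μ k s f a
      + (-∫ y in D2, (k a y - k x y) * f y ∂μ)
      + ∫ y, (D1.indicator (fun y => k x y * f y) y - D2.indicator (fun y => k x y * f y) y) ∂μ := by
    simp only [sub_mul]
    rw [integral_sub i3 i2, integral_sub (i1.integrable_indicator hm1) (i2.integrable_indicator hm2),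
      integral_indicator hm1, integral_indicator hm2, Tr]
    ring
  rw [e, mul_add, ENNReal.ofReal_add (by positivity) (by positivity), add_mul, ← add_assoc]
  refine (enorm_add_le _ _).trans (add_le_add ((enorm_add_le _ _).trans (add_le_add (le_TS hs0 _ _) ?_)) ?_)
  · rw [enorm_neg]
    refine (enorm_integral_le_lintegral_enorm _).trans ?_
    simp only [enorm_mul]
    exact h.far_diff hμ hs0 (by linarith) (by linarith) f
  · set S := (D1 \ D2) ∪ (D2 \ D1)
    have hS : MeasurableSet S := (hm1.diff hm2).union (hm2.diff hm1)
    refine ((enorm_integral_le_lintegral_enorm _).trans ?_).trans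
      (h.shell hμ hs0 (x := x) (a := a) (x' := z) hS ?_ (by linarith) f)
    · rw [← lintegral_indicator hS]
      refine lintegral_mono fun y => ?_
      by_cases h1 : y ∈ D1 <;> by_cases h2 : y ∈ D2 <;> simp [S, h1, h2, enorm_mul]
    · rintro y (⟨h1, h2⟩ | ⟨h1, h2⟩)
      · rw [mem1] at h1
        simp only [hD2, mem_setOf_eq, not_lt] at h2
        refine ⟨?_, by linarith⟩
        rcases le_total ε R with h' | h'
        · rw [hs, max_eq_right h'] at h2; linarith
        · rw [hs, max_eq_left h']; linarith
      · rw [mem1] at h2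
        simp only [hD2, mem_setOf_eq] at h1
        have h3 : dist x y ≤ ε := by
          by_contra hc; push Not at hc; exact h2 ⟨hc, by linarith⟩
        constructor
        · linarith [dist_triangle a x y]
        · linarith [dist_triangle a x y]

/-- The good-λ inequality, uniform over weights with a given `A_p` constant. -/
lemma CZK.good_lambda [Nonempty X] (h : CZK μ Q k A) (hμ : HomSp μ Q V) {δ : ℝ} (hδ : 0 < δ) :
    ∃ γ : ℝ, 0 < γ ∧ ∀ (p q : ℝ) (C : ℝ≥0∞) (w σ : X → ℝ≥0∞), ApPair μ p q w σ C →
      ∀ f : X → ℝ, Integrable f μ → ∀ t : ℝ, 0 < t →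
      μ.withDensity w {x | ENNReal.ofReal ((1 + δ) * t) < TS μ k f x} ≤
        theta p C Q * μ.withDensity w {x | ENNReal.ofReal t < TS μ k f x} +
        μ.withDensity w {x | ENNReal.ofReal (γ * t) < MF μ (fun y => ‖f y‖ₑ) x} := by
  obtain ⟨C₁, hC₁t, hC₁⟩ := h.weak11 hμ
  have hA := h.nonneg
  have hV := hμ.pos
  lift C₁ to ℝ≥0 using hC₁t
  set C₂ : ℝ := A * V * (2 ^ (Q + 1) + 6 ^ Q) with hC₂
  have hC₂0 : 0 ≤ C₂ := by positivity
  set den : ℝ := 2 * (C₂ + 1) + 4 * (C₁ + 1) * 31 ^ Q with hden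
  have hden0 : 0 < den := by positivity
  set γ : ℝ := δ / den with hγ
  have hγ0 : 0 < γ := by positivity
  have hγd : γ * den = δ := by rw [hγ]; field_simp
  have hg1 : C₂ * γ ≤ δ / 2 := by
    have : 0 ≤ γ * (4 * (C₁ + 1) * 31 ^ Q) := by positivity
    rw [hden, mul_add] at hγd
    nlinarith
  have hg2 : 2 * (C₁ * (γ * 31 ^ Q)) ≤ δ / 2 := by
    have h1 : 0 ≤ γ * (2 * (C₂ + 1)) := by positivity
    have h2 : 0 ≤ γ * 31 ^ Q := by positivity
    rw [hden, mul_add] at hγd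
    nlinarith
  refine ⟨γ, hγ0, fun p q C w σ hw f hf t ht => ?_⟩
  set g : X → ℝ≥0∞ := fun y => ‖f y‖ₑ with hg
  set Ω := {x | ENNReal.ofReal t < TS μ k f x} with hΩ
  have hΩo : IsOpen Ω := h.isOpen_lt_TS hμ hf _
  have ht0 : ENNReal.ofReal t ≠ 0 := by simpa using ht
  have hΩfin : μ Ω ≠ ⊤ := by
    intro hcon
    have := hC₁ f hf (ENNReal.ofReal t)
    rw [show {x | ENNReal.ofReal t < TS μ k f x} = Ω from rfl, hcon, ENNReal.mul_top ht0] at this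
    exact (this.trans_lt (ENNReal.mul_lt_top ENNReal.coe_lt_top hf.2)).ne rfl
  obtain ⟨u, r, hW⟩ := hμ.whitney hΩo hΩfin
  set E := {x | ENNReal.ofReal ((1 + δ) * t) < TS μ k f x ∧ MF μ g x ≤ ENNReal.ofReal (γ * t)} with hE
  have hEm : MeasurableSet E := (h.isOpen_lt_TS hμ hf _).measurableSet.inter
    (measurableSet_le (measurable_MF μ g) measurable_const)
  have hEΩ : E ⊆ Ω := fun x hx => lt_of_le_of_lt (ENNReal.ofReal_le_ofReal (by nlinarith)) hx.1
  have hsm : ∀ c ∈ u, 2 * μ (E ∩ ball c (r c)) ≤ μ (ball c (r c)) := by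
    intro c hc
    have hr := hW.pos c hc
    rcases (E ∩ ball c (r c)).eq_empty_or_nonempty with he | ⟨z, hz, hzb⟩
    · rw [he]; simp
    obtain ⟨a, haΩ, hac⟩ := hW.touch c hc
    have haT : TS μ k f a ≤ ENNReal.ofReal t := not_lt.1 haΩ
    set R := 30 * r c with hR
    set S := Metric.closedBall a R with hS
    have hSm : MeasurableSet S := measurableSet_closedBall
    have hdist : ∀ y ∈ ball c (r c), dist a y < 12 * r c := fun y hy => by
      rw [Metric.mem_ball, dist_comm] at hy
      linarith [dist_triangle a c y, dist_comm a c]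
    have hsub : E ∩ ball c (r c) ⊆ {x | ENNReal.ofReal (δ / 2 * t) < TS μ k (S.indicator f) x} := by
      rintro y ⟨hy, hyb⟩
      by_contra hcon
      simp only [mem_setOf_eq, not_lt] at hcon
      have h1 : TS μ k f y ≤ TS μ k (S.indicator f) y + TS μ k (Sᶜ.indicator f) y := by
        conv_lhs => rw [split_indicator f S]
        exact h.ts_add (hf.indicator hSm) (hf.indicator hSm.compl) y
      have h2 := h.far_part hμ hf (a := a) (x := y) (z := z) (R := R) (by linarith)
        (by linarith [hdist y hyb]) (by linarith [hdist z hzb])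
      have h3 : TS μ k (Sᶜ.indicator f) y ≤ ENNReal.ofReal t + ENNReal.ofReal (δ / 2 * t) := by
        refine h2.trans (add_le_add haT ((mul_le_mul_right hz.2 _).trans ?_))
        rw [← ENNReal.ofReal_mul hC₂0]
        refine ENNReal.ofReal_le_ofReal ?_
        nlinarith
      have h4 := hy.1.trans_le (h1.trans (add_le_add hcon h3))
      rw [← ENNReal.ofReal_add (by positivity) (by positivity),
        ← ENNReal.ofReal_add (by positivity) (by positivity)] at h4
      refine h4.ne (congrArg _ ?_)
      ring
    have hbig : ∫⁻ x, ‖S.indicator f x‖ₑ ∂μ ≤ ENNReal.ofReal (γ * t) * (ENNReal.ofReal (31 ^ Q) * μ (ball c (r c))) := by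
      simp only [enorm_indicator_eq_indicator_enorm]
      rw [lintegral_indicator hSm, ← hμ.ball_mul a c (by norm_num : (0:ℝ) < 31)]
      calc ∫⁻ x in S, ‖f x‖ₑ ∂μ ≤ ∫⁻ x in ball a (31 * r c), ‖f x‖ₑ ∂μ :=
            lintegral_mono_set (Metric.closedBall_subset_ball (by linarith))
        _ ≤ MF μ g z * μ (ball a (31 * r c)) := setLIntegral_le_MF g
            (by rw [Metric.mem_ball, dist_comm]; linarith [hdist z hzb]) (hμ.ball_ne_top _ _)
        _ ≤ _ := mul_le_mul_left hz.2 _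
    have h5 := (mul_le_mul_right (measure_mono hsub) (ENNReal.ofReal (δ / 2 * t))).trans
      ((hC₁ _ (hf.indicator hSm) _).trans (mul_le_mul_right hbig _))
    have hne : ENNReal.ofReal (δ / 2 * t) ≠ 0 := by simpa using by positivity
    refine (ENNReal.mul_le_mul_iff_right hne ENNReal.ofReal_ne_top).1 ?_
    calc ENNReal.ofReal (δ / 2 * t) * (2 * μ (E ∩ ball c (r c)))
        = 2 * (ENNReal.ofReal (δ / 2 * t) * μ (E ∩ ball c (r c))) := by ring
      _ ≤ 2 * (C₁ * (ENNReal.ofReal (γ * t) * (ENNReal.ofReal (31 ^ Q) * μ (ball c (r c))))) :=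
          mul_le_mul_right h5 _
      _ = ENNReal.ofReal (2 * (C₁ * (γ * t * 31 ^ Q))) * μ (ball c (r c)) := by
          rw [ENNReal.ofReal_mul (p := 2) (by norm_num), ENNReal.ofReal_mul (p := (C₁ : ℝ)) (by positivity),
            ENNReal.ofReal_mul (p := γ * t) (by positivity), ENNReal.ofReal_coe_nnreal]
          simp only [ENNReal.ofReal_ofNat]
          ring
      _ ≤ _ := by
          refine mul_le_mul_left (ENNReal.ofReal_le_ofReal ?_) _
          nlinarith
  have key := hw.whitney_small hμ hW hEm hsm
  refine (measure_mono (t := (Ω ∩ E) ∪ {x | ENNReal.ofReal (γ * t) < MF μ g x}) fun x hx => ?_).trans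
    ((measure_union_le _ _).trans (add_le_add key le_rfl))
  by_cases hm : MF μ g x ≤ ENNReal.ofReal (γ * t)
  · exact Or.inl ⟨hEΩ ⟨hx, hm⟩, hx, hm⟩
  · exact Or.inr (not_le.1 hm)

lemma ofReal_lt_inv_mul {b : ℝ} (hb : 0 < b) (t : ℝ) (y : ℝ≥0∞) :
    ENNReal.ofReal t < ENNReal.ofReal b⁻¹ * y ↔ ENNReal.ofReal (b * t) < y := by
  have h0 : ENNReal.ofReal b ≠ 0 := by simpa using hb
  rw [ENNReal.ofReal_inv_of_pos hb, ENNReal.ofReal_mul hb.le, ← ENNReal.mul_lt_mul_iff_right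
    h0 ENNReal.ofReal_ne_top, ← mul_assoc, ENNReal.mul_inv_cancel h0 ENNReal.ofReal_ne_top, one_mul]

/-- Integrating a good-λ inequality. -/
lemma good_lambda_int {ν : Measure X} [SFinite ν] {p : ℝ} (hp : 0 < p) {F G : X → ℝ≥0∞}
    (hF : Measurable F) (hG : Measurable G) {δ γ : ℝ} (hδ : 0 < δ) (hγ : 0 < γ) {θ : ℝ≥0∞}
    (hθ : ENNReal.ofReal ((1 + δ) ^ p) * θ < 1)
    (hgl : ∀ t : ℝ, 0 < t → ν {x | ENNReal.ofReal ((1 + δ) * t) < F x} ≤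
      θ * ν {x | ENNReal.ofReal t < F x} + ν {x | ENNReal.ofReal (γ * t) < G x})
    (hfin : ∀ Λ : ℝ≥0, ∫⁻ x, (min (F x) Λ) ^ p ∂ν ≠ ⊤) :
    ∫⁻ x, F x ^ p ∂ν ≤ ENNReal.ofReal ((1 + δ) ^ p) * ENNReal.ofReal (γ⁻¹ ^ p) *
      (1 - ENNReal.ofReal ((1 + δ) ^ p) * θ)⁻¹ * ∫⁻ x, G x ^ p ∂ν := by
  set a := ENNReal.ofReal ((1 + δ) ^ p) with ha
  have hδ1 : 0 < 1 + δ := by linarith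
  have hscale : ∀ (b : ℝ), 0 < b → ∀ y : ℝ≥0∞, (ENNReal.ofReal b⁻¹ * y) ^ p =
      ENNReal.ofReal (b⁻¹ ^ p) * y ^ p := fun b hb y => by
    rw [ENNReal.mul_rpow_of_nonneg _ _ hp.le, ENNReal.ofReal_rpow_of_pos (by positivity)]
  have ha1 : a * ENNReal.ofReal ((1 + δ)⁻¹ ^ p) = 1 := by
    rw [ha, ← ENNReal.ofReal_mul (by positivity), ← Real.mul_rpow hδ1.le (by positivity),
      mul_inv_cancel₀ hδ1.ne']; simp
  have hmain : ∀ Λ : ℝ≥0, ∫⁻ x, (min (F x) Λ) ^ p ∂ν ≤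
      a * ENNReal.ofReal (γ⁻¹ ^ p) * (1 - a * θ)⁻¹ * ∫⁻ x, G x ^ p ∂ν := by
    intro Λ
    set I := ∫⁻ x, (min (F x) Λ) ^ p ∂ν with hI
    have hFm : Measurable fun x => min (F x) (Λ : ℝ≥0∞) := hF.min measurable_const
    have hI2 : I = a * ∫⁻ x, (ENNReal.ofReal (1 + δ)⁻¹ * min (F x) Λ) ^ p ∂ν := by
      simp only [hscale _ hδ1]
      rw [lintegral_const_mul _ (hFm.pow_const p), ← mul_assoc, ha1, one_mul]
    have hstep : ∫⁻ x, (ENNReal.ofReal (1 + δ)⁻¹ * min (F x) Λ) ^ p ∂ν ≤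
        θ * I + ENNReal.ofReal (γ⁻¹ ^ p) * ∫⁻ x, G x ^ p ∂ν := by
      rw [← lintegral_const_mul _ (hG.pow_const p)]
      simp only [← hscale _ hγ]
      rw [hI, lintegral_rpow_layer hp (hFm.const_mul _), lintegral_rpow_layer hp hFm,
        lintegral_rpow_layer hp (hG.const_mul _), ← mul_assoc, mul_comm θ, mul_assoc, ← mul_add]
      refine mul_le_mul_right ?_ _
      have hms : Measurable fun t : ℝ => ENNReal.ofReal (t ^ (p - 1)) * ν {x | ENNReal.ofReal t < min (F x) Λ} := by
        refine (ENNReal.measurable_ofReal.comp (by fun_prop)).mul ?_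
        have : Antitone fun t : ℝ => ν {x | ENNReal.ofReal t < min (F x) Λ} := fun s t hst =>
          measure_mono fun x hx => (ENNReal.ofReal_le_ofReal hst).trans_lt hx
        exact this.measurable
      rw [← lintegral_const_mul _ hms, ← lintegral_add_left (hms.const_mul _)]
      refine setLIntegral_mono' measurableSet_Ioi fun t ht => ?_
      have ht : 0 < t := ht
      have e : θ * (ENNReal.ofReal (t ^ (p - 1)) * ν {x | ENNReal.ofReal t < min (F x) Λ}) +
          ENNReal.ofReal (t ^ (p - 1)) * ν {x | ENNReal.ofReal t < ENNReal.ofReal γ⁻¹ * G x} =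
          ENNReal.ofReal (t ^ (p - 1)) * (θ * ν {x | ENNReal.ofReal t < min (F x) Λ} +
          ν {x | ENNReal.ofReal t < ENNReal.ofReal γ⁻¹ * G x}) := by ring
      rw [e]
      refine mul_le_mul_right ?_ _
      simp only [ofReal_lt_inv_mul hδ1, ofReal_lt_inv_mul hγ]
      rcases lt_or_ge (ENNReal.ofReal t) Λ with hlt | hge
      · have e2 : {x | ENNReal.ofReal t < min (F x) Λ} = {x | ENNReal.ofReal t < F x} := by
          ext x; simp [hlt]
        rw [e2]
        have hmono : ν {x | ENNReal.ofReal ((1 + δ) * t) < min (F x) Λ} ≤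
            ν {x | ENNReal.ofReal ((1 + δ) * t) < F x} := by
          refine measure_mono fun x hx => ?_
          simp only [mem_setOf_eq, lt_min_iff] at hx ⊢
          exact hx.1
        exact hmono.trans (hgl t ht)
      · have : {x | ENNReal.ofReal ((1 + δ) * t) < min (F x) Λ} = ∅ := by
          ext x
          simp only [mem_setOf_eq, mem_empty_iff_false, iff_false, not_lt]
          exact (min_le_right _ _).trans (hge.trans (ENNReal.ofReal_le_ofReal (by nlinarith)))
        rw [this]; simp
    have h1 : I ≤ a * θ * I + a * (ENNReal.ofReal (γ⁻¹ ^ p) * ∫⁻ x, G x ^ p ∂ν) := by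
      conv_lhs => rw [hI2]
      rw [mul_assoc a θ, ← mul_add]
      exact mul_le_mul_right hstep _
    have h2 : (1 - a * θ) * I ≤ a * (ENNReal.ofReal (γ⁻¹ ^ p) * ∫⁻ x, G x ^ p ∂ν) := by
      rw [ENNReal.sub_mul (fun _ _ => hfin Λ), one_mul]
      exact tsub_le_iff_left.2 h1
    have h0 : 1 - a * θ ≠ 0 := by rw [ne_eq, tsub_eq_zero_iff_le, not_le]; exact hθ
    have ht : 1 - a * θ ≠ ⊤ := (tsub_le_self.trans_lt one_lt_top).ne
    have h3 := mul_le_mul_right h2 (1 - a * θ)⁻¹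
    rw [← mul_assoc, ENNReal.inv_mul_cancel h0 ht, one_mul] at h3
    exact h3.trans_eq (by ring)
  have hlim : ∀ x, Tendsto (fun n : ℕ => (min (F x) ((n : ℝ≥0) : ℝ≥0∞)) ^ p) atTop (𝓝 (F x ^ p)) := by
    intro x
    refine ((ENNReal.continuous_rpow_const (y := p)).tendsto _).comp ?_
    have : Tendsto (fun n : ℕ => min (F x) ((n : ℝ≥0) : ℝ≥0∞)) atTop (𝓝 (min (F x) ⊤)) := by
      refine tendsto_const_nhds.min ?_
      simpa using ENNReal.tendsto_nat_nhds_top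
    simpa using this
  refine le_of_tendsto' (lintegral_tendsto_of_tendsto_of_monotone
    (fun n => ((hF.min measurable_const).pow_const p).aemeasurable)
    (Eventually.of_forall fun x m n hmn => ?_) (Eventually.of_forall hlim)) fun n => hmain n
  dsimp only
  gcongr

/-- Away from a ball carrying `f` the maximal truncation is dominated by the maximal function. -/
lemma CZK.TS_far (h : CZK μ Q k A) (hμ : HomSp μ Q V) {f : X → ℝ} {x₀ x : X} {R : ℝ}
    (hsupp : ∀ y, y ∉ ball x₀ R → f y = 0) (hx : 2 * R ≤ dist x x₀) (hR : 0 < R) :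
    TS μ k f x ≤ ENNReal.ofReal (A * V * 6 ^ Q) * MF μ (fun y => ‖f y‖ₑ) x := by
  refine TS_le fun ε hε => ?_
  have hz : Tr μ k ε f x = Tr μ k ε ((ball x₀ R).indicator f) x := by
    congr 1; ext y
    by_cases hy : y ∈ ball x₀ R
    · rw [indicator_of_mem hy]
    · rw [indicator_of_notMem hy, hsupp y hy]
  rw [hz, Tr_indicator _ _ measurableSet_ball]
  refine (enorm_integral_le_lintegral_enorm _).trans ?_
  simp only [enorm_mul]
  refine h.shell hμ (s := dist x x₀) (by linarith) (a := x)
    ((measurableSet_far x ε).inter measurableSet_ball) (fun y hy => ?_) (by rw [dist_self]; linarith) f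
  have hy2 : dist y x₀ < R := hy.2
  constructor
  · linarith [dist_triangle x y x₀]
  · linarith [dist_triangle x x₀ y, dist_comm y x₀]

/-- Coifman–Fefferman: maximal truncations are bounded on weighted `L^p` spaces, uniformly over
weights with a given `A_p` constant. -/
lemma CZK.weighted [Nonempty X] (h : CZK μ Q k A) (hμ : HomSp μ Q V) {p q : ℝ}
    (hpq : p.HolderConjugate q) {C : ℝ≥0∞} (hC : C ≠ ⊤) :
    ∃ K : ℝ≥0∞, K ≠ ⊤ ∧ ∀ w σ : X → ℝ≥0∞, ApPair μ p q w σ C → ∀ f : X → ℝ, Measurable f →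
      Integrable f μ → ∀ (x₀ : X) (R : ℝ), (∀ y, y ∉ ball x₀ R → f y = 0) →
      ∫⁻ x, TS μ k f x ^ p * w x ∂μ ≤ K * ∫⁻ x, ‖f x‖ₑ ^ p * w x ∂μ := by
  obtain ⟨K₀, hK₀, hM⟩ := muckenhoupt (X := X) Q hpq hC
  have hp := hpq.pos
  have hθ := theta_lt hp hC Q
  obtain ⟨δ, hδ, hδθ⟩ : ∃ δ : ℝ, 0 < δ ∧ ENNReal.ofReal ((1 + δ) ^ p) * theta p C Q < 1 := by
    have hc : Tendsto (fun δ : ℝ => ENNReal.ofReal ((1 + δ) ^ p) * theta p C Q) (𝓝[>] 0)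
        (𝓝 (ENNReal.ofReal ((1 + 0) ^ p) * theta p C Q)) := by
      refine ENNReal.Tendsto.mul_const ?_ (Or.inr (hθ.trans one_lt_top).ne)
      refine (ENNReal.continuous_ofReal.tendsto _).comp (tendsto_nhdsWithin_of_tendsto_nhds ?_)
      refine ContinuousAt.rpow_const (by fun_prop) (Or.inr hp.le)
    have hc' := hc.eventually_lt_const (u := 1) (by simpa using hθ)
    obtain ⟨δ, h1, h2⟩ := (hc'.and self_mem_nhdsWithin).exists
    exact ⟨δ, h2, h1⟩
  obtain ⟨γ, hγ, hgl⟩ := h.good_lambda hμ hδ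
  refine ⟨ENNReal.ofReal ((1 + δ) ^ p) * ENNReal.ofReal (γ⁻¹ ^ p) *
      (1 - ENNReal.ofReal ((1 + δ) ^ p) * theta p C Q)⁻¹ * K₀ + 1, ?_, ?_⟩
  · have : 1 - ENNReal.ofReal ((1 + δ) ^ p) * theta p C Q ≠ 0 := by
      rw [ne_eq, tsub_eq_zero_iff_le, not_le]; exact hδθ
    have := ENNReal.inv_ne_top.2 this
    finiteness
  intro w σ hw f hfm hf x₀ R' hsupp'
  set R := max R' 1 with hR
  have hR0 : 0 < R := lt_of_lt_of_le one_pos (le_max_right _ _)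
  have hsupp : ∀ y, y ∉ ball x₀ R → f y = 0 := fun y hy =>
    hsupp' y fun h' => hy (ball_subset_ball (le_max_left _ _) h')
  have hMf := hM μ V hμ w σ hw (fun x => ‖f x‖ₑ) hfm.enorm
  set g : X → ℝ≥0∞ := MF μ (fun x => ‖f x‖ₑ) with hg
  have hgm : Measurable g := measurable_MF _ _
  have hTm := h.measurable_TS hμ hf
  by_cases htop : ∫⁻ x, ‖f x‖ₑ ^ p * w x ∂μ = ⊤
  · rw [htop, ENNReal.mul_top (by simp)]; exact le_top
  have hwd : ∀ F : X → ℝ≥0∞, Measurable F → ∫⁻ x, F x ∂(μ.withDensity w) = ∫⁻ x, F x * w x ∂μ :=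
    fun F hF => by
      rw [lintegral_withDensity_eq_lintegral_mul _ hw.meas_w (g := fun y => F y) hF]
      simp only [Pi.mul_apply, mul_comm]
  rw [← hwd _ (hTm.pow_const p)]
  refine le_trans ?_ (mul_le_mul_left (le_self_add (a := _) (b := (1 : ℝ≥0∞))) _)
  rw [mul_assoc]
  rw [← hwd _ (hgm.pow_const p)] at hMf
  refine (good_lambda_int hp hTm hgm hδ hγ hδθ (fun t ht => hgl p q C w σ hw f hf t ht) ?_).trans
    (mul_le_mul_right hMf _)
  intro Λ
  have hb : ∀ x, (min (TS μ k f x) Λ) ^ p ≤ (ball x₀ (2 * R)).indicator (fun _ => (Λ : ℝ≥0∞) ^ p) x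
      + ENNReal.ofReal (A * V * 6 ^ Q) ^ p * g x ^ p := by
    intro x
    by_cases hx : x ∈ ball x₀ (2 * R)
    · rw [indicator_of_mem hx]
      exact le_add_right (ENNReal.rpow_le_rpow (min_le_right _ _) hp.le)
    · rw [indicator_of_notMem hx, zero_add, ← ENNReal.mul_rpow_of_nonneg _ _ hp.le]
      rw [Metric.mem_ball, not_lt] at hx
      exact ENNReal.rpow_le_rpow ((min_le_left _ _).trans (h.TS_far hμ hsupp hx hR0)) hp.le
  refine ((lintegral_mono hb).trans_lt ?_).ne
  rw [lintegral_add_left (measurable_const.indicator measurableSet_ball),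
    lintegral_indicator measurableSet_ball, lintegral_const_mul _ (hgm.pow_const p)]
  refine ENNReal.add_lt_top.2 ⟨?_, ?_⟩
  · simp only [lintegral_const, Measure.restrict_apply_univ]
    rw [withDensity_apply _ measurableSet_ball]
    have := hw.fin_w hμ x₀ (2 * R)
    have : (Λ : ℝ≥0∞) ^ p ≠ ⊤ := ENNReal.rpow_ne_top_of_nonneg hp.le ENNReal.coe_ne_top
    finiteness
  · have h1 : ENNReal.ofReal (A * V * 6 ^ Q) ^ p ≠ ⊤ := ENNReal.rpow_ne_top_of_nonneg hp.le ENNReal.ofReal_ne_top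
    have h2 : ∫⁻ x, g x ^ p ∂(μ.withDensity w) ≠ ⊤ :=
      (hMf.trans_lt (ENNReal.mul_lt_top hK₀.lt_top (lt_top_iff_ne_top.2 htop))).ne
    exact ENNReal.mul_lt_top h1.lt_top h2.lt_top
end CZ

namespace CZ

/-! ### `A_∞`, John–Nirenberg and tilted weights -/

open Set Metric

variable {X : Type*} [MetricSpace X] [MeasurableSpace X] [BorelSpace X]
  [SecondCountableTopology X] {μ : Measure X} {Q : ℕ} {V : ℝ}
  {w σ : X → ℝ≥0∞} {p q : ℝ} {C : ℝ≥0∞}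

/-- One step in the proof that `A_p` weights are absolutely continuous in a quantitative way: the
weight of a sparse set is a fixed fraction of the weight of a slightly larger sparse set. -/
lemma ApPair.small_step [Nonempty X] (h : ApPair μ p q w σ C) (hμ : HomSp μ Q V) {ε κ : ℝ} (hε : 0 < ε)
    (hκ : 0 < κ) (hεκ : ε ≤ (2 * 12 ^ Q)⁻¹ * (κ / 2) ^ Q) {x₀ : X} {R S : ℝ} (hR : 0 < R) {E : Set X}
    (hEm : MeasurableSet E) (hE : E ⊆ ball x₀ S) (hμE : μ E ≤ ENNReal.ofReal ε * μ (ball x₀ R)) :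
    ∃ E', MeasurableSet E' ∧ E' ⊆ ball x₀ (S + κ * R) ∧
      μ E' ≤ ENNReal.ofReal (ε * (2 * 12 ^ Q * 4 ^ Q)) * μ (ball x₀ R) ∧
      μ.withDensity w E ≤ theta p C Q * μ.withDensity w E' := by
  have hV := hμ.pos
  set τ : ℝ := (2 * 12 ^ Q)⁻¹ with hτ
  have hτ0 : 0 < τ := by positivity
  have hEt : μ E ≠ ⊤ := (hμE.trans_lt (ENNReal.mul_lt_top ENNReal.ofReal_lt_top
    (hμ.ball_ne_top _ _).lt_top)).ne
  set g : X → ℝ≥0∞ := E.indicator 1 with hg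
  have hgi : ∀ s, MeasurableSet s → ∫⁻ x in s, g x ∂μ = μ (E ∩ s) := fun s hs => by
    rw [hg, lintegral_indicator_one hEm, Measure.restrict_apply hEm]
  have hgi' : ∫⁻ x, g x ∂μ = μ E := by rw [hg, lintegral_indicator_one hEm]
  set Ω := {x | ENNReal.ofReal τ < MF μ g x} with hΩ
  have hΩo : IsOpen Ω := isOpen_lt_MF μ g _
  have hτe : ENNReal.ofReal τ ≠ 0 := by simpa using hτ0
  have hμΩ : μ Ω ≤ ENNReal.ofReal (ε * (2 * 12 ^ Q * 4 ^ Q)) * μ (ball x₀ R) := by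
    have h1 := MF_weak hμ.doubling g (ENNReal.ofReal τ)
    rw [hgi'] at h1
    refine (ENNReal.mul_le_mul_iff_right hτe ENNReal.ofReal_ne_top).1 (h1.trans ?_)
    refine (mul_le_mul_right hμE _).trans_eq ?_
    rw [← mul_assoc, ← mul_assoc, ← ENNReal.ofReal_mul hτ0.le]
    congr 1
    have e : τ * (ε * (2 * 12 ^ Q * 4 ^ Q)) = (2 ^ Q) ^ 2 * ε := by
      rw [hτ, ← pow_mul, mul_comm Q 2, pow_mul]; field_simp; norm_num
    rw [e, ENNReal.ofReal_mul (by positivity), ENNReal.ofReal_pow (by positivity),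
      ENNReal.ofReal_pow (by positivity)]
    simp
  refine ⟨Ω, hΩo.measurableSet, fun x hx => ?_, hμΩ, ?_⟩
  · obtain ⟨c, r, hxc, hlt⟩ := lt_MF_iff.1 hx
    have hr : 0 < r := dist_nonneg.trans_lt hxc
    rw [hgi _ measurableSet_ball, ENNReal.lt_div_iff_mul_lt (Or.inl (hμ.ball_ne_zero c hr))
      (Or.inl (hμ.ball_ne_top c r))] at hlt
    have hne : (E ∩ ball c r).Nonempty := by
      by_contra hcon
      rw [not_nonempty_iff_eq_empty] at hcon
      rw [hcon] at hlt; simp at hlt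
    obtain ⟨y, hyE, hyc⟩ := hne
    have h1 := hlt.le.trans ((measure_mono inter_subset_left).trans hμE)
    rw [hμ.ball c r hr, hμ.ball x₀ R hR, ← ENNReal.ofReal_mul hτ0.le, ← ENNReal.ofReal_mul hε.le,
      ENNReal.ofReal_le_ofReal_iff (by positivity)] at h1
    have h2 : r ^ Q ≤ (κ / 2 * R) ^ Q := by
      rw [mul_pow]
      have h3 : ε * (V * R ^ Q) ≤ τ * (κ / 2) ^ Q * (V * R ^ Q) :=
        mul_le_mul_of_nonneg_right hεκ (by positivity)
      have h4 : (τ * V) * r ^ Q ≤ (τ * V) * ((κ / 2) ^ Q * R ^ Q) := by linarith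
      exact le_of_mul_le_mul_left h4 (by positivity)
    have h3 : r ≤ κ / 2 * R :=
      le_of_pow_le_pow_left₀ (by have := hμ.one_le; omega) (by positivity) h2
    have h4 := hE hyE
    simp only [Metric.mem_ball] at *
    linarith [dist_triangle x c x₀, dist_triangle c y x₀, dist_comm c y]
  · obtain ⟨u, r, hW⟩ := hμ.whitney hΩo (hμΩ.trans_lt (ENNReal.mul_lt_top ENNReal.ofReal_lt_top
      (hμ.ball_ne_top _ _).lt_top)).ne
    have hsm : ∀ c ∈ u, 2 * μ (E ∩ ball c (r c)) ≤ μ (ball c (r c)) := by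
      intro c hc
      have hr := hW.pos c hc
      obtain ⟨a, haΩ, hac⟩ := hW.touch c hc
      have ha : MF μ g a ≤ ENNReal.ofReal τ := not_lt.1 haΩ
      have h1 := setLIntegral_le_MF g (x := a) (c := a) (r := 12 * r c)
        (mem_ball_self (by positivity)) (hμ.ball_ne_top _ _)
      rw [hgi _ measurableSet_ball, hμ.ball_mul a c (by norm_num : (0:ℝ) < 12)] at h1
      have h2 : E ∩ ball c (r c) ⊆ E ∩ ball a (12 * r c) :=
        inter_subset_inter_right _ (ball_subset_ball' (by linarith))
      calc 2 * μ (E ∩ ball c (r c)) ≤ 2 * (ENNReal.ofReal τ * (ENNReal.ofReal (12 ^ Q) * μ (ball c (r c)))) :=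
            mul_le_mul_right ((measure_mono h2).trans (h1.trans (mul_le_mul_left ha _))) _
        _ = ENNReal.ofReal (2 * (τ * 12 ^ Q)) * μ (ball c (r c)) := by
            rw [ENNReal.ofReal_mul (p := 2) (by norm_num), ENNReal.ofReal_mul (p := τ) hτ0.le]
            simp only [ENNReal.ofReal_ofNat]
            ring
        _ = μ (ball c (r c)) := by
            have : 2 * (τ * 12 ^ Q) = 1 := by rw [hτ]; field_simp
            rw [this]; simp
    have key := h.whitney_small hμ hW hEm hsm
    refine le_trans ?_ key
    have hae : ∀ᵐ x ∂μ, g x ≤ MF μ g x := hμ.le_MF_ae ((measurable_one.indicator hEm).aemeasurable)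
      (by rw [hgi']; exact hEt)
    refine measure_mono_ae ?_
    filter_upwards [withDensity_absolutelyContinuous μ w hae] with x hx hxE
    refine ⟨?_, hxE⟩
    have hxE' : x ∈ E := hxE
    have : g x = 1 := by simp [hg, hxE']
    rw [this] at hx
    refine lt_of_lt_of_le ?_ hx
    rw [ENNReal.ofReal_lt_one, hτ]
    refine inv_lt_one_of_one_lt₀ ?_
    have : (1:ℝ) ≤ 12 ^ Q := one_le_pow₀ (by norm_num)
    linarith

/-- Iteration of `ApPair.small_step`: a set of sufficiently small measure has weight at most
`theta ^ j` times the weight of a slightly larger ball. -/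
lemma ApPair.small_iter [Nonempty X] (h : ApPair μ p q w σ C) (hμ : HomSp μ Q V) {κ : ℝ} (hκ : 0 < κ)
    (j : ℕ) : ∃ ε : ℝ, 0 < ε ∧ ∀ (x₀ : X) (R S : ℝ), 0 < R → ∀ E, MeasurableSet E → E ⊆ ball x₀ S →
      μ E ≤ ENNReal.ofReal ε * μ (ball x₀ R) →
      μ.withDensity w E ≤ theta p C Q ^ j * μ.withDensity w (ball x₀ (S + j * κ * R)) := by
  induction j with
  | zero =>
    refine ⟨1, one_pos, fun x₀ R S hR E _ hE _ => ?_⟩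
    simpa using measure_mono hE
  | succ j ih =>
    obtain ⟨ε, hε, ih⟩ := ih
    refine ⟨min (ε / (2 * 12 ^ Q * 4 ^ Q)) ((2 * 12 ^ Q)⁻¹ * (κ / 2) ^ Q), by positivity,
      fun x₀ R S hR E hEm hE hμE => ?_⟩
    obtain ⟨E', hm', hE', hμ', hw'⟩ := h.small_step hμ (by positivity) hκ (min_le_right _ _) hR hEm hE hμE
    refine hw'.trans ?_
    rw [pow_succ', mul_assoc]
    refine mul_le_mul_right ?_ _
    have := ih x₀ R _ hR E' hm' hE' (hμ'.trans (mul_le_mul_left (ENNReal.ofReal_le_ofReal ?_) _))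
    · have e : S + ((j + 1 : ℕ) : ℝ) * κ * R = S + κ * R + j * κ * R := by push_cast; ring
      rw [e]; exact this
    · rw [← le_div_iff₀ (by positivity)]; exact min_le_left _ _

/-- Quantitative absolute continuity (`A_∞`) of an `A_p` weight. -/
lemma ApPair.small [Nonempty X] (h : ApPair μ p q w σ C) (hμ : HomSp μ Q V) {s : ℝ≥0∞} (hs : s ≠ 0) :
    ∃ ε : ℝ, 0 < ε ∧ ∀ (x₀ : X) (R : ℝ), 0 < R → ∀ E, MeasurableSet E → E ⊆ ball x₀ R →
      μ E ≤ ENNReal.ofReal ε * μ (ball x₀ R) →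
      μ.withDensity w E ≤ s * μ.withDensity w (ball x₀ R) := by
  set D := (C * 2 ^ Q) ^ p
  have hD := h.doubling hμ
  have hlim : Tendsto (fun k : ℕ => theta p C Q ^ k * D) atTop (𝓝 (0 * D)) :=
    ENNReal.Tendsto.mul_const (ENNReal.tendsto_pow_atTop_nhds_zero_of_lt_one
      (theta_lt h.conj.pos h.fin Q)) (Or.inr hD.fin)
  rw [zero_mul] at hlim
  obtain ⟨k, hk, hk1⟩ := ((hlim.eventually_lt_const (pos_iff_ne_zero.2 hs)).and
    (eventually_ge_atTop 1)).exists
  have hk0 : (0 : ℝ) < k := by exact_mod_cast hk1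
  obtain ⟨ε, hε, H⟩ := h.small_iter hμ (κ := 1 / k) (by positivity) k
  refine ⟨ε, hε, fun x₀ R hR E hEm hE hμE => (H x₀ R R hR E hEm hE hμE).trans ?_⟩
  have e : R + k * (1 / k : ℝ) * R = 2 * R := by
    rw [mul_one_div_cancel hk0.ne']; ring
  rw [e]
  calc _ ≤ theta p C Q ^ k * (D * μ.withDensity w (ball x₀ R)) := mul_le_mul_right (hD.dbl _ _) _
    _ = theta p C Q ^ k * D * μ.withDensity w (ball x₀ R) := by ring
    _ ≤ _ := mul_le_mul_left hk.le _

/-- `b` has mean oscillation at most `N`, the oscillation on the ball `B(x,r)` being measured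
around the number `m x r`. -/
structure Osc (μ : Measure X) (b : X → ℝ) (m : X → ℝ → ℝ) (N : ℝ≥0∞) : Prop where
  meas : Measurable b
  fin : N ≠ ⊤
  bound : ∀ x r, ∫⁻ y in ball x r, ‖b y - m x r‖ₑ ∂μ ≤ N * μ (ball x r)

variable {b : X → ℝ} {m : X → ℝ → ℝ} {N : ℝ≥0∞}

lemma enorm_sub_comm' (a b : ℝ) : ‖a - b‖ₑ = ‖b - a‖ₑ := by
  rw [← enorm_neg, neg_sub]

lemma enorm_tri (a b c : ℝ) : ‖a - c‖ₑ ≤ ‖a - b‖ₑ + ‖b - c‖ₑ := by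
  rw [← sub_add_sub_cancel a b c]
  exact enorm_add_le _ _

lemma Osc.center (hb : Osc μ b m N) (x : X) (r c : ℝ) :
    ‖m x r - c‖ₑ * μ (ball x r) ≤ N * μ (ball x r) + ∫⁻ y in ball x r, ‖b y - c‖ₑ ∂μ := by
  rw [← setLIntegral_const]
  refine le_trans ?_ (add_le_add_left (hb.bound x r) _)
  rw [← lintegral_add_left (hb.meas.sub_const _).enorm]
  refine lintegral_mono fun y => ?_
  rw [enorm_sub_comm' (b y) (m x r)]
  exact enorm_tri _ _ _

/-- The inductive step of the John–Nirenberg inequality in the measure `w μ`. -/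
lemma ApPair.jn_step [Nonempty X] (h : ApPair μ p q w σ C) (hμ : HomSp μ Q V) (hb : Osc μ b m N) :
    ∃ L : ℝ≥0∞, L ≠ ⊤ ∧ ∀ t α : ℝ≥0∞,
      (∀ x r, μ.withDensity w {y ∈ ball x r | t < ‖b y - m x r‖ₑ} ≤ α * μ.withDensity w (ball x r)) →
      ∀ x r, μ.withDensity w {y ∈ ball x r | t + L < ‖b y - m x r‖ₑ} ≤
        α * 2⁻¹ * μ.withDensity w (ball x r) := by
  set D := (C * 2 ^ Q) ^ p + 1 with hDdef
  have hD0 := h.doubling hμ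
  have hDt : D ≠ ⊤ := ENNReal.add_ne_top.2 ⟨hD0.fin, by simp⟩
  have hD : ∀ x r, μ.withDensity w (ball x (2 * r)) ≤ D * μ.withDensity w (ball x r) := fun x r =>
    (hD0.dbl x r).trans (mul_le_mul_left le_self_add _)
  have hDne : D ≠ 0 := by simp [hDdef]
  set s : ℝ≥0∞ := (2 * D ^ 3)⁻¹ with hs
  have hs0 : s ≠ 0 := ENNReal.inv_ne_zero.2 (by finiteness)
  obtain ⟨ε₀, hε₀, hsm⟩ := h.small hμ hs0
  set ε : ℝ := min ε₀ ((1 / 64) ^ Q) with hεdef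
  have hε : 0 < ε := by positivity
  have hεe : ENNReal.ofReal ε ≠ 0 := by simpa using hε
  have hV := hμ.pos
  have hN := hb.fin
  set M : ℝ≥0∞ := (2 ^ Q) ^ 2 * (N + (N + N * 2 ^ Q)) with hM
  set Λ : ℝ≥0∞ := M * (ENNReal.ofReal ε)⁻¹ + 1 with hΛ
  have hΛt : Λ ≠ ⊤ := by
    have := ENNReal.inv_ne_top.2 hεe
    finiteness
  have hΛ0 : Λ ≠ 0 := by simp [hΛ]
  set L : ℝ≥0∞ := N + 4 ^ Q * Λ with hL
  have hLt : L ≠ ⊤ := by finiteness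
  have h2Q : ∀ (x : X) (r : ℝ), μ (ball x (2 * r)) = 2 ^ Q * μ (ball x r) := fun x r => by
    rw [hμ.ball_mul x x two_pos, ENNReal.ofReal_pow (by norm_num)]; simp
  refine ⟨L, hLt, fun t α hα x₀ R => ?_⟩
  set ν := μ.withDensity w with hν
  rcases le_or_gt R 0 with hR | hR
  · rw [ball_eq_empty.2 hR]; simp
  set mB := m x₀ R with hmB
  set Bs := ball x₀ (2 * R) with hBs
  set g : X → ℝ≥0∞ := Bs.indicator fun y => ‖b y - mB‖ₑ with hg
  have hgm : Measurable g := (hb.meas.sub_const _).enorm.indicator measurableSet_ball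
  have hB0 := hμ.ball_ne_zero x₀ hR
  have hBt := hμ.ball_ne_top x₀ R
  have hc : ‖m x₀ (2 * R) - mB‖ₑ ≤ N + N * 2 ^ Q := by
    have h1 : ‖mB - m x₀ (2 * R)‖ₑ * μ (ball x₀ R) ≤ (N + N * 2 ^ Q) * μ (ball x₀ R) := by
      refine (hb.center x₀ R (m x₀ (2 * R))).trans ?_
      rw [add_mul, mul_assoc N, ← h2Q]
      refine add_le_add le_rfl (le_trans ?_ (hb.bound x₀ (2 * R)))
      exact lintegral_mono_set (ball_subset_ball (by linarith))
    rw [enorm_sub_comm']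
    exact (ENNReal.mul_le_mul_iff_left hB0 hBt).1 h1
  have hgint : ∫⁻ y, g y ∂μ ≤ (N + (N + N * 2 ^ Q)) * μ Bs := by
    rw [hg, lintegral_indicator measurableSet_ball, add_mul]
    calc ∫⁻ y in Bs, ‖b y - mB‖ₑ ∂μ ≤ ∫⁻ y in Bs, (‖b y - m x₀ (2 * R)‖ₑ + ‖m x₀ (2 * R) - mB‖ₑ) ∂μ :=
          lintegral_mono fun y => enorm_tri _ _ _
      _ = ∫⁻ y in Bs, ‖b y - m x₀ (2 * R)‖ₑ ∂μ + ‖m x₀ (2 * R) - mB‖ₑ * μ Bs := by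
          rw [lintegral_add_left (hb.meas.sub_const _).enorm, setLIntegral_const]
      _ ≤ _ := add_le_add (hb.bound _ _) (mul_le_mul_left hc _)
  have hBst : μ Bs ≠ ⊤ := hμ.ball_ne_top _ _
  have hgt : ∫⁻ y, g y ∂μ ≠ ⊤ := (hgint.trans_lt (by finiteness)).ne
  set Ω := {x | Λ < MF μ g x} with hΩ
  have hΩo : IsOpen Ω := isOpen_lt_MF μ g _
  have hμΩ : μ Ω ≤ ENNReal.ofReal ε * μ Bs := by
    have h1 := (MF_weak hμ.doubling g Λ).trans (mul_le_mul_right hgint _)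
    refine (ENNReal.mul_le_mul_iff_right hΛ0 hΛt).1 (h1.trans ?_)
    rw [← mul_assoc, ← hM, ← mul_assoc]
    refine mul_le_mul_left ?_ _
    rw [hΛ, add_mul, mul_assoc, ENNReal.inv_mul_cancel hεe ENNReal.ofReal_ne_top, mul_one]
    exact le_self_add
  obtain ⟨u, r, hW⟩ := hμ.whitney hΩo (hμΩ.trans_lt (by finiteness)).ne
  have hrR : ∀ c ∈ u, 32 * r c ≤ R := by
    intro c hc
    have hr := hW.pos c hc
    have h1 : μ (ball c (r c)) ≤ ENNReal.ofReal ε * μ Bs :=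
      (measure_mono ((ball_subset_ball (by linarith)).trans (hW.sub c hc))).trans hμΩ
    rw [hμ.ball c _ hr, hBs, hμ.ball x₀ _ (by positivity), ← ENNReal.ofReal_mul hε.le,
      ENNReal.ofReal_le_ofReal_iff (by positivity)] at h1
    have h2 : ε * (V * (2 * R) ^ Q) ≤ (1 / 64) ^ Q * (V * (2 * R) ^ Q) :=
      mul_le_mul_of_nonneg_right (min_le_right _ _) (by positivity)
    have h3 : V * r c ^ Q ≤ V * (R / 32) ^ Q := by
      have e : (R / 32) ^ Q = (1 / 64) ^ Q * (2 * R) ^ Q := by rw [← mul_pow]; congr 1; ring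
      rw [e]; linarith
    have h4 := le_of_pow_le_pow_left₀ (by have := hμ.one_le; omega) (by positivity)
      (le_of_mul_le_mul_left h3 hV)
    linarith
  set u' := {c ∈ u | (ball c (4 * r c) ∩ ball x₀ R).Nonempty} with hu'
  have hcount : Countable u' := (hW.countable.mono (sep_subset _ _)).to_subtype
  have hcent : ∀ c ∈ u', ‖m c (4 * r c) - mB‖ₑ ≤ L := by
    rintro c ⟨hc, z, hz1, hz2⟩
    have hr := hW.pos c hc
    have hR30 := hrR c hc
    obtain ⟨a, haΩ, hac⟩ := hW.touch c hc
    have ha : MF μ g a ≤ Λ := not_lt.1 haΩ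
    have h0 := hμ.ball_ne_zero c (r := 4 * r c) (by positivity)
    have ht := hμ.ball_ne_top c (4 * r c)
    have h1 := hb.center c (4 * r c) mB
    simp only [Metric.mem_ball] at hz1 hz2
    have h2 : ∫⁻ y in ball c (4 * r c), ‖b y - mB‖ₑ ∂μ ≤ 4 ^ Q * Λ * μ (ball c (4 * r c)) := by
      have hsub : ball c (4 * r c) ⊆ ball a (16 * r c) := ball_subset_ball' (by linarith)
      have hsub2 : ball a (16 * r c) ⊆ Bs := ball_subset_ball' (by
        linarith [dist_triangle a c x₀, dist_triangle c z x₀, dist_comm a c, dist_comm c z])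
      have hmf := setLIntegral_le_MF g (x := a) (c := a) (r := 16 * r c)
        (mem_ball_self (by positivity)) (hμ.ball_ne_top _ _)
      have e : ∫⁻ y in ball a (16 * r c), g y ∂μ = ∫⁻ y in ball a (16 * r c), ‖b y - mB‖ₑ ∂μ :=
        setLIntegral_congr_fun measurableSet_ball fun y hy => indicator_of_mem (hsub2 hy) _
      have e2 : μ (ball a (16 * r c)) = 4 ^ Q * μ (ball c (4 * r c)) := by
        rw [show 16 * r c = 4 * (4 * r c) by ring, hμ.ball_mul a c (by norm_num : (0:ℝ) < 4),
          ENNReal.ofReal_pow (by norm_num)]; simp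
      rw [e, e2] at hmf
      calc _ ≤ ∫⁻ y in ball a (16 * r c), ‖b y - mB‖ₑ ∂μ := lintegral_mono_set hsub
        _ ≤ Λ * (4 ^ Q * μ (ball c (4 * r c))) := hmf.trans (mul_le_mul_left ha _)
        _ = _ := by ring
    refine (ENNReal.mul_le_mul_iff_left h0 ht).1 (h1.trans ?_)
    rw [hL, add_mul]
    exact add_le_add le_rfl h2
  set P : X → Set X := fun c => {y ∈ ball c (4 * r c) | t < ‖b y - m c (4 * r c)‖ₑ} with hP
  have hae : ∀ᵐ y ∂ν, g y ≤ MF μ g y :=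
    withDensity_absolutelyContinuous μ w (hμ.le_MF_ae hgm.aemeasurable hgt)
  have hE : ν {y ∈ ball x₀ R | t + L < ‖b y - mB‖ₑ} ≤ ν (⋃ c : u', P c) := by
    refine measure_mono_ae ?_
    filter_upwards [hae] with y hy hyE
    obtain ⟨hyB, hyt⟩ : y ∈ ball x₀ R ∧ t + L < ‖b y - mB‖ₑ := hyE
    have hyΩ : y ∈ Ω := by
      refine lt_of_lt_of_le ?_ hy
      rw [hg, indicator_of_mem (ball_subset_ball (by linarith) hyB)]
      refine lt_of_le_of_lt ?_ hyt
      calc Λ ≤ 4 ^ Q * Λ := le_mul_of_one_le_left zero_le (one_le_pow₀ (by norm_num))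
        _ ≤ t + L := le_add_left (by rw [hL]; exact le_add_self)
    rw [hW.cover] at hyΩ
    obtain ⟨c, hc, hyc⟩ := mem_iUnion₂.1 hyΩ
    have hcu : c ∈ u' := ⟨hc, y, hyc, hyB⟩
    refine mem_iUnion.2 ⟨⟨c, hcu⟩, hyc, ?_⟩
    have h1 : ‖b y - mB‖ₑ ≤ ‖b y - m c (4 * r c)‖ₑ + L :=
      (enorm_tri _ _ _).trans (add_le_add le_rfl (hcent c hcu))
    exact (ENNReal.add_lt_add_iff_right hLt).1 (hyt.trans_le h1)
  have hsub : (⋃ c : u', ball c.1 (r c)) ⊆ Ω ∩ Bs := by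
    refine iUnion_subset fun ⟨c, hc, z, hz1, hz2⟩ => ?_
    have hr := hW.pos c hc
    have hR30 := hrR c hc
    simp only [Metric.mem_ball] at hz1 hz2
    refine subset_inter ((ball_subset_ball (by linarith)).trans (hW.sub c hc)) (ball_subset_ball' ?_)
    linarith [dist_triangle c z x₀, dist_comm c z]
  refine hE.trans ?_
  calc ν (⋃ c : u', P c) ≤ ∑' c : u', ν (P c) := measure_iUnion_le _
    _ ≤ ∑' c : u', α * (D * (D * ν (ball c.1 (r c)))) := by
        refine ENNReal.tsum_le_tsum fun c => (hα c.1 (4 * r c)).trans (mul_le_mul_right ?_ _)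
        rw [show 4 * r c.1 = 2 * (2 * r c.1) by ring]
        exact (hD _ _).trans (mul_le_mul_right (hD _ _) _)
    _ = α * (D * (D * ν (⋃ c : u', ball c.1 (r c)))) := by
        simp only [ENNReal.tsum_mul_left]
        rw [measure_iUnion (ι := u') (f := fun c : u' => ball c.1 (r c))
          (fun x y hxy => hW.disj x.2.1 y.2.1 fun e => hxy (Subtype.ext e))
          fun x => measurableSet_ball]
    _ ≤ α * (D * (D * (s * (D * ν (ball x₀ R))))) := by
        have h1 := hsm x₀ (2 * R) (by positivity) (Ω ∩ Bs) (hΩo.measurableSet.inter measurableSet_ball)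
          inter_subset_right ((measure_mono inter_subset_left).trans (hμΩ.trans
            (mul_le_mul_left (ENNReal.ofReal_le_ofReal (min_le_left _ _)) _)))
        have h2 := (measure_mono (μ := ν) hsub).trans (h1.trans (mul_le_mul_right (hD x₀ R) s))
        exact mul_le_mul_right (mul_le_mul_right (mul_le_mul_right h2 _) _) _
    _ = α * (s * D ^ 3) * ν (ball x₀ R) := by ring
    _ = _ := by
        rw [hs, ENNReal.mul_inv (by simp) (by simp), mul_assoc 2⁻¹,
          ENNReal.inv_mul_cancel (pow_ne_zero _ hDne) (by finiteness), mul_one]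

/-- John–Nirenberg inequality in the measure `w μ`. -/
lemma ApPair.jn [Nonempty X] (h : ApPair μ p q w σ C) (hμ : HomSp μ Q V) (hb : Osc μ b m N) :
    ∃ L : ℝ, 0 < L ∧ ∀ (n : ℕ) x r,
      μ.withDensity w {y ∈ ball x r | n * L < |b y - m x r|} ≤
        2⁻¹ ^ n * μ.withDensity w (ball x r) := by
  obtain ⟨L, hL, H⟩ := h.jn_step hμ hb
  have key : ∀ (n : ℕ) x r, μ.withDensity w {y ∈ ball x r | n * L < ‖b y - m x r‖ₑ} ≤
      2⁻¹ ^ n * μ.withDensity w (ball x r) := by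
    intro n
    induction n with
    | zero => intro x r; rw [pow_zero, one_mul]; exact measure_mono (sep_subset _ _)
    | succ n ih =>
      intro x r
      have := H _ _ ih x r
      rw [pow_succ]
      convert this using 7
      push_cast; ring
  refine ⟨L.toReal + 1, by positivity, fun n x r => le_trans ?_ (key n x r)⟩
  refine measure_mono fun y hy => ⟨hy.1, ?_⟩
  have h1 : (n : ℝ) * L.toReal < |b y - m x r| := by
    have := hy.2
    have h2 : (0:ℝ) ≤ n := n.cast_nonneg
    nlinarith
  rw [Real.enorm_eq_ofReal_abs, ENNReal.lt_ofReal_iff_toReal_lt (by finiteness)]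
  simpa using h1

lemma exp_layer {L y : ℝ} (hL : 0 < L) (hy : 0 ≤ y) :
    ENNReal.ofReal (Real.exp (Real.log (3 / 2) / L * y)) ≤
      1 + ∑' n : ℕ, ENNReal.ofReal ((3 / 2) ^ (n + 1)) * (if n * L < y then 1 else 0) := by
  have hl : 0 < Real.log (3 / 2) := Real.log_pos (by norm_num)
  rcases hy.eq_or_lt with rfl | hy0
  · simp
  -- the largest `n` with `n L < y`
  obtain ⟨n, hn1, hn2⟩ : ∃ n : ℕ, n * L < y ∧ y ≤ (n + 1 : ℕ) * L := by
    have hex : ∃ n : ℕ, y ≤ n * L := by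
      obtain ⟨n, hn⟩ := exists_nat_ge (y / L)
      exact ⟨n, by rwa [div_le_iff₀ hL] at hn⟩
    classical
    have h0 : Nat.find hex ≠ 0 := by
      intro h0
      have := Nat.find_spec hex
      rw [h0] at this; simp at this; linarith
    obtain ⟨k, hk⟩ := Nat.exists_eq_succ_of_ne_zero h0
    refine ⟨k, not_le.1 (Nat.find_min hex (by omega)), ?_⟩
    have := Nat.find_spec hex
    rwa [hk] at this
  refine le_trans ?_ (le_add_left (ENNReal.le_tsum n))
  rw [if_pos hn1, mul_one]
  refine ENNReal.ofReal_le_ofReal ?_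
  calc Real.exp (Real.log (3 / 2) / L * y) ≤ Real.exp (((n + 1 : ℕ) : ℝ) * Real.log (3 / 2)) := by
        refine Real.exp_le_exp.2 ?_
        rw [div_mul_eq_mul_div, div_le_iff₀ hL]
        nlinarith
    _ = (3 / 2) ^ (n + 1) := by
        rw [Real.exp_nat_mul, Real.exp_log (by norm_num)]

/-- Exponential integrability of a function of bounded mean oscillation in the measure `w μ`. -/
lemma ApPair.jn_exp [Nonempty X] (h : ApPair μ p q w σ C) (hμ : HomSp μ Q V) (hb : Osc μ b m N) :
    ∃ η : ℝ, 0 < η ∧ ∀ x r,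
      ∫⁻ y in ball x r, ENNReal.ofReal (Real.exp (η * |b y - m x r|)) ∂μ.withDensity w ≤
        7 * μ.withDensity w (ball x r) := by
  obtain ⟨L, hL, H⟩ := h.jn hμ hb
  refine ⟨Real.log (3 / 2) / L, div_pos (Real.log_pos (by norm_num)) hL, fun x r => ?_⟩
  set ν := μ.withDensity w with hν
  have hms : ∀ n : ℕ, MeasurableSet {y | n * L < |b y - m x r|} := fun n =>
    measurableSet_lt measurable_const ((hb.meas.sub_const _).abs)
  have hmi : ∀ n : ℕ, Measurable fun y => (if n * L < |b y - m x r| then (1:ℝ≥0∞) else 0) := fun n =>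
    Measurable.ite (hms n) measurable_const measurable_const
  calc _ ≤ ∫⁻ y in ball x r, (1 + ∑' n : ℕ, ENNReal.ofReal ((3 / 2) ^ (n + 1)) *
        (if n * L < |b y - m x r| then 1 else 0)) ∂ν :=
        lintegral_mono fun y => exp_layer hL (abs_nonneg _)
    _ = ν (ball x r) + ∑' n : ℕ, ENNReal.ofReal ((3 / 2) ^ (n + 1)) *
        ν {y ∈ ball x r | n * L < |b y - m x r|} := by
        rw [lintegral_add_left measurable_const, setLIntegral_const, one_mul,
          lintegral_tsum fun n => ((hmi n).const_mul _).aemeasurable]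
        congr 2
        ext n
        rw [lintegral_const_mul _ (hmi n)]
        congr 1
        have : (fun y => (if n * L < |b y - m x r| then (1:ℝ≥0∞) else 0)) =
            {y | n * L < |b y - m x r|}.indicator 1 := by
          ext y; simp [indicator_apply]
        rw [this, lintegral_indicator_one (hms n), Measure.restrict_apply (hms n), inter_comm]
        rfl
    _ ≤ ν (ball x r) + ∑' n : ℕ, ENNReal.ofReal ((3 / 2) ^ (n + 1)) * (2⁻¹ ^ n * ν (ball x r)) :=
        add_le_add le_rfl (ENNReal.tsum_le_tsum fun n => mul_le_mul_right (H n x r) _)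
    _ = (1 + ∑' n : ℕ, ENNReal.ofReal (3 / 2 * (3 / 4) ^ n)) * ν (ball x r) := by
        rw [add_mul, one_mul, ← ENNReal.tsum_mul_right]
        congr 2
        ext n
        rw [← mul_assoc]
        congr 1
        have : (2⁻¹ : ℝ≥0∞) ^ n = ENNReal.ofReal (2⁻¹ ^ n) := by
          rw [ENNReal.ofReal_pow (by norm_num), ENNReal.ofReal_inv_of_pos (by norm_num)]; simp
        rw [this, ← ENNReal.ofReal_mul (by positivity)]
        congr 1
        rw [show (3/4 : ℝ) = 3 / 2 * 2⁻¹ by norm_num, mul_pow]; ring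
    _ = 7 * ν (ball x r) := by
        rw [← ENNReal.ofReal_tsum_of_nonneg (fun n => by positivity)
          ((summable_geometric_of_lt_one (by norm_num) (by norm_num)).mul_left _)]
        have e : (∑' n : ℕ, (3 / 2 : ℝ) * (3 / 4) ^ n) = 6 := by
          rw [_root_.tsum_mul_left, tsum_geometric_of_lt_one (by norm_num) (by norm_num)]; norm_num
        rw [e]
        norm_num

/-- Exponential tilts of an `A_p` weight by a small multiple of a `BMO` function are again `A_p`
weights, with a uniform constant. -/
lemma ApPair.tilt [Nonempty X] (h : ApPair μ p q w σ C) (hμ : HomSp μ Q V) (hb : Osc μ b m N) :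
    ∃ δ : ℝ, 0 < δ ∧ ∀ τ : ℝ, |τ| ≤ δ →
      ApPair μ p q (fun y => w y * ENNReal.ofReal (Real.exp (p * τ * b y)))
        (fun y => σ y * ENNReal.ofReal (Real.exp (-(q * τ * b y)))) (7 * C) := by
  have hp := h.conj.pos
  have hq := h.conj.symm.pos
  have main : ∀ {w' : X → ℝ≥0∞} {η s : ℝ}, Measurable w' → |s| ≤ η → (∀ x r,
      ∫⁻ y in ball x r, ENNReal.ofReal (Real.exp (η * |b y - m x r|)) ∂μ.withDensity w' ≤
        7 * μ.withDensity w' (ball x r)) → ∀ x r,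
      ∫⁻ y in ball x r, w' y * ENNReal.ofReal (Real.exp (s * b y)) ∂μ ≤
        ENNReal.ofReal (Real.exp (s * m x r)) * (7 * ∫⁻ y in ball x r, w' y ∂μ) := by
    intro w' η s hw' hs H x r
    have hbm := hb.meas
    have H' := H x r
    rw [withDensity_apply _ measurableSet_ball, restrict_withDensity measurableSet_ball,
      lintegral_withDensity_eq_lintegral_mul _ hw' (g := fun y =>
        ENNReal.ofReal (Real.exp (η * |b y - m x r|))) (ENNReal.measurable_ofReal.comp (by fun_prop))] at H'
    simp only [Pi.mul_apply] at H'
    refine le_trans ?_ (mul_le_mul_right H' _)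
    rw [← lintegral_const_mul _ (f := fun y => w' y * ENNReal.ofReal (Real.exp (η * |b y - m x r|)))
      (hw'.mul (ENNReal.measurable_ofReal.comp (by fun_prop)))]
    refine lintegral_mono fun y => ?_
    rw [mul_left_comm, ← ENNReal.ofReal_mul (Real.exp_nonneg _), ← Real.exp_add]
    refine mul_le_mul_right (ENNReal.ofReal_le_ofReal (Real.exp_le_exp.2 ?_)) _
    have h1 : s * (b y - m x r) ≤ η * |b y - m x r| :=
      (le_abs_self _).trans (by rw [abs_mul]; exact mul_le_mul_of_nonneg_right hs (abs_nonneg _))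
    linarith
  obtain ⟨η₁, h1, H1⟩ := h.jn_exp hμ hb
  obtain ⟨η₂, h2, H2⟩ := h.symm.jn_exp hμ hb
  refine ⟨min (η₁ / p) (η₂ / q), by positivity, fun τ hτ => ?_⟩
  have hbm := hb.meas
  have e1 : |p * τ| ≤ η₁ := by
    rw [abs_mul, abs_of_pos hp, mul_comm, ← le_div_iff₀ hp]; exact hτ.trans (min_le_left _ _)
  have e2 : |-(q * τ)| ≤ η₂ := by
    rw [abs_neg, abs_mul, abs_of_pos hq, mul_comm, ← le_div_iff₀ hq]; exact hτ.trans (min_le_right _ _)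
  have er : ∀ {a s : ℝ}, 0 < a → ENNReal.ofReal (Real.exp (a * s)) ^ (1 / a) = ENNReal.ofReal (Real.exp s) := by
    intro a s ha
    rw [ENNReal.ofReal_rpow_of_pos (Real.exp_pos _), ← Real.exp_mul]
    congr 2; field_simp
  have ec : ∀ s : ℝ, ENNReal.ofReal (Real.exp s) * ENNReal.ofReal (Real.exp (-s)) = 1 := by
    intro s
    rw [← ENNReal.ofReal_mul (Real.exp_nonneg _), ← Real.exp_add]; simp
  have hp' : 0 ≤ 1 / p := by positivity
  have hq' : 0 ≤ 1 / q := by positivity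
  refine ⟨h.conj, h.meas_w.mul (ENNReal.measurable_ofReal.comp (by fun_prop)),
    h.meas_σ.mul (ENNReal.measurable_ofReal.comp (by fun_prop)), by have := h.fin; finiteness, ?_, ?_⟩
  · filter_upwards [h.prod] with x hx
    rw [ENNReal.mul_rpow_of_nonneg _ _ hp', ENNReal.mul_rpow_of_nonneg _ _ hq', mul_assoc p,
      er hp, mul_assoc q, ← mul_neg, er hq, mul_mul_mul_comm, hx, ec, one_mul]
  · intro x r
    have A1 := ENNReal.rpow_le_rpow (main h.meas_w e1 H1 x r) hp'
    have A2 := ENNReal.rpow_le_rpow (main h.meas_σ e2 H2 x r) hq'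
    simp only [neg_mul] at A2
    refine (mul_le_mul' A1 A2).trans ?_
    rw [ENNReal.mul_rpow_of_nonneg _ _ hp', ENNReal.mul_rpow_of_nonneg _ _ hq', mul_assoc p,
      er hp, mul_assoc q, ← mul_neg, er hq, mul_mul_mul_comm, ec, one_mul,
      ENNReal.mul_rpow_of_nonneg _ _ hp', ENNReal.mul_rpow_of_nonneg _ _ hq', mul_mul_mul_comm,
      ← ENNReal.rpow_add _ _ (by norm_num) (by norm_num)]
    have : 1 / p + 1 / q = 1 := by simpa using h.conj.inv_add_inv_eq_one
    rw [this, ENNReal.rpow_one, mul_assoc]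
    exact mul_le_mul_right (h.bound x r) _

end CZ

namespace CZ

/-! ### The commutator as a circular average of conjugated singular integrals -/

open Set Metric

variable {X : Type*} [MetricSpace X] [MeasurableSpace X] [BorelSpace X]
  [SecondCountableTopology X] {μ : Measure X} {Q : ℕ} {V A : ℝ} {k : X → X → ℝ}
  {w σ : X → ℝ≥0∞} {p q : ℝ} {C : ℝ≥0∞} {b : X → ℝ} {m : X → ℝ → ℝ} {N : ℝ≥0∞}

/-- Cauchy's formula for the derivative of `z ↦ exp (a z)` at the origin, in real form. -/
lemma trig_id (a : ℝ) : ∫ θ in (0:ℝ)..(2 * Real.pi), Real.exp (a * Real.cos θ) *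
    Real.cos (a * Real.sin θ - θ) = 2 * Real.pi * a := by
  have hd : Differentiable ℂ fun z : ℂ => Complex.exp (a * z) := by fun_prop
  have H := Complex.two_pi_I_inv_smul_circleIntegral_sub_sq_inv_smul_of_differentiable
    (U := univ) isOpen_univ (c := 0) (R := 1) (w₀ := 0) (subset_univ _) hd.differentiableOn
    (by simp)
  have hderiv : deriv (fun z : ℂ => Complex.exp (a * z)) 0 = a := by
    have : HasDerivAt (fun z : ℂ => Complex.exp (a * z)) (Complex.exp (a * 0) * (a * 1)) 0 :=
      ((hasDerivAt_id (0:ℂ)).const_mul (a:ℂ)).cexp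
    simpa using this.deriv
  rw [hderiv, circleIntegral] at H
  have e : ∀ θ : ℝ, deriv (circleMap 0 1) θ • ((circleMap 0 1 θ - 0) ^ 2)⁻¹ •
      Complex.exp (a * circleMap 0 1 θ) =
      Complex.I * Complex.exp (a * Complex.exp (θ * Complex.I) - θ * Complex.I) := by
    intro θ
    simp only [deriv_circleMap, circleMap, smul_eq_mul, sub_zero, zero_add, Complex.ofReal_one, one_mul,
      Complex.exp_sub]
    have := Complex.exp_ne_zero (θ * Complex.I)
    field_simp
  simp_rw [e] at H
  rw [intervalIntegral.integral_const_mul, smul_eq_mul] at H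
  have hpi : (Real.pi : ℂ) ≠ 0 := by exact_mod_cast Real.pi_ne_zero
  have H2 : ∫ θ in (0:ℝ)..(2 * Real.pi), Complex.exp (a * Complex.exp (θ * Complex.I) - θ * Complex.I)
      = 2 * Real.pi * a := by
    generalize (∫ θ in (0:ℝ)..(2 * Real.pi),
      Complex.exp (a * Complex.exp (θ * Complex.I) - θ * Complex.I)) = J at H
    rw [← H]; field_simp
  have H3 := congrArg Complex.re H2
  have hi : IntervalIntegrable (fun θ : ℝ => Complex.exp (a * Complex.exp (θ * Complex.I) - θ * Complex.I))
      volume 0 (2 * Real.pi) := by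
    refine Continuous.intervalIntegrable ?_ _ _
    fun_prop
  have H4 := Complex.reCLM.intervalIntegral_comp_comm hi
  rw [show Complex.reCLM (∫ θ in (0:ℝ)..(2 * Real.pi),
    Complex.exp (a * Complex.exp (θ * Complex.I) - θ * Complex.I)) = 2 * Real.pi * a by
      rw [Complex.reCLM_apply, H3]; norm_cast] at H4
  rw [← H4]
  refine intervalIntegral.integral_congr fun θ _ => ?_
  simp only [Complex.reCLM_apply, Complex.exp_re]
  congr 2
  · simp [Complex.exp_re]
  · simp [Complex.exp_im]

/-- The truncated commutator. -/
def CTr (μ : Measure X) (k : X → X → ℝ) (b : X → ℝ) (ε : ℝ) (f : X → ℝ) (x : X) : ℝ :=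
  ∫ y in {y | ε < dist x y}, (b x - b y) * (k x y * f y) ∂μ

/-- The angular variable of the circle. -/
def circ : Measure ℝ := volume.restrict (Ioc 0 (2 * Real.pi))

instance : IsFiniteMeasure circ := by
  unfold circ
  exact ⟨by rw [Measure.restrict_apply_univ, Real.volume_Ioc]; exact ENNReal.ofReal_lt_top⟩

/-- The conjugated function whose singular integral represents the commutator. -/
def tw (b : X → ℝ) (δ : ℝ) (φ : ℝ → ℝ) (f : X → ℝ) (θ : ℝ) (y : X) : ℝ :=
  Real.exp (-(δ * Real.cos θ * b y)) * φ (δ * Real.sin θ * b y) * f y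

lemma abs_tw_le {φ : ℝ → ℝ} (hφ1 : ∀ t, |φ t| ≤ 1) (δ : ℝ) (f : X → ℝ) (θ : ℝ) (y : X) :
    |tw b δ φ f θ y| ≤ Real.exp (-(δ * Real.cos θ * b y)) * |f y| := by
  rw [tw, abs_mul, abs_mul, Real.abs_exp]
  refine mul_le_mul_of_nonneg_right ?_ (abs_nonneg _)
  exact mul_le_of_le_one_right (Real.exp_nonneg _) (hφ1 _)

lemma meas_tw {φ : ℝ → ℝ} (hφ : Continuous φ) (hb : Measurable b) (δ : ℝ) {f : X → ℝ}
    (hf : Measurable f) : Measurable fun z : ℝ × X => tw b δ φ f z.1 z.2 := by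
  unfold tw
  have := hφ.measurable
  fun_prop

lemma CZK.meas_Tr_par [SFinite μ] (hk : CZK μ Q k A) {u : ℝ → X → ℝ}
    (hum : Measurable fun z : ℝ × X => u z.1 z.2) (ε : ℝ) :
    Measurable fun z : ℝ × X => Tr μ k ε (u z.1) z.2 := by
  have h1 : StronglyMeasurable fun z : (ℝ × X) × X => {z : (ℝ × X) × X | ε < dist z.1.2 z.2}.indicator
      (fun z => k z.1.2 z.2 * u z.1.1 z.2) z := by
    refine Measurable.stronglyMeasurable (Measurable.indicator ?_
      (measurableSet_lt (f := fun _ => ε) (g := fun z : (ℝ × X) × X => dist z.1.2 z.2)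
      (by fun_prop) (by fun_prop)))
    exact (hk.meas.comp (by fun_prop : Measurable fun z : (ℝ × X) × X => (z.1.2, z.2))).mul
      (hum.comp (by fun_prop : Measurable fun z : (ℝ × X) × X => (z.1.1, z.2)))
  have h2 := (h1.integral_prod_right' (ν := μ)).measurable
  convert h2 using 1
  ext z
  rw [Tr, ← integral_indicator (measurableSet_far z.2 ε)]
  rfl

/-- Boundedness on `L^p(w)` of the part of the Cauchy integral for the commutator that carries
the trigonometric function `φ`. -/
lemma CZK.circ_part [Nonempty X] [SFinite μ] (hk : CZK μ Q k A) (hμ : HomSp μ Q V)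
    (h : ApPair μ p q w σ C) (hb : Osc μ b m N) :
    ∃ δ : ℝ, 0 < δ ∧ ∃ K : ℝ≥0∞, K ≠ ⊤ ∧ ∀ φ : ℝ → ℝ, Continuous φ → (∀ t, |φ t| ≤ 1) →
      ∀ f : X → ℝ, Measurable f → ∀ (x₀ : X) (R : ℝ), (∀ y, y ∉ Metric.ball x₀ R → f y = 0) →
      (∀ θ, Integrable (tw b δ φ f θ) μ) → ∀ ε : ℝ, 0 < ε →
      ∫⁻ x, (∫⁻ θ, ENNReal.ofReal (Real.exp (δ * Real.cos θ * b x)) *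
        ‖Tr μ k ε (tw b δ φ f θ) x‖ₑ ∂circ) ^ p * w x ∂μ ≤ K * ∫⁻ x, ‖f x‖ₑ ^ p * w x ∂μ := by
  have hp := h.conj.pos
  have hq := h.conj.symm.pos
  obtain ⟨δ, hδ, H⟩ := h.tilt hμ hb
  have hC7 : 7 * C ≠ ⊤ := by have := h.fin; finiteness
  obtain ⟨K, hK, HK⟩ := hk.weighted hμ h.conj hC7
  have hbm := hb.meas
  have hct : circ univ ≠ ⊤ := measure_ne_top _ _
  have hct' : circ univ ^ (p / q) ≠ ⊤ := ENNReal.rpow_ne_top_of_nonneg (div_pos hp hq).le hct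
  have hKt : circ univ ^ (p / q) * (K * circ univ) ≠ ⊤ :=
    ENNReal.mul_ne_top hct' (ENNReal.mul_ne_top hK hct)
  refine ⟨δ, hδ, circ univ ^ (p / q) * (K * circ univ), hKt, ?_⟩
  intro φ hφ hφ1 f hf x₀ R hR hi ε hε
  obtain ⟨u, hu⟩ : ∃ u, u = tw b δ φ f := ⟨_, rfl⟩
  rw [← hu] at hi ⊢
  have hum : Measurable fun z : ℝ × X => u z.1 z.2 := by rw [hu]; exact meas_tw hφ hbm δ hf
  have hTr : Measurable fun z : ℝ × X => Tr μ k ε (u z.1) z.2 := hk.meas_Tr_par hum ε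
  set F : X → ℝ → ℝ≥0∞ := fun x θ => ENNReal.ofReal (Real.exp (δ * Real.cos θ * b x)) *
    ‖Tr μ k ε (u θ) x‖ₑ with hF
  have hFm : Measurable (Function.uncurry F) := by
    refine Measurable.mul (ENNReal.measurable_ofReal.comp (by fun_prop)) ?_
    exact (hTr.comp measurable_swap).enorm
  have hF1 : ∀ x, Measurable (F x) := fun x => hFm.of_uncurry_left
  have hjen : ∀ x, (∫⁻ θ, F x θ ∂circ) ^ p ≤ circ univ ^ (p / q) * ∫⁻ θ, F x θ ^ p ∂circ := by
    intro x
    have := ENNReal.lintegral_mul_le_Lp_mul_Lq circ h.conj (hF1 x).aemeasurable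
      (g := 1) measurable_one.aemeasurable
    simp only [Pi.mul_apply, Pi.one_apply, mul_one, ENNReal.one_rpow, lintegral_one] at this
    refine (ENNReal.rpow_le_rpow this hp.le).trans_eq ?_
    rw [ENNReal.mul_rpow_of_nonneg _ _ hp.le, ← ENNReal.rpow_mul, ← ENNReal.rpow_mul,
      one_div_mul_cancel hp.ne', ENNReal.rpow_one, mul_comm]
    congr 2; ring
  have hθ : ∀ θ, ∫⁻ x, F x θ ^ p * w x ∂μ ≤ K * ∫⁻ x, ‖f x‖ₑ ^ p * w x ∂μ := by
    intro θ
    have hcos : |δ * Real.cos θ| ≤ δ := by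
      rw [abs_mul, abs_of_pos hδ]; exact mul_le_of_le_one_right hδ.le (Real.abs_cos_le_one θ)
    have hz : ∀ y, y ∉ Metric.ball x₀ R → u θ y = 0 := fun y hy => by
      rw [hu, tw, hR y hy, mul_zero]
    have h1 := HK _ _ (H _ hcos) (u θ) (hum.comp measurable_prodMk_left) (hi θ) x₀ R hz
    have er : ∀ s : ℝ, ENNReal.ofReal (Real.exp s) ^ p = ENNReal.ofReal (Real.exp (p * s)) := by
      intro s
      rw [ENNReal.ofReal_rpow_of_pos (Real.exp_pos _), ← Real.exp_mul, mul_comm]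
    refine le_trans (lintegral_mono fun x => ?_) (h1.trans (mul_le_mul_right (lintegral_mono fun x => ?_) _))
    · rw [hF]
      simp only
      rw [ENNReal.mul_rpow_of_nonneg _ _ hp.le, er]
      calc _ = ‖Tr μ k ε (u θ) x‖ₑ ^ p * (w x * ENNReal.ofReal (Real.exp (p * (δ * Real.cos θ * b x)))) := by
            ring
        _ ≤ _ := by
            rw [← mul_assoc p]
            exact mul_le_mul_left (ENNReal.rpow_le_rpow (le_TS hε _ _) hp.le) _
    · have h2 : ‖u θ x‖ₑ ≤ ENNReal.ofReal (Real.exp (-(δ * Real.cos θ * b x))) * ‖f x‖ₑ := by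
        rw [Real.enorm_eq_ofReal_abs, Real.enorm_eq_ofReal_abs, ← ENNReal.ofReal_mul (Real.exp_nonneg _)]
        rw [hu]
        exact ENNReal.ofReal_le_ofReal (abs_tw_le hφ1 _ _ _ _)
      refine (mul_le_mul_left (ENNReal.rpow_le_rpow h2 hp.le) _).trans_eq ?_
      rw [ENNReal.mul_rpow_of_nonneg _ _ hp.le, er]
      calc _ = (ENNReal.ofReal (Real.exp (p * -(δ * Real.cos θ * b x))) *
            ENNReal.ofReal (Real.exp (p * (δ * Real.cos θ) * b x))) * (‖f x‖ₑ ^ p * w x) := by ring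
        _ = _ := by
            rw [← ENNReal.ofReal_mul (Real.exp_nonneg _), ← Real.exp_add,
              show p * -(δ * Real.cos θ * b x) + p * (δ * Real.cos θ) * b x = 0 by ring]
            simp
  have hwm := h.meas_w
  have hFp : Measurable fun z : X × ℝ => F z.1 z.2 ^ p := hFm.pow_const p
  calc ∫⁻ x, (∫⁻ θ, F x θ ∂circ) ^ p * w x ∂μ
      ≤ ∫⁻ x, circ univ ^ (p / q) * (∫⁻ θ, F x θ ^ p * w x ∂circ) ∂μ := by
        refine lintegral_mono fun x => ?_
        rw [lintegral_mul_const _ ((hF1 x).pow_const p), ← mul_assoc]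
        exact mul_le_mul_left (hjen x) _
    _ = circ univ ^ (p / q) * ∫⁻ θ, (∫⁻ x, F x θ ^ p * w x ∂μ) ∂circ := by
        have hm : Measurable fun z : X × ℝ => F z.1 z.2 ^ p * w z.1 := hFp.mul (hwm.comp measurable_fst)
        rw [lintegral_const_mul _ hm.lintegral_prod_right', lintegral_lintegral_swap hm.aemeasurable]
    _ ≤ circ univ ^ (p / q) * ∫⁻ θ, (K * ∫⁻ x, ‖f x‖ₑ ^ p * w x ∂μ) ∂circ :=
        mul_le_mul_right (lintegral_mono hθ) _
    _ = _ := by rw [lintegral_const]; ring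

/-- Bounded measurable functions with bounded support on which `b` is bounded as well. -/
structure Nice (b : X → ℝ) (f : X → ℝ) (M : ℝ) (x₀ : X) (R : ℝ) : Prop where
  meas : Measurable f
  supp : ∀ y, y ∉ Metric.ball x₀ R → f y = 0
  bdd : ∀ y, |f y| ≤ M
  bdd' : ∀ y, f y ≠ 0 → |b y| ≤ M

variable {f : X → ℝ} {M R δ : ℝ} {x₀ : X}

lemma integrable_of_bdd_supp (hμ : HomSp μ Q V) {g : X → ℝ} (hg : Measurable g)
    (hs : ∀ y, y ∉ Metric.ball x₀ R → g y = 0) (hM : ∀ y, |g y| ≤ M) : Integrable g μ := by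
  have : IntegrableOn g (Metric.ball x₀ R) μ := by
    refine Measure.integrableOn_of_bounded (hμ.ball_ne_top _ _) hg.aestronglyMeasurable (M := M) ?_
    exact Eventually.of_forall hM
  exact (integrableOn_iff_integrable_of_support_subset fun y hy => by
    by_contra h; exact hy (hs y h)).1 this

lemma Nice.integrable (hf : Nice b f M x₀ R) (hμ : HomSp μ Q V) : Integrable f μ :=
  integrable_of_bdd_supp hμ hf.meas hf.supp hf.bdd

lemma Nice.abs_le (hf : Nice b f M x₀ R) {a : ℝ} (y : X) :
    Real.exp (a * b y) * |f y| ≤ Real.exp (|a| * M) * M := by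
  have hM : 0 ≤ M := (abs_nonneg _).trans (hf.bdd y)
  by_cases h0 : f y = 0
  · rw [h0]; simp; positivity
  · refine mul_le_mul (Real.exp_le_exp.2 ?_) (hf.bdd y) (abs_nonneg _) (Real.exp_nonneg _)
    calc a * b y ≤ |a * b y| := le_abs_self _
      _ = |a| * |b y| := abs_mul _ _
      _ ≤ _ := mul_le_mul_of_nonneg_left (hf.bdd' y h0) (abs_nonneg _)

lemma Nice.integrable_tw (hf : Nice b f M x₀ R) (hμ : HomSp μ Q V) (hb : Measurable b) {φ : ℝ → ℝ}
    (hφ : Continuous φ) (hφ1 : ∀ t, |φ t| ≤ 1) (δ θ : ℝ) : Integrable (tw b δ φ f θ) μ := by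
  refine integrable_of_bdd_supp hμ ?_ (x₀ := x₀) (R := R)
    (M := Real.exp (|-(δ * Real.cos θ)| * M) * M) ?_ ?_
  · have := meas_tw hφ hb δ hf.meas
    exact this.of_uncurry_left (f := tw b δ φ f)
  · intro y hy; rw [tw, hf.supp y hy, mul_zero]
  · intro y
    refine (abs_tw_le hφ1 δ f θ y).trans ?_
    have := hf.abs_le (a := -(δ * Real.cos θ)) y
    rwa [neg_mul] at this

/-- Representation of the truncated commutator as a circular average of conjugated
truncated singular integrals. -/
lemma CZK.CTr_eq [SFinite μ] (hk : CZK μ Q k A) (hμ : HomSp μ Q V) (hb : Measurable b)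
    (hf : Nice b f M x₀ R) {ε : ℝ} (hε : 0 < ε) (hδ : 0 < δ) (x : X) :
    2 * Real.pi * δ * CTr μ k b ε f x = ∫ θ, Real.exp (δ * Real.cos θ * b x) *
      (Real.cos (δ * Real.sin θ * b x - θ) * Tr μ k ε (tw b δ Real.cos f θ) x +
        Real.sin (δ * Real.sin θ * b x - θ) * Tr μ k ε (tw b δ Real.sin f θ) x) ∂circ := by
  set g : ℝ → X → ℝ := fun θ y => Real.exp (δ * (b x - b y) * Real.cos θ) *
    Real.cos (δ * (b x - b y) * Real.sin θ - θ) * (k x y * f y) with hg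
  set ν := μ.restrict {y | ε < dist x y} with hν
  have hkm : Measurable (k x) := hk.meas.of_uncurry_left
  have hfm := hf.meas
  have hgm : Measurable (Function.uncurry g) := by
    simp only [hg, Function.uncurry_def]; fun_prop
  have hIg : Integrable (Function.uncurry g) (circ.prod ν) := by
    have h1 : Integrable (fun z : ℝ × X => (Real.exp (δ * |b x|) * (Real.exp (δ * M) * (A / ε ^ Q))) * |f z.2|)
        (circ.prod ν) :=
      ((Integrable.comp_snd (hf.integrable hμ).integrableOn circ).abs).const_mul _
    refine h1.mono' hgm.aestronglyMeasurable ?_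
    have hae : ∀ᵐ y ∂ν, ε < dist x y := by
      rw [hν, ae_restrict_iff' (measurableSet_far x ε)]; exact Eventually.of_forall fun y hy => hy
    have hae' : ∀ᵐ z ∂circ.prod ν, ε < dist x z.2 := Measure.quasiMeasurePreserving_snd.ae hae
    filter_upwards [hae'] with z hz
    simp only [Function.uncurry, hg, Real.norm_eq_abs, abs_mul, Real.abs_exp]
    have hA := hk.nonneg
    by_cases h0 : f z.2 = 0
    · simp [h0]
    have hb' := hf.bdd' _ h0
    have e1 : Real.exp (δ * (b x - b z.2) * Real.cos z.1) ≤ Real.exp (δ * |b x|) * Real.exp (δ * M) := by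
      rw [← Real.exp_add, Real.exp_le_exp]
      have h2 : (b x - b z.2) * Real.cos z.1 ≤ |b x| + M := by
        refine (le_abs_self _).trans ?_
        rw [abs_mul]
        have h3 : |b x - b z.2| ≤ |b x| + |b z.2| := abs_sub _ _
        nlinarith [Real.abs_cos_le_one z.1, abs_nonneg (b x - b z.2), abs_nonneg (Real.cos z.1)]
      nlinarith
    have e2 := Real.abs_cos_le_one (δ * (b x - b z.2) * Real.sin z.1 - z.1)
    have e3 := hk.far_le hε hz
    calc _ ≤ Real.exp (δ * |b x|) * Real.exp (δ * M) * 1 * ((A / ε ^ Q) * |f z.2|) := by gcongr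
      _ = _ := by ring
  have hsw := integral_integral_swap hIg
  have hL : ∫ y, ∫ θ, g θ y ∂circ ∂ν = 2 * Real.pi * δ * CTr μ k b ε f x := by
    rw [CTr, ← integral_const_mul]
    refine integral_congr_ae (Eventually.of_forall fun y => ?_)
    have h1 := trig_id (δ * (b x - b y))
    rw [intervalIntegral.integral_of_le (by positivity)] at h1
    simp only [hg]
    rw [integral_mul_const, circ, h1]; ring
  rw [← hL, ← hsw]
  refine integral_congr_ae (Eventually.of_forall fun θ => ?_)
  simp only
  have hi1 := hk.int_far hε (hf.integrable_tw hμ hb Real.continuous_cos Real.abs_cos_le_one δ θ) x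
  have hi2 := hk.int_far hε (hf.integrable_tw hμ hb Real.continuous_sin Real.abs_sin_le_one δ θ) x
  rw [Tr, Tr, ← integral_const_mul, ← integral_const_mul, ← integral_add (hi1.const_mul _) (hi2.const_mul _),
    ← integral_const_mul]
  refine integral_congr_ae (Eventually.of_forall fun y => ?_)
  simp only [hg, tw]
  rw [show δ * (b x - b y) * Real.cos θ = δ * Real.cos θ * b x + -(δ * Real.cos θ * b y) by ring,
    show δ * (b x - b y) * Real.sin θ - θ = (δ * Real.sin θ * b x - θ) - δ * Real.sin θ * b y by ring,
    Real.exp_add, Real.cos_sub]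
  ring

/-- Uniform `L^p(w)` bounds for truncated commutators on nice functions. -/
lemma CZK.comm_nice [Nonempty X] [SFinite μ] (hk : CZK μ Q k A) (hμ : HomSp μ Q V)
    (h : ApPair μ p q w σ C) (hb : Osc μ b m N) :
    ∃ K : ℝ≥0∞, K ≠ ⊤ ∧ ∀ f M x₀ R, Nice b f M x₀ R → ∀ ε : ℝ, 0 < ε →
      ∫⁻ x, ‖CTr μ k b ε f x‖ₑ ^ p * w x ∂μ ≤ K * ∫⁻ x, ‖f x‖ₑ ^ p * w x ∂μ := by
  have hp := h.conj.pos
  obtain ⟨δ, hδ, K, hK, H⟩ := hk.circ_part hμ h hb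
  have hbm := hb.meas
  set B := ENNReal.ofReal (2 * Real.pi * δ) ^ p with hB
  have hB0 : B ≠ 0 := (ENNReal.rpow_pos (by rw [ENNReal.ofReal_pos]; positivity) ENNReal.ofReal_ne_top).ne'
  have hBt : B ≠ ⊤ := ENNReal.rpow_ne_top_of_nonneg hp.le ENNReal.ofReal_ne_top
  have h2 : (2:ℝ≥0∞) ^ (p - 1) ≠ ⊤ :=
    ENNReal.rpow_ne_top_of_nonneg (by linarith [h.conj.lt]) (by simp)
  refine ⟨B⁻¹ * (2 ^ (p - 1) * (K + K)), ?_, ?_⟩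
  · have := ENNReal.inv_ne_top.2 hB0
    finiteness
  intro f M x₀ R hf ε hε
  have hic := hf.integrable_tw hμ hbm Real.continuous_cos Real.abs_cos_le_one δ
  have his := hf.integrable_tw hμ hbm Real.continuous_sin Real.abs_sin_le_one δ
  have H1 := H _ Real.continuous_cos Real.abs_cos_le_one f hf.meas x₀ R hf.supp hic ε hε
  have H2 := H _ Real.continuous_sin Real.abs_sin_le_one f hf.meas x₀ R hf.supp his ε hε
  set I := ∫⁻ x, ‖f x‖ₑ ^ p * w x ∂μ with hI
  set F : (ℝ → ℝ) → X → ℝ → ℝ≥0∞ := fun φ x θ => ENNReal.ofReal (Real.exp (δ * Real.cos θ * b x)) *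
        ‖Tr μ k ε (tw b δ φ f θ) x‖ₑ with hF
  have hTm : ∀ φ, Continuous φ → Measurable fun z : ℝ × X => Tr μ k ε (tw b δ φ f z.1) z.2 :=
    fun φ hφ => hk.meas_Tr_par (meas_tw hφ hbm δ hf.meas) ε
  have hFm : ∀ φ, Continuous φ → Measurable fun z : X × ℝ => F φ z.1 z.2 := by
    intro φ hφ
    refine Measurable.mul (ENNReal.measurable_ofReal.comp (by fun_prop)) ?_
    exact Measurable.enorm ((hTm φ hφ).comp (g := fun z : ℝ × X => Tr μ k ε (tw b δ φ f z.1) z.2)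
      (f := fun z : X × ℝ => (z.2, z.1)) (by fun_prop))
  have hF1 : ∀ φ, Continuous φ → ∀ x, Measurable (F φ x) := fun φ hφ x =>
    (hFm φ hφ).of_uncurry_left (f := F φ)
  have hpt : ∀ x, ENNReal.ofReal (2 * Real.pi * δ) * ‖CTr μ k b ε f x‖ₑ ≤
      ∫⁻ θ, F Real.cos x θ ∂circ + ∫⁻ θ, F Real.sin x θ ∂circ := by
    intro x
    have e : ENNReal.ofReal (2 * Real.pi * δ) = ‖2 * Real.pi * δ‖ₑ :=
      (Real.enorm_of_nonneg (by positivity)).symm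
    rw [e, ← enorm_mul, hk.CTr_eq hμ hbm hf hε hδ x, ← lintegral_add_left (hF1 _ Real.continuous_cos x)]
    refine (enorm_integral_le_lintegral_enorm _).trans (lintegral_mono fun θ => ?_)
    rw [hF]
    simp only
    rw [← mul_add, enorm_mul, Real.enorm_of_nonneg (Real.exp_nonneg _)]
    refine mul_le_mul_right ((enorm_add_le _ _).trans (add_le_add ?_ ?_)) _ <;>
    · rw [enorm_mul]
      refine mul_le_of_le_one_left zero_le ?_
      rw [Real.enorm_eq_ofReal_abs, ENNReal.ofReal_le_one]
      first | exact Real.abs_cos_le_one _ | exact Real.abs_sin_le_one _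
  have hPm : ∀ φ, Continuous φ → Measurable fun x => (∫⁻ θ, F φ x θ ∂circ) := fun φ hφ =>
    (hFm φ hφ).lintegral_prod_right'
  have hwm := h.meas_w
  have key : B * ∫⁻ x, ‖CTr μ k b ε f x‖ₑ ^ p * w x ∂μ ≤ 2 ^ (p - 1) * (K + K) * I := by
    rw [← lintegral_const_mul' _ _ hBt]
    calc _ ≤ ∫⁻ x, 2 ^ (p - 1) * ((∫⁻ θ, F Real.cos x θ ∂circ) ^ p * w x +
          (∫⁻ θ, F Real.sin x θ ∂circ) ^ p * w x) ∂μ := by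
          refine lintegral_mono fun x => ?_
          rw [← mul_assoc, hB, ← ENNReal.mul_rpow_of_nonneg _ _ hp.le, ← add_mul, ← mul_assoc]
          refine mul_le_mul_left ((ENNReal.rpow_le_rpow (hpt x) hp.le).trans ?_) _
          exact ENNReal.rpow_add_le_mul_rpow_add_rpow _ _ h.conj.lt.le
      _ = 2 ^ (p - 1) * (∫⁻ x, (∫⁻ θ, F Real.cos x θ ∂circ) ^ p * w x ∂μ +
          ∫⁻ x, (∫⁻ θ, F Real.sin x θ ∂circ) ^ p * w x ∂μ) := by
          rw [lintegral_const_mul' _ _ h2, lintegral_add_left]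
          exact ((hPm _ Real.continuous_cos).pow_const p).mul hwm
      _ ≤ 2 ^ (p - 1) * (K * I + K * I) := mul_le_mul_right (add_le_add H1 H2) _
      _ = _ := by ring
  rw [mul_assoc, ← ENNReal.div_eq_inv_mul, ENNReal.le_div_iff_mul_le (Or.inl hB0) (Or.inl hBt), mul_comm]
  exact key

end CZ

namespace CZ

/-! ### Local integrability at points where all truncated commutators are integrals -/

open Set Metric

variable {X : Type*} [MetricSpace X] [MeasurableSpace X] [BorelSpace X]
  [SecondCountableTopology X] {μ : Measure X} {Q : ℕ} {V A : ℝ} {ι : Type*} [Fintype ι]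
  {k : X → X → ι → ℝ} {w σ : X → ℝ≥0∞} {p q : ℝ} {C : ℝ≥0∞} {b f : X → ℝ} {m : X → ℝ → ℝ} {N : ℝ≥0∞}

/-- The integrand of the commutator for a kernel with several components. -/
def CI (k : X → X → ι → ℝ) (b f : X → ℝ) (x y : X) : ι → ℝ := ((b x - b y) * f y) • k x y

/-- The truncated commutator for a kernel with several components. -/
def CE (μ : Measure X) (k : X → X → ι → ℝ) (b f : X → ℝ) (ε : ℝ) (x : X) : ι → ℝ :=
  ∫ y in {y | ε < dist x y}, CI k b f x y ∂μ

/-- The points at which all truncated commutators are genuine integrals. -/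
def Good (μ : Measure X) (k : X → X → ι → ℝ) (b f : X → ℝ) (x : X) : Prop :=
  ∀ ε, 0 < ε → IntegrableOn (CI k b f x) {y | ε < dist x y} μ

lemma CE_of_not_good {x : X} (h : ¬ Good μ k b f x) :
    Tendsto (fun ε => CE μ k b f ε x) (𝓝[>] 0) (𝓝 0) := by
  simp only [Good, not_forall] at h
  obtain ⟨ε₀, hε₀, h⟩ := h
  refine tendsto_const_nhds.congr' ?_
  filter_upwards [Ioo_mem_nhdsGT hε₀] with ε hε
  rw [CE, integral_undef]
  intro hi
  exact h (IntegrableOn.mono_set (s := {y | ε₀ < dist x y}) hi fun y hy => hε.2.trans hy)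

lemma meas_CI (hk : ∀ i, Measurable (Function.uncurry fun x y => k x y i)) (hb : Measurable b)
    (hf : Measurable f) : Measurable (Function.uncurry (CI k b f)) := by
  refine measurable_pi_iff.2 fun i => ?_
  have := hk i
  have h2 : Measurable fun z : X × X => (b z.1 - b z.2) * f z.2 := by fun_prop
  exact h2.mul this

lemma meas_good [SFinite μ] (hk : ∀ i, Measurable (Function.uncurry fun x y => k x y i))
    (hb : Measurable b) (hf : Measurable f) : MeasurableSet {x | Good μ k b f x} := by
  have e : {x | Good μ k b f x} = ⋂ n : ℕ, {x | Integrable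
      (fun y => {y | 1 / ((n:ℝ) + 1) < dist x y}.indicator (CI k b f x) y) μ} := by
    ext x
    simp only [mem_setOf_eq, mem_iInter]
    constructor
    · intro h n
      exact (integrable_indicator_iff (measurableSet_far x _)).2 (h _ (by positivity))
    · intro h ε hε
      obtain ⟨n, hn⟩ := exists_nat_one_div_lt hε
      exact ((integrable_indicator_iff (measurableSet_far x _)).1 (h n)).mono_set
        fun y hy => lt_trans hn hy
  rw [e]
  refine MeasurableSet.iInter fun n => ?_
  refine measurableSet_integrable (f := fun x y =>
    {y | 1 / ((n:ℝ) + 1) < dist x y}.indicator (CI k b f x) y) ?_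
  have h1 := (meas_CI hk hb hf).indicator (measurableSet_lt (f := fun _ => 1 / ((n:ℝ) + 1))
    (g := fun z : X × X => dist z.1 z.2) (by fun_prop) (by fun_prop))
  exact h1.stronglyMeasurable

/-- Local integrability at `x` of `(t - b) f`. -/
def Loc (μ : Measure X) (b f : X → ℝ) (t : ℝ) (x : X) : Prop :=
  ∃ ρ > 0, IntegrableOn (fun y => (t - b y) * f y) (ball x ρ) μ

/-- If the kernel based at a good point `x` does not vanish at `y`, then by continuity it is bounded
below near `y`, so that integrability against the kernel becomes local integrability at `y`. -/
lemma loc_of_good (hk : ∀ i, CZK μ Q (fun x y => k x y i) A) (hb : Measurable b) (hf : Measurable f)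
    {x y : X} (hx : Good μ k b f x) (hxy : x ≠ y) (hne : k x y ≠ 0) : Loc μ b f (b x) y := by
  obtain ⟨i, hi⟩ := Function.ne_iff.1 hne
  have hA := (hk i).nonneg
  have hd : 0 < dist x y := dist_pos.2 hxy
  have hc : 0 < |k x y i| := abs_pos.2 hi
  set c := |k x y i| / 2 with hcdef
  have hc0 : 0 < c := by positivity
  set ρ := min (dist x y / 2) (c * dist x y ^ (Q + 1) / (A + 1)) with hρ
  have hρ0 : 0 < ρ := by positivity
  refine ⟨ρ, hρ0, ?_⟩
  have hlow : ∀ y' ∈ ball y ρ, c ≤ |k x y' i| := by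
    intro y' hy'
    have h0 : dist y y' ≤ ρ := by rw [dist_comm]; exact (mem_ball.1 hy').le
    have h1 := (hk i).reg2 x y y' hxy (by linarith [min_le_left (dist x y / 2) (c * dist x y ^ (Q + 1) / (A + 1))])
    have h2 : A * dist y y' / dist x y ^ (Q + 1) ≤ c := by
      rw [div_le_iff₀ (by positivity)]
      have h3 : dist y y' ≤ c * dist x y ^ (Q + 1) / (A + 1) := h0.trans (min_le_right _ _)
      rw [le_div_iff₀ (by positivity)] at h3
      nlinarith [dist_nonneg (x := y) (y := y')]
    have h4 := abs_sub_abs_le_abs_sub (k x y i) (k x y' i)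
    linarith
  have hsub : ball y ρ ⊆ {y' | dist x y / 4 < dist x y'} := by
    intro y' hy'
    have h0 := mem_ball.1 hy'
    have h1 := min_le_left (dist x y / 2) (c * dist x y ^ (Q + 1) / (A + 1))
    have := dist_triangle x y' y
    simp only [mem_setOf_eq]; linarith
  have hIg := ((hx (dist x y / 4) (by positivity)).mono_set hsub).norm.const_mul c⁻¹
  refine Integrable.mono' hIg (by
    have : Measurable fun y => (b x - b y) * f y := by fun_prop
    exact this.aestronglyMeasurable) ?_
  refine (ae_restrict_iff' measurableSet_ball).2 (Eventually.of_forall fun y' hy' => ?_)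
  rw [CI, norm_smul, inv_mul_eq_div, le_div_iff₀ hc0]
  exact mul_le_mul_of_nonneg_left ((hlow y' hy').trans (norm_le_pi_norm (k x y') i)) (norm_nonneg _)

/-- Local integrability at `x` of `f` and `b f`. -/
def LocB (μ : Measure X) (b f : X → ℝ) (x : X) : Prop :=
  ∃ ρ > 0, IntegrableOn f (ball x ρ) μ ∧ IntegrableOn (fun y => b y * f y) (ball x ρ) μ

lemma LocB.loc {x : X} (h : LocB μ b f x) (t : ℝ) : Loc μ b f t x := by
  obtain ⟨ρ, hρ, h1, h2⟩ := h
  refine ⟨ρ, hρ, ((Integrable.const_mul h1 t).sub h2).congr (Eventually.of_forall fun y => ?_)⟩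
  simp only [Pi.sub_apply]; ring

lemma loc_two' {S : Set X} {t t' : ℝ} (htt : t ≠ t') (h : IntegrableOn (fun y => (t - b y) * f y) S μ)
    (h' : IntegrableOn (fun y => (t' - b y) * f y) S μ) :
    IntegrableOn f S μ ∧ IntegrableOn (fun y => b y * f y) S μ := by
  have hne : t - t' ≠ 0 := sub_ne_zero.2 htt
  have h1 : IntegrableOn f S μ := by
    refine ((Integrable.sub h h').const_mul (t - t')⁻¹).congr (Eventually.of_forall fun y => ?_)
    simp only [Pi.sub_apply]; field_simp; ring
  refine ⟨h1, ((Integrable.const_mul h1 t).sub h).congr (Eventually.of_forall fun y => ?_)⟩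
  simp only [Pi.sub_apply]; ring

lemma loc_two {x : X} {t t' : ℝ} (htt : t ≠ t') (h : Loc μ b f t x) (h' : Loc μ b f t' x) :
    LocB μ b f x := by
  obtain ⟨ρ, hρ, h⟩ := h
  obtain ⟨ρ', hρ', h'⟩ := h'
  exact ⟨min ρ ρ', lt_min hρ hρ', loc_two' htt (h.mono_set (ball_subset_ball (min_le_left _ _)))
    (h'.mono_set (ball_subset_ball (min_le_right _ _)))⟩

/-- A kernel that is non-degenerate at every scale around every point. -/
def Nondeg (k : X → X → ι → ℝ) : Prop :=
  ∃ κ : ℝ, 0 < κ ∧ ∀ y r, 0 < r → ∃ z, ball z (κ * r) ⊆ ball y r ∧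
    ∀ x ∈ ball z (κ * r), x ≠ y ∧ k x y ≠ 0

/-- At almost every good point the commutator integrand is locally integrable once the singular
kernel is removed. The nearby good points `x'` show that `(b x' - b) f` is integrable near `x`; two
different values of `b x'` would suffice, and at a Lebesgue point of `b` and of the set of good
points, these values cannot all equal one number different from `b x`. -/
lemma ae_loc [SFinite μ] (hk : ∀ i, CZK μ Q (fun x y => k x y i) A) (hμ : HomSp μ Q V) (hb : Measurable b)
    (hbi : ∀ x r, IntegrableOn b (ball x r) μ) (hf : Measurable f) (hnd : Nondeg k) :
    ∀ᵐ x ∂μ, Good μ k b f x → Loc μ b f (b x) x := by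
  have := hμ.locFin
  have := hμ.unif
  have hbl : LocallyIntegrable b μ := fun x => ⟨ball x 1, ball_mem_nhds x one_pos, hbi x 1⟩
  obtain ⟨κ, hκ, hnd⟩ := hnd
  set S := {x | Good μ k b f x} with hS
  have hSm : MeasurableSet S := meas_good (fun i => (hk i).meas) hb hf
  have h1l : LocallyIntegrable (S.indicator (1 : X → ℝ)) μ :=
    ((locallyIntegrable_const (1:ℝ)).indicator hSm)
  filter_upwards [IsUnifLocDoublingMeasure.ae_tendsto_average_norm_sub μ hbl 1,
    IsUnifLocDoublingMeasure.ae_tendsto_average_norm_sub μ h1l 1] with x hxb hxS hx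
  by_contra hcon
  have hmem : ∀ᶠ r in 𝓝[>] (0:ℝ), x ∈ closedBall x (1 * r) := by
    filter_upwards [self_mem_nhdsWithin] with r hr
    exact mem_closedBall_self (by rw [one_mul]; exact (mem_Ioi.1 hr).le)
  have hlim := (hxb (fun _ => x) id tendsto_id hmem).add (hxS (fun _ => x) id tendsto_id hmem)
  obtain ⟨t, ht, hval⟩ : ∃ t, t ≠ b x ∧ ∀ x', Good μ k b f x' → x' ≠ x → k x' x ≠ 0 → b x' = t := by
    by_cases hex : ∃ x', Good μ k b f x' ∧ x' ≠ x ∧ k x' x ≠ 0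
    · obtain ⟨x₁, h1, h2, h3⟩ := hex
      have hl := loc_of_good hk hb hf h1 h2 h3
      refine ⟨b x₁, fun e => hcon (by rwa [e] at hl), fun x' h1' h2' h3' => ?_⟩
      by_contra hne
      exact hcon ((loc_two hne (loc_of_good hk hb hf h1' h2' h3') hl).loc _)
    · exact ⟨b x + 1, by simp, fun x' h1 h2 h3 => absurd ⟨x', h1, h2, h3⟩ hex⟩
  set η := min |t - b x| 1 with hη
  have hη0 : 0 < η := lt_min (abs_pos.2 (sub_ne_zero.2 ht)) one_pos
  rw [add_zero] at hlim
  have hpos : 0 < η * κ ^ Q := by positivity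
  obtain ⟨r, hr1, hr2⟩ := ((hlim.eventually_lt_const hpos).and self_mem_nhdsWithin).exists
  have hr : 0 < r := hr2
  simp only [id] at hr1
  obtain ⟨z, hz1, hz2⟩ := hnd x r hr
  have hcb := hμ.closedBall x hr.le
  have hcbt : μ (closedBall x r) ≠ ⊤ := by rw [hcb]; finiteness
  have hcbi : ∀ g : X → ℝ, IntegrableOn g (closedBall x r) μ →
      IntegrableOn (fun y => ‖g y - g x‖) (closedBall x r) μ := fun g hg =>
    (Integrable.sub hg (integrableOn_const hcbt)).norm
  have hi1 := hcbi b ((hbi x (2 * r)).mono_set (closedBall_subset_ball (by linarith)))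
  have hi2 := hcbi (S.indicator 1) (IntegrableOn.indicator (integrableOn_const hcbt) hSm)
  have hzsub : ball z (κ * r) ⊆ closedBall x r := hz1.trans ball_subset_closedBall
  have hlow : ∀ x' ∈ ball z (κ * r), η ≤ ‖b x' - b x‖ + ‖S.indicator (1 : X → ℝ) x' - S.indicator 1 x‖ := by
    intro x' hx'
    obtain ⟨h1, h2⟩ := hz2 x' hx'
    by_cases hg : Good μ k b f x'
    · rw [hval x' hg h1 h2, Real.norm_eq_abs]
      exact (min_le_left _ _).trans (le_add_of_nonneg_right (norm_nonneg _))
    · have e1 : S.indicator (1 : X → ℝ) x' = 0 := indicator_of_notMem hg _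
      have e2 : S.indicator (1 : X → ℝ) x = 1 := indicator_of_mem (show x ∈ S from hx) _
      rw [e1, e2]
      refine (min_le_right _ _).trans ?_
      norm_num
  have hsum := Integrable.add hi1 hi2
  have hge : η * μ.real (ball z (κ * r)) ≤
      ∫ y in closedBall x r, (‖b y - b x‖ + ‖S.indicator (1 : X → ℝ) y - S.indicator 1 x‖) ∂μ := by
    refine le_trans ?_ (setIntegral_mono_set hsum (Eventually.of_forall fun y => by
      simp only [Pi.zero_apply]; positivity) hzsub.eventuallyLE)
    have h0 := setIntegral_mono_on (integrableOn_const (C := η) (hμ.ball_ne_top z (κ * r)))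
      (IntegrableOn.mono_set hsum hzsub) measurableSet_ball hlow
    rw [setIntegral_const, smul_eq_mul, mul_comm] at h0
    exact h0
  rw [integral_add hi1 hi2] at hge
  have hV := hμ.pos
  rw [setAverage_eq, setAverage_eq, smul_eq_mul, smul_eq_mul, ← mul_add, inv_mul_lt_iff₀ (by
    rw [measureReal_def, hcb, ENNReal.toReal_ofReal (by positivity)]; positivity)] at hr1
  have e1 : μ.real (ball z (κ * r)) = V * (κ * r) ^ Q := by
    rw [measureReal_def, hμ.ball z _ (by positivity), ENNReal.toReal_ofReal (by positivity)]
  have e2 : μ.real (closedBall x r) = V * r ^ Q := by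
    rw [measureReal_def, hcb, ENNReal.toReal_ofReal (by positivity)]
  rw [e1] at hge
  rw [e2] at hr1
  have : η * (V * (κ * r) ^ Q) = V * r ^ Q * (η * κ ^ Q) := by rw [mul_pow]; ring
  linarith
end CZ

namespace CZ

/-! ### Principal values and weighted bounds of the commutator -/

open Set Metric

variable {X : Type*} [MetricSpace X] [MeasurableSpace X] [BorelSpace X]
  [SecondCountableTopology X] {μ : Measure X} {Q : ℕ} {V A : ℝ} {ι : Type*} [Fintype ι]
  {k : X → X → ι → ℝ} {w σ : X → ℝ≥0∞} {p q : ℝ} {C : ℝ≥0∞} {b f : X → ℝ} {m : X → ℝ → ℝ} {N : ℝ≥0∞}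

lemma CE_eval {x : X} (hG : Good μ k b f x) {ε : ℝ} (hε : 0 < ε) (i : ι) :
    CE μ k b f ε x i = CTr μ (fun x y => k x y i) b ε f x := by
  rw [CE, eval_integral (fun i => (integrable_pi_iff.1 (hG ε hε)) i), CTr]
  congr 1; ext y
  simp only [CI, Pi.smul_apply, smul_eq_mul]; ring

lemma Good.int {x : X} (hG : Good μ k b f x) {ε : ℝ} (hε : 0 < ε) (i : ι) :
    IntegrableOn (fun y => (b x - b y) * (k x y i * f y)) {y | ε < dist x y} μ := by
  refine (integrable_pi_iff.1 (hG ε hε) i).congr (Eventually.of_forall fun y => ?_)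
  simp only [CI, Pi.smul_apply, smul_eq_mul]; ring

/-- The principal value at `x` only depends on the function near `x`. -/
lemma local_lim [SFinite μ] {k : X → X → ℝ} {h : X → ℝ} {x : X} {B : Set X} (hB : IsOpen B) (hx : x ∈ B)
    (hG : ∀ ε > 0, IntegrableOn (fun y => k x y * h y) {y | ε < dist x y} μ)
    (hl : ∃ L, Tendsto (fun ε => Tr μ k ε (B.indicator h) x) (𝓝[>] 0) (𝓝 L)) :
    ∃ L, Tendsto (fun ε => Tr μ k ε h x) (𝓝[>] 0) (𝓝 L) := by
  obtain ⟨L, hL⟩ := hl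
  obtain ⟨ρ, hρ, hsub⟩ := Metric.isOpen_iff.1 hB x hx
  refine ⟨L + ∫ y in Bᶜ, k x y * h y ∂μ, (hL.add_const _).congr' ?_⟩
  filter_upwards [Ioo_mem_nhdsGT hρ] with ε hε
  rw [Tr_indicator ε h hB.measurableSet x, Tr,
    ← integral_inter_add_diff hB.measurableSet (hG ε hε.1)]
  congr 3
  ext y
  simp only [mem_compl_iff, mem_diff, mem_setOf_eq]
  refine ⟨fun hy => ⟨?_, hy⟩, fun hy => hy.2⟩
  by_contra hcon
  exact hy (hsub (by rw [mem_ball, dist_comm]; linarith [hε.2]))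

/-- Principal values of `(t - b) f` localised to `B`, simultaneously for all `t` for which this function
is integrable on `B`: two such values of `t` make both `f` and `b f` integrable on `B`. -/
lemma pvB [SFinite μ] (hk : ∀ i, CZK μ Q (fun x y => k x y i) A) (hμ : HomSp μ Q V)
    {B : Set X} (hB : MeasurableSet B) :
    ∀ᵐ x ∂μ, ∀ t, IntegrableOn (fun y => (t - b y) * f y) B μ → ∀ i, ∃ L,
      Tendsto (fun ε => Tr μ (fun x y => k x y i) ε (B.indicator fun y => (t - b y) * f y) x)
        (𝓝[>] 0) (𝓝 L) := by
  by_cases h2 : IntegrableOn f B μ ∧ IntegrableOn (fun y => b y * f y) B μ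
  · have a1 : ∀ᵐ x ∂μ, ∀ i, ∃ L, Tendsto (fun ε => Tr μ (fun x y => k x y i) ε (B.indicator f) x)
        (𝓝[>] 0) (𝓝 L) := ae_all_iff.2 fun i => (hk i).pv_ae hμ ((integrable_indicator_iff hB).2 h2.1)
    have a2 : ∀ᵐ x ∂μ, ∀ i, ∃ L, Tendsto (fun ε => Tr μ (fun x y => k x y i) ε
        (B.indicator fun y => b y * f y) x) (𝓝[>] 0) (𝓝 L) :=
      ae_all_iff.2 fun i => (hk i).pv_ae hμ ((integrable_indicator_iff hB).2 h2.2)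
    filter_upwards [a1, a2] with x h1 h2' t ht i
    obtain ⟨L₁, hL₁⟩ := h1 i
    obtain ⟨L₂, hL₂⟩ := h2' i
    refine ⟨t * L₁ - L₂, ((hL₁.const_mul t).sub hL₂).congr' ?_⟩
    filter_upwards [self_mem_nhdsWithin] with ε hε
    have i1 := (hk i).int_far (mem_Ioi.1 hε) ((integrable_indicator_iff hB).2 h2.1) x
    have i2 := (hk i).int_far (mem_Ioi.1 hε) ((integrable_indicator_iff hB).2 h2.2) x
    rw [Tr, Tr, Tr, ← integral_const_mul, ← integral_sub (Integrable.const_mul i1 t) i2]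
    congr 1; ext y
    by_cases hy : y ∈ B
    · simp only [indicator_of_mem hy]; ring
    · simp only [indicator_of_notMem hy]; ring
  · by_cases hex : ∃ t, IntegrableOn (fun y => (t - b y) * f y) B μ
    · obtain ⟨t₀, ht₀⟩ := hex
      have a1 : ∀ᵐ x ∂μ, ∀ i, ∃ L, Tendsto (fun ε => Tr μ (fun x y => k x y i) ε
          (B.indicator fun y => (t₀ - b y) * f y) x) (𝓝[>] 0) (𝓝 L) :=
        ae_all_iff.2 fun i => (hk i).pv_ae hμ ((integrable_indicator_iff hB).2 ht₀)
      filter_upwards [a1] with x h1 t ht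
      by_cases e : t = t₀
      · rw [e]; exact h1
      · exact absurd (loc_two' e ht ht₀) h2
    · exact Eventually.of_forall fun x t ht => absurd ⟨t, ht⟩ hex

/-- Almost everywhere existence of the principal value of the commutator, for arbitrary `f`. -/
lemma CE_pv [SFinite μ] (hk : ∀ i, CZK μ Q (fun x y => k x y i) A) (hμ : HomSp μ Q V)
    (hb : Measurable b) (hbi : ∀ x r, IntegrableOn b (ball x r) μ) (hf : Measurable f)
    (hnd : Nondeg k) :
    ∀ᵐ x ∂μ, ∃ L, Tendsto (fun ε => CE μ k b f ε x) (𝓝[>] 0) (𝓝 L) := by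
  have hcount := TopologicalSpace.countable_countableBasis X
  have hbasis := TopologicalSpace.isBasis_countableBasis X
  have a1 := (ae_ball_iff hcount).2 fun B hB =>
    pvB (b := b) (f := f) hk hμ (hbasis.isOpen hB).measurableSet
  filter_upwards [a1, ae_loc hk hμ hb hbi hf hnd] with x h1 h2
  by_cases hG : Good μ k b f x
  swap
  · exact ⟨0, CE_of_not_good hG⟩
  obtain ⟨ρ, hρ, hloc⟩ := h2 hG
  obtain ⟨B, hB, hxB, hsub⟩ := hbasis.exists_subset_of_mem_open (mem_ball_self hρ) isOpen_ball
  have key : ∀ i, ∃ L, Tendsto (fun ε => CE μ k b f ε x i) (𝓝[>] 0) (𝓝 L) := by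
    intro i
    have hi : ∀ ε > 0, IntegrableOn (fun y => k x y i * ((b x - b y) * f y)) {y | ε < dist x y} μ :=
      fun ε hε => (hG.int hε i).congr (Eventually.of_forall fun y => by ring)
    obtain ⟨L, hL⟩ := local_lim (k := fun x y => k x y i) (hbasis.isOpen hB) hxB hi
      (h1 B hB (b x) (hloc.mono_set hsub) i)
    refine ⟨L, hL.congr' ?_⟩
    filter_upwards [self_mem_nhdsWithin] with ε hε
    rw [CE_eval hG hε, Tr, CTr]
    congr 1; ext y; ring
  choose L hL using key
  exact ⟨L, tendsto_pi_nhds.2 hL⟩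

lemma meas_CTr [SFinite μ] {k : X → X → ℝ} (hk : Measurable (Function.uncurry k)) (hb : Measurable b)
    (hf : Measurable f) (ε : ℝ) : Measurable (CTr μ k b ε f) := by
  have h1 : Measurable fun z : X × X => (b z.1 - b z.2) * (k z.1 z.2 * f z.2) := by
    have h2 : Measurable fun z : X × X => k z.1 z.2 := hk
    fun_prop
  have h3 := (h1.indicator (measurableSet_lt (f := fun _ => ε)
    (g := fun z : X × X => dist z.1 z.2) (by fun_prop) (by fun_prop))).stronglyMeasurable
  have h4 := (StronglyMeasurable.integral_prod_right' (ν := μ) h3).measurable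
  convert h4 using 1
  ext x
  rw [CTr, ← integral_indicator (measurableSet_far x ε)]
  rfl

/-- Truncation of `f` to a bounded set on which `f` and `b` are bounded. -/
def cut (b f : X → ℝ) (x₀ : X) (j : ℕ) : X → ℝ :=
  {y | |f y| ≤ j ∧ |b y| ≤ j ∧ dist y x₀ < j}.indicator f

lemma cut_nice (hb : Measurable b) (hf : Measurable f) (x₀ : X) (j : ℕ) :
    Nice b (cut b f x₀ j) j x₀ j where
  meas := by
    refine hf.indicator ?_
    refine (measurableSet_le (f := fun y => |f y|) (g := fun _ => (j:ℝ)) (by fun_prop) (by fun_prop)).inter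
      ((measurableSet_le (f := fun y => |b y|) (g := fun _ => (j:ℝ)) (by fun_prop) (by fun_prop)).inter
      (measurableSet_lt (f := fun y => dist y x₀) (g := fun _ => (j:ℝ)) (by fun_prop) (by fun_prop)))
  supp y hy := indicator_of_notMem (fun h => hy h.2.2) _
  bdd y := by
    rw [cut, indicator_apply]
    split_ifs with h
    · exact h.1
    · simp
  bdd' y hy := by
    have := mem_of_indicator_ne_zero hy
    exact this.2.1

lemma abs_cut_le (x₀ : X) (j : ℕ) (y : X) : |cut b f x₀ j y| ≤ |f y| := by
  rw [cut, indicator_apply]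
  split_ifs <;> simp

lemma cut_lim (x₀ y : X) : ∀ᶠ j : ℕ in atTop, cut b f x₀ j y = f y := by
  filter_upwards [eventually_ge_atTop ⌈|f y|⌉₊, eventually_ge_atTop ⌈|b y|⌉₊,
    eventually_gt_atTop ⌈dist y x₀⌉₊] with j h1 h2 h3
  exact indicator_of_mem (show y ∈ {y | |f y| ≤ (j:ℝ) ∧ |b y| ≤ j ∧ dist y x₀ < j} from
    ⟨Nat.ceil_le.1 h1, Nat.ceil_le.1 h2, (Nat.le_ceil _).trans_lt (by exact_mod_cast h3)⟩) _

lemma CTr_cut_lim {k : X → X → ℝ} (hk : Measurable (Function.uncurry k)) (hb : Measurable b)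
    (hf : Measurable f) {x : X} {ε : ℝ}
    (hi : IntegrableOn (fun y => (b x - b y) * (k x y * f y)) {y | ε < dist x y} μ) (x₀ : X) :
    Tendsto (fun j : ℕ => CTr μ k b ε (cut b f x₀ j) x) atTop (𝓝 (CTr μ k b ε f x)) := by
  have hkx : Measurable (k x) := hk.of_uncurry_left
  refine tendsto_integral_of_dominated_convergence _ (fun j => ?_) hi.norm (fun j => ?_) ?_
  · have := (cut_nice hb hf x₀ j).meas
    have h2 : Measurable fun y => (b x - b y) * (k x y * cut b f x₀ j y) := by fun_prop
    exact h2.aestronglyMeasurable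
  · refine Eventually.of_forall fun y => ?_
    rw [norm_mul, norm_mul, norm_mul, norm_mul]
    have := abs_cut_le (b := b) (f := f) x₀ j y
    rw [← Real.norm_eq_abs, ← Real.norm_eq_abs] at this
    gcongr
  · refine Eventually.of_forall fun y => ?_
    refine tendsto_const_nhds.congr' ?_
    filter_upwards [cut_lim x₀ y] with j hj
    rw [hj]

/-- Passage from truncated functions to arbitrary ones by Fatou's lemma, on a set of points where the
truncated commutator is a genuine integral. -/
lemma CTr_bound [SFinite μ] {k : X → X → ℝ} (hk : Measurable (Function.uncurry k)) (hb : Measurable b)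
    (hf : Measurable f) (hw : Measurable w) (hp : 0 < p) {K : ℝ≥0∞} {ε : ℝ} {S : Set X} (hS : MeasurableSet S)
    (hi : ∀ x ∈ S, IntegrableOn (fun y => (b x - b y) * (k x y * f y)) {y | ε < dist x y} μ) (x₀ : X)
    (hK : ∀ j, ∫⁻ x, ‖CTr μ k b ε (cut b f x₀ j) x‖ₑ ^ p * w x ∂μ ≤
      K * ∫⁻ x, ‖cut b f x₀ j x‖ₑ ^ p * w x ∂μ) :
    ∫⁻ x in S, ‖CTr μ k b ε f x‖ₑ ^ p * w x ∂μ ≤ K * ∫⁻ x, ‖f x‖ₑ ^ p * w x ∂μ := by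
  have hm : ∀ j, Measurable fun x => ‖CTr μ k b ε (cut b f x₀ j) x‖ₑ ^ p * w x := fun j =>
    (((meas_CTr hk hb (cut_nice hb hf x₀ j).meas ε).enorm).pow_const p).mul hw
  calc ∫⁻ x in S, ‖CTr μ k b ε f x‖ₑ ^ p * w x ∂μ
      ≤ ∫⁻ x in S, liminf (fun j => ‖CTr μ k b ε (cut b f x₀ j) x‖ₑ ^ p) atTop * w x ∂μ := by
        refine setLIntegral_mono' hS fun x hx => ?_
        refine mul_le_mul' (le_of_eq ?_) le_rfl
        exact ((ENNReal.continuous_rpow_const.tendsto _).comp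
          ((continuous_enorm.tendsto _).comp (CTr_cut_lim hk hb hf (hi x hx) x₀))).liminf_eq.symm
    _ ≤ ∫⁻ x in S, liminf (fun j => ‖CTr μ k b ε (cut b f x₀ j) x‖ₑ ^ p * w x) atTop ∂μ := by
        refine lintegral_mono fun x => ?_
        rw [liminf_eq_iSup_iInf_of_nat, liminf_eq_iSup_iInf_of_nat, ENNReal.iSup_mul]
        refine iSup_mono fun n => le_iInf₂ fun j hj => ?_
        exact mul_le_mul' (iInf₂_le (f := fun j (_ : j ≥ n) => ‖CTr μ k b ε (cut b f x₀ j) x‖ₑ ^ p) j hj) le_rfl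
    _ ≤ liminf (fun j => ∫⁻ x in S, ‖CTr μ k b ε (cut b f x₀ j) x‖ₑ ^ p * w x ∂μ) atTop :=
        lintegral_liminf_le hm
    _ ≤ K * ∫⁻ x, ‖f x‖ₑ ^ p * w x ∂μ := by
        refine liminf_le_of_frequently_le' (Eventually.frequently (Eventually.of_forall fun j => ?_))
        refine (setLIntegral_le_lintegral _ _).trans ((hK j).trans ?_)
        gcongr with x
        have := abs_cut_le (b := b) (f := f) x₀ j x
        rw [← Real.norm_eq_abs, ← Real.norm_eq_abs] at this
        exact enorm_le_iff_norm_le.2 this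

/-- The weighted bound for the principal value commutator. -/
lemma comm_bound [Nonempty X] [SFinite μ] (hk : ∀ i, CZK μ Q (fun x y => k x y i) A) (hμ : HomSp μ Q V)
    (h : ApPair μ p q w σ C) (hb : Osc μ b m N) :
    ∃ K : ℝ≥0∞, K ≠ ⊤ ∧ ∀ f, Measurable f → ∀ F : X → ι → ℝ,
      (∀ᵐ x ∂μ, Tendsto (fun ε => CE μ k b f ε x) (𝓝[>] 0) (𝓝 (F x))) →
      ∫⁻ x, ‖F x‖ₑ ^ p * w x ∂μ ≤ K * ∫⁻ x, ‖f x‖ₑ ^ p * w x ∂μ := by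
  choose K hK H using fun i => (hk i).comm_nice hμ h hb
  have hp := h.conj.pos
  have hbm := hb.meas
  obtain ⟨x₀⟩ := ‹Nonempty X›
  refine ⟨∑ i, K i, ENNReal.sum_ne_top.2 fun i _ => hK i, fun f hf F hF => ?_⟩
  set S := {x | Good μ k b f x} with hS
  have hSm : MeasurableSet S := meas_good (fun i => (hk i).meas) hbm hf
  have hcomp : ∀ i, ∫⁻ x in S, ‖F x i‖ₑ ^ p * w x ∂μ ≤ K i * ∫⁻ x, ‖f x‖ₑ ^ p * w x ∂μ := by
    intro i
    set e : ℕ → ℝ := fun n => 1 / ((n:ℝ) + 1) with he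
    have he0 : ∀ n, 0 < e n := fun n => by positivity
    have helim : Tendsto e atTop (𝓝[>] 0) :=
      tendsto_nhdsWithin_iff.2 ⟨tendsto_one_div_add_atTop_nhds_zero_nat, Eventually.of_forall he0⟩
    calc ∫⁻ x in S, ‖F x i‖ₑ ^ p * w x ∂μ
        ≤ ∫⁻ x in S, liminf (fun n => ‖CTr μ (fun x y => k x y i) b (e n) f x‖ₑ ^ p * w x) atTop ∂μ := by
          refine lintegral_mono_ae ((ae_restrict_iff' hSm).2 ?_)
          filter_upwards [hF] with x hx hxS
          have hl : Tendsto (fun n => CTr μ (fun x y => k x y i) b (e n) f x) atTop (𝓝 (F x i)) := by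
            refine (((continuous_apply i).tendsto _).comp (hx.comp helim)).congr fun n => ?_
            exact CE_eval hxS (he0 n) i
          have hl2 := ((ENNReal.continuous_rpow_const (y := p)).tendsto _).comp
            ((continuous_enorm.tendsto _).comp hl)
          rw [← show _ = ‖F x i‖ₑ ^ p from hl2.liminf_eq, liminf_eq_iSup_iInf_of_nat,
            liminf_eq_iSup_iInf_of_nat, ENNReal.iSup_mul]
          refine iSup_mono fun n => le_iInf₂ fun j hj => mul_le_mul' ?_ le_rfl
          exact iInf₂_le (f := fun j (_ : j ≥ n) => ‖CTr μ (fun x y => k x y i) b (e j) f x‖ₑ ^ p) j hj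
      _ ≤ liminf (fun n => ∫⁻ x in S, ‖CTr μ (fun x y => k x y i) b (e n) f x‖ₑ ^ p * w x ∂μ) atTop :=
          lintegral_liminf_le fun n => (((meas_CTr (hk i).meas hbm hf _).enorm).pow_const p).mul h.meas_w
      _ ≤ _ := by
          refine liminf_le_of_frequently_le' (Eventually.frequently (Eventually.of_forall fun n => ?_))
          exact CTr_bound (hk i).meas hbm hf h.meas_w hp hSm (fun x hx => Good.int hx (he0 n) i) x₀
            fun j => H i _ _ _ _ (cut_nice hbm hf x₀ j) _ (he0 n)
  have hpt : ∀ᵐ x ∂μ, ‖F x‖ₑ ^ p * w x ≤ S.indicator (fun x => ∑ i, ‖F x i‖ₑ ^ p * w x) x := by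
    filter_upwards [hF] with x hx
    by_cases hxS : x ∈ S
    · rw [indicator_of_mem hxS, ← Finset.sum_mul]
      refine mul_le_mul' ?_ le_rfl
      rcases isEmpty_or_nonempty ι with he | he
      · rw [Subsingleton.elim (F x) 0, enorm_zero, ENNReal.zero_rpow_of_pos hp]; exact zero_le
      · obtain ⟨i, -, hi⟩ := Finset.exists_mem_eq_sup' Finset.univ_nonempty (fun i => ‖F x i‖)
        have : ‖F x‖ ≤ ‖F x i‖ := by
          rw [← hi]
          exact (pi_norm_le_iff_of_nonempty _).2 fun j => Finset.le_sup' (fun i => ‖F x i‖) (Finset.mem_univ j)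
        refine (ENNReal.rpow_le_rpow (enorm_le_iff_norm_le.2 this) hp.le).trans ?_
        exact Finset.single_le_sum (f := fun i => ‖F x i‖ₑ ^ p) (fun _ _ => zero_le) (Finset.mem_univ i)
    · have : F x = 0 := tendsto_nhds_unique hx (CE_of_not_good hxS)
      rw [this, enorm_zero, ENNReal.zero_rpow_of_pos hp, zero_mul]; exact zero_le
  calc ∫⁻ x, ‖F x‖ₑ ^ p * w x ∂μ ≤ ∫⁻ x, S.indicator (fun x => ∑ i, ‖F x i‖ₑ ^ p * w x) x ∂μ :=
        lintegral_mono_ae hpt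
    _ = ∫⁻ x in S, ∑ i, ‖F x i‖ₑ ^ p * w x ∂μ := lintegral_indicator hSm _
    _ = ∑ i, ∫⁻ x in S, ‖F x i‖ₑ ^ p * w x ∂μ := by
        refine lintegral_finsetSum' _ fun i _ => ?_
        have hFm : AEMeasurable (fun x => F x i) (μ.restrict S) := by
          refine aemeasurable_of_tendsto_metrizable_ae atTop
            (f := fun (n:ℕ) => CTr μ (fun x y => k x y i) b (1 / ((n:ℝ) + 1)) f)
            (fun n => (meas_CTr (hk i).meas hbm hf _).aemeasurable) ((ae_restrict_iff' hSm).2 ?_)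
          filter_upwards [hF] with x hx hxS
          refine (((continuous_apply i).tendsto _).comp (hx.comp (tendsto_nhdsWithin_iff.2
            ⟨tendsto_one_div_add_atTop_nhds_zero_nat, Eventually.of_forall fun n => ?_⟩))).congr fun n => ?_
          · exact mem_Ioi.2 (by positivity)
          · exact CE_eval hxS (by positivity) i
        exact (hFm.enorm.pow_const p).mul h.meas_w.aemeasurable
    _ ≤ ∑ i, K i * ∫⁻ x, ‖f x‖ₑ ^ p * w x ∂μ := Finset.sum_le_sum fun i _ => hcomp i
    _ = _ := (Finset.sum_mul ..).symm
end CZ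

namespace CZ

/-! ### The quaternionic Heisenberg group as a homogeneous metric measure space -/

open Set Metric

open QHeis

variable {n : ℕ}

lemma idx_bij : Function.Bijective fun z : Fin (n-1) × Fin 4 => idx z.1 z.2 := by
  rw [Fintype.bijective_iff_injective_and_card]
  refine ⟨fun a b h => ?_, by simp [mul_comm]⟩
  obtain ⟨a1, a2⟩ := a
  obtain ⟨b1, b2⟩ := b
  simp only [idx, Fin.mk.injEq] at h
  have h1 := a2.2
  have h2 := b2.2
  ext <;> simp only <;> omega

lemma sum_idx (f : Fin (4*(n-1)) → ℝ) : ∑ i, f i = ∑ l : Fin (n-1), ∑ k : Fin 4, f (idx l k) := by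
  rw [← Fintype.sum_prod_type']
  exact (Function.Bijective.sum_comp idx_bij f).symm

/-- The quaternion with the coordinates of `u` in block `l`. -/
def blk (u : Fin (4*(n-1)) → ℝ) (l : Fin (n-1)) : Quaternion ℝ :=
  ⟨u (idx l 0), u (idx l 1), u (idx l 2), u (idx l 3)⟩

/-- The quaternion `∑ₗ conj(uₗ) vₗ`. -/
def hp (u v : Fin (4*(n-1)) → ℝ) : Quaternion ℝ := ∑ l : Fin (n-1), star (blk u l) * blk v l

/-- The four real coordinates of a quaternion. -/
def coords : Quaternion ℝ ≃L[ℝ] (Fin 4 → ℝ) :=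
  (show Quaternion ℝ ≃ₗ[ℝ] (Fin 4 → ℝ) from
    QuaternionAlgebra.linearEquivTuple (-1:ℝ) 0 (-1)).toContinuousLinearEquiv

lemma coords_apply (a : Quaternion ℝ) : coords a = ![a.re, a.imI, a.imJ, a.imK] := rfl

lemma coords_mul (a b : Quaternion ℝ) : coords (star a * b) =
    ![a.re * b.re + a.imI * b.imI + a.imJ * b.imJ + a.imK * b.imK,
      a.re * b.imI - a.imI * b.re - a.imJ * b.imK + a.imK * b.imJ,
      a.re * b.imJ + a.imI * b.imK - a.imJ * b.re - a.imK * b.imI,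
      a.re * b.imK - a.imI * b.imJ + a.imJ * b.imI - a.imK * b.re] := by
  rw [coords_apply]
  ext i
  fin_cases i <;> simp <;> ring

lemma abs_coord_le (a : Quaternion ℝ) : |a.re| ≤ ‖a‖ ∧ |a.imI| ≤ ‖a‖ ∧ |a.imJ| ≤ ‖a‖ ∧ |a.imK| ≤ ‖a‖ := by
  have h : ‖a‖ ^ 2 = a.re ^ 2 + a.imI ^ 2 + a.imJ ^ 2 + a.imK ^ 2 := by
    rw [sq ‖a‖, ← Quaternion.normSq_eq_norm_mul_self, Quaternion.normSq_def']
  refine ⟨?_, ?_, ?_, ?_⟩ <;> refine abs_le_of_sq_le_sq ?_ (norm_nonneg _) <;> rw [h] <;> nlinarith [sq_nonneg a.re, sq_nonneg a.imI, sq_nonneg a.imJ, sq_nonneg a.imK]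

lemma hp_coords (u v : Fin (4*(n-1)) → ℝ) (i : Fin 4) : coords (hp u v) i = ∑ l : Fin (n-1),
    coords (star (blk u l) * blk v l) i := by
  rw [hp, map_sum, Finset.sum_apply]

lemma coords_toQ (g : G n) : coords (toQ g) = ![∑ l, ∑ k, g.2 (idx l k) ^ 2, g.1 0, g.1 1, g.1 2] := by
  rw [← sum_idx fun i => g.2 i ^ 2]; rfl

lemma toQ_mul (a b : G n) : toQ (QHeis.mul a b) = toQ a + toQ b + (2:ℝ) • hp a.2 b.2 := by
  refine coords.injective ?_
  rw [map_add, map_add, map_smul]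
  ext i
  simp only [Pi.add_apply, Pi.smul_apply, hp_coords, smul_eq_mul, coords_mul, coords_toQ]
  fin_cases i
  · simp [QHeis.mul, blk, Finset.mul_sum, ← Finset.sum_add_distrib, Fin.sum_univ_four]
    refine Finset.sum_congr rfl fun l _ => ?_
    ring
  all_goals
  · simp [QHeis.mul, blk, bmat, Fin.sum_univ_four, -Finset.sum_sub_distrib]
    refine Finset.sum_congr rfl fun l _ => ?_
    ring

lemma normSq_blk (u : Fin (4*(n-1)) → ℝ) : ∑ l, ‖blk u l‖ ^ 2 = ∑ i, u i ^ 2 := by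
  rw [sum_idx]
  refine Finset.sum_congr rfl fun l _ => ?_
  rw [sq, ← Quaternion.normSq_eq_norm_mul_self, Quaternion.normSq_def', Fin.sum_univ_four]
  rfl

/-- The Euclidean length of the horizontal part. -/
def len (u : Fin (4*(n-1)) → ℝ) : ℝ := √(∑ i, u i ^ 2)

lemma len_nonneg (u : Fin (4*(n-1)) → ℝ) : 0 ≤ len u := Real.sqrt_nonneg _
lemma len_sq (u : Fin (4*(n-1)) → ℝ) : len u ^ 2 = ∑ i, u i ^ 2 :=
  Real.sq_sqrt (Finset.sum_nonneg fun _ _ => sq_nonneg _)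

lemma norm_hp_le (u v : Fin (4*(n-1)) → ℝ) : ‖hp u v‖ ≤ len u * len v := by
  refine (norm_sum_le _ _).trans ?_
  simp only [norm_mul, norm_star]
  rw [len, len, ← normSq_blk, ← normSq_blk]
  exact Real.sum_mul_le_sqrt_mul_sqrt _ _ _

/-- The nonnegative square root of `‖toQ g‖` is the homogeneous norm. -/
lemma hnorm_sq (g : G n) : hnorm g ^ 2 = ‖toQ g‖ := by
  have e : ((∑ i, (g.2 i)^2)^2 + ∑ α, (g.1 α)^2) = ‖toQ g‖ ^ 2 := by
    rw [sq ‖toQ g‖, ← Quaternion.normSq_eq_norm_mul_self, Quaternion.normSq_def', Fin.sum_univ_three, toQ]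
    ring
  rw [hnorm, e, ← Real.rpow_natCast, ← Real.rpow_natCast, ← Real.rpow_mul (by positivity),
    ← Real.rpow_mul (norm_nonneg _)]
  norm_num

lemma hnorm_nonneg (g : G n) : 0 ≤ hnorm g := by
  rw [hnorm]; positivity

lemma len_le_hnorm (g : G n) : len g.2 ≤ hnorm g := by
  refine (abs_le_of_sq_le_sq' ?_ (hnorm_nonneg g)).2
  rw [hnorm_sq, len_sq]
  exact (le_abs_self _).trans (abs_coord_le (toQ g)).1

/-- The quaternion `|y|² + t` varies slowly under multiplication by an element of small gauge; this
gives both the triangle inequality and the regularity of the kernel. -/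
lemma norm_toQ_mul_sub (a b : G n) :
    ‖toQ (QHeis.mul a b) - toQ a‖ ≤ hnorm b ^ 2 + 2 * hnorm a * hnorm b ∧
    ‖toQ (QHeis.mul a b) - toQ b‖ ≤ hnorm a ^ 2 + 2 * hnorm a * hnorm b := by
  have h := norm_hp_le a.2 b.2
  have h1 := len_le_hnorm a
  have h2 := len_le_hnorm b
  have h3 := len_nonneg a.2
  have h4 := len_nonneg b.2
  have h5 : ‖(2:ℝ) • hp a.2 b.2‖ ≤ 2 * hnorm a * hnorm b := by
    rw [norm_smul, Real.norm_two]; nlinarith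
  rw [hnorm_sq, hnorm_sq, toQ_mul]
  constructor
  · rw [add_assoc, add_sub_cancel_left]
    exact (norm_add_le _ _).trans (by linarith)
  · rw [show toQ a + toQ b + (2:ℝ) • hp a.2 b.2 - toQ b = toQ a + (2:ℝ) • hp a.2 b.2 by abel]
    exact (norm_add_le _ _).trans (by linarith)

lemma hnorm_mul_le (a b : G n) : hnorm (QHeis.mul a b) ≤ hnorm a + hnorm b := by
  have h1 := (norm_toQ_mul_sub a b).1
  have h2 := norm_add_le (toQ (QHeis.mul a b) - toQ a) (toQ a)
  rw [sub_add_cancel, ← hnorm_sq, ← hnorm_sq] at h2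
  have := hnorm_nonneg a
  have := hnorm_nonneg b
  refine (abs_le_of_sq_le_sq' ?_ (by positivity)).2
  nlinarith

lemma hnorm_inv (a : G n) : hnorm (QHeis.inv a) = hnorm a := by
  simp [hnorm, QHeis.inv]

lemma toQ_eq_zero {g : G n} (h : toQ g = 0) : g = 0 := by
  have h0 := congrArg coords h
  rw [map_zero, coords_apply] at h0
  have e0 : ∑ i, (g.2 i)^2 = 0 := congrFun h0 0
  have e1 : g.1 0 = 0 := congrFun h0 1
  have e2 : g.1 1 = 0 := congrFun h0 2
  have e3 : g.1 2 = 0 := congrFun h0 3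
  ext i
  · fin_cases i <;> assumption
  · exact pow_eq_zero_iff (two_ne_zero) |>.1
      ((Finset.sum_eq_zero_iff_of_nonneg fun _ _ => sq_nonneg _).1 e0 i (Finset.mem_univ i))

lemma hnorm_eq_zero {g : G n} : hnorm g = 0 ↔ g = 0 := by
  constructor
  · intro h
    refine toQ_eq_zero (norm_eq_zero.1 ?_)
    rw [← hnorm_sq, h]; norm_num
  · rintro rfl
    simp [hnorm]

/-- The Heisenberg group as a metric space; the underlying type is that of `G n`. -/
def Hs (n : ℕ) : Type := G n

instance : TopologicalSpace (Hs n) := inferInstanceAs (TopologicalSpace (G n))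
instance : SecondCountableTopology (Hs n) := inferInstanceAs (SecondCountableTopology (G n))
instance : MeasurableSpace (Hs n) := inferInstanceAs (MeasurableSpace (G n))
instance : BorelSpace (Hs n) := inferInstanceAs (BorelSpace (G n))
instance : Nonempty (Hs n) := inferInstanceAs (Nonempty (G n))

lemma hmul_assoc (a b c : G n) : QHeis.mul (QHeis.mul a b) c = QHeis.mul a (QHeis.mul b c) := by
  refine Prod.ext (funext fun α => ?_) (add_assoc _ _ _)
  simp only [QHeis.mul, Pi.add_apply]
  have : ∀ x y z : Fin (4*(n-1)) → ℝ, (∑ l : Fin (n-1), ∑ k : Fin 4, ∑ j : Fin 4,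
        bmat α k j * (x (idx l k) + y (idx l k)) * z (idx l j)) =
      (∑ l : Fin (n-1), ∑ k : Fin 4, ∑ j : Fin 4, bmat α k j * x (idx l k) * z (idx l j)) +
      ∑ l : Fin (n-1), ∑ k : Fin 4, ∑ j : Fin 4, bmat α k j * y (idx l k) * z (idx l j) := by
    intro x y z
    simp only [← Finset.sum_add_distrib]
    refine Finset.sum_congr rfl fun l _ => Finset.sum_congr rfl fun k _ => Finset.sum_congr rfl fun j _ => ?_
    ring
  have h2 : ∀ x y z : Fin (4*(n-1)) → ℝ, (∑ l : Fin (n-1), ∑ k : Fin 4, ∑ j : Fin 4,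
        bmat α k j * x (idx l k) * (y (idx l j) + z (idx l j))) =
      (∑ l : Fin (n-1), ∑ k : Fin 4, ∑ j : Fin 4, bmat α k j * x (idx l k) * y (idx l j)) +
      ∑ l : Fin (n-1), ∑ k : Fin 4, ∑ j : Fin 4, bmat α k j * x (idx l k) * z (idx l j) := by
    intro x y z
    simp only [← Finset.sum_add_distrib]
    refine Finset.sum_congr rfl fun l _ => Finset.sum_congr rfl fun k _ => Finset.sum_congr rfl fun j _ => ?_
    ring
  rw [this, h2]
  ring

lemma bmat_self (u : Fin (4*(n-1)) → ℝ) (α : Fin 3) : ∑ l : Fin (n-1), ∑ k : Fin 4, ∑ j : Fin 4,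
    bmat α k j * u (idx l k) * u (idx l j) = 0 := by
  refine Finset.sum_eq_zero fun l _ => ?_
  fin_cases α <;> simp [bmat, Fin.sum_univ_four] <;> ring

instance : Group (Hs n) where
  mul := QHeis.mul (n := n)
  one := (0 : G n)
  inv := QHeis.inv (n := n)
  mul_assoc := hmul_assoc
  one_mul a := by
    refine Prod.ext (funext fun α => ?_) (zero_add _)
    change (0:ℝ) + a.1 α + 2 * ∑ l : Fin (n-1), ∑ k : Fin 4, ∑ j : Fin 4,
        bmat α k j * (0:ℝ) * a.2 (idx l j) = a.1 α
    simp
  mul_one a := by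
    refine Prod.ext (funext fun α => ?_) (add_zero _)
    change a.1 α + (0:ℝ) + 2 * ∑ l : Fin (n-1), ∑ k : Fin 4, ∑ j : Fin 4,
        bmat α k j * a.2 (idx l k) * (0:ℝ) = a.1 α
    simp
  inv_mul_cancel a := by
    refine Prod.ext (funext fun α => ?_) (neg_add_cancel _)
    change -a.1 α + a.1 α + 2 * ∑ l : Fin (n-1), ∑ k : Fin 4, ∑ j : Fin 4,
        bmat α k j * (-a.2 (idx l k)) * a.2 (idx l j) = 0
    have := bmat_self a.2 α
    simp only [mul_neg, neg_mul, Finset.sum_neg_distrib]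
    rw [this]; ring

lemma cont_mul_left (a : G n) : Continuous fun x => QHeis.mul a x := by
  refine Continuous.prodMk ?_ (by fun_prop)
  refine continuous_pi fun α => ?_
  fun_prop

lemma cont_hnorm : Continuous (hnorm (n := n)) := by
  refine Continuous.rpow_const (by fun_prop) fun g => Or.inr (by norm_num)

lemma coord_le_hnorm (g : G n) {δ : ℝ} (hδ : δ ≤ 1) (h : hnorm g < δ) : dist g 0 < δ := by
  have h0 := hnorm_nonneg g
  have h1 := abs_coord_le (toQ g)
  rw [← hnorm_sq] at h1
  have h2 : hnorm g ^ 2 < δ := by nlinarith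
  have h3 := len_le_hnorm g
  have hd : 0 < δ := h0.trans_lt h
  rw [Prod.dist_eq, max_lt_iff, dist_pi_lt_iff hd, dist_pi_lt_iff hd]
  refine ⟨fun α => ?_, fun i => ?_⟩
  · change dist (g.1 α) 0 < δ
    rw [Real.dist_0_eq_abs]
    fin_cases α
    · exact h1.2.1.trans_lt h2
    · exact h1.2.2.1.trans_lt h2
    · exact h1.2.2.2.trans_lt h2
  · change dist (g.2 i) 0 < δ
    rw [Real.dist_0_eq_abs]
    refine lt_of_le_of_lt ?_ h
    refine (Real.abs_le_sqrt ?_).trans h3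
    exact Finset.single_le_sum (f := fun i => g.2 i ^ 2) (fun _ _ => sq_nonneg _) (Finset.mem_univ i)

lemma hmul_def (a b : Hs n) : a * b = QHeis.mul (n := n) a b := rfl
lemma hinv_def (a : Hs n) : a⁻¹ = QHeis.inv (n := n) a := rfl

/-- The homogeneous norm on `Hs n`. -/
def nm (g : Hs n) : ℝ := hnorm (n := n) g

lemma nm_nonneg (g : Hs n) : 0 ≤ nm g := hnorm_nonneg _
lemma nm_inv (g : Hs n) : nm g⁻¹ = nm g := hnorm_inv _
lemma nm_mul_le (g h : Hs n) : nm (g * h) ≤ nm g + nm h := hnorm_mul_le _ _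
lemma nm_eq_zero {g : Hs n} : nm g = 0 ↔ g = 1 := hnorm_eq_zero
lemma cont_nm : Continuous (nm (n := n)) := cont_hnorm
lemma cont_mul (a : Hs n) : Continuous fun x => a * x := cont_mul_left _

instance : MetricSpace (Hs n) := MetricSpace.ofDistTopology (fun x y => nm (y⁻¹ * x))
  (fun x => by rw [inv_mul_cancel]; exact nm_eq_zero.2 rfl)
  (fun x y => by rw [← nm_inv]; congr 1; group)
  (fun x y z => by
    have := nm_mul_le (z⁻¹ * y) (y⁻¹ * x)
    rw [show z⁻¹ * y * (y⁻¹ * x) = z⁻¹ * x by group] at this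
    linarith)
  (fun s => by
    constructor
    · intro hs x hx
      have h1 : (fun u => x * u) ⁻¹' s ∈ 𝓝 (1 : Hs n) :=
        (cont_mul x).continuousAt.preimage_mem_nhds (hs.mem_nhds (by simpa using hx))
      obtain ⟨δ, hδ, hsub⟩ := (Metric.mem_nhds_iff (α := G n)).1 h1
      refine ⟨min δ 1, by positivity, fun y hy => ?_⟩
      have h2 : nm (x⁻¹ * y) < min δ 1 := by
        rw [← nm_inv]; convert hy using 2; group
      have h3 : x * (x⁻¹ * y) ∈ s :=
        hsub (a := x⁻¹ * y) ((coord_le_hnorm _ (min_le_right _ _) h2).trans_le (min_le_left _ _))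
      rwa [mul_inv_cancel_left] at h3
    · intro h
      rw [isOpen_iff_mem_nhds]
      intro x hx
      obtain ⟨ε, hε, hs⟩ := h x hx
      have h1 : Continuous fun y => nm (x⁻¹ * y) := cont_nm.comp (cont_mul _)
      have h2 : ∀ᶠ y in 𝓝 x, nm (x⁻¹ * y) < ε := by
        refine h1.continuousAt.eventually_lt_const ?_
        change nm (x⁻¹ * x) < ε
        rwa [inv_mul_cancel, nm_eq_zero.2 rfl]
      filter_upwards [h2] with y hy
      refine hs y ?_
      rw [← nm_inv]; convert hy using 2; group)
  (fun x y h => by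
    have := nm_eq_zero.1 h
    rw [inv_mul_eq_one] at this
    exact this.symm)

lemma dist_def (x y : Hs n) : dist x y = nm (y⁻¹ * x) := rfl

/-- Lebesgue measure on `Hs n`. -/
def vol (n : ℕ) : Measure (Hs n) := (volume : Measure (G n))

instance : SFinite (vol n) := inferInstanceAs (SFinite (volume : Measure (G n)))
instance : (vol n).IsOpenPosMeasure := inferInstanceAs ((volume : Measure (G n)).IsOpenPosMeasure)

lemma meas_pres_mul (a : Hs n) : MeasurePreserving (fun x => a * x) (vol n) (vol n) := by
  set B : (Fin (4*(n-1)) → ℝ) → Fin 3 → ℝ := fun v α => 2 * ∑ l : Fin (n-1), ∑ k : Fin 4, ∑ j : Fin 4,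
    bmat α k j * (show G n from a).2 (idx l k) * v (idx l j) with hB
  have hBm : Measurable B := by
    refine measurable_pi_lambda _ fun α => ?_
    simp only [hB]; fun_prop
  have h1 : MeasurePreserving (fun z : (Fin (4*(n-1)) → ℝ) × (Fin 3 → ℝ) =>
      ((show G n from a).2 + z.1, ((show G n from a).1 + B z.1) + z.2))
      ((volume : Measure (Fin (4*(n-1)) → ℝ)).prod volume) ((volume : Measure (Fin (4*(n-1)) → ℝ)).prod volume) := by
    refine (measurePreserving_add_left volume _).skew_product (g := fun y t => ((show G n from a).1 + B y) + t) (by fun_prop) ?_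
    exact Eventually.of_forall fun y => (measurePreserving_add_left volume _).map_eq
  have h2 := (Measure.measurePreserving_swap.comp h1).comp (Measure.measurePreserving_swap (μ := (volume : Measure (Fin 3 → ℝ))) (ν := (volume : Measure (Fin (4*(n-1)) → ℝ))))
  have e : (fun x : Hs n => a * x) = (Prod.swap ∘ fun z : (Fin (4*(n-1)) → ℝ) × (Fin 3 → ℝ) =>
      ((show G n from a).2 + z.1, ((show G n from a).1 + B z.1) + z.2)) ∘ Prod.swap := by
    funext x
    refine Prod.ext (funext fun α => ?_) rfl
    change a.1 α + x.1 α + B x.2 α = a.1 α + B x.2 α + x.1 α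
    ring
  rw [e]
  exact h2

lemma meas_pres_inv : MeasurePreserving (fun x : Hs n => x⁻¹) (vol n) (vol n) :=
  (Measure.measurePreserving_neg (volume : Measure (Fin 3 → ℝ))).prod
    (Measure.measurePreserving_neg (volume : Measure (Fin (4*(n-1)) → ℝ)))
/-- The homogeneous dimension. -/
def hdim (n : ℕ) : ℕ := 6 + 4 * (n - 1)

/-- The automorphic dilations. -/
def dl (r : ℝ) (g : Hs n) : Hs n := QHeis.dil (n := n) r g

lemma map_dl {r : ℝ} (hr : 0 < r) :
    Measure.map (dl r) (vol n) = ENNReal.ofReal ((r ^ hdim n)⁻¹) • vol n := by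
  have e : dl (n := n) r = Prod.map (fun t : Fin 3 → ℝ => r ^ 2 • t) (fun y : Fin (4*(n-1)) → ℝ => r • y) := rfl
  have h1 := Measure.map_addHaar_smul (volume : Measure (Fin 3 → ℝ)) (r := r ^ 2) (by positivity)
  have h2 := Measure.map_addHaar_smul (volume : Measure (Fin (4*(n-1)) → ℝ)) (r := r) (by positivity)
  have h3 := Measure.map_prod_map (volume : Measure (Fin 3 → ℝ)) (volume : Measure (Fin (4*(n-1)) → ℝ))
    (f := fun t : Fin 3 → ℝ => r ^ 2 • t) (g := fun y : Fin (4*(n-1)) → ℝ => r • y)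
    (measurable_const_smul _) (measurable_const_smul _)
  rw [e]
  refine h3.symm.trans ?_
  erw [h1, h2]
  rw [Measure.prod_smul_left, Measure.prod_smul_right, smul_smul, ← ENNReal.ofReal_mul (abs_nonneg _)]
  congr 2
  rw [← abs_mul, abs_of_nonneg (by positivity), hdim]
  simp only [Module.finrank_fintype_fun_eq_card, Fintype.card_fin]
  rw [← mul_inv, pow_add, ← pow_mul]

lemma meas_dl (r : ℝ) : Measurable (dl (n := n) r) := by
  have e : dl (n := n) r = Prod.map (fun t : Fin 3 → ℝ => r ^ 2 • t) (fun y : Fin (4*(n-1)) → ℝ => r • y) := rfl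
  rw [e]
  exact (measurable_const_smul _).prodMap (measurable_const_smul _)

lemma toQ_dl (r : ℝ) (g : Hs n) : toQ (n := n) (dl r g) = r ^ 2 • toQ (n := n) g := by
  refine coords.injective ?_
  rw [map_smul, show coords (toQ (n := n) g) = _ from coords_toQ _]
  refine (coords_toQ _).trans ?_
  ext i
  fin_cases i <;> simp [dl, QHeis.dil, mul_pow, Finset.mul_sum]

lemma nm_sq (g : Hs n) : nm g ^ 2 = ‖toQ (n := n) g‖ := hnorm_sq _

lemma nm_dl {r : ℝ} (hr : 0 ≤ r) (g : Hs n) : nm (dl r g) = r * nm g := by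
  refine (pow_left_inj₀ (nm_nonneg _) (mul_nonneg hr (nm_nonneg g)) two_ne_zero).1 ?_
  rw [nm_sq, toQ_dl, norm_smul, mul_pow, nm_sq, Real.norm_eq_abs, abs_of_nonneg (by positivity)]

lemma dl_mul (r : ℝ) (g h : Hs n) : dl r (g * h) = dl r g * dl r h := by
  refine Prod.ext (funext fun α => ?_) (smul_add r g.2 h.2)
  change r ^ 2 * (g.1 α + h.1 α + 2 * ∑ l : Fin (n-1), ∑ k : Fin 4, ∑ j : Fin 4,
        bmat α k j * g.2 (idx l k) * h.2 (idx l j)) = r ^ 2 * g.1 α + r ^ 2 * h.1 α +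
      2 * ∑ l : Fin (n-1), ∑ k : Fin 4, ∑ j : Fin 4,
        bmat α k j * (r * g.2 (idx l k)) * (r * h.2 (idx l j))
  simp only [mul_add, Finset.mul_sum]
  congr 1
  refine Finset.sum_congr rfl fun l _ => Finset.sum_congr rfl fun k _ => Finset.sum_congr rfl fun j _ => ?_
  ring

lemma dl_inv (r : ℝ) (g : Hs n) : dl r g⁻¹ = (dl r g)⁻¹ := by
  refine Prod.ext (funext fun α => ?_) (smul_neg r g.2)
  exact mul_neg (r ^ 2) (g.1 α)

lemma dl_dl (r s : ℝ) (g : Hs n) : dl r (dl s g) = dl (r * s) g := by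
  refine Prod.ext (funext fun α => ?_) (smul_smul r s g.2)
  change r ^ 2 * (s ^ 2 * g.1 α) = (r * s) ^ 2 * g.1 α
  ring

lemma dl_one (g : Hs n) : dl 1 g = g := by
  refine Prod.ext (funext fun α => ?_) (one_smul ℝ g.2)
  change (1:ℝ) ^ 2 * g.1 α = g.1 α
  ring

lemma dist_dl {r : ℝ} (hr : 0 ≤ r) (g h : Hs n) : dist (dl r g) (dl r h) = r * dist g h := by
  rw [dist_def, ← dl_inv, ← dl_mul, nm_dl hr, dist_def]

lemma dist_mul_left' (a x y : Hs n) : dist (a * x) (a * y) = dist x y := by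
  rw [dist_def, dist_def]; congr 1; group

/-- The volume of the unit ball. -/
def unitVol (n : ℕ) : ℝ := (vol n (Metric.ball 1 1)).toReal

lemma vol_dl {r : ℝ} (hr : 0 < r) {E : Set (Hs n)} (hE : MeasurableSet E) :
    vol n (dl r ⁻¹' E) = ENNReal.ofReal ((r ^ hdim n)⁻¹) * vol n E := by
  rw [← Measure.map_apply (meas_dl r) hE, map_dl hr]; rfl

lemma bdd_nm (R : ℝ) : vol n {g | nm g ≤ R} ≠ ⊤ := by
  set r := 1 / (2 * (|R| + 1)) with hr
  have hr0 : 0 < r := by positivity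
  have hsub : {g : Hs n | nm g ≤ R} ⊆ dl r ⁻¹' {g | nm g < 1} := by
    intro g hg
    rw [mem_preimage, mem_setOf_eq, nm_dl hr0.le, hr, one_div, inv_mul_lt_iff₀ (by positivity)]
    have := le_abs_self R
    have h2 : nm g ≤ R := hg
    linarith [abs_nonneg R]
  have hfin : vol n {g | nm g < 1} < ⊤ :=
    (measure_mono fun g hg => mem_ball.2 (coord_le_hnorm g le_rfl hg)).trans_lt
      (measure_ball_lt_top (μ := (volume : Measure (G n))) (x := 0) (r := 1))
  refine ((measure_mono hsub).trans_lt ?_).ne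
  rw [vol_dl hr0 (measurableSet_lt cont_nm.measurable measurable_const)]
  exact ENNReal.mul_lt_top ENNReal.ofReal_lt_top hfin

lemma dist_one (g : Hs n) : dist g 1 = nm g := by rw [dist_def, inv_one, one_mul]

lemma homSp : HomSp (vol n) (hdim n) (unitVol n) where
  one_le := by rw [hdim]; omega
  pos := by
    refine ENNReal.toReal_pos ?_ ?_
    · exact (isOpen_ball.measure_pos (vol n) ⟨(1 : Hs n), mem_ball_self one_pos⟩).ne'
    · refine ((measure_mono fun g hg => ?_).trans_lt (bdd_nm (n := n) 1).lt_top).ne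
      rw [mem_ball, dist_one] at hg
      exact hg.le
  ball x r hr := by
    have e1 : (fun g => x * g) ⁻¹' (Metric.ball x r) = Metric.ball (1 : Hs n) r := by
      ext g
      rw [mem_preimage, mem_ball, mem_ball]
      conv_lhs => rw [← mul_one x, mul_assoc, one_mul, dist_mul_left']
    have e2 : dl r ⁻¹' (Metric.ball (1 : Hs n) r) = Metric.ball 1 1 := by
      ext g
      rw [mem_preimage, mem_ball, mem_ball, dist_one, dist_one, nm_dl hr.le]
      exact ⟨fun h => by nlinarith, fun h => by nlinarith⟩
    have h1 := (meas_pres_mul x).measure_preimage (measurableSet_ball (x := x) (ε := r)).nullMeasurableSet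
    rw [e1] at h1
    have h2 := vol_dl hr (measurableSet_ball (x := (1 : Hs n)) (ε := r))
    rw [e2, h1] at h2
    have h3 : vol n (Metric.ball 1 1) = ENNReal.ofReal (unitVol n) := by
      rw [unitVol, ENNReal.ofReal_toReal]
      refine ((measure_mono fun g hg => ?_).trans_lt (bdd_nm (n := n) 1).lt_top).ne
      rw [mem_ball, dist_one] at hg
      exact hg.le
    rw [ENNReal.ofReal_mul (p := unitVol n) ENNReal.toReal_nonneg, ← h3, h2, mul_comm, ← mul_assoc,
      ← ENNReal.ofReal_mul (by positivity), mul_inv_cancel₀ (by positivity), ENNReal.ofReal_one, one_mul]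
end CZ

namespace CZ

/-! ### Derivatives of the quaternionic Cauchy kernel -/

open Set Metric

open QHeis

/-- The derivatives along the real axis of the quaternionic Cauchy kernel. -/
def Sk (m : ℕ) : Quaternion ℝ → Quaternion ℝ :=
  dre^[m] fun τ => ((Quaternion.normSq τ) ^ 2)⁻¹ • star τ

/-- Quaternionic conjugation as a real-linear continuous map. -/
def starC : Quaternion ℝ →L[ℝ] Quaternion ℝ :=
  LinearMap.toContinuousLinearMap
    { toFun := star, map_add' := star_add, map_smul' := fun r a => Quaternion.star_smul r a }

lemma starC_apply (a : Quaternion ℝ) : starC a = star a := rfl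

/-- Quaternionic conjugation as a continuous real-linear equivalence. -/
def starCE : Quaternion ℝ ≃L[ℝ] Quaternion ℝ :=
  ContinuousLinearEquiv.equivOfInverse starC starC star_star star_star

lemma starCE_apply (a : Quaternion ℝ) : starCE a = star a := rfl

lemma Sk_zero (σ : Quaternion ℝ) : Sk 0 σ = (‖σ‖ ^ 4)⁻¹ • star σ := by
  rw [Sk, Function.iterate_zero, id, Quaternion.normSq_eq_norm_mul_self]
  congr 2; ring

lemma Sk_succ (m : ℕ) (σ : Quaternion ℝ) :
    Sk (m + 1) σ = deriv (fun s : ℝ => Sk m (σ + (s : Quaternion ℝ))) 0 := by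
  rw [Sk, Function.iterate_succ_apply']; rfl

lemma sker_eq (m : ℕ) (c : ℝ) (σ : Quaternion ℝ) : sker m c σ = c • Sk m σ := rfl

lemma Sk_hom (m : ℕ) {r : ℝ} (hr : 0 < r) (σ : Quaternion ℝ) :
    Sk m (r • σ) = (r ^ (3 + m))⁻¹ • Sk m σ := by
  induction m generalizing σ with
  | zero =>
    rw [Sk_zero, Sk_zero, norm_smul, Quaternion.star_smul, smul_smul, smul_smul, Real.norm_eq_abs, abs_of_pos hr]
    congr 1
    field_simp
  | succ m ih =>
    rw [Sk_succ, Sk_succ]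
    have e : (fun s : ℝ => Sk m (r • σ + (s : Quaternion ℝ))) =
        fun s : ℝ => (r ^ (3 + m))⁻¹ • (fun u : ℝ => Sk m (σ + (u : Quaternion ℝ))) (r⁻¹ * s) := by
      ext1 s
      rw [← ih]
      congr 1
      rw [smul_add]
      congr 1
      rw [Quaternion.smul_coe, mul_inv_cancel_left₀ hr.ne']
    have e2 := deriv_comp_mul_left r⁻¹ (fun u : ℝ => Sk m (σ + (u : Quaternion ℝ))) 0
    rw [mul_zero] at e2
    rw [e, deriv_fun_const_smul_field, e2, smul_smul]
    congr 1
    rw [← add_assoc, pow_succ, mul_inv]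

lemma Sk_star (m : ℕ) (σ : Quaternion ℝ) : Sk m (star σ) = star (Sk m σ) := by
  induction m generalizing σ with
  | zero => rw [Sk_zero, Sk_zero, norm_star, Quaternion.star_smul]
  | succ m ih =>
    rw [Sk_succ, Sk_succ]
    have e : (fun s : ℝ => Sk m (star σ + (s : Quaternion ℝ))) =
        fun s : ℝ => starCE (Sk m (σ + (s : Quaternion ℝ))) := by
      ext1 s
      rw [starCE_apply, ← ih, star_add, Quaternion.star_coe]
    rw [e, ← starCE_apply]
    have := starCE.comp_fderiv (f := fun s : ℝ => Sk m (σ + (s : Quaternion ℝ))) (x := 0)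
    have h2 := congrArg (fun L => L 1) this
    exact h2

lemma Sk_smooth (m : ℕ) : ContDiffOn ℝ (⊤ : ℕ∞) (Sk m) {0}ᶜ := by
  induction m with
  | zero =>
    have : ContDiffOn ℝ (⊤ : ℕ∞) (fun σ : Quaternion ℝ => ((‖σ‖ ^ 2) ^ 2)⁻¹ • star σ) {0}ᶜ := by
      have hs : ContDiffOn ℝ (⊤ : ℕ∞) (fun σ : Quaternion ℝ => (‖σ‖ ^ 2) ^ 2) {0}ᶜ := ?_
      · refine ContDiffOn.smul (ContDiffOn.inv hs ?_) ?_
        · intro x hx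
          have : ‖x‖ ≠ 0 := norm_ne_zero_iff.2 hx
          positivity
        · exact starC.contDiff.contDiffOn
      · exact (((contDiff_norm_sq ℝ : ContDiff ℝ (⊤ : ℕ∞) fun x : Quaternion ℝ => ‖x‖ ^ 2)).pow 2).contDiffOn
    refine this.congr fun σ _ => ?_
    rw [Sk_zero]; congr 2; ring
  | succ m ih =>
    have ho : IsOpen ({0}ᶜ : Set (Quaternion ℝ)) := isOpen_compl_singleton
    have h1 : ContDiffOn ℝ (⊤ : ℕ∞) (fderiv ℝ (Sk m)) {0}ᶜ := ih.fderiv_of_isOpen ho (by simp)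
    refine (h1.clm_apply (contDiffOn_const (c := (1 : Quaternion ℝ)))).congr fun σ hσ => ?_
    have hd : HasFDerivAt (Sk m) (fderiv ℝ (Sk m) σ) (σ + ((0:ℝ) : Quaternion ℝ)) := by
      have := ((ih.contDiffAt (ho.mem_nhds hσ)).differentiableAt (by simp)).hasFDerivAt
      rwa [Quaternion.coe_zero, add_zero]
    have hl : HasDerivAt (fun s : ℝ => σ + (s : Quaternion ℝ)) (1 : Quaternion ℝ) 0 := by
      have h0 := ((hasDerivAt_id (0:ℝ)).smul_const (1 : Quaternion ℝ)).const_add σ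
      rw [one_smul] at h0
      refine h0.congr_of_eventuallyEq (Eventually.of_forall fun s => ?_)
      simp only [id, ← Quaternion.coe_one, Quaternion.smul_coe, mul_one]
    rw [Sk_succ]
    exact (hd.comp_hasDerivAt (0:ℝ) hl).deriv

lemma Sk_deriv (m : ℕ) (σ : Quaternion ℝ) (s : ℝ) (h : σ + (s : Quaternion ℝ) ≠ 0) :
    HasDerivAt (fun s : ℝ => Sk m (σ + (s : Quaternion ℝ))) (Sk (m + 1) (σ + (s : Quaternion ℝ))) s := by
  have hl : ∀ s, HasDerivAt (fun s : ℝ => σ + (s : Quaternion ℝ)) (1 : Quaternion ℝ) s := by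
    intro s
    have h0 := ((hasDerivAt_id s).smul_const (1 : Quaternion ℝ)).const_add σ
    rw [one_smul] at h0
    refine h0.congr_of_eventuallyEq (Eventually.of_forall fun s => ?_)
    simp only [id, ← Quaternion.coe_one, Quaternion.smul_coe, mul_one]
  have hd := (((Sk_smooth m).contDiffAt (isOpen_compl_singleton.mem_nhds h)).differentiableAt (by simp)).hasFDerivAt
  have h1 := hd.comp_hasDerivAt s (hl s)
  have h2 := h1.differentiableAt.hasDerivAt
  have e : Sk (m + 1) (σ + (s : Quaternion ℝ)) =
      deriv (Sk m ∘ fun s : ℝ => σ + (s : Quaternion ℝ)) s := ?_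
  · rw [e]; exact h2
  rw [Sk_succ]
  change _ = deriv (fun s : ℝ => Sk m (σ + (s : Quaternion ℝ))) s
  have := deriv_comp_const_add (f := fun s : ℝ => Sk m (σ + (s : Quaternion ℝ))) s 0
  rw [add_zero] at this
  rw [← this]
  congr 1
  ext1 u
  rw [add_assoc, ← Quaternion.coe_add]

lemma Sk_size (m : ℕ) : ∃ A : ℝ, 0 ≤ A ∧ ∀ σ, σ ≠ 0 → ‖Sk m σ‖ ≤ A / ‖σ‖ ^ (3 + m) := by
  have hc : IsCompact (sphere (0 : Quaternion ℝ) 1) := isCompact_sphere _ _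
  obtain ⟨A, hA⟩ := hc.exists_bound_of_continuousOn ((Sk_smooth m).continuousOn.mono fun x hx => by
    intro h
    rw [mem_singleton_iff] at h
    rw [h] at hx; simp at hx)
  have h1 : 0 ≤ A := (norm_nonneg _).trans (hA 1 (by simp))
  refine ⟨A, h1, fun σ hσ => ?_⟩
  have hn : 0 < ‖σ‖ := norm_pos_iff.2 hσ
  have e : σ = ‖σ‖ • (‖σ‖⁻¹ • σ) := by rw [smul_smul, mul_inv_cancel₀ hn.ne', one_smul]
  conv_lhs => rw [e, Sk_hom m hn, norm_smul, Real.norm_eq_abs, abs_of_pos (by positivity)]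
  rw [div_eq_inv_mul]
  gcongr
  exact hA _ (by rw [mem_sphere_zero_iff_norm, norm_smul, norm_inv, norm_norm, inv_mul_cancel₀ hn.ne'])

/-- A function smooth away from the origin is Lipschitz near the unit sphere. -/
lemma lip_sphere {E F : Type*} [NormedAddCommGroup E] [NormedSpace ℝ E] [ProperSpace E]
    [NormedAddCommGroup F] [NormedSpace ℝ F] {f : E → F} (hf : ContDiffOn ℝ (⊤ : ℕ∞) f {0}ᶜ) :
    ∃ A : ℝ, 0 ≤ A ∧ ∀ σ τ : E, ‖σ‖ = 1 → ‖τ - σ‖ ≤ 1 / 2 → ‖f τ - f σ‖ ≤ A * ‖τ - σ‖ := by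
  set T : Set E := closedBall 0 (3 / 2) \ ball 0 (1 / 2) with hT
  have hc : IsCompact T := (isCompact_closedBall _ _).diff isOpen_ball
  have ho : IsOpen ({0}ᶜ : Set E) := isOpen_compl_singleton
  have hT0 : T ⊆ {0}ᶜ := by
    intro x hx h
    rw [mem_singleton_iff] at h
    rw [h] at hx; simp [hT] at hx
  have hcont : ContinuousOn (fderiv ℝ f) T :=
    (hf.continuousOn_fderiv_of_isOpen ho (by simp)).mono hT0
  obtain ⟨A, hA⟩ := hc.exists_bound_of_continuousOn hcont
  refine ⟨max A 0, le_max_right _ _, fun σ τ hσ hτ => ?_⟩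
  have hsub : closedBall σ (1 / 2) ⊆ T := by
    intro x hx
    rw [mem_closedBall, dist_eq_norm] at hx
    have a1 := norm_sub_norm_le σ x
    have a2 := norm_sub_norm_le x σ
    rw [norm_sub_rev] at a1
    rw [hT, mem_diff, mem_closedBall_zero_iff, mem_ball_zero_iff, not_lt]
    constructor <;> linarith
  refine (convex_closedBall σ (1 / 2)).norm_image_sub_le_of_norm_fderiv_le (𝕜 := ℝ) (fun x hx => ?_)
    (fun x hx => (hA x (hsub hx)).trans (le_max_left _ _)) (mem_closedBall_self (by norm_num))
    (by rwa [mem_closedBall, dist_eq_norm])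
  exact (hf.contDiffAt (ho.mem_nhds (hT0 (hsub hx)))).differentiableAt (by simp)

lemma Sk_lip (m : ℕ) : ∃ A : ℝ, 0 ≤ A ∧ ∀ σ τ, σ ≠ 0 → ‖τ - σ‖ ≤ ‖σ‖ / 2 →
    ‖Sk m τ - Sk m σ‖ ≤ A * ‖τ - σ‖ / ‖σ‖ ^ (4 + m) := by
  obtain ⟨A, h1, key⟩ := lip_sphere (Sk_smooth m)
  refine ⟨A, h1, fun σ τ hσ hτ => ?_⟩
  have hn : 0 < ‖σ‖ := norm_pos_iff.2 hσ
  have e : ∀ x : Quaternion ℝ, Sk m x = (‖σ‖ ^ (3 + m))⁻¹ • Sk m (‖σ‖⁻¹ • x) := by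
    intro x
    rw [← Sk_hom m hn, smul_smul, mul_inv_cancel₀ hn.ne', one_smul]
  have e2 : ‖‖σ‖⁻¹ • τ - ‖σ‖⁻¹ • σ‖ = ‖σ‖⁻¹ * ‖τ - σ‖ := by
    rw [← smul_sub, norm_smul, norm_inv, norm_norm]
  have h3 := key (‖σ‖⁻¹ • σ) (‖σ‖⁻¹ • τ)
    (by rw [norm_smul, norm_inv, norm_norm, inv_mul_cancel₀ hn.ne'])
    (by rw [e2, inv_mul_le_iff₀ hn]; linarith)
  rw [e2] at h3
  rw [e τ, e σ, ← smul_sub, norm_smul, Real.norm_eq_abs, abs_of_pos (by positivity)]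
  refine (mul_le_mul_of_nonneg_left h3 (by positivity)).trans (le_of_eq ?_)
  rw [show 4 + m = (3 + m) + 1 by ring, pow_succ]
  field_simp
end CZ

namespace CZ

/-! ### Cancellation of the Cauchy–Szegő kernel on gauge shells -/

open Set Metric

open QHeis

/-- The quaternion with real part `x` and imaginary part `t`. -/
def qt (x : ℝ) (t : Fin 3 → ℝ) : Quaternion ℝ := ⟨x, t 0, t 1, t 2⟩

lemma toQ_qt {n : ℕ} (g : G n) : toQ g = qt (∑ i, g.2 i ^ 2) g.1 := rfl

lemma coords_qt (x : ℝ) (t : Fin 3 → ℝ) : coords (qt x t) = ![x, t 0, t 1, t 2] := rfl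

lemma qt_cont : Continuous fun z : ℝ × (Fin 3 → ℝ) => qt z.1 z.2 := by
  have e : (fun z : ℝ × (Fin 3 → ℝ) => qt z.1 z.2) = fun z => coords.symm ![z.1, z.2 0, z.2 1, z.2 2] := by
    ext1 z
    exact (coords.symm_apply_apply _).symm.trans (congrArg coords.symm (coords_qt _ _))
  rw [e]
  refine coords.symm.continuous.comp (continuous_pi fun i => ?_)
  fin_cases i <;> simp <;> fun_prop

lemma qt_smul (r x : ℝ) (t : Fin 3 → ℝ) : r • qt x t = qt (r * x) (r • t) := by
  refine coords.injective ?_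
  rw [map_smul, coords_qt, coords_qt]
  ext i
  fin_cases i <;> simp

lemma qt_re (x : ℝ) (t : Fin 3 → ℝ) : (qt x t).re = x := rfl
lemma qt_imI (x : ℝ) (t : Fin 3 → ℝ) : (qt x t).imI = t 0 := rfl
lemma qt_imJ (x : ℝ) (t : Fin 3 → ℝ) : (qt x t).imJ = t 1 := rfl
lemma qt_imK (x : ℝ) (t : Fin 3 → ℝ) : (qt x t).imK = t 2 := rfl

lemma qt_add (x : ℝ) (t : Fin 3 → ℝ) : qt 0 t + (x : Quaternion ℝ) = qt x t := by
  ext <;> simp [qt_re, qt_imI, qt_imJ, qt_imK]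

lemma qt_star (x : ℝ) (t : Fin 3 → ℝ) : star (qt x t) = qt x (-t) := by
  ext <;> simp [qt_re, qt_imI, qt_imJ, qt_imK]

lemma le_norm_qt {x : ℝ} (hx : 0 ≤ x) (t : Fin 3 → ℝ) : (x + ‖t‖) / 2 ≤ ‖qt x t‖ := by
  obtain ⟨h0, h1, h2, h3⟩ := abs_coord_le (qt x t)
  have hx' : x ≤ ‖qt x t‖ := (le_abs_self x).trans h0
  have ht : ‖t‖ ≤ ‖qt x t‖ := by
    refine (pi_norm_le_iff_of_nonneg (norm_nonneg _)).2 fun i => ?_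
    fin_cases i
    exacts [h1, h2, h3]
  linarith

/-- The real part of the `k`-th derivative of the quaternionic Cauchy kernel. -/
def rk (k : ℕ) (x : ℝ) (t : Fin 3 → ℝ) : ℝ := (Sk k (qt x t)).re

lemma qt_ne {x : ℝ} (hx : x ≠ 0) (t : Fin 3 → ℝ) : qt x t ≠ 0 := fun h =>
  hx (congrArg (fun a : Quaternion ℝ => a.re) h)

lemma rk_cont (k : ℕ) {x : ℝ} (hx : x ≠ 0) : Continuous (rk k x) := by
  have h1 : Continuous fun t => Sk k (qt x t) := by
    rw [← continuousOn_univ]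
    refine (Sk_smooth k).continuousOn.comp (f := fun t => qt x t) ?_ fun t _ => qt_ne hx t
    exact (qt_cont.comp (by fun_prop : Continuous fun t : Fin 3 → ℝ => (x, t))).continuousOn
  exact (continuous_apply (0 : Fin 4)).comp (coords.continuous.comp h1)

lemma rk_deriv (k : ℕ) {x : ℝ} (hx : x ≠ 0) (t : Fin 3 → ℝ) :
    HasDerivAt (fun x => rk k x t) (rk (k + 1) x t) x := by
  have h := Sk_deriv k (qt 0 t) x (by rw [qt_add]; exact qt_ne hx t)
  simp only [qt_add] at h
  have h2 := (coords : Quaternion ℝ →L[ℝ] (Fin 4 → ℝ)).hasFDerivAt.comp_hasDerivAt x h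
  exact (hasDerivAt_pi.1 h2) 0

lemma rk_bound (k : ℕ) : ∃ A : ℝ, ∀ x, 1 / 2 ≤ x → x ≤ 3 / 2 → ∀ t, |rk k x t| ≤ A * (1 + ‖t‖) ^ (-(4:ℝ)) := by
  have hlow : ∀ x, 1 / 2 ≤ x → ∀ t : Fin 3 → ℝ, (1 + ‖t‖) / 4 ≤ ‖qt x t‖ := by
    intro x hx t
    have := le_norm_qt (by linarith : 0 ≤ x) t
    linarith [norm_nonneg t]
  have hrp : ∀ t : Fin 3 → ℝ, (1 + ‖t‖) ^ (-(4:ℝ)) = ((1 + ‖t‖) ^ 4)⁻¹ := by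
    intro t
    rw [Real.rpow_neg (by positivity)]
    congr 1
    exact_mod_cast Real.rpow_natCast (1 + ‖t‖) 4
  rcases Nat.eq_zero_or_pos k with rfl | hk
  · refine ⟨3 / 2 * 4 ^ 4, fun x h1 h2 t => ?_⟩
    have e : rk 0 x t = (‖qt x t‖ ^ 4)⁻¹ * x := by
      rw [rk, Sk_zero]; simp [qt_re]
    rw [e, hrp, abs_of_nonneg (by positivity)]
    have h3 : (‖qt x t‖ ^ 4)⁻¹ ≤ (((1 + ‖t‖) / 4) ^ 4)⁻¹ := by
      gcongr; exact hlow x h1 t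
    calc _ ≤ (((1 + ‖t‖) / 4) ^ 4)⁻¹ * (3 / 2) := by gcongr
      _ = _ := by rw [div_pow, inv_div]; ring
  · obtain ⟨A, hA, h⟩ := Sk_size k
    refine ⟨A * 4 ^ (3 + k), fun x h1 h2 t => ?_⟩
    have h3 := (abs_coord_le (Sk k (qt x t))).1.trans (h _ (qt_ne (by linarith) t))
    refine h3.trans ?_
    rw [hrp, div_eq_mul_inv, mul_assoc]
    refine mul_le_mul_of_nonneg_left ?_ hA
    calc _ ≤ (((1 + ‖t‖) / 4) ^ (3 + k))⁻¹ := by gcongr; exact hlow x h1 t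
      _ = 4 ^ (3 + k) * ((1 + ‖t‖) ^ (3 + k))⁻¹ := by rw [div_pow, inv_div, div_eq_mul_inv]
      _ ≤ _ := by
        gcongr
        · linarith [norm_nonneg t]
        · omega

lemma int_decay : Integrable (fun t : Fin 3 → ℝ => (1 + ‖t‖) ^ (-(4:ℝ))) :=
  integrable_one_add_norm (by simp; norm_num)

lemma rk_scale (k : ℕ) {x : ℝ} (hx : 0 < x) : ∫ t, rk k x t = (x ^ k)⁻¹ * ∫ t, rk k 1 t := by
  have h := Measure.integral_comp_smul (volume : Measure (Fin 3 → ℝ)) (rk k x) x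
  have e : ∀ t, rk k x (x • t) = (x ^ (3 + k))⁻¹ * rk k 1 t := by
    intro t
    rw [rk, rk, show qt x (x • t) = x • qt 1 t by rw [qt_smul, mul_one], Sk_hom k hx]
    simp
  simp only [e] at h
  rw [integral_const_mul, abs_of_pos (by positivity), smul_eq_mul] at h
  have h3 : Module.finrank ℝ (Fin 3 → ℝ) = 3 := by simp
  rw [h3] at h
  have hx3 : (x ^ 3) ≠ 0 := by positivity
  rw [pow_add, mul_inv, mul_assoc] at h
  exact (mul_left_cancel₀ (inv_ne_zero hx3) h).symm

/-- The integral over the centre of `rk (k+1)` is the derivative of that of `rk k`, so it vanishes as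
soon as the latter does not depend on `x`. -/
lemma rk_int_succ (k : ℕ) (h : ∀ x, 0 < x → ∫ t, rk k x t = ∫ t, rk k 1 t) : ∫ t, rk (k + 1) 1 t = 0 := by
  obtain ⟨A, hA⟩ := rk_bound k
  obtain ⟨B, hB⟩ := rk_bound (k + 1)
  have hs : ball (1:ℝ) (1 / 2) ∈ 𝓝 (1:ℝ) := ball_mem_nhds _ (by norm_num)
  have hb : ∀ x ∈ ball (1:ℝ) (1 / 2), 1 / 2 ≤ x ∧ x ≤ 3 / 2 := by
    intro x hx
    rw [mem_ball, Real.dist_eq, abs_lt] at hx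
    constructor <;> linarith
  have hd := (hasDerivAt_integral_of_dominated_loc_of_deriv_le (μ := (volume : Measure (Fin 3 → ℝ)))
    (F := rk k) (F' := rk (k + 1)) (x₀ := (1:ℝ)) (bound := fun t => B * (1 + ‖t‖) ^ (-(4:ℝ))) hs
    (by
      filter_upwards [hs] with x hx
      exact (rk_cont k (by linarith [(hb x hx).1])).aestronglyMeasurable)
    ((int_decay.const_mul A).mono' (rk_cont k one_ne_zero).aestronglyMeasurable
      (Eventually.of_forall fun t => hA 1 (by norm_num) (by norm_num) t))
    (rk_cont (k + 1) one_ne_zero).aestronglyMeasurable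
    (Eventually.of_forall fun t x hx => hB x (hb x hx).1 (hb x hx).2 t)
    (int_decay.const_mul B)
    (Eventually.of_forall fun t x hx => rk_deriv k (by linarith [(hb x hx).1]) t)).2
  have hc : HasDerivAt (fun x => ∫ t, rk k x t) 0 1 := by
    refine (hasDerivAt_const (1:ℝ) (∫ t, rk k 1 t)).congr_of_eventuallyEq ?_
    filter_upwards [hs] with x hx
    exact h x (by linarith [(hb x hx).1])
  exact hd.unique hc

lemma rk_int (k : ℕ) (hk : 1 ≤ k) : ∀ x, 0 < x → ∫ t, rk k x t = 0 := by
  induction k, hk using Nat.le_induction with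
  | base =>
    intro x hx
    rw [rk_scale 1 hx, rk_int_succ 0 fun x hx => by rw [rk_scale 0 hx]; simp, mul_zero]
  | succ k hk ih =>
    intro x hx
    rw [rk_scale _ hx, rk_int_succ k fun x hx => by rw [ih x hx, ih 1 one_pos], mul_zero]

variable {n : ℕ}

/-- The `i`-th real coordinate of the Cauchy–Szegő kernel, up to the constant factor. -/
def ck (m : ℕ) (i : Fin 4) (g : Hs n) : ℝ := coords (Sk m (toQ (n := n) g)) i

lemma toQ_cont : Continuous fun g : Hs n => toQ (n := n) g := by
  have e : (fun g : Hs n => toQ (n := n) g) = fun g : G n => qt (∑ i, g.2 i ^ 2) g.1 := rfl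
  rw [e]
  exact qt_cont.comp (by fun_prop : Continuous fun g : G n => ((∑ i, g.2 i ^ 2), g.1))

lemma toQ_ne {g : Hs n} (hg : g ≠ 1) : toQ (n := n) g ≠ 0 := fun h => hg (toQ_eq_zero h)

lemma ck_contOn (m : ℕ) (i : Fin 4) : ContinuousOn (ck (n := n) m i) {1}ᶜ :=
  ((continuous_apply i).comp coords.continuous).comp_continuousOn
    ((Sk_smooth m).continuousOn.comp (f := fun g : Hs n => toQ (n := n) g) toQ_cont.continuousOn
      fun g hg => toQ_ne hg)

lemma ck_meas (m : ℕ) (i : Fin 4) : Measurable (ck (n := n) m i) :=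
  measurable_of_continuousOn_compl_singleton 1 (ck_contOn m i)

lemma coord_le (a : Quaternion ℝ) (i : Fin 4) : |coords a i| ≤ ‖a‖ := by
  obtain ⟨h0, h1, h2, h3⟩ := abs_coord_le a
  fin_cases i
  exacts [h0, h1, h2, h3]

lemma ck_dl (m : ℕ) (i : Fin 4) {r : ℝ} (hr : 0 < r) (g : Hs n) :
    ck m i (dl r g) = (r ^ (2 * (3 + m)))⁻¹ * ck m i g := by
  rw [ck, toQ_dl, Sk_hom m (by positivity), map_smul, ck, pow_mul]; rfl

lemma mp_setInt {α β : Type*} [MeasurableSpace α] [MeasurableSpace β] {μ : Measure α} {ν : Measure β}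
    {φ : α → β} (h : MeasurePreserving φ μ ν) {s : Set β} (hs : MeasurableSet s) {f : β → ℝ} (hf : Measurable f) :
    ∫ y in s, f y ∂ν = ∫ x in φ ⁻¹' s, f (φ x) ∂μ := by
  rw [← h.map_eq]
  exact setIntegral_map hs hf.aestronglyMeasurable h.measurable.aemeasurable

/-- The Euclidean length of the horizontal component. -/
def ln (g : Hs n) : ℝ := len (show G n from g).2

lemma ln_le (g : Hs n) : ln g ≤ nm g := len_le_hnorm _

lemma len_cont : Continuous (len (n := n)) := by unfold len; fun_prop

lemma ln_sq (g : Hs n) : ln g ^ 2 = ∑ i, (show G n from g).2 i ^ 2 := len_sq _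

lemma ln_meas : Measurable (ln (n := n)) := by
  have h : Continuous (ln (n := n)) := Continuous.comp (X := G n) (g := len) len_cont continuous_snd
  exact h.measurable

/-- Reflection in the centre, `(t, y) ↦ (-t, y)`. -/
def rf (g : Hs n) : Hs n := ((-(show G n from g).1, (show G n from g).2) : G n)

lemma rf_mp : MeasurePreserving (rf (n := n)) (vol n) (vol n) :=
  (Measure.measurePreserving_neg (volume : Measure (Fin 3 → ℝ))).prod
    (MeasurePreserving.id (volume : Measure (Fin (4*(n-1)) → ℝ)))

lemma toQ_rf (g : Hs n) : toQ (n := n) (rf g) = star (toQ (n := n) g) :=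
  (qt_star (∑ i, (show G n from g).2 i ^ 2) (show G n from g).1).symm

lemma nm_rf (g : Hs n) : nm (rf g) = nm g := by
  refine (pow_left_inj₀ (nm_nonneg _) (nm_nonneg _) two_ne_zero).1 ?_
  rw [nm_sq, nm_sq, toQ_rf, norm_star]

lemma ck_rf (m : ℕ) {i : Fin 4} (hi : i ≠ 0) (g : Hs n) : ck m i (rf g) = - ck m i g := by
  have e (g : Hs n) : ck m i g = coords (Sk m (toQ (n := n) g)) i := rfl
  rw [e, e, toQ_rf, Sk_star, coords_apply, coords_apply]
  fin_cases i <;> simp at hi ⊢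

lemma nm_meas : Measurable (nm (n := n)) := cont_nm.measurable

/-- Gauge shells. -/
def Sh (a b : ℝ) : Set (Hs n) := {g | a < nm g ∧ nm g ≤ b}
/-- Cylindrical shells. -/
def Cy (a b : ℝ) : Set (Hs n) := {g | a < ln g ∧ ln g ≤ b}
/-- The part of a vertical cylinder outside of the ball of the same radius. -/
def Ex (r : ℝ) : Set (Hs n) := {g | r < nm g ∧ ln g ≤ r}

lemma Sh_meas (a b : ℝ) : MeasurableSet (Sh (n := n) a b) :=
  (measurableSet_lt measurable_const nm_meas).inter (measurableSet_le nm_meas measurable_const)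
lemma Cy_meas (a b : ℝ) : MeasurableSet (Cy (n := n) a b) :=
  (measurableSet_lt measurable_const ln_meas).inter (measurableSet_le ln_meas measurable_const)
lemma Ex_meas (r : ℝ) : MeasurableSet (Ex (n := n) r) :=
  (measurableSet_lt measurable_const nm_meas).inter (measurableSet_le ln_meas measurable_const)

lemma ck_int_Sh (m : ℕ) (i : Fin 4) {a : ℝ} (ha : 0 < a) (b : ℝ) : IntegrableOn (ck m i) (Sh a b) (vol n) := by
  obtain ⟨A, hA, h⟩ := Sk_size m
  refine Measure.integrableOn_of_bounded (M := A / (a ^ 2) ^ (3 + m))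
    ((measure_mono fun g hg => hg.2).trans_lt (bdd_nm (n := n) b).lt_top).ne (ck_meas m i).aestronglyMeasurable ?_
  refine ae_restrict_of_forall_mem (Sh_meas a b) fun g hg => ?_
  have hg1 : g ≠ 1 := by
    rintro rfl
    have := hg.1
    rw [nm_eq_zero.2 rfl] at this
    linarith
  refine (coord_le _ i).trans ((h _ (toQ_ne hg1)).trans ?_)
  rw [← nm_sq]
  have := hg.1
  gcongr

/-- The kernel is integrable outside of the ball inside a cylinder, because its decay in the centre is
integrable there. -/
lemma ck_int_Ex (m : ℕ) (hm : 1 ≤ m) (i : Fin 4) {r : ℝ} (hr : 0 < r) : IntegrableOn (ck m i) (Ex r) (vol n) := by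
  obtain ⟨A, hA, h⟩ := Sk_size m
  set δ := min (r ^ 2 / 2) (1 / 4) with hδ
  have hδ0 : 0 < δ := by positivity
  have hfin : volume {y : Fin (4*(n-1)) → ℝ | len y ≤ r} < ⊤ := by
    refine (measure_mono fun y hy => ?_).trans_lt (measure_closedBall_lt_top (x := 0) (r := r))
    rw [mem_closedBall_zero_iff]
    refine (pi_norm_le_iff_of_nonneg hr.le).2 fun i => le_trans ?_ hy
    rw [Real.norm_eq_abs]
    refine abs_le_of_sq_le_sq ?_ (len_nonneg y)
    rw [len_sq]
    exact Finset.single_le_sum (f := fun i => y i ^ 2) (fun _ _ => sq_nonneg _) (Finset.mem_univ i)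
  have hmT : MeasurableSet {y : Fin (4*(n-1)) → ℝ | len y ≤ r} :=
    measurableSet_le len_cont.measurable measurable_const
  have hB : Integrable (fun g : G n => (A / δ ^ (3 + m) * (1 + ‖g.1‖) ^ (-(4:ℝ))) *
      ({y : Fin (4*(n-1)) → ℝ | len y ≤ r}.indicator (fun _ => (1:ℝ)) g.2)) volume :=
    (int_decay.const_mul _).mul_prod
      ((integrable_indicator_iff hmT).2 (integrableOn_const hfin.ne))
  refine (Integrable.integrableOn (μ := vol n) hB).mono' (ck_meas m i).aestronglyMeasurable ?_
  refine ae_restrict_of_forall_mem (Ex_meas r) fun g hg => ?_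
  have hg1 : g ≠ 1 := by
    rintro rfl
    have := hg.1
    rw [nm_eq_zero.2 rfl] at this
    linarith
  refine (coord_le _ i).trans ((h _ (toQ_ne hg1)).trans ?_)
  set t := (show G n from g).1 with ht
  have e1 : {y : Fin (4*(n-1)) → ℝ | len y ≤ r}.indicator (fun _ => (1:ℝ)) (show G n from g).2 = 1 :=
    indicator_of_mem (s := {y : Fin (4*(n-1)) → ℝ | len y ≤ r}) (a := (show G n from g).2) hg.2 _
  have hlow : δ * (1 + ‖t‖) ≤ ‖toQ (n := n) g‖ := by
    have h1 : r ^ 2 ≤ ‖toQ (n := n) g‖ := by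
      rw [← nm_sq]
      have := hg.1
      gcongr
    have h2 : (∑ i, (show G n from g).2 i ^ 2 + ‖t‖) / 2 ≤ ‖toQ (n := n) g‖ :=
      le_norm_qt (Finset.sum_nonneg fun _ _ => sq_nonneg _) t
    have h3 : 0 ≤ ∑ i, (show G n from g).2 i ^ 2 := Finset.sum_nonneg fun _ _ => sq_nonneg _
    have h4 := min_le_left (r ^ 2 / 2) (1 / 4)
    have h5 : δ * ‖t‖ ≤ 1 / 4 * ‖t‖ := mul_le_mul_of_nonneg_right (min_le_right _ _) (norm_nonneg _)
    linarith
  have hrp : (1 + ‖t‖) ^ (-(4:ℝ)) = ((1 + ‖t‖) ^ 4)⁻¹ := by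
    rw [Real.rpow_neg (by positivity)]
    congr 1
    exact_mod_cast Real.rpow_natCast (1 + ‖t‖) 4
  change _ ≤ (A / δ ^ (3 + m) * (1 + ‖t‖) ^ (-(4:ℝ))) * _
  rw [e1, mul_one, hrp]
  calc A / ‖toQ (n := n) g‖ ^ (3 + m) ≤ A / (δ * (1 + ‖t‖)) ^ (3 + m) := by gcongr
    _ = A / δ ^ (3 + m) * ((1 + ‖t‖) ^ (3 + m))⁻¹ := by rw [mul_pow]; field_simp
    _ ≤ _ := by
      gcongr
      · linarith [norm_nonneg t]
      · omega

/-- By homogeneity, the integral over `Ex r` does not depend on `r`. -/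
lemma ck_Ex_scale (m : ℕ) (hm : hdim n = 2 * (3 + m)) (i : Fin 4) {r : ℝ} (hr : 0 < r) :
    ∫ g in Ex r, ck m i g ∂(vol n) = ∫ g in Ex 1, ck m i g ∂(vol n) := by
  have h := setIntegral_map (μ := vol n) (Ex_meas (n := n) r) (f := ck m i)
    (ck_meas m i).aestronglyMeasurable (meas_dl (n := n) r).aemeasurable
  have e : dl r ⁻¹' Ex (n := n) r = Ex 1 := by
    ext g
    have h1 : ln (dl r g) = r * ln g := by
      refine (pow_left_inj₀ (a := ln (dl r g)) (b := r * ln g) (len_nonneg _)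
        (mul_nonneg hr.le (len_nonneg _)) two_ne_zero).1 ?_
      rw [mul_pow, ln_sq, ln_sq, Finset.mul_sum]
      exact Finset.sum_congr rfl fun i _ => mul_pow _ _ _
    simp only [Ex, mem_preimage, mem_setOf_eq, h1, nm_dl hr.le]
    rw [lt_mul_iff_one_lt_right hr, mul_le_iff_le_one_right hr]
  rw [map_dl hr, Measure.restrict_smul, integral_smul_measure, ENNReal.toReal_ofReal (by positivity), e] at h
  simp only [ck_dl m i hr] at h
  rw [integral_const_mul, ← hm, smul_eq_mul] at h
  exact mul_left_cancel₀ (by positivity) h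

/-- On cylindrical shells the real part integrates to zero, since its integral over the centre is
zero for each fixed horizontal component. -/
lemma ck_Cy (m : ℕ) (hm : 1 ≤ m) {a : ℝ} (ha : 0 < a) (b : ℝ) (hi : IntegrableOn (ck m 0) (Cy a b) (vol n)) :
    ∫ g in Cy a b, ck m 0 g ∂(vol n) = 0 := by
  rw [← integral_indicator (Cy_meas a b)]
  have hi' : Integrable ((Cy (n := n) a b).indicator (ck m 0))
      ((volume : Measure (Fin 3 → ℝ)).prod (volume : Measure (Fin (4*(n-1)) → ℝ))) :=
    (integrable_indicator_iff (Cy_meas a b)).2 hi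
  refine (integral_prod_symm _ hi').trans ?_
  refine integral_eq_zero_of_ae (Eventually.of_forall fun y => ?_)
  by_cases hy : a < len y ∧ len y ≤ b
  · have hp : 0 < ∑ i, y i ^ 2 := by rw [← len_sq]; exact pow_pos (ha.trans hy.1) 2
    refine Eq.trans (integral_congr_ae (Eventually.of_forall fun t => ?_)) (rk_int m hm _ hp)
    exact indicator_of_mem (s := Cy (n := n) a b) (a := ((t, y) : G n)) hy _
  · refine integral_eq_zero_of_ae (Eventually.of_forall fun t => ?_)
    exact indicator_of_notMem (s := Cy (n := n) a b) (a := ((t, y) : G n)) hy _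

/-- The kernel has mean zero on gauge shells. The imaginary coordinates are odd under reflection in
the centre; for the real part, a gauge shell differs from a cylindrical shell by `Ex a` and `Ex b`,
over which the integrals coincide. -/
lemma ck_Sh (m : ℕ) (hm : 1 ≤ m) (hd : hdim n = 2 * (3 + m)) (i : Fin 4) {a : ℝ} (ha : 0 < a) (b : ℝ) :
    ∫ g in Sh a b, ck m i g ∂(vol n) = 0 := by
  by_cases hi : i = 0
  · subst hi
    rcases lt_or_ge b a with hab | hab
    · have : Sh (n := n) a b = ∅ := by
        ext g
        simp only [Sh, mem_setOf_eq, mem_empty_iff_false, iff_false, not_and]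
        intro h; linarith
      rw [this, setIntegral_empty]
    have hb := ha.trans_le hab
    have e : Sh (n := n) a b ∪ Ex b = Cy a b ∪ Ex a := by
      ext g
      have := ln_le g
      simp only [Sh, Ex, Cy, mem_union, mem_setOf_eq]
      constructor
      · rintro (⟨h1, h2⟩ | ⟨h1, h2⟩)
        · rcases lt_or_ge a (ln g) with h3 | h3
          · exact .inl ⟨h3, by linarith⟩
          · exact .inr ⟨h1, h3⟩
        · rcases lt_or_ge a (ln g) with h3 | h3
          · exact .inl ⟨h3, h2⟩
          · exact .inr ⟨by linarith, h3⟩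
      · rintro (⟨h1, h2⟩ | ⟨h1, h2⟩)
        · rcases lt_or_ge b (nm g) with h3 | h3
          · exact .inr ⟨h3, h2⟩
          · exact .inl ⟨by linarith, h3⟩
        · rcases lt_or_ge b (nm g) with h3 | h3
          · exact .inr ⟨h3, by linarith⟩
          · exact .inl ⟨h1, h3⟩
    have d1 : Disjoint (Sh (n := n) a b) (Ex b) := by
      rw [Set.disjoint_left]
      rintro g ⟨_, h2⟩ ⟨h3, _⟩
      linarith
    have d2 : Disjoint (Cy (n := n) a b) (Ex a) := by
      rw [Set.disjoint_left]
      rintro g ⟨h2, _⟩ ⟨_, h3⟩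
      linarith
    have i1 := ck_int_Sh (n := n) m 0 ha b
    have i2 := ck_int_Ex (n := n) m hm 0 hb
    have i3 := ck_int_Ex (n := n) m hm 0 ha
    have i4 : IntegrableOn (ck m 0) (Cy a b) (vol n) :=
      (i1.union i2).mono_set (by rw [e]; exact subset_union_left)
    have h1 := setIntegral_union d1 (Ex_meas b) i1 i2
    have h2 := setIntegral_union d2 (Ex_meas a) i4 i3
    rw [e, h2, ck_Cy m hm ha b i4, ck_Ex_scale m hd 0 ha, ck_Ex_scale m hd 0 hb] at h1
    linarith
  · have h := mp_setInt (rf_mp (n := n)) (Sh_meas a b) (ck_meas m i)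
    have e1 : rf ⁻¹' (Sh (n := n) a b) = Sh a b := by
      ext g
      simp only [Sh, mem_preimage, mem_setOf_eq, nm_rf]
    simp only [e1, ck_rf m hi] at h
    rw [integral_neg] at h
    linarith
end CZ

namespace CZ

/-! ### The Cauchy–Szegő kernel is a Calderón–Zygmund kernel -/

open Set Metric

open QHeis

variable {n : ℕ}

lemma CZK.smul {X : Type*} [MetricSpace X] [MeasurableSpace X] {μ : Measure X} {Q : ℕ} {k : X → X → ℝ} {A : ℝ}
    (h : CZK μ Q k A) (c : ℝ) : CZK μ Q (fun x y => c * k x y) (|c| * A) where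
  meas := h.meas.const_mul c
  nonneg := mul_nonneg (abs_nonneg _) h.nonneg
  size x y hxy := by
    rw [abs_mul, mul_div_assoc]
    exact mul_le_mul_of_nonneg_left (h.size x y hxy) (abs_nonneg _)
  reg1 x x' y hxy hd := by
    rw [← mul_sub, abs_mul, mul_assoc, mul_div_assoc]
    exact mul_le_mul_of_nonneg_left (h.reg1 x x' y hxy hd) (abs_nonneg _)
  reg2 x y y' hxy hd := by
    rw [← mul_sub, abs_mul, mul_assoc, mul_div_assoc]
    exact mul_le_mul_of_nonneg_left (h.reg2 x y y' hxy hd) (abs_nonneg _)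
  canc1 x a b ha := by rw [integral_const_mul, h.canc1 x a b ha, mul_zero]
  canc2 x a b ha := by rw [integral_const_mul, h.canc2 x a b ha, mul_zero]

lemma ck_size (m : ℕ) : ∃ A : ℝ, 0 ≤ A ∧ ∀ (i : Fin 4) (g : Hs n), g ≠ 1 → |ck m i g| ≤ A / nm g ^ (2 * (3 + m)) := by
  obtain ⟨A, hA, h⟩ := Sk_size m
  refine ⟨A, hA, fun i g hg => ?_⟩
  rw [pow_mul, nm_sq]
  exact (coord_le _ i).trans (h _ (toQ_ne hg))

/-- Regularity of the kernel under perturbations that are small relative to the gauge; the two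
hypotheses on `g` hold both for `u * v` and for `v * u` when `nm v = s`. -/
lemma ck_reg (m : ℕ) : ∃ A : ℝ, 0 ≤ A ∧ ∀ (i : Fin 4) (u g : Hs n) (s : ℝ), u ≠ 1 → 0 ≤ s → 2 * s ≤ nm u →
    ‖toQ (n := n) g - toQ (n := n) u‖ ≤ s ^ 2 + 2 * nm u * s → nm u - s ≤ nm g →
    |ck m i u - ck m i g| ≤ A * s / nm u ^ (2 * (3 + m) + 1) := by
  obtain ⟨A, hA, h⟩ := ck_size (n := n) m
  obtain ⟨B, hB, h2⟩ := Sk_lip m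
  refine ⟨3 * B + 6 * A * (2 ^ (2 * (3 + m)) + 1), by positivity, fun i u g s hu hs hsu hd hn => ?_⟩
  have hP : 0 < nm u := lt_of_le_of_ne (nm_nonneg u) fun h => hu (nm_eq_zero.1 h.symm)
  rcases le_or_gt (6 * s) (nm u) with h6 | h6
  · have hd3 : ‖toQ (n := n) g - toQ (n := n) u‖ ≤ 3 * nm u * s := by nlinarith
    have hd4 : ‖toQ (n := n) g - toQ (n := n) u‖ ≤ ‖toQ (n := n) u‖ / 2 := by
      rw [← nm_sq]; nlinarith
    have h3 : |ck m i u - ck m i g| ≤ ‖Sk m (toQ (n := n) g) - Sk m (toQ (n := n) u)‖ := by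
      rw [abs_sub_comm]
      refine le_trans (le_of_eq ?_) (coord_le _ i)
      rw [map_sub]; rfl
    refine h3.trans ((h2 _ _ (toQ_ne hu) hd4).trans ?_)
    rw [← nm_sq, ← pow_mul]
    calc B * ‖toQ (n := n) g - toQ (n := n) u‖ / nm u ^ (2 * (4 + m))
        ≤ B * (3 * nm u * s) / nm u ^ (2 * (4 + m)) := by gcongr
      _ = 3 * B * s / nm u ^ (2 * (3 + m) + 1) := by
        rw [show 2 * (4 + m) = (2 * (3 + m) + 1) + 1 by ring, pow_succ _ (2 * (3 + m) + 1)]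
        field_simp
      _ ≤ _ := by
        gcongr
        have : 0 ≤ 6 * A * (2 ^ (2 * (3 + m)) + 1) := by positivity
        linarith
  · have hg : nm u / 2 ≤ nm g := by linarith
    have hg1 : g ≠ 1 := by
      rintro rfl
      rw [nm_eq_zero.2 rfl] at hg
      linarith
    have h3 := h i g hg1
    have h4 := h i u hu
    have h5 : A / nm g ^ (2 * (3 + m)) ≤ A / (nm u / 2) ^ (2 * (3 + m)) := by gcongr
    calc |ck m i u - ck m i g| ≤ |ck m i u| + |ck m i g| := abs_sub _ _
      _ ≤ A / nm u ^ (2 * (3 + m)) + A / (nm u / 2) ^ (2 * (3 + m)) := by linarith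
      _ = A * (2 ^ (2 * (3 + m)) + 1) * nm u / nm u ^ (2 * (3 + m) + 1) := by
        rw [div_pow, pow_succ]; field_simp; ring
      _ ≤ A * (2 ^ (2 * (3 + m)) + 1) * (6 * s) / nm u ^ (2 * (3 + m) + 1) := by gcongr
      _ ≤ _ := by
        refine div_le_div_of_nonneg_right ?_ (by positivity)
        have : 0 ≤ 3 * B * s := by positivity
        linarith

lemma div_meas : Measurable fun z : Hs n × Hs n => z.2⁻¹ * z.1 := by
  have h : Continuous fun z : G n × G n => QHeis.mul (QHeis.inv z.2) z.1 := by
    unfold QHeis.mul QHeis.inv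
    fun_prop
  have h' : Continuous fun z : Hs n × Hs n => z.2⁻¹ * z.1 := h
  exact h'.measurable

/-- The coordinates of the Cauchy–Szegő kernel satisfy the size, regularity and cancellation
conditions of a Calderón–Zygmund kernel. -/
lemma ck_CZK (m : ℕ) (hm : 1 ≤ m) (hd : hdim n = 2 * (3 + m)) :
    ∃ A, ∀ i, CZK (vol n) (hdim n) (fun x y => ck m i (y⁻¹ * x)) A := by
  obtain ⟨A, hA, h⟩ := ck_size (n := n) m
  obtain ⟨B, hB, h2⟩ := ck_reg (n := n) m
  have ne : ∀ x y : Hs n, x ≠ y → y⁻¹ * x ≠ 1 := fun x y hxy h => hxy (inv_mul_eq_one.1 h).symm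
  refine ⟨A + B, fun i => ⟨(ck_meas m i).comp div_meas, by positivity, fun x y hxy => ?_,
    fun x x' y hxy hd' => ?_, fun x y y' hxy hd' => ?_, fun x a b ha => ?_, fun y a b ha => ?_⟩⟩
  · refine (h i _ (ne x y hxy)).trans ?_
    rw [dist_def, hd]
    have := nm_nonneg (y⁻¹ * x)
    gcongr
    linarith
  · have e : y⁻¹ * x' = (y⁻¹ * x) * (x⁻¹ * x') := by group
    have hd1 : dist x x' = nm (x⁻¹ * x') := by rw [dist_comm, dist_def]
    rw [hd1, dist_def x y] at hd' ⊢
    have h3 := h2 i (y⁻¹ * x) (y⁻¹ * x') (nm (x⁻¹ * x')) (ne x y hxy) (nm_nonneg _) hd'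
      (by rw [e]; exact (norm_toQ_mul_sub _ _).1)
      (by
        have h4 := nm_mul_le (y⁻¹ * x') (x⁻¹ * x')⁻¹
        rw [nm_inv, show y⁻¹ * x' * (x⁻¹ * x')⁻¹ = y⁻¹ * x by group] at h4
        linarith)
    refine h3.trans ?_
    rw [hd]
    have := nm_nonneg (y⁻¹ * x)
    have := nm_nonneg (x⁻¹ * x')
    gcongr
    linarith
  · have e : y'⁻¹ * x = (y'⁻¹ * y) * (y⁻¹ * x) := by group
    rw [dist_def y y', dist_def x y] at hd' ⊢
    have h3 := h2 i (y⁻¹ * x) (y'⁻¹ * x) (nm (y'⁻¹ * y)) (ne x y hxy) (nm_nonneg _) hd'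
      (by
        rw [e]
        refine (norm_toQ_mul_sub _ _).2.trans (le_of_eq ?_)
        change nm (y'⁻¹ * y) ^ 2 + 2 * nm (y'⁻¹ * y) * nm (y⁻¹ * x) = _
        ring)
      (by
        have h4 := nm_mul_le (y'⁻¹ * y)⁻¹ (y'⁻¹ * x)
        rw [nm_inv, show (y'⁻¹ * y)⁻¹ * (y'⁻¹ * x) = y⁻¹ * x by group] at h4
        linarith)
    refine h3.trans ?_
    rw [hd]
    have := nm_nonneg (y⁻¹ * x)
    have := nm_nonneg (y'⁻¹ * y)
    gcongr
    linarith
  · have h3 := mp_setInt (meas_pres_inv.comp (meas_pres_mul x⁻¹)) (Sh_meas (n := n) a b) (ck_meas m i)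
    rw [ck_Sh m hm hd i ha b] at h3
    have e : ∀ y : Hs n, ((fun x : Hs n => x⁻¹) ∘ fun z => x⁻¹ * z) y = y⁻¹ * x := fun y => by
      simp
    have e2 : ((fun x : Hs n => x⁻¹) ∘ fun z => x⁻¹ * z) ⁻¹' Sh a b = {y | a < dist x y ∧ dist x y ≤ b} := by
      ext y
      rw [mem_preimage, e]; rfl
    rw [e2] at h3
    simp only [e] at h3
    exact h3.symm
  · have h3 := mp_setInt (meas_pres_mul y⁻¹) (Sh_meas (n := n) a b) (ck_meas m i)
    rw [ck_Sh m hm hd i ha b] at h3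
    have e2 : (fun z => y⁻¹ * z) ⁻¹' Sh a b = {x | a < dist y x ∧ dist y x ≤ b} := by
      ext x
      rw [mem_preimage, mem_setOf_eq, dist_comm y x]; rfl
    rw [e2] at h3
    exact h3.symm

/-- By homogeneity, a kernel that does not vanish identically is nonzero on a fixed proportion of
every ball around the pole. -/
lemma ck_nondeg (m : ℕ) {c : ℝ} (hc : c ≠ 0) {g0 : Hs n} (hg0 : g0 ≠ 1) {i : Fin 4} (hi : ck m i g0 ≠ 0) :
    Nondeg (fun (x y : Hs n) (i : Fin 4) => c * ck m i (y⁻¹ * x)) := by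
  have hnb : {g : Hs n | g ≠ 1 ∧ ck m i g ≠ 0} ∈ 𝓝 g0 := by
    have h1 : ({1}ᶜ : Set (Hs n)) ∈ 𝓝 g0 := isOpen_compl_singleton.mem_nhds hg0
    have h2 : ContinuousAt (ck m i) g0 := (ck_contOn m i).continuousAt h1
    filter_upwards [h1, h2.eventually_ne hi] with g h3 h4 using ⟨h3, h4⟩
  obtain ⟨δ, hδ, hball⟩ := Metric.mem_nhds_iff.1 hnb
  have hn0 := nm_nonneg g0
  have hR : 0 < nm g0 + δ := by linarith
  refine ⟨δ / (nm g0 + δ), by positivity, fun y r hr => ?_⟩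
  set s := r / (nm g0 + δ) with hs
  have hs0 : 0 < s := by positivity
  have key : ∀ x ∈ Metric.ball (y * dl s g0) (δ / (nm g0 + δ) * r),
      ∃ u ∈ Metric.ball g0 δ, y⁻¹ * x = dl s u := by
    intro x hx
    have e : dl s (dl s⁻¹ (y⁻¹ * x)) = y⁻¹ * x := by rw [dl_dl, mul_inv_cancel₀ hs0.ne', dl_one]
    refine ⟨dl s⁻¹ (y⁻¹ * x), ?_, e.symm⟩
    rw [mem_ball] at hx ⊢
    rw [← mul_lt_mul_iff_right₀ hs0, ← dist_dl hs0.le, e, ← dist_mul_left' y, mul_inv_cancel_left]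
    refine hx.trans_le (le_of_eq ?_)
    rw [hs]; ring
  refine ⟨y * dl s g0, fun x hx => ?_, fun x hx => ?_⟩
  · obtain ⟨u, hu, e⟩ := key x hx
    rw [mem_ball, dist_def, e, nm_dl hs0.le]
    have h1 : nm u < nm g0 + δ := by
      have := dist_triangle u g0 1
      rw [dist_one, dist_one] at this
      rw [mem_ball] at hu
      linarith
    calc s * nm u < s * (nm g0 + δ) := mul_lt_mul_of_pos_left h1 hs0
      _ = r := by rw [hs]; field_simp
  · obtain ⟨u, hu, e⟩ := key x hx
    obtain ⟨h1, h2⟩ := hball hu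
    constructor
    · rintro rfl
      rw [inv_mul_cancel] at e
      have h3 := nm_dl hs0.le u
      rw [← e, nm_eq_zero.2 rfl] at h3
      rcases mul_eq_zero.1 h3.symm with h4 | h4
      · exact hs0.ne' h4
      · exact h1 (nm_eq_zero.1 h4)
    · intro h3
      have h4 := congrFun h3 i
      simp only [e, ck_dl m i hs0, Pi.zero_apply] at h4
      have : (s ^ (2 * (3 + m)))⁻¹ ≠ 0 := by positivity
      exact (mul_ne_zero hc (mul_ne_zero this h2)) h4
end CZ

namespace CZ

/-! ### Commutators and mean oscillation on the Heisenberg group -/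

open Set Metric

open QHeis

variable {n : ℕ}

/-- The coordinates of the Cauchy–Szegő kernel as a two-point function. -/
def kk (c : ℝ) (x y : Hs n) (i : Fin 4) : ℝ := c * ck (2*(n-1)) i (y⁻¹ * x)

lemma hdim_eq : hdim n = 2 * (3 + 2 * (n - 1)) := by rw [hdim]; ring

lemma coords_Kker2 (c : ℝ) (x y : Hs n) : coords (Kker2 (n := n) c x y) = kk c x y := by
  have e : Kker2 (n := n) c x y = c • Sk (2*(n-1)) (toQ (n := n) (y⁻¹ * x)) := rfl
  rw [e, map_smul]
  rfl

lemma ball_eq (g : Hs n) (r : ℝ) : QHeis.ball (n := n) g r = Metric.ball g r := rfl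

/-- The truncated commutator of the statement, in coordinates; `b` may be replaced by any
representative agreeing with it at the base point. -/
lemma comm_coords (c : ℝ) {b b' : Hs n → ℝ} (hbb : b =ᵐ[vol n] b') (f : Hs n → ℝ) {x : Hs n} (hx : b x = b' x) (ε : ℝ) :
    coords (∫ h in {h : G n | ε < rho (n := n) x h}, ((b x - b h) * f h) • Kker2 (n := n) c x h) =
      CE (vol n) (kk c) b' f ε x := by
  refine (coords.integral_comp_comm _).symm.trans ?_
  change ∫ y in {y : Hs n | ε < dist x y}, coords (((b x - b y) * f y) • Kker2 (n := n) c x y) ∂(vol n) = _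
  rw [CE]
  refine integral_congr_ae (ae_restrict_of_ae ?_)
  filter_upwards [hbb] with y hy
  rw [map_smul, coords_Kker2, CI, hx, hy]

lemma commTendsto_iff (c : ℝ) {b b' : Hs n → ℝ} (hbb : b =ᵐ[vol n] b') (f : Hs n → ℝ) {x : Hs n} (hx : b x = b' x)
    (L : Quaternion ℝ) : commTendsto (n := n) c b f x L ↔
      Tendsto (fun ε => CE (vol n) (kk c) b' f ε x) (𝓝[>] 0) (𝓝 (coords L)) := by
  have e : (fun ε => CE (vol n) (kk c) b' f ε x) = fun ε =>
    coords (∫ h in {h : G n | ε < rho (n := n) x h}, ((b x - b h) * f h) • Kker2 (n := n) c x h) :=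
    funext fun ε => (comm_coords c hbb f hx ε).symm
  rw [e]
  constructor
  · intro h
    exact (coords.continuous.tendsto L).comp h
  · intro h
    have h2 := (coords.symm.continuous.tendsto (coords L)).comp h
    rw [coords.symm_apply_apply] at h2
    refine h2.congr fun ε => ?_
    exact coords.symm_apply_apply _

/-- If the integrand of the commutator vanishes off the diagonal, the principal value is zero. -/
lemma CE_zero {X ι : Type*} [MetricSpace X] [MeasurableSpace X] [OpensMeasurableSpace X] {μ : Measure X} [Fintype ι]
    {k : X → X → ι → ℝ} {b f : X → ℝ} {x : X} (h : ∀ᵐ y ∂μ, y ≠ x → CI k b f x y = 0) :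
    Tendsto (fun ε => CE μ k b f ε x) (𝓝[>] 0) (𝓝 0) := by
  refine tendsto_const_nhds.congr' ?_
  filter_upwards [self_mem_nhdsWithin] with ε hε
  have hε' : 0 < ε := hε
  refine (integral_eq_zero_of_ae ?_).symm
  have hm : MeasurableSet {y | ε < dist x y} :=
    (isOpen_lt continuous_const (continuous_const.dist continuous_id)).measurableSet
  rw [EventuallyEq, ae_restrict_iff' hm]
  filter_upwards [h] with y hy h2
  refine hy ?_
  intro hyx
  have h3 : ε < dist x y := h2
  rw [hyx, dist_self] at h3
  linarith

lemma kk_CZK (hn : 2 ≤ n) (c : ℝ) : ∃ A, ∀ i, CZK (vol n) (hdim n) (fun x y => kk c x y i) A := by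
  obtain ⟨A, hA⟩ := ck_CZK (n := n) (2*(n-1)) (by omega) hdim_eq
  exact ⟨|c| * A, fun i => (hA i).smul c⟩

lemma pv_ae (hn : 2 ≤ n) {c : ℝ} (hc : c ≠ 0) {b f : Hs n → ℝ} (hb : Measurable b)
    (hbi : ∀ x r, IntegrableOn b (Metric.ball x r) (vol n)) (hf : Measurable f) :
    ∀ᵐ x ∂(vol n), ∃ L, Tendsto (fun ε => CE (vol n) (kk c) b f ε x) (𝓝[>] 0) (𝓝 L) := by
  obtain ⟨A, hA⟩ := kk_CZK hn c
  by_cases h : ∃ g0 : Hs n, g0 ≠ 1 ∧ ∃ i, ck (2*(n-1)) i g0 ≠ 0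
  · obtain ⟨g0, hg0, i, hi⟩ := h
    exact CE_pv hA homSp hb hbi hf (ck_nondeg _ hc hg0 hi)
  · push Not at h
    refine Eventually.of_forall fun x => ⟨0, CE_zero (Eventually.of_forall fun y hy => ?_)⟩
    have e : kk c x y = 0 := by
      ext i
      rw [kk, h _ (fun h1 => hy (inv_mul_eq_one.1 h1)) i, mul_zero]; rfl
    rw [CI, e, smul_zero]

lemma iUnion_balls : (⋃ k : ℕ, Metric.ball (1 : Hs n) (k + 1)) = univ := by
  refine eq_univ_of_forall fun x => mem_iUnion.2 ?_
  obtain ⟨k, hk⟩ := exists_nat_gt (dist x 1)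
  exact ⟨k, by rw [mem_ball]; linarith⟩

lemma ball_fin (x : Hs n) (r : ℝ) : vol n (Metric.ball x r) ≠ ⊤ := by
  rcases le_or_gt r 0 with h | h
  · rw [Metric.ball_eq_empty.2 h]; simp
  · rw [homSp.ball x r h]; exact ENNReal.ofReal_ne_top

lemma ball_pos (x : Hs n) {r : ℝ} (h : 0 < r) : vol n (Metric.ball x r) ≠ 0 :=
  (Metric.isOpen_ball.measure_pos (vol n) ⟨x, mem_ball_self h⟩).ne'

lemma ae_of_balls {P : Hs n → Prop} (h : ∀ k : ℕ, ∀ᵐ x ∂(vol n).restrict (Metric.ball 1 (k + 1)), P x) :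
    ∀ᵐ x ∂(vol n), P x := by
  have := (ae_restrict_iUnion_iff (μ := vol n) (fun k : ℕ => Metric.ball (1 : Hs n) (k + 1)) P).2 h
  rwa [iUnion_balls, Measure.restrict_univ] at this

lemma locInt_ball {b : Hs n → ℝ} (hb : IsLocInt (n := n) b) (x : Hs n) (r : ℝ) :
    IntegrableOn b (Metric.ball x r) (vol n) := by
  rcases le_or_gt r 0 with h | h
  · rw [Metric.ball_eq_empty.2 h]; exact integrableOn_empty
  · exact hb x r h

/-- A measurable representative of a locally integrable function. -/
lemma exists_rep {b : Hs n → ℝ} (hb : IsLocInt (n := n) b) : ∃ b', Measurable b' ∧ b =ᵐ[vol n] b' := by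
  have h : AEStronglyMeasurable b ((vol n).restrict (⋃ k : ℕ, Metric.ball (1 : Hs n) (k + 1))) :=
    aestronglyMeasurable_iUnion_iff.2 fun k => (locInt_ball hb 1 (k + 1)).aestronglyMeasurable
  rw [iUnion_balls, Measure.restrict_univ] at h
  exact ⟨h.mk b, h.stronglyMeasurable_mk.measurable, h.ae_eq_mk⟩

lemma osc_bound {b : Hs n → ℝ} (hb : IsLocInt (n := n) b) {D : ℝ} (hD : 0 ≤ D)
    (h : ∀ (g : G n) (r : ℝ), 0 < r → oscB (n := n) b g r ≤ D) (x : Hs n) (r : ℝ) :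
    ∫⁻ y in Metric.ball x r, ‖b y - avg (n := n) (QHeis.ball (n := n) x r) b‖ₑ ∂(vol n) ≤
      ENNReal.ofReal D * vol n (Metric.ball x r) := by
  rcases le_or_gt r 0 with hr | hr
  · rw [Metric.ball_eq_empty.2 hr]; simp
  have hfin := ball_fin x r
  have hpos := ENNReal.toReal_pos (ball_pos x hr) hfin
  set a := avg (n := n) (QHeis.ball (n := n) x r) b with ha
  have hi : IntegrableOn (fun y => b y - a) (Metric.ball x r) (vol n) :=
    (locInt_ball hb x r).sub (integrableOn_const hfin)
  rw [← ofReal_integral_norm_eq_lintegral_enorm hi]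
  have h1 : (vol n (Metric.ball x r)).toReal⁻¹ * ∫ y in Metric.ball x r, ‖b y - a‖ ∂(vol n) ≤ D := by
    have h0 := h x r hr
    simp only [Real.norm_eq_abs]
    exact h0
  rw [inv_mul_le_iff₀ hpos] at h1
  refine (ENNReal.ofReal_le_ofReal h1).trans (le_of_eq ?_)
  rw [mul_comm, ENNReal.ofReal_mul hD, ENNReal.ofReal_toReal hfin]

/-- The oscillation bound of the statement in the form used for abstract metric measure spaces,
passed to a measurable representative. -/
lemma osc_rep {b b' : Hs n → ℝ} (hb : IsLocInt (n := n) b) (hb' : Measurable b') (hbb : b =ᵐ[vol n] b')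
    {D : ℝ} (hD : 0 ≤ D) (h : ∀ (g : G n) (r : ℝ), 0 < r → oscB (n := n) b g r ≤ D) :
    Osc (vol n) b' (fun x r => avg (n := n) (QHeis.ball (n := n) x r) b) (ENNReal.ofReal D) where
  meas := hb'
  fin := ENNReal.ofReal_ne_top
  bound x r := by
    refine le_trans (le_of_eq ?_) (osc_bound hb hD h x r)
    refine lintegral_congr_ae (ae_restrict_of_ae ?_)
    filter_upwards [hbb] with y hy
    rw [hy]

/-- A function without mean oscillation is constant almost everywhere. -/
lemma const_of_osc {b : Hs n → ℝ} (hb : IsLocInt (n := n) b)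
    (h : ∀ (g : G n) (r : ℝ), 0 < r → oscB (n := n) b g r ≤ 0) : ∃ a, ∀ᵐ x ∂(vol n), b x = a := by
  have h0 : ∀ r : ℝ, ∀ᵐ y ∂(vol n).restrict (Metric.ball 1 r), b y = avg (n := n) (QHeis.ball (n := n) (1 : Hs n) r) b := by
    intro r
    have h1 := osc_bound hb le_rfl h 1 r
    rw [ENNReal.ofReal_zero, zero_mul, nonpos_iff_eq_zero, lintegral_eq_zero_iff'] at h1
    · filter_upwards [h1] with y hy
      have : ‖b y - avg (n := n) (QHeis.ball (n := n) (1 : Hs n) r) b‖ₑ = 0 := hy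
      exact sub_eq_zero.1 (enorm_eq_zero.1 this)
    · exact ((locInt_ball hb 1 r).aestronglyMeasurable.sub aestronglyMeasurable_const).enorm
  refine ⟨avg (n := n) (QHeis.ball (n := n) (1 : Hs n) 1) b, ae_of_balls fun k => ?_⟩
  have e : avg (n := n) (QHeis.ball (n := n) (1 : Hs n) (k + 1)) b = avg (n := n) (QHeis.ball (n := n) (1 : Hs n) 1) b := by
    have h2 := ae_restrict_of_ae_restrict_of_subset
      (Metric.ball_subset_ball (x := (1 : Hs n)) (by simp : (1:ℝ) ≤ (k:ℝ) + 1)) (h0 (k + 1))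
    have : NeBot (ae ((vol n).restrict (Metric.ball (1 : Hs n) 1))) := by
      rw [ae_neBot]
      intro h3
      exact ball_pos (1 : Hs n) one_pos (Measure.restrict_eq_zero.1 h3)
    obtain ⟨y, hy1, hy2⟩ := (h2.and (h0 1)).exists
    rw [← hy1, hy2]
  rw [← e]
  exact h0 (k + 1)
end CZ

namespace CZ

/-! ### Weights and the weighted estimate on the Heisenberg group -/

open Set Metric

open QHeis

variable {n : ℕ} {p : ℝ} {w : Hs n → ℝ}

/-- The dual weight of an `A_p` weight. -/
def dualW (p : ℝ) (w : Hs n → ℝ) (x : Hs n) : ℝ≥0∞ := ENNReal.ofReal (w x) ^ (-(1/(p-1)))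

lemma ap_bound (hp : 1 < p) (h : IsApGt1 (n := n) p w) : ∃ D : ℝ≥0∞, D ≠ ⊤ ∧ ∀ (x : Hs n) (r : ℝ), 0 < r →
    ((∫⁻ y in Metric.ball x r, ENNReal.ofReal (w y) ∂(vol n)) / vol n (Metric.ball x r)) *
      ((∫⁻ y in Metric.ball x r, dualW p w y ∂(vol n)) / vol n (Metric.ball x r)) ^ (p - 1) ≤ D := by
  obtain ⟨C, hC⟩ := h
  exact ⟨ENNReal.ofReal C, ENNReal.ofReal_ne_top, fun x r hr => hC x r hr⟩

/-- An `A_p` weight in the sense of the statement either vanishes almost everywhere or is almost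
everywhere positive, since its dual weight is infinite where it vanishes. -/
lemma ap_dichotomy (hp : 1 < p) (hw : Measurable w) (h : IsApGt1 (n := n) p w) :
    (∀ᵐ x ∂(vol n), ENNReal.ofReal (w x) = 0) ∨ ∀ᵐ x ∂(vol n), ENNReal.ofReal (w x) ≠ 0 := by
  obtain ⟨D, hD, hb⟩ := ap_bound hp h
  have hW : Measurable fun x => ENNReal.ofReal (w x) := hw.ennreal_ofReal
  have hσ : Measurable (dualW p w) := hW.pow_const _
  by_cases h0 : ∀ k : ℕ, ∫⁻ y in Metric.ball (1 : Hs n) (k + 1), ENNReal.ofReal (w y) ∂(vol n) = 0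
  · exact Or.inl (ae_of_balls fun k => (lintegral_eq_zero_iff hW).1 (h0 k))
  right
  push Not at h0
  obtain ⟨k0, hk0⟩ := h0
  refine ae_of_balls fun k => ?_
  have hr : (0:ℝ) < max k k0 + 1 := by positivity
  refine ae_restrict_of_ae_restrict_of_subset (t := Metric.ball (1 : Hs n) (max k k0 + 1))
    (Metric.ball_subset_ball (by gcongr; exact le_max_left _ _)) ?_
  have h1 : ∫⁻ y in Metric.ball (1 : Hs n) (max k k0 + 1), ENNReal.ofReal (w y) ∂(vol n) ≠ 0 := by
    intro h2
    refine hk0 (le_antisymm ?_ bot_le)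
    rw [← h2]
    exact lintegral_mono_set (Metric.ball_subset_ball (by gcongr; exact le_max_right _ _))
  have h2 := ne_top_of_le_ne_top hD (hb 1 _ hr)
  have h3 : ((∫⁻ y in Metric.ball (1 : Hs n) (max k k0 + 1), dualW p w y ∂(vol n)) /
      vol n (Metric.ball (1 : Hs n) (max k k0 + 1))) ^ (p - 1) ≠ ⊤ := by
    intro h4
    rw [h4, ENNReal.mul_top (ENNReal.div_ne_zero.2 ⟨h1, ball_fin _ _⟩)] at h2
    exact h2 rfl
  have h5 : ∫⁻ y in Metric.ball (1 : Hs n) (max k k0 + 1), dualW p w y ∂(vol n) ≠ ⊤ := by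
    intro h4
    rw [h4, ENNReal.top_div_of_ne_top (ball_fin _ _), ENNReal.top_rpow_of_pos (by linarith)] at h3
    exact h3 rfl
  filter_upwards [ae_lt_top hσ h5] with y hy hy0
  have h6 : -(1/(p-1)) < 0 := by
    have : 0 < 1/(p-1) := by apply one_div_pos.2; linarith
    linarith
  rw [dualW, hy0, ENNReal.zero_rpow_of_neg h6] at hy
  exact lt_irrefl _ hy

/-- The `A_p` condition of the statement, rewritten for a pair of dual weights. -/
lemma ap_pair (hp : 1 < p) (hw : Measurable w) (h : IsApGt1 (n := n) p w)
    (hpos : ∀ᵐ x ∂(vol n), ENNReal.ofReal (w x) ≠ 0) :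
    ∃ C, ApPair (vol n) p p.conjExponent (fun x => ENNReal.ofReal (w x)) (dualW p w) C := by
  obtain ⟨D, hD, hb⟩ := ap_bound hp h
  have hp0 : 0 < p := by linarith
  have hp1 : 0 < p - 1 := by linarith
  have hW : Measurable fun x => ENNReal.ofReal (w x) := hw.ennreal_ofReal
  have hq : 1 / p.conjExponent = (p - 1) / p := by rw [Real.conjExponent, one_div_div]
  refine ⟨D ^ (1 / p), Real.HolderConjugate.conjExponent hp, hW, hW.pow_const _,
    ENNReal.rpow_ne_top_of_nonneg (by positivity) hD, ?_, ?_⟩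
  · filter_upwards [hpos] with x hx
    rw [dualW, ← ENNReal.rpow_mul, ← ENNReal.rpow_add _ _ hx ENNReal.ofReal_ne_top, hq]
    have : 1 / p + -(1 / (p - 1)) * ((p - 1) / p) = 0 := by field_simp; ring
    rw [this, ENNReal.rpow_zero]
  · intro x r
    rcases le_or_gt r 0 with hr | hr
    · have : 0 < 1 / p := by positivity
      rw [Metric.ball_eq_empty.2 hr]
      simp [hp0]
    have h1 := hb x r hr
    have hB0 := ball_pos x hr
    have hBt := ball_fin x r
    set B := vol n (Metric.ball x r)
    set a := ∫⁻ y in Metric.ball x r, ENNReal.ofReal (w y) ∂(vol n)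
    set d := ∫⁻ y in Metric.ball x r, dualW p w y ∂(vol n)
    have hpi : 0 ≤ 1 / p := by positivity
    have hqi : 0 ≤ (p - 1) / p := by positivity
    have h2 := ENNReal.rpow_le_rpow h1 hpi
    rw [ENNReal.mul_rpow_of_nonneg _ _ hpi, ← ENNReal.rpow_mul, mul_one_div] at h2
    rw [hq]
    calc a ^ (1 / p) * d ^ ((p - 1) / p)
        = ((a / B) * B) ^ (1 / p) * ((d / B) * B) ^ ((p - 1) / p) := by
          rw [ENNReal.div_mul_cancel hB0 hBt, ENNReal.div_mul_cancel hB0 hBt]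
      _ = ((a / B) ^ (1 / p) * (d / B) ^ ((p - 1) / p)) * (B ^ (1 / p) * B ^ ((p - 1) / p)) := by
          rw [ENNReal.mul_rpow_of_nonneg _ _ hpi, ENNReal.mul_rpow_of_nonneg _ _ hqi]; ring
      _ = ((a / B) ^ (1 / p) * (d / B) ^ ((p - 1) / p)) * B := by
          rw [← ENNReal.rpow_add _ _ hB0 hBt]
          have : 1 / p + (p - 1) / p = 1 := by field_simp; ring
          rw [this, ENNReal.rpow_one]
      _ ≤ D ^ (1 / p) * B := by gcongr

/-- Almost everywhere existence of the principal values of the commutator. -/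
lemma comm_pv (hn : 2 ≤ n) {c : ℝ} (hc : c ≠ 0) {b f : Hs n → ℝ} (hb : IsLocInt (n := n) b) (hf : Measurable f) :
    ∀ᵐ g ∂(vol n), ∃ L : Quaternion ℝ, commTendsto (n := n) c b f g L := by
  obtain ⟨b', hb', hbb⟩ := exists_rep hb
  have hi : ∀ x r, IntegrableOn b' (Metric.ball x r) (vol n) := fun x r =>
    (locInt_ball hb x r).congr (ae_restrict_of_ae hbb)
  filter_upwards [pv_ae hn hc hb' hi hf, hbb] with x hx hxb
  obtain ⟨L, hL⟩ := hx
  refine ⟨coords.symm L, (commTendsto_iff c hbb f hxb _).2 ?_⟩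
  rwa [coords.apply_symm_apply]

lemma comm_lim {c : ℝ} {b f : Hs n → ℝ} {g : Hs n} {L : Quaternion ℝ}
    (h : commTendsto (n := n) c b f g L) : commFun (n := n) c b f g = L :=
  Tendsto.limUnder_eq h

/-- The commutator with a function that is constant almost everywhere vanishes. -/
lemma comm_const {c : ℝ} {b f : Hs n → ℝ} {a : ℝ} (hb : ∀ᵐ x ∂(vol n), b x = a) :
    ∀ᵐ g ∂(vol n), commFun (n := n) c b f g = 0 := by
  filter_upwards [hb] with x hx
  refine comm_lim ((commTendsto_iff c (EventuallyEq.refl _ b) f rfl 0).2 ?_)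
  rw [map_zero]
  refine CE_zero ?_
  filter_upwards [hb] with y hy _
  change ((b x - b y) * f y) • kk c x y = 0
  rw [hx, hy, sub_self, zero_mul, zero_smul]

lemma norm_le_coords (a : Quaternion ℝ) : ‖a‖ ≤ 2 * ‖coords a‖ := by
  have h : ∀ i, (coords a i) ^ 2 ≤ ‖coords a‖ ^ 2 := fun i => by
    rw [← sq_abs]
    exact pow_le_pow_left₀ (abs_nonneg _) (norm_le_pi_norm (coords a) i) 2
  have e : ‖a‖ ^ 2 = coords a 0 ^ 2 + coords a 1 ^ 2 + coords a 2 ^ 2 + coords a 3 ^ 2 := by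
    rw [coords_apply, pow_two, ← Quaternion.normSq_eq_norm_mul_self, Quaternion.normSq_def']
    rfl
  have := h 0
  have := h 1
  have := h 2
  have := h 3
  exact abs_le_of_sq_le_sq' (by nlinarith) (by positivity) |>.2

/-- The weighted estimate for a weight which is positive almost everywhere. -/
lemma comm_weighted (hn : 2 ≤ n) (hp : 1 < p) (hw : Measurable w) (h : IsApGt1 (n := n) p w)
    (hpos : ∀ᵐ x ∂(vol n), ENNReal.ofReal (w x) ≠ 0) {c : ℝ} (hc : c ≠ 0) {b : Hs n → ℝ}
    (hb : InBMO (n := n) b) : ∃ K : ℝ≥0∞, K ≠ ⊤ ∧ ∀ f : Hs n → ℝ, Measurable f →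
      lpwNormQ (n := n) p w (fun g => commFun (n := n) c b f g) ≤ K * lpwNorm (n := n) p w f := by
  obtain ⟨hloc, D, hD⟩ := hb
  obtain ⟨b', hb', hbb⟩ := exists_rep hloc
  obtain ⟨C, hA⟩ := ap_pair hp hw h hpos
  obtain ⟨A, hk⟩ := kk_CZK hn c
  have hosc := osc_rep hloc hb' hbb (le_max_right D 0) fun g r hr => (hD g r hr).trans (le_max_left _ _)
  obtain ⟨K, hK, H⟩ := comm_bound hk homSp hA hosc
  have hp0 : 0 < p := by linarith
  have hpi : 0 ≤ 1 / p := by positivity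
  refine ⟨2 * K ^ (1 / p), ENNReal.mul_ne_top (by simp) (ENNReal.rpow_ne_top_of_nonneg hpi hK),
    fun f hf => ?_⟩
  have h1 := H f hf (fun x => coords (commFun (n := n) c b f x)) (by
    filter_upwards [comm_pv hn hc hloc hf, hbb] with x hx hxb
    obtain ⟨L, hL⟩ := hx
    rw [comm_lim hL]
    exact (commTendsto_iff c hbb f hxb L).1 hL)
  have h2 : ∫⁻ x, (ENNReal.ofReal ‖commFun (n := n) c b f x‖) ^ p * ENNReal.ofReal (w x) ∂(vol n) ≤
      2 ^ p * ∫⁻ x, ‖coords (commFun (n := n) c b f x)‖ₑ ^ p * ENNReal.ofReal (w x) ∂(vol n) := by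
    rw [← lintegral_const_mul' _ _ (ENNReal.rpow_ne_top_of_nonneg hp0.le (by simp))]
    refine lintegral_mono fun x => ?_
    rw [← mul_assoc, ← ENNReal.mul_rpow_of_nonneg _ _ hp0.le]
    gcongr
    rw [← ofReal_norm_eq_enorm, show (2 : ℝ≥0∞) = ENNReal.ofReal 2 by simp, ← ENNReal.ofReal_mul (by norm_num)]
    exact ENNReal.ofReal_le_ofReal (norm_le_coords _)
  have h3 := ENNReal.rpow_le_rpow (h2.trans (mul_le_mul_right h1 _)) hpi
  refine le_trans h3 (le_of_eq ?_)
  rw [ENNReal.mul_rpow_of_nonneg _ _ hpi, ENNReal.mul_rpow_of_nonneg _ _ hpi, ← ENNReal.rpow_mul,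
    mul_one_div_cancel hp0.ne', ENNReal.rpow_one, ← mul_assoc]
  congr 2
  refine lintegral_congr fun x => ?_
  rw [← Real.norm_eq_abs, ofReal_norm_eq_enorm]

lemma lpwNormQ_zero (hp : 0 < p) {F : Hs n → Quaternion ℝ}
    (h : ∀ᵐ x ∂(vol n), F x = 0 ∨ ENNReal.ofReal (w x) = 0) : lpwNormQ (n := n) p w F = 0 := by
  have e : ∫⁻ x, (ENNReal.ofReal ‖F x‖) ^ p * ENNReal.ofReal (w x) ∂(vol n) = 0 := by
    rw [← lintegral_zero (μ := vol n)]
    refine lintegral_congr_ae ?_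
    filter_upwards [h] with x hx
    rcases hx with hx | hx
    · rw [hx, norm_zero, ENNReal.ofReal_zero, ENNReal.zero_rpow_of_pos hp, zero_mul]
    · rw [hx, mul_zero]
  exact (congrArg (· ^ (1 / p)) e).trans (ENNReal.zero_rpow_of_pos (by positivity))

lemma bmoNorm_nonneg (b : Hs n → ℝ) : 0 ≤ bmoNorm (n := n) b :=
  Real.sInf_nonneg fun _ h => h.1

lemma osc_of_bmoNorm_zero {b : Hs n → ℝ} (hb : InBMO (n := n) b) (h : bmoNorm (n := n) b = 0)
    (g : G n) (r : ℝ) (hr : 0 < r) : oscB (n := n) b g r ≤ 0 := by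
  obtain ⟨-, D, hD⟩ := hb
  rw [← h]
  exact le_csInf ⟨max D 0, le_max_right _ _, fun g r hr => (hD g r hr).trans (le_max_left _ _)⟩
    fun C hC => hC.2 g r hr
end CZ

open QHeis MeasureTheory in
/-- for `p ∈ (1,∞)`, `w ∈ A_p(𝓗^{n-1})` and `b ∈ BMO(𝓗^{n-1})`, the
Cauchy–Szegő commutator `[b,𝒞]` is bounded on `L^p_w(𝓗^{n-1})`: there is `C > 0` such
that for every `f ∈ L^p_w`, the principal value exists a.e. and
`‖[b,𝒞]f‖_{L^p_w} ≤ C ‖b‖_BMO ‖f‖_{L^p_w}`. -/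
theorem commutator_bounded_on_weighted_lebesgue (n : ℕ) (hn : 2 ≤ n)
    (p : ℝ) (hp : 1 < p) (w : G n → ℝ) (hw : IsAp p w)
    (c : ℝ) (hc : c ≠ 0) (b : G n → ℝ) (hb : InBMO b) :
    ∃ C : ℝ, 0 < C ∧ ∀ f : G n → ℝ, Measurable f → lpwNorm p w f < ⊤ →
      (∀ᵐ g ∂(volume : Measure (G n)), ∃ L : Quaternion ℝ, commTendsto c b f g L) ∧
      lpwNormQ p w (fun g => commFun c b f g)
        ≤ ENNReal.ofReal (C * bmoNorm b) * lpwNorm p w f := by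
  have hpv : ∀ f : G n → ℝ, Measurable f →
      ∀ᵐ g ∂(volume : Measure (G n)), ∃ L : Quaternion ℝ, commTendsto c b f g L :=
    fun f hf => CZ.comm_pv hn hc hb.1 hf
  obtain ⟨hwm, -, -, h | ⟨-, hA⟩⟩ := hw
  · exact absurd h.1 hp.ne'
  have hp0 : 0 < p := by linarith
  -- If the weighted norm of every commutator vanishes, any constant works.
  have hzero : (∀ f : G n → ℝ, lpwNormQ p w (fun g => commFun c b f g) = 0) →
      ∃ C : ℝ, 0 < C ∧ ∀ f : G n → ℝ, Measurable f → lpwNorm p w f < ⊤ →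
      (∀ᵐ g ∂(volume : Measure (G n)), ∃ L : Quaternion ℝ, commTendsto c b f g L) ∧
      lpwNormQ p w (fun g => commFun c b f g)
        ≤ ENNReal.ofReal (C * bmoNorm b) * lpwNorm p w f := fun h0 =>
    ⟨1, one_pos, fun f hf _ => ⟨hpv f hf, by rw [h0 f]; exact bot_le⟩⟩
  rcases CZ.ap_dichotomy (n := n) hp hwm hA with hw0 | hpos
  · exact hzero fun f => CZ.lpwNormQ_zero (n := n) hp0 (hw0.mono fun _ h => Or.inr h)
  rcases (CZ.bmoNorm_nonneg (n := n) b).eq_or_lt with hb0 | hb0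
  · obtain ⟨a, ha⟩ := CZ.const_of_osc (n := n) hb.1 (CZ.osc_of_bmoNorm_zero hb hb0.symm)
    exact hzero fun f => CZ.lpwNormQ_zero (n := n) hp0 ((CZ.comm_const ha).mono fun _ h => Or.inl h)
  obtain ⟨K, hK, H⟩ := CZ.comm_weighted (n := n) hn hp hwm hA hpos hc hb
  -- The constant may depend on `b`, so it absorbs division by the positive number `bmoNorm b`.
  refine ⟨(K.toReal + 1) / bmoNorm b, by positivity, fun f hf _ => ⟨hpv f hf, (H f hf).trans ?_⟩⟩
  rw [div_mul_cancel₀ _ hb0.ne']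
  gcongr
  refine (ENNReal.ofReal_toReal hK).symm.le.trans (ENNReal.ofReal_le_ofReal (by linarith))
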